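/- Let d ≥ 2 be a positive integer and let {X_n : n ∈ ℕ^d} be a weakly stationary negatively associated field of identically distributed random variables with E[X_1] = 0 and E[X_1² log^{d-1}(|X_1|) / log log (|X_1|)] < ∞. Let Υ(j − i) = Cov(X_j, X_i) for i, j ∈ ℕ^d, and set σ² = Σ_{j ∈ ℤ^d} Υ(j). Then almost surely, limsup_{n → ∞} S_n / (2d |n| log log |n|)^{1/2} = σ, where n → ∞ means all coordinates n_1, …, n_d tend to infinity. -/

import Mathlib

/-!
After a shift the field lives on all of `ℕ^d` (`NAField`). Negative association makes every
off-diagonal covariance nonpositive; since variances of box sums are nonnegative, the covariances are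
summable (`summable_uu`), and `Var (sum over a box) / |box|` tends to `σ²` for boxes with large sides
(`var_le`, `var_ge`). Both halves of the law are proved for sums over the boxes `[0, n)`.

**Upper half** (`upper`). For corners `n` in a dyadic block of volume about `2^M`, values above
`tau M` contribute negligibly, with probabilities summable over the blocks; this is where the moment
condition enters (`summable_two_pow`, `tail_summable`). The clipped variables remain negatively
associated, so exponential moments of sums are dominated by products, which gives Bernstein bounds
(`NegAssocOn.tail_le`). The corner is rounded down to a coarse grid with boundedly many points and to
a fine grid of mesh about `M⁻⁴` (`decomp`). Coarse boxes are cut into cubes, whose variance per point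
is close to `σ²`, and this gives an exponent better than `d log M` (`coarse`), summable over
`m ∈ ℕ^d`. The layer between the two grids has small density and an arbitrarily good exponent
(`mid`). In the remaining layer of density `O(M⁻⁴)` a stronger truncation makes the bounds survive a
union over all corners of the block (`fine`, `overshoot`). The resulting `block_bound` is summable and
the Borel–Cantelli lemma applies.

**Lower half** (`lower`). No second Borel–Cantelli lemma for independent events is available, and the
covariances decay at no prescribed rate. A box with large sides exceeds `(1 - 4κ) b` standard
deviations with probability at least `exp (-(1/2 + 2κ) b²)` for some fixed `b`, `one_block`: this is
a moment generating function argument for a fixed number of small truncated sub-blocks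
(`NegAssocOn.block_lower`). The box `bx A m` is cut into `2^(ρ d)` cells. If every cell exceeds about
`b` of its standard deviations, the whole box exceeds about `2^(ρ d / 2) b` of its own. The
probability that all cells succeed is at least about the product of the individual ones
(`NegAssocOn.decouple`, `cells_lower`). Pairs of cells that share a coordinate can be as correlated as
neighbours, but each cell has only `O(2^(ρ (d - 1)))` of them and their covariances cause a relative
loss only; for the other pairs every coordinate is crossed. Averaged over the scales `I < mᵢ ≤ 2 I`,
each crossed coordinate gains a factor `1 / I` (`sum_wsum_le`), which suffices when
`I ≈ exp (β 2^(ρ d))`. So at least half of the `I^d` scales succeed with a good probability, the boxes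
`bx A m` are disjoint, and negative association makes a simultaneous failure exponentially unlikely
(`stage`). With `β ≈ b² / (2 d)`, at these scales `2^(ρ d) b² ≈ 2 d log log |n|`. Inclusion–exclusion
and the upper half, applied to `X` and `-X`, transfer the bound from `bx A m` to the sum over
`[0, A^m)`, with an error that vanishes as `A → ∞` (`incl_excl`, `link`). If `σ = 0`, the lower half
is the upper half for `-X`.
-/

open MeasureTheory Filter Finset

noncomputable section

/-- `plog x = ln (max x e)`, the truncated logarithm used in the paper. -/
def plog (x : ℝ) : ℝ := Real.log (max x (Real.exp 1))

/-- A family of real random variables `X i`, `i ∈ S`, is *negatively associated* if for every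
pair of disjoint finite subsets `A`, `B` of `S` and all coordinatewise non-decreasing functions
`f`, `g`, one has `Cov (f (X_i, i ∈ A), g (X_j, j ∈ B)) ≤ 0`, whenever the covariance exists. -/
def NegAssocOn {Ω : Type} [MeasurableSpace Ω] (μ : Measure Ω) {ι : Type}
    (X : ι → Ω → ℝ) (S : Set ι) : Prop :=
  ∀ A B : Finset ι, ↑A ⊆ S → ↑B ⊆ S → Disjoint A B →
    ∀ (f : (↥A → ℝ) → ℝ) (g : (↥B → ℝ) → ℝ), Monotone f → Monotone g →
      Integrable (fun ω => f (fun i => X i ω)) μ →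
      Integrable (fun ω => g (fun j => X j ω)) μ →
      Integrable (fun ω => f (fun i => X i ω) * g (fun j => X j ω)) μ →
      ∫ ω, f (fun i => X i ω) * g (fun j => X j ω) ∂μ ≤
        (∫ ω, f (fun i => X i ω) ∂μ) * ∫ ω, g (fun j => X j ω) ∂μ

section

variable {Ω : Type} [MeasurableSpace Ω] {μ : Measure Ω} {ι κ : Type}

/-! ### Negative association: closure properties -/

lemma NegAssocOn.mono {X : ι → Ω → ℝ} {S T : Set ι} (h : NegAssocOn μ X S) (hT : T ⊆ S) :
    NegAssocOn μ X T := fun A B hA hB => h A B (hA.trans hT) (hB.trans hT)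

lemma NegAssocOn.int_mul_le {X : ι → Ω → ℝ} {S : Set ι} (h : NegAssocOn μ X S)
    {A B : Finset ι} (hA : ↑A ⊆ S) (hB : ↑B ⊆ S) (hAB : Disjoint A B)
    {F G : (ι → ℝ) → ℝ} (hF : Monotone F) (hG : Monotone G)
    (hFA : DependsOn F (A : Set ι)) (hGB : DependsOn G (B : Set ι))
    (iF : Integrable (fun ω => F (fun i => X i ω)) μ)
    (iG : Integrable (fun ω => G (fun i => X i ω)) μ)
    (iFG : Integrable (fun ω => F (fun i => X i ω) * G (fun i => X i ω)) μ) :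
    ∫ ω, F (fun i => X i ω) * G (fun i => X i ω) ∂μ ≤
      (∫ ω, F (fun i => X i ω) ∂μ) * ∫ ω, G (fun i => X i ω) ∂μ := by
  classical
  have key : ∀ (A : Finset ι) (F : (ι → ℝ) → ℝ), DependsOn F (A : Set ι) → ∀ ω,
      F (fun i => if hi : i ∈ A then X i ω else 0) = F (fun i => X i ω) := by
    intro A F hFA ω
    apply hFA
    intro i hi
    have : i ∈ A := hi
    simp [this]
  have := h A B hA hB hAB
    (fun x => F (fun i => if hi : i ∈ A then x ⟨i, hi⟩ else 0))
    (fun x => G (fun i => if hi : i ∈ B then x ⟨i, hi⟩ else 0))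
    (fun x y hxy => hF (fun i => by by_cases hi : i ∈ A <;> simp [hi]; exact hxy _))
    (fun x y hxy => hG (fun i => by by_cases hi : i ∈ B <;> simp [hi]; exact hxy _))
  simp only [key A F hFA, key B G hGB] at this
  exact this iF iG iFG

/-- Monotone functions of disjoint blocks of a negatively associated family are again negatively
associated. -/
lemma NegAssocOn.block {X : ι → Ω → ℝ} {S : Set ι} (h : NegAssocOn μ X S) {T : Set κ}
    (D : κ → Finset ι) (hD : ∀ k ∈ T, (D k : Set ι) ⊆ S)
    (hdis : ∀ k ∈ T, ∀ l ∈ T, k ≠ l → Disjoint (D k) (D l))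
    (H : κ → (ι → ℝ) → ℝ) (hH : ∀ k ∈ T, Monotone (H k))
    (hdep : ∀ k ∈ T, DependsOn (H k) (D k : Set ι)) :
    NegAssocOn μ (fun k ω => H k (fun i => X i ω)) T := by
  classical
  intro A B hA hB hAB f g hf hg i1 i2 i3
  refine h.int_mul_le (A := A.biUnion D) (B := B.biUnion D) ?_ ?_ ?_
    (F := fun x => f (fun k => H k x)) (G := fun x => g (fun k => H k x)) ?_ ?_ ?_ ?_ i1 i2 i3
  · intro i hi
    simp only [coe_biUnion, Set.mem_iUnion] at hi
    obtain ⟨k, hk, hi⟩ := hi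
    exact hD k (hA hk) hi
  · intro i hi
    simp only [coe_biUnion, Set.mem_iUnion] at hi
    obtain ⟨k, hk, hi⟩ := hi
    exact hD k (hB hk) hi
  · rw [Finset.disjoint_biUnion_left]
    intro k hk
    rw [Finset.disjoint_biUnion_right]
    intro l hl
    refine hdis k (hA hk) l (hB hl) ?_
    rintro rfl
    exact Finset.disjoint_left.1 hAB hk hl
  · exact fun x y hxy => hf fun k => hH k (hA k.2) hxy
  · exact fun x y hxy => hg fun k => hH k (hB k.2) hxy
  · intro x y hxy
    refine congrArg f (funext fun k => hdep k (hA k.2) fun i hi => hxy i ?_)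
    simp only [coe_biUnion, Set.mem_iUnion]
    exact ⟨k, k.2, hi⟩
  · intro x y hxy
    refine congrArg g (funext fun k => hdep k (hB k.2) fun i hi => hxy i ?_)
    simp only [coe_biUnion, Set.mem_iUnion]
    exact ⟨k, k.2, hi⟩

lemma NegAssocOn.comp {X : ι → Ω → ℝ} {S : Set ι} (h : NegAssocOn μ X S)
    (φ : ι → ℝ → ℝ) (hφ : ∀ i ∈ S, Monotone (φ i)) :
    NegAssocOn μ (fun i ω => φ i (X i ω)) S := by
  classical
  refine h.block (fun i => {i}) (fun k hk => by simpa using hk)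
    (fun k _ l _ hkl => by simpa using hkl) (fun i x => φ i (x i))
    (fun k hk x y hxy => hφ k hk (hxy k)) (fun k _ x y hxy => ?_)
  have := hxy k (by simp)
  simp [this]

lemma NegAssocOn.sum_block {X : ι → Ω → ℝ} {S : Set ι} (h : NegAssocOn μ X S) {T : Set κ}
    (D : κ → Finset ι) (hD : ∀ k ∈ T, (D k : Set ι) ⊆ S)
    (hdis : ∀ k ∈ T, ∀ l ∈ T, k ≠ l → Disjoint (D k) (D l)) :
    NegAssocOn μ (fun k ω => ∑ i ∈ D k, X i ω) T :=
  h.block D hD hdis (fun k x => ∑ i ∈ D k, x i)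
    (fun k _ x y hxy => Finset.sum_le_sum fun i _ => hxy i)
    (fun k _ x y hxy => Finset.sum_congr rfl fun i hi => hxy i hi)

lemma NegAssocOn.neg {X : ι → Ω → ℝ} {S : Set ι} (h : NegAssocOn μ X S) :
    NegAssocOn μ (fun i ω => -X i ω) S := by
  intro A B hA hB hAB f g hf hg i1 i2 i3
  have := h A B hA hB hAB (fun x => -f (fun i => -x i)) (fun x => -g (fun i => -x i))
    (fun x y hxy => neg_le_neg (hf fun i => neg_le_neg (hxy i)))
    (fun x y hxy => neg_le_neg (hg fun i => neg_le_neg (hxy i)))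
    i1.neg i2.neg (by simpa using i3)
  simpa [integral_neg] using this

/-! ### Product and exponential inequalities -/

lemma monotone_clip01_prod (A : Finset ι) (C : ℝ) :
    Monotone (fun x : ι → ℝ => ∏ i ∈ A, max 0 (min (x i) C)) := by
  intro x y hxy
  apply Finset.prod_le_prod
  · intro i _; positivity
  · intro i _; exact max_le_max le_rfl (min_le_min (hxy i) le_rfl)

lemma dependsOn_prod (A : Finset ι) (φ : ℝ → ℝ) :
    DependsOn (fun x : ι → ℝ => ∏ i ∈ A, φ (x i)) (A : Set ι) := by
  intro x y hxy
  exact Finset.prod_congr rfl fun i hi => by rw [hxy i hi]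

variable [IsProbabilityMeasure μ]

lemma integrable_of_bdd {f : Ω → ℝ} (hf : Measurable f) {C : ℝ} (hC : ∀ ω, |f ω| ≤ C) :
    Integrable f μ :=
  Integrable.of_bound hf.aestronglyMeasurable C (ae_of_all _ fun ω => by
    simpa [Real.norm_eq_abs] using hC ω)

lemma prod_mem_bound {A : Finset ι} {f : ι → ℝ} {C : ℝ}
    (h0 : ∀ i ∈ A, 0 ≤ f i) (h1 : ∀ i ∈ A, f i ≤ C) : |∏ i ∈ A, f i| ≤ C ^ A.card := by
  rw [abs_of_nonneg (Finset.prod_nonneg h0), ← Finset.prod_const]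
  exact Finset.prod_le_prod h0 h1

/-- Expectations of products of bounded nonnegative negatively associated variables are dominated by
products of expectations. -/
lemma NegAssocOn.prod_le {X : ι → Ω → ℝ} {S : Set ι} (h : NegAssocOn μ X S)
    (A : Finset ι) (hA : ↑A ⊆ S) (hm : ∀ i ∈ S, Measurable (X i)) {C : ℝ}
    (h0 : ∀ i ∈ A, ∀ ω, 0 ≤ X i ω) (h1 : ∀ i ∈ A, ∀ ω, X i ω ≤ C) :
    ∫ ω, ∏ i ∈ A, X i ω ∂μ ≤ ∏ i ∈ A, ∫ ω, X i ω ∂μ := by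
  classical
  induction A using Finset.induction_on with
  | empty => simp
  | insert a A ha ih =>
    have hC : 0 ≤ C := by
      have : Nonempty Ω := by
        by_contra hne
        rw [not_nonempty_iff] at hne
        exact IsProbabilityMeasure.ne_zero μ (Measure.eq_zero_of_isEmpty μ)
      obtain ⟨ω⟩ := this
      exact (h0 a (by simp) ω).trans (h1 a (by simp) ω)
    have hAS : ↑A ⊆ S := fun i hi => hA (by simp [Finset.mem_coe.1 hi])
    have haS : a ∈ S := hA (by simp)
    have ih' := ih hAS (fun i hi => h0 i (by simp [hi])) (fun i hi => h1 i (by simp [hi]))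
    have hcl : ∀ i ∈ insert a A, ∀ ω, max 0 (min (X i ω) C) = X i ω := by
      intro i hi ω
      rw [min_eq_left (h1 i hi ω), max_eq_right (h0 i hi ω)]
    have e1 : ∀ ω, ∏ i ∈ A, max 0 (min (X i ω) C) = ∏ i ∈ A, X i ω := fun ω =>
      Finset.prod_congr rfl fun i hi => hcl i (by simp [hi]) ω
    have e2 : ∀ ω, ∏ i ∈ ({a} : Finset ι), max 0 (min (X i ω) C) = X a ω := fun ω => by
      simpa using hcl a (by simp) ω
    have mA : Measurable (fun ω => ∏ i ∈ A, X i ω) :=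
      Finset.measurable_prod _ fun i hi => hm i (hAS hi)
    have b1 : ∀ ω, |∏ i ∈ A, X i ω| ≤ C ^ A.card := fun ω =>
      prod_mem_bound (fun i hi => h0 i (by simp [hi]) ω) (fun i hi => h1 i (by simp [hi]) ω)
    have ba : ∀ ω, |X a ω| ≤ C := fun ω => by
      rw [abs_of_nonneg (h0 a (by simp) ω)]; exact h1 a (by simp) ω
    have key := h.int_mul_le (A := {a}) (B := A) (by simpa using haS) hAS (by simpa using ha)
      (monotone_clip01_prod _ C) (monotone_clip01_prod _ C)
      (dependsOn_prod _ fun x => max 0 (min x C)) (dependsOn_prod _ fun x => max 0 (min x C))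
      (by simp only [e2]; exact integrable_of_bdd (hm a haS) ba)
      (by simp only [e1]; exact integrable_of_bdd mA b1)
      (by
        simp only [e1, e2]
        refine integrable_of_bdd ((hm a haS).mul mA) (C := C * C ^ A.card) fun ω => ?_
        rw [abs_mul]
        exact mul_le_mul (ba ω) (b1 ω) (abs_nonneg _) hC)
    simp only [e1, e2] at key
    simp only [Finset.prod_insert ha]
    refine key.trans ?_
    exact mul_le_mul_of_nonneg_left ih' (integral_nonneg fun ω => h0 a (by simp) ω)

end

section

variable {Ω : Type} [MeasurableSpace Ω] {μ : Measure Ω} {ι κ : Type} [IsProbabilityMeasure μ]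

lemma NegAssocOn.prod_one_sub_le {X : ι → Ω → ℝ} {S : Set ι} (h : NegAssocOn μ X S)
    (A : Finset ι) (hA : ↑A ⊆ S) (hm : ∀ i ∈ S, Measurable (X i))
    (h0 : ∀ i ∈ A, ∀ ω, 0 ≤ X i ω) (h1 : ∀ i ∈ A, ∀ ω, X i ω ≤ 1) :
    ∫ ω, ∏ i ∈ A, (1 - X i ω) ∂μ ≤ ∏ i ∈ A, (1 - ∫ ω, X i ω ∂μ) := by
  have h2 := (h.neg.comp (fun _ x => 1 + x) (fun i _ x y hxy => by simpa using hxy)).prod_le A hA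
    (fun i hi => (hm i hi).neg.const_add 1) (C := 1)
    (fun i hi ω => by have := h1 i hi ω; linarith) (fun i hi ω => by have := h0 i hi ω; linarith)
  simp only [← sub_eq_add_neg] at h2
  refine h2.trans (le_of_eq (Finset.prod_congr rfl fun i hi => ?_))
  rw [integral_sub (integrable_const _)
    (integrable_of_bdd (hm i (hA hi)) (C := 1) fun ω => abs_le.2 ⟨by linarith [h0 i hi ω], h1 i hi ω⟩)]
  simp

lemma exp_le_taylor3 (x : ℝ) : Real.exp x ≤ 1 + x + x ^ 2 / 2 + |x| ^ 3 * Real.exp |x| := by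
  have h := Complex.norm_exp_sub_sum_le_norm_mul_exp (x : ℂ) 3
  have e : Complex.exp x - ∑ m ∈ range 3, (x : ℂ) ^ m / (m.factorial : ℂ)
      = ((Real.exp x - (1 + x + x ^ 2 / 2) : ℝ) : ℂ) := by
    simp [Finset.sum_range_succ, Nat.factorial]
  rw [e, Complex.norm_real, Complex.norm_real, Real.norm_eq_abs, Real.norm_eq_abs] at h
  linarith [le_abs_self (Real.exp x - (1 + x + x ^ 2 / 2))]

lemma exp_ge_taylor3 (x : ℝ) : 1 + x + x ^ 2 / 2 - |x| ^ 3 * Real.exp |x| ≤ Real.exp x := by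
  have h := Complex.norm_exp_sub_sum_le_norm_mul_exp (x : ℂ) 3
  have e : Complex.exp x - ∑ m ∈ range 3, (x : ℂ) ^ m / (m.factorial : ℂ)
      = ((Real.exp x - (1 + x + x ^ 2 / 2) : ℝ) : ℂ) := by
    simp [Finset.sum_range_succ, Nat.factorial]
  rw [e, Complex.norm_real, Complex.norm_real, Real.norm_eq_abs, Real.norm_eq_abs] at h
  linarith [neg_abs_le (Real.exp x - (1 + x + x ^ 2 / 2))]

lemma exp_le_quad {x b : ℝ} (hb : |x| ≤ b) :
    Real.exp x ≤ 1 + x + (1 / 2 + b * Real.exp b) * x ^ 2 := by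
  have h := exp_le_taylor3 x
  have hb0 : 0 ≤ b := (abs_nonneg x).trans hb
  have h3 : |x| ^ 3 * Real.exp |x| ≤ b * Real.exp b * x ^ 2 := by
    have : |x| ^ 3 = |x| * x ^ 2 := by rw [pow_succ, sq_abs]; ring
    rw [this]
    have := mul_le_mul hb (Real.exp_le_exp.2 hb) (Real.exp_nonneg _) hb0
    nlinarith [sq_nonneg x]
  linarith

lemma measure_le_of_exp {Y : Ω → ℝ} (hY : Measurable Y) {lam x B : ℝ}
    (hl : 0 ≤ lam) (hi : Integrable (fun ω => Real.exp (lam * Y ω)) μ)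
    (hB : ∫ ω, Real.exp (lam * Y ω) ∂μ ≤ B) :
    μ.real {ω | x ≤ Y ω} ≤ Real.exp (-lam * x) * B := by
  have h := ProbabilityTheory.measure_ge_le_exp_mul_mgf (μ := μ) (X := Y) x hl hi
  refine h.trans ?_
  exact mul_le_mul_of_nonneg_left hB (Real.exp_nonneg _)

lemma exp_sum_le_of_single {X : ι → Ω → ℝ} {S : Set ι} (h : NegAssocOn μ X S)
    (A : Finset ι) (hA : ↑A ⊆ S) (hm : ∀ i ∈ S, Measurable (X i)) {b lam : ℝ} (hl : 0 ≤ lam)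
    (hb : ∀ i ∈ S, ∀ ω, |X i ω| ≤ b) (u : ι → ℝ)
    (hu : ∀ i ∈ A, ∫ ω, Real.exp (lam * X i ω) ∂μ ≤ Real.exp (u i)) :
    Integrable (fun ω => Real.exp (lam * ∑ i ∈ A, X i ω)) μ ∧
    ∫ ω, Real.exp (lam * ∑ i ∈ A, X i ω) ∂μ ≤ Real.exp (∑ i ∈ A, u i) := by
  constructor
  · refine integrable_of_bdd (C := Real.exp (lam * (A.card * b))) ?_ ?_
    · exact ((Finset.measurable_sum _ fun i hi => hm i (hA hi)).const_mul lam).exp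
    · intro ω
      rw [abs_of_nonneg (Real.exp_nonneg _)]
      refine Real.exp_le_exp.2 (mul_le_mul_of_nonneg_left ?_ hl)
      calc ∑ i ∈ A, X i ω ≤ ∑ i ∈ A, b :=
            Finset.sum_le_sum fun i hi => (le_abs_self _).trans (hb i (hA hi) ω)
        _ = _ := by simp
  · have h2 := (h.comp (fun _ x => Real.exp (lam * x)) (fun i _ x y hxy =>
      Real.exp_le_exp.2 (mul_le_mul_of_nonneg_left hxy hl))).prod_le A hA
      (fun i hi => ((hm i hi).const_mul lam).exp) (C := Real.exp (lam * b))
      (fun i hi ω => Real.exp_nonneg _)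
      (fun i hi ω => Real.exp_le_exp.2 (mul_le_mul_of_nonneg_left
        ((le_abs_self _).trans (hb i (hA hi) ω)) hl))
    simp only [← Real.exp_sum, ← Finset.mul_sum] at h2
    refine h2.trans ?_
    rw [Real.exp_sum]
    exact Finset.prod_le_prod (fun i _ => integral_nonneg fun ω => Real.exp_nonneg _) hu

lemma single_mgf_le {Y : Ω → ℝ} (hY : Measurable Y) {b lam w : ℝ} (hl : 0 ≤ lam)
    (hb : ∀ ω, |Y ω| ≤ b) (h0 : ∫ ω, Y ω ∂μ = 0) (hw : ∫ ω, Y ω ^ 2 ∂μ ≤ w) :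
    ∫ ω, Real.exp (lam * Y ω) ∂μ ≤
      Real.exp ((1 / 2 + lam * b * Real.exp (lam * b)) * lam ^ 2 * w) := by
  have hiY : Integrable Y μ := integrable_of_bdd hY hb
  have hb0 : 0 ≤ b := by
    have : Nonempty Ω := by
      by_contra hne
      rw [not_nonempty_iff] at hne
      exact IsProbabilityMeasure.ne_zero μ (Measure.eq_zero_of_isEmpty μ)
    exact (abs_nonneg _).trans (hb this.some)
  have hiY2 : Integrable (fun ω => Y ω ^ 2) μ :=
    integrable_of_bdd (hY.pow_const 2) (C := b ^ 2) fun ω => by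
      rw [abs_pow]; exact pow_le_pow_left₀ (abs_nonneg _) (hb ω) 2
  set K := 1 / 2 + lam * b * Real.exp (lam * b) with hK
  have hK0 : 0 ≤ K := by positivity
  have h1 : ∀ ω, Real.exp (lam * Y ω) ≤ 1 + lam * Y ω + K * lam ^ 2 * Y ω ^ 2 := fun ω => by
    have := exp_le_quad (x := lam * Y ω) (b := lam * b)
      (by rw [abs_mul, abs_of_nonneg hl]; exact mul_le_mul_of_nonneg_left (hb ω) hl)
    rw [← hK] at this
    linarith [this, mul_pow lam (Y ω) 2, congrArg (K * ·) (mul_pow lam (Y ω) 2)]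
  have i1 : Integrable (fun ω => 1 + lam * Y ω) μ := (integrable_const _).add (hiY.const_mul lam)
  calc ∫ ω, Real.exp (lam * Y ω) ∂μ ≤ ∫ ω, (1 + lam * Y ω + K * lam ^ 2 * Y ω ^ 2) ∂μ := by
        refine integral_mono ?_ (i1.add (hiY2.const_mul _)) h1
        refine integrable_of_bdd (hY.const_mul lam).exp (C := Real.exp (lam * b)) fun ω => ?_
        rw [abs_of_nonneg (Real.exp_nonneg _)]
        exact Real.exp_le_exp.2 (mul_le_mul_of_nonneg_left ((le_abs_self _).trans (hb ω)) hl)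
    _ = 1 + K * lam ^ 2 * ∫ ω, Y ω ^ 2 ∂μ := by
        rw [integral_add i1 (hiY2.const_mul _), integral_add (integrable_const _) (hiY.const_mul lam),
          integral_const_mul, integral_const_mul, h0]
        simp
    _ ≤ 1 + K * lam ^ 2 * w := by gcongr
    _ ≤ _ := by linarith [Real.add_one_le_exp (K * lam ^ 2 * w)]

/-- Bernstein-type tail bound for bounded centred negatively associated variables; the factor
`1/2` becomes sharp as `lam * b → 0`. -/
lemma NegAssocOn.tail_le {X : ι → Ω → ℝ} {S : Set ι} (h : NegAssocOn μ X S)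
    (A : Finset ι) (hA : ↑A ⊆ S) (hm : ∀ i ∈ S, Measurable (X i)) {b lam x : ℝ} (hl : 0 ≤ lam)
    (hb : ∀ i ∈ S, ∀ ω, |X i ω| ≤ b) (h0 : ∀ i ∈ A, ∫ ω, X i ω ∂μ = 0)
    (w : ℝ) (hw : ∀ i ∈ A, ∫ ω, X i ω ^ 2 ∂μ ≤ w) :
    μ.real {ω | x ≤ ∑ i ∈ A, X i ω} ≤
      Real.exp (-lam * x + (1 / 2 + lam * b * Real.exp (lam * b)) * lam ^ 2 * (A.card * w)) := by
  have h1 := exp_sum_le_of_single h A hA hm hl hb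
    (fun i => (1 / 2 + lam * b * Real.exp (lam * b)) * lam ^ 2 * w)
    (fun i hi => single_mgf_le (hm i (hA hi)) hl (hb i (hA hi)) (h0 i hi) (hw i hi))
  have h2 := measure_le_of_exp (x := x) (Finset.measurable_sum _ fun i hi => hm i (hA hi)) hl h1.1 h1.2
  refine h2.trans (le_of_eq ?_)
  rw [← Real.exp_add]
  congr 1
  simp
  ring

/-- Poisson-type tail bound for bounded non-negative negatively associated variables. -/
lemma NegAssocOn.tail_le_nonneg {X : ι → Ω → ℝ} {S : Set ι} (h : NegAssocOn μ X S)
    (A : Finset ι) (hA : ↑A ⊆ S) (hm : ∀ i ∈ S, Measurable (X i)) {b lam x : ℝ} (hl : 0 ≤ lam)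
    (hb : ∀ i ∈ S, ∀ ω, 0 ≤ X i ω ∧ X i ω ≤ b)
    (w : ℝ) (hw : ∀ i ∈ A, ∫ ω, X i ω ∂μ ≤ w) :
    μ.real {ω | x ≤ ∑ i ∈ A, X i ω} ≤
      Real.exp (-lam * x + lam * Real.exp (lam * b) * (A.card * w)) := by
  have hb' : ∀ i ∈ S, ∀ ω, |X i ω| ≤ b := fun i hi ω => by
    rw [abs_of_nonneg (hb i hi ω).1]; exact (hb i hi ω).2
  have hs : ∀ i ∈ A, ∫ ω, Real.exp (lam * X i ω) ∂μ ≤ Real.exp (lam * Real.exp (lam * b) * w) := by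
    intro i hi
    have hiS := hA hi
    have hiY : Integrable (X i) μ := integrable_of_bdd (hm i hiS) (hb' i hiS)
    have hx : ∀ ω, Real.exp (lam * X i ω) ≤ 1 + lam * Real.exp (lam * b) * X i ω := by
      intro ω
      have h3 : 0 ≤ lam * X i ω := mul_nonneg hl (hb i hiS ω).1
      have h4 : Real.exp (lam * X i ω) ≤ Real.exp (lam * b) :=
        Real.exp_le_exp.2 (mul_le_mul_of_nonneg_left (hb i hiS ω).2 hl)
      have h5 := Real.add_one_le_exp (-(lam * X i ω))
      have h6 : Real.exp (lam * X i ω) * Real.exp (-(lam * X i ω)) = 1 := by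
        rw [← Real.exp_add]; simp
      nlinarith [Real.exp_pos (lam * X i ω), Real.exp_pos (-(lam * X i ω))]
    calc ∫ ω, Real.exp (lam * X i ω) ∂μ ≤ ∫ ω, (1 + lam * Real.exp (lam * b) * X i ω) ∂μ := by
          refine integral_mono ?_ ((integrable_const _).add (hiY.const_mul _)) hx
          refine integrable_of_bdd ((hm i hiS).const_mul lam).exp (C := Real.exp (lam * b)) fun ω => ?_
          rw [abs_of_nonneg (Real.exp_nonneg _)]
          exact Real.exp_le_exp.2 (mul_le_mul_of_nonneg_left (hb i hiS ω).2 hl)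
      _ = 1 + lam * Real.exp (lam * b) * ∫ ω, X i ω ∂μ := by
          rw [integral_add (integrable_const _) (hiY.const_mul _), integral_const_mul]
          simp
      _ ≤ 1 + lam * Real.exp (lam * b) * w := by gcongr; exact hw i hi
      _ ≤ _ := by linarith [Real.add_one_le_exp (lam * Real.exp (lam * b) * w)]
  have h1 := exp_sum_le_of_single h A hA hm hl hb' (fun i => lam * Real.exp (lam * b) * w) hs
  have h2 := measure_le_of_exp (x := x) (Finset.measurable_sum _ fun i hi => hm i (hA hi)) hl h1.1 h1.2
  refine h2.trans (le_of_eq ?_)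
  rw [← Real.exp_add]
  congr 1
  simp
  ring

end

section

variable {Ω : Type} [MeasurableSpace Ω] {μ : Measure Ω} {ι κ : Type} [IsProbabilityMeasure μ]

/-! ### Covariance inequalities -/

open ProbabilityTheory in
lemma NegAssocOn.cov_nonpos {X : ι → Ω → ℝ} {S : Set ι} (h : NegAssocOn μ X S)
    {A B : Finset ι} (hA : ↑A ⊆ S) (hB : ↑B ⊆ S) (hAB : Disjoint A B)
    {F G : (ι → ℝ) → ℝ} (hF : Monotone F) (hG : Monotone G)
    (hFA : DependsOn F (A : Set ι)) (hGB : DependsOn G (B : Set ι))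
    (iF : MemLp (fun ω => F (fun i => X i ω)) 2 μ)
    (iG : MemLp (fun ω => G (fun i => X i ω)) 2 μ) :
    cov[fun ω => F (fun i => X i ω), fun ω => G (fun i => X i ω); μ] ≤ 0 := by
  rw [covariance_eq_sub iF iG]
  have := h.int_mul_le hA hB hAB hF hG hFA hGB (iF.integrable (by norm_num))
    (iG.integrable (by norm_num)) (iF.integrable_mul iG)
  simp only [Pi.mul_apply]
  linarith

lemma dependsOn_sum (A : Finset ι) : DependsOn (fun x : ι → ℝ => ∑ i ∈ A, x i) (A : Set ι) :=
  fun _ _ hxy => Finset.sum_congr rfl fun i hi => hxy i hi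

lemma monotone_sum (A : Finset ι) : Monotone (fun x : ι → ℝ => ∑ i ∈ A, x i) :=
  fun _ _ hxy => Finset.sum_le_sum fun i _ => hxy i

lemma DependsOn.sub' {F G : (ι → ℝ) → ℝ} {A : Set ι} (hF : DependsOn F A) (hG : DependsOn G A) :
    DependsOn (fun x => F x - G x) A := fun x y hxy => by
  simp only [hF hxy, hG hxy]

open ProbabilityTheory in
/-- If `F` and `G` are monotone and grow at most like the sums over the disjoint blocks `A`, `B`,
then their (non-positive) covariance is bounded below by that of the sums. -/
lemma NegAssocOn.newman {X : ι → Ω → ℝ} {S : Set ι} (h : NegAssocOn μ X S)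
    {A B : Finset ι} (hA : ↑A ⊆ S) (hB : ↑B ⊆ S) (hAB : Disjoint A B)
    {F G : (ι → ℝ) → ℝ} (hG : Monotone G)
    (hFA : DependsOn F (A : Set ι)) (hGB : DependsOn G (B : Set ι))
    (hF' : Monotone fun x => (∑ i ∈ A, x i) - F x) (hG' : Monotone fun x => (∑ i ∈ B, x i) - G x)
    (iX : ∀ i ∈ S, MemLp (X i) 2 μ)
    (iF : MemLp (fun ω => F (fun i => X i ω)) 2 μ)
    (iG : MemLp (fun ω => G (fun i => X i ω)) 2 μ) :
    ∑ i ∈ A, ∑ j ∈ B, cov[X i, X j; μ] ≤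
      cov[fun ω => F (fun i => X i ω), fun ω => G (fun i => X i ω); μ] := by
  have iA : MemLp (fun ω => ∑ i ∈ A, X i ω) 2 μ := memLp_finsetSum A fun i hi => iX i (hA hi)
  have iB : MemLp (fun ω => ∑ i ∈ B, X i ω) 2 μ := memLp_finsetSum B fun i hi => iX i (hB hi)
  have h1 := h.cov_nonpos hA hB hAB hF' hG ((dependsOn_sum A).sub' hFA) hGB (iA.sub iF) iG
  have h2 := h.cov_nonpos hA hB hAB (monotone_sum A) hG' (dependsOn_sum A)
    ((dependsOn_sum B).sub' hGB) iA (iB.sub iG)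
  rw [covariance_fun_sub_left iA iF iG] at h1
  rw [covariance_fun_sub_right iA iB iG] at h2
  have h3 := covariance_fun_sum_fun_sum' (μ := μ) (s := A) (t := B) (X := X) (Y := X)
    (fun i hi => iX i (hA hi)) (fun i hi => iX i (hB hi))
  rw [← h3]
  linarith

lemma prod_sub_prod_le {A : Finset ι} {u v : ι → ℝ} (h0 : ∀ i ∈ A, 0 ≤ u i)
    (huv : ∀ i ∈ A, u i ≤ v i) (h1 : ∀ i ∈ A, v i ≤ 1) :
    ∏ i ∈ A, v i - ∏ i ∈ A, u i ≤ ∑ i ∈ A, (v i - u i) := by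
  classical
  induction A using Finset.induction_on with
  | empty => simp
  | insert a A ha ih =>
    rw [prod_insert ha, prod_insert ha, sum_insert ha]
    have ih' := ih (fun i hi => h0 i (by simp [hi])) (fun i hi => huv i (by simp [hi]))
      (fun i hi => h1 i (by simp [hi]))
    have a0 := h0 a (by simp)
    have a1 := huv a (by simp)
    have a2 := h1 a (by simp)
    have p1 : ∏ i ∈ A, v i ≤ 1 := Finset.prod_le_one
      (fun i hi => (h0 i (by simp [hi])).trans (huv i (by simp [hi]))) (fun i hi => h1 i (by simp [hi]))
    have p0 : ∏ i ∈ A, u i ≤ ∏ i ∈ A, v i := Finset.prod_le_prod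
      (fun i hi => h0 i (by simp [hi])) (fun i hi => huv i (by simp [hi]))
    have p2 : 0 ≤ ∏ i ∈ A, u i := Finset.prod_nonneg (fun i hi => h0 i (by simp [hi]))
    nlinarith [mul_nonneg (sub_nonneg.2 a1) (sub_nonneg.2 p1), mul_nonneg (sub_nonneg.2 p0) (sub_nonneg.2 (a1.trans a2))]

/-- Truncation to `[0, 1]`. -/
def cl01 (x : ℝ) : ℝ := max 0 (min x 1)

lemma cl01_nonneg (x : ℝ) : 0 ≤ cl01 x := le_max_left _ _
lemma cl01_le_one (x : ℝ) : cl01 x ≤ 1 := max_le zero_le_one (min_le_right _ _)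
lemma cl01_mono : Monotone cl01 := fun _ _ h => max_le_max le_rfl (min_le_min h le_rfl)
lemma cl01_eq {x : ℝ} (h0 : 0 ≤ x) (h1 : x ≤ 1) : cl01 x = x := by
  rw [cl01, min_eq_left h1, max_eq_right h0]

/-- The product of the variables `f i` over `A`. -/
def pr (f : ι → Ω → ℝ) (A : Finset ι) (ω : Ω) : ℝ := ∏ i ∈ A, f i ω

section pl

variable {f : ι → Ω → ℝ} {S : Set ι}

lemma pr_bd (h0 : ∀ i ∈ S, ∀ ω, 0 ≤ f i ω ∧ f i ω ≤ 1) {A : Finset ι}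
    (hA : ↑A ⊆ S) (ω : Ω) : 0 ≤ pr f A ω ∧ pr f A ω ≤ 1 :=
  ⟨Finset.prod_nonneg fun i hi => (h0 i (hA hi) ω).1,
    Finset.prod_le_one (fun i hi => (h0 i (hA hi) ω).1) fun i hi => (h0 i (hA hi) ω).2⟩

lemma pr_meas (hm : ∀ i ∈ S, Measurable (f i)) {A : Finset ι} (hA : ↑A ⊆ S) :
    Measurable (pr f A) := Finset.measurable_prod _ fun i hi => hm i (hA hi)

lemma memLp_of_bdd {g : Ω → ℝ} (hg : Measurable g) {C : ℝ} (hC : ∀ ω, |g ω| ≤ C) :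
    MemLp g 2 μ :=
  MemLp.of_bound hg.aestronglyMeasurable C (ae_of_all _ fun ω => by
    simpa [Real.norm_eq_abs] using hC ω)

lemma pr_memLp (hm : ∀ i ∈ S, Measurable (f i))
    (h0 : ∀ i ∈ S, ∀ ω, 0 ≤ f i ω ∧ f i ω ≤ 1) {A : Finset ι} (hA : ↑A ⊆ S) :
    MemLp (pr f A) 2 μ :=
  memLp_of_bdd (pr_meas hm hA) (C := 1) fun ω => by
    rw [abs_of_nonneg (pr_bd h0 hA ω).1]; exact (pr_bd h0 hA ω).2

lemma pr_singleton (i : ι) : pr f {i} = f i := by funext ω; simp [pr]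

lemma pr_union [DecidableEq ι] {A B : Finset ι} (h : Disjoint A B) (ω : Ω) :
    pr f (A ∪ B) ω = pr f A ω * pr f B ω := Finset.prod_union h

open ProbabilityTheory in
/-- On the unit cube `∑ x_i - ∏ x_i` is non-negative and non-decreasing, so products may be replaced
by sums in lower bounds for covariances. -/
lemma NegAssocOn.cov_prod_ge [DecidableEq ι] (h : NegAssocOn μ f S)
    (hm : ∀ i ∈ S, Measurable (f i)) (h0 : ∀ i ∈ S, ∀ ω, 0 ≤ f i ω ∧ f i ω ≤ 1)
    {K A B : Finset ι} (hK : ↑K ⊆ S) (hA : ↑A ⊆ S) (hB : ↑B ⊆ S)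
    (hKA : Disjoint K A) (hKB : Disjoint K B) (hAB : Disjoint A B) (hne : A.Nonempty) :
    ∑ i ∈ A, cov[pr f K, pr f (insert i B); μ] ≤ cov[pr f K, pr f (A ∪ B); μ] := by
  have hAB' : ↑(A ∪ B) ⊆ S := by rw [coe_union]; exact Set.union_subset hA hB
  have hins : ∀ i ∈ A, ↑(insert i B) ⊆ S := fun i hi => by
    rw [coe_insert]; exact Set.insert_subset (hA hi) hB
  have hnot : ∀ i ∈ A, i ∉ B := fun i hi => Finset.disjoint_left.1 hAB hi
  set F : (ι → ℝ) → ℝ := fun x => ∏ i ∈ K, cl01 (x i) with hF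
  set G : (ι → ℝ) → ℝ := fun x =>
    (∑ i ∈ A, cl01 (x i) - ∏ i ∈ A, cl01 (x i)) * ∏ i ∈ B, cl01 (x i) with hG
  have monP : ∀ A : Finset ι, Monotone (fun x : ι → ℝ => ∏ i ∈ A, cl01 (x i)) := fun A x y hxy =>
    Finset.prod_le_prod (fun i _ => cl01_nonneg _) fun i _ => cl01_mono (hxy i)
  have monG : Monotone G := by
    intro x y hxy
    refine mul_le_mul ?_ (monP B hxy) (Finset.prod_nonneg fun i _ => cl01_nonneg _) ?_
    · have := prod_sub_prod_le (A := A) (u := fun i => cl01 (x i)) (v := fun i => cl01 (y i))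
        (fun i _ => cl01_nonneg _) (fun i _ => cl01_mono (hxy i)) (fun i _ => cl01_le_one _)
      rw [Finset.sum_sub_distrib] at this
      linarith
    · obtain ⟨a, ha⟩ := hne
      have h1 : ∏ i ∈ A, cl01 (y i) ≤ cl01 (y a) := by
        rw [← Finset.mul_prod_erase A _ ha]
        exact mul_le_of_le_one_right (cl01_nonneg _)
          (Finset.prod_le_one (fun i _ => cl01_nonneg _) fun i _ => cl01_le_one _)
      have h2 : cl01 (y a) ≤ ∑ i ∈ A, cl01 (y i) :=
        Finset.single_le_sum (f := fun i => cl01 (y i)) (fun i _ => cl01_nonneg _) ha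
      linarith
  have eP : ∀ A : Finset ι, ↑A ⊆ S → ∀ ω, ∏ i ∈ A, cl01 (f i ω) = pr f A ω := fun A hA ω =>
    Finset.prod_congr rfl fun i hi => cl01_eq (h0 i (hA hi) ω).1 (h0 i (hA hi) ω).2
  have eF : (fun ω => F (fun i => f i ω)) = pr f K := funext fun ω => eP K hK ω
  have eG : (fun ω => G (fun i => f i ω)) =
      fun ω => (∑ i ∈ A, pr f (insert i B) ω) - pr f (A ∪ B) ω := by
    funext ω
    simp only [hG, eP A hA, eP B hB, pr_union hAB]
    rw [sub_mul, Finset.sum_mul]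
    congr 1
    refine Finset.sum_congr rfl fun i hi => ?_
    rw [cl01_eq (h0 i (hA hi) ω).1 (h0 i (hA hi) ω).2, pr, pr, prod_insert (hnot i hi)]
  have iS : MemLp (fun ω => ∑ i ∈ A, pr f (insert i B) ω) 2 μ :=
    memLp_finsetSum A fun i hi => pr_memLp hm h0 (hins i hi)
  have iAB : MemLp (pr f (A ∪ B)) 2 μ := pr_memLp hm h0 hAB'
  have key := h.cov_nonpos hK hAB' (Finset.disjoint_union_right.2 ⟨hKA, hKB⟩) (monP K) monG
    (dependsOn_prod K cl01) (fun x y hxy => ?_)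
    (by rw [eF]; exact pr_memLp hm h0 hK) (by rw [eG]; exact iS.sub iAB)
  · rw [eF, eG, covariance_fun_sub_right (pr_memLp hm h0 hK) iS iAB,
      covariance_fun_sum_right' (fun i hi => pr_memLp hm h0 (hins i hi)) (pr_memLp hm h0 hK)] at key
    linarith
  · have eA : ∀ i ∈ A, x i = y i := fun i hi => hxy i (by simp [hi])
    have eB : ∀ i ∈ B, x i = y i := fun i hi => hxy i (by simp [hi])
    simp only [hG]
    rw [Finset.sum_congr rfl fun i hi => by rw [eA i hi], Finset.prod_congr rfl fun i hi => by rw [eA i hi],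
      Finset.prod_congr (s₁ := B) rfl fun i hi => by rw [eB i hi]]

open ProbabilityTheory in
lemma NegAssocOn.cov_prod_ge' [DecidableEq ι] (h : NegAssocOn μ f S)
    (hm : ∀ i ∈ S, Measurable (f i)) (h0 : ∀ i ∈ S, ∀ ω, 0 ≤ f i ω ∧ f i ω ≤ 1)
    {K A : Finset ι} (hK : ↑K ⊆ S) (hA : ↑A ⊆ S) (hKA : Disjoint K A) :
    ∑ k ∈ K, ∑ i ∈ A, cov[f k, f i; μ] ≤ cov[pr f K, pr f A; μ] := by
  have hemp : ∀ g : Ω → ℝ, cov[g, pr f ∅; μ] = 0 := fun g => by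
    have : pr f (∅ : Finset ι) = fun _ => (1 : ℝ) := by funext ω; simp [pr]
    rw [this, covariance_const_right]
  have step : ∀ {K A : Finset ι}, ↑K ⊆ S → ↑A ⊆ S → Disjoint K A →
      ∑ i ∈ A, cov[pr f K, f i; μ] ≤ cov[pr f K, pr f A; μ] := by
    intro K A hK hA hKA
    rcases A.eq_empty_or_nonempty with rfl | hne
    · simp [hemp]
    · have := h.cov_prod_ge hm h0 (B := ∅) hK hA (by simp) hKA (by simp) (by simp) hne
      simpa [pr_singleton] using this
  refine le_trans ?_ (step hK hA hKA)
  rw [Finset.sum_comm]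
  refine Finset.sum_le_sum fun i hi => ?_
  have := step (K := {i}) (A := K) (by simpa using hA hi) hK
    (by simpa using fun hik => Finset.disjoint_left.1 hKA hik hi)
  rw [pr_singleton, covariance_comm (f i)] at this
  refine le_trans (le_of_eq (Finset.sum_congr rfl fun k hk => covariance_comm _ _)) this

end pl

end

section

variable {Ω : Type} [MeasurableSpace Ω] {μ : Measure Ω} {ι κ : Type} [IsProbabilityMeasure μ]
variable {f : ι → Ω → ℝ} {S : Set ι}

open ProbabilityTheory in
lemma NegAssocOn.cov_single_nonpos (h : NegAssocOn μ f S) {i j : ι} (hi : i ∈ S) (hj : j ∈ S)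
    (hij : i ≠ j) (iX : ∀ i ∈ S, MemLp (f i) 2 μ) : cov[f i, f j; μ] ≤ 0 := by
  classical
  exact h.cov_nonpos (A := {i}) (B := {j}) (by simpa using hi) (by simpa using hj)
    (by simpa using hij)
    (F := fun x => x i) (G := fun x => x j) (fun x y hxy => hxy i) (fun x y hxy => hxy j)
    (fun x y hxy => hxy i (by simp)) (fun x y hxy => hxy j (by simp)) (iX i hi) (iX j hj)

open ProbabilityTheory in
/-- One step of the decoupling: adding the index `k` to `T'`.  The covariances with indices adjacent
to `k` are multiplied by the expectation of a product over almost all of `T'`; only those of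
non-adjacent pairs enter without such a factor. -/
lemma NegAssocOn.decouple_step [DecidableEq ι] (h : NegAssocOn μ f S)
    (hm : ∀ i ∈ S, Measurable (f i)) (h0 : ∀ i ∈ S, ∀ ω, 0 ≤ f i ω ∧ f i ω ≤ 1)
    (adj : ι → ι → Prop) [DecidableRel adj]
    {T T' : Finset ι} {k : ι} (hT : ↑T ⊆ S) (hT' : T' ⊆ T) (hk : k ∈ T) (hkT' : k ∉ T') {c2 : ℝ}
    (h2 : ∀ a ∈ T, ∑ b ∈ T with b ≠ a ∧ ¬ adj a b, -cov[f a, f b; μ] ≤ c2) :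
    -(∑ i ∈ T' with adj k i, -cov[f k, f i; μ] *
        ∫ ω, pr f {j ∈ T' | ¬ adj k j ∧ ¬ adj i j} ω ∂μ) - ((#T : ℝ) + 1) ^ 2 * c2
      ≤ cov[f k, pr f T'; μ] := by
  have iX : ∀ i ∈ S, MemLp (f i) 2 μ := fun i hi => by
    have := pr_memLp (μ := μ) hm h0 (A := {i}) (by simpa using hi)
    rwa [pr_singleton] at this
  have cn : ∀ a ∈ T, ∀ b ∈ T, b ≠ a → 0 ≤ -cov[f a, f b; μ] := fun a ha b hb hab =>
    neg_nonneg.2 (h.cov_single_nonpos (hT ha) (hT hb) hab.symm iX)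
  have hsub : ∀ {A : Finset ι}, A ⊆ T → (A : Set ι) ⊆ S := fun hA => (Finset.coe_subset.2 hA).trans hT
  have c20 : 0 ≤ c2 := (Finset.sum_nonneg fun b hb => by
    simp only [mem_filter] at hb; exact cn k hk b hb.1 hb.2.1).trans (h2 k hk)
  -- sums of covariances over sets of non-adjacent indices
  have sumle : ∀ a ∈ T, ∀ A : Finset ι, A ⊆ T → (∀ b ∈ A, b ≠ a ∧ ¬ adj a b) →
      -c2 ≤ ∑ b ∈ A, cov[f a, f b; μ] := by
    intro a ha A hA hA'
    have : ∑ b ∈ A, -cov[f a, f b; μ] ≤ c2 := by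
      refine le_trans (Finset.sum_le_sum_of_subset_of_nonneg ?_ ?_) (h2 a ha)
      · intro b hb; simp only [mem_filter]; exact ⟨hA hb, hA' b hb⟩
      · intro b hb _; simp only [mem_filter] at hb; exact cn a ha b hb.1 hb.2.1
    rw [Finset.sum_neg_distrib] at this; linarith
  set N := {i ∈ T' | adj k i} with hN
  set Fs := {i ∈ T' | ¬ adj k i} with hFs
  have hNF : N ∪ Fs = T' := Finset.filter_union_filter_not_eq _ _
  have hdNF : Disjoint N Fs := Finset.disjoint_filter_filter_not _ _ _
  have hNT : N ⊆ T := (Finset.filter_subset _ _).trans hT'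
  have hFT : Fs ⊆ T := (Finset.filter_subset _ _).trans hT'
  have hkN : k ∉ N := fun hh => hkT' (Finset.filter_subset _ _ hh)
  have hkF : k ∉ Fs := fun hh => hkT' (Finset.filter_subset _ _ hh)
  have hne_k : ∀ b ∈ T', b ≠ k := fun b hb hbk => hkT' (hbk ▸ hb)
  have hkS : (({k} : Finset ι) : Set ι) ⊆ S := by simpa using hT hk
  rcases N.eq_empty_or_nonempty with hNe | hNne
  · have e1 : T' = Fs := by rw [← hNF, hNe, empty_union]
    have := h.cov_prod_ge' hm h0 (K := {k}) (A := T') hkS (hsub hT') (by simpa using hkT')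
    rw [pr_singleton, sum_singleton] at this
    have h3 := sumle k hk T' hT' (fun b hb => ⟨hne_k b hb, by
      rw [e1] at hb; simp only [hFs, mem_filter] at hb; exact hb.2⟩)
    rw [hNe, sum_empty]
    nlinarith [mul_nonneg (Nat.cast_nonneg (α := ℝ) (#T)) c20, sq_nonneg (#T : ℝ),
      mul_nonneg (sq_nonneg (#T : ℝ)) c20]
  have hcovk := h.cov_prod_ge hm h0 (K := {k}) hkS (hsub hNT) (hsub hFT)
    (by simpa using hkN) (by simpa using hkF) hdNF hNne
  rw [hNF, pr_singleton] at hcovk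
  have main : ∀ i ∈ N, -(-cov[f k, f i; μ] * ∫ ω, pr f {j ∈ T' | ¬ adj k j ∧ ¬ adj i j} ω ∂μ)
      - ((#T : ℝ) + 2) * c2 ≤ cov[f k, pr f (insert i Fs); μ] := by
    intro i hi
    have hiT' : i ∈ T' := Finset.filter_subset _ _ hi
    have hiT := hNT hi
    have hiF : i ∉ Fs := Finset.disjoint_left.1 hdNF hi
    set Q := {j ∈ Fs | adj i j} with hQ
    set W := {j ∈ Fs | ¬ adj i j} with hW
    have hWeq : {j ∈ T' | ¬ adj k j ∧ ¬ adj i j} = W := by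
      rw [hW, hFs, filter_filter]
    rw [hWeq]
    have hQW : Q ∪ W = Fs := Finset.filter_union_filter_not_eq _ _
    have hdQW : Disjoint Q W := Finset.disjoint_filter_filter_not _ _ _
    have hQT : Q ⊆ T := (Finset.filter_subset _ _).trans hFT
    have hWT : W ⊆ T := (Finset.filter_subset _ _).trans hFT
    have hQF : Q ⊆ Fs := Finset.filter_subset _ _
    have hWF : W ⊆ Fs := Finset.filter_subset _ _
    have hiW : i ∉ W := fun hh => hiF (hWF hh)
    have hiQ : i ∉ Q := fun hh => hiF (hQF hh)
    have hik : i ≠ k := hne_k i hiT'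
    have hkQ : k ∉ Q := fun hh => hkF (hQF hh)
    have hkW : k ∉ W := fun hh => hkF (hWF hh)
    have hWk : ∀ b ∈ W, b ≠ k ∧ ¬ adj k b := fun b hb => by
      have := hWF hb
      simp only [hFs, mem_filter] at this
      exact ⟨hne_k b this.1, this.2⟩
    have hWi : ∀ b ∈ W, b ≠ i ∧ ¬ adj i b := fun b hb => by
      refine ⟨fun hbi => hiW (hbi ▸ hb), ?_⟩
      simp only [hW, mem_filter] at hb; exact hb.2
    have hb := h.cov_prod_ge hm h0 (K := {k}) (A := insert i Q) (B := W) hkS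
      (hsub (Finset.insert_subset hiT hQT)) (hsub hWT)
      (by simp only [disjoint_singleton_left, mem_insert, not_or]; exact ⟨hik.symm, hkQ⟩)
      (by simpa using hkW)
      (by rw [Finset.disjoint_insert_left]; exact ⟨hiW, hdQW⟩) (by simp)
    rw [Finset.insert_union, hQW, pr_singleton, sum_insert hiQ] at hb
    have hq : ∀ q ∈ Q, -c2 ≤ cov[f k, pr f (insert q W); μ] := by
      intro q hq
      have hqF := hQF hq
      have hqk : q ≠ k ∧ ¬ adj k q := by
        simp only [hFs, mem_filter] at hqF
        exact ⟨hne_k q hqF.1, hqF.2⟩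
      have h4 := h.cov_prod_ge' hm h0 (K := {k}) (A := insert q W) hkS
        (hsub (Finset.insert_subset (hQT hq) hWT))
        (by simp only [disjoint_singleton_left, mem_insert, not_or]; exact ⟨hqk.1.symm, hkW⟩)
      rw [pr_singleton, sum_singleton] at h4
      refine le_trans (sumle k hk _ (Finset.insert_subset (hQT hq) hWT) ?_) h4
      intro b hb
      rw [mem_insert] at hb
      rcases hb with rfl | hb
      · exact hqk
      · exact hWk b hb
    have hqs : -((#T : ℝ) * c2) ≤ ∑ q ∈ Q, cov[f k, pr f (insert q W); μ] := by
      calc -((#T : ℝ) * c2) ≤ ∑ q ∈ Q, -c2 := by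
            rw [sum_const, nsmul_eq_mul]
            have : (#Q : ℝ) ≤ #T := by exact_mod_cast Finset.card_le_card hQT
            nlinarith
        _ ≤ _ := Finset.sum_le_sum hq
    -- the pair `k, i` against the rest
    have hd1 := h.cov_prod_ge' hm h0 (K := {k, i}) (A := W)
      (hsub (Finset.insert_subset hk (by simpa using hiT))) (hsub hWT)
      (by simp only [disjoint_insert_left, disjoint_singleton_left]; exact ⟨hkW, hiW⟩)
    rw [sum_pair hik.symm] at hd1
    have s1 := sumle k hk W hWT hWk
    have s2 := sumle i hiT W hWT hWi
    have hd2 : cov[f i, pr f W; μ] ≤ 0 := by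
      have := h.cov_nonpos (A := {i}) (B := W) (by simpa using hT hiT) (hsub hWT)
        (by simpa using hiW) (F := fun x => x i) (G := fun x => ∏ j ∈ W, cl01 (x j))
        (fun x y hxy => hxy i) (fun x y hxy =>
          Finset.prod_le_prod (fun i _ => cl01_nonneg _) fun i _ => cl01_mono (hxy i))
        (fun x y hxy => hxy i (by simp)) (dependsOn_prod W cl01) (iX i (hT hiT))
      have e : (fun ω => ∏ j ∈ W, cl01 (f j ω)) = pr f W := funext fun ω =>
        Finset.prod_congr rfl fun j hj => cl01_eq (h0 j (hT (hWT hj)) ω).1 (h0 j (hT (hWT hj)) ω).2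
      rw [e] at this
      exact this (pr_memLp hm h0 (hsub hWT))
    have mk := iX k (hT hk)
    have mi := iX i (hT hiT)
    have mW : MemLp (pr f W) 2 μ := pr_memLp hm h0 (hsub hWT)
    have miW : MemLp (pr f (insert i W)) 2 μ :=
      pr_memLp hm h0 (hsub (Finset.insert_subset hiT hWT))
    have mki : MemLp (pr f {k, i}) 2 μ :=
      pr_memLp hm h0 (hsub (Finset.insert_subset hk (by simpa using hiT)))
    rw [covariance_eq_sub mki mW] at hd1
    rw [covariance_eq_sub mi mW] at hd2
    rw [covariance_eq_sub mk miW] at hb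
    rw [covariance_eq_sub mk mi]
    have e1 : ∫ ω, (f k * pr f (insert i W)) ω ∂μ = ∫ ω, (pr f {k, i} * pr f W) ω ∂μ := by
      refine integral_congr_ae (ae_of_all _ fun ω => ?_)
      simp only [Pi.mul_apply, pr]
      rw [prod_insert hiW, prod_pair hik.symm]; ring
    have e2 : ∫ ω, pr f (insert i W) ω ∂μ = ∫ ω, (f i * pr f W) ω ∂μ := by
      refine integral_congr_ae (ae_of_all _ fun ω => ?_)
      simp only [Pi.mul_apply, pr]
      rw [prod_insert hiW]
    have e3 : ∫ ω, pr f {k, i} ω ∂μ = ∫ ω, (f k * f i) ω ∂μ := by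
      refine integral_congr_ae (ae_of_all _ fun ω => ?_)
      simp only [Pi.mul_apply, pr]
      rw [prod_pair hik.symm]
    rw [e1, e2] at hb
    rw [e3] at hd1
    have ek : 0 ≤ ∫ ω, f k ω ∂μ := integral_nonneg fun ω => (h0 k (hT hk) ω).1
    have := mul_nonneg ek (neg_nonneg.2 hd2)
    linarith
  have : ∑ i ∈ N, (-(-cov[f k, f i; μ] * ∫ ω, pr f {j ∈ T' | ¬ adj k j ∧ ¬ adj i j} ω ∂μ)
      - ((#T : ℝ) + 2) * c2) ≤ cov[f k, pr f T'; μ] := (Finset.sum_le_sum main).trans hcovk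
  refine le_trans ?_ this
  rw [Finset.sum_sub_distrib, Finset.sum_neg_distrib, sum_const, nsmul_eq_mul]
  have hc : (#N : ℝ) ≤ #T := by exact_mod_cast Finset.card_le_card hNT
  have : (#N : ℝ) * (((#T : ℝ) + 2) * c2) ≤ ((#T : ℝ) + 1) ^ 2 * c2 := by
    have : (#N : ℝ) * ((#T : ℝ) + 2) ≤ ((#T : ℝ) + 1) ^ 2 := by nlinarith
    nlinarith
  linarith

open ProbabilityTheory in
/-- Lower bound for the expectation of a product of `[0,1]`-valued negatively associated variables:
covariances of adjacent pairs only cause a relative loss. -/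
lemma NegAssocOn.decouple [DecidableEq ι] (h : NegAssocOn μ f S)
    (hm : ∀ i ∈ S, Measurable (f i)) (h0 : ∀ i ∈ S, ∀ ω, 0 ≤ f i ω ∧ f i ω ≤ 1)
    (adj : ι → ι → Prop) [DecidableRel adj]
    {T : Finset ι} (hT : ↑T ⊆ S) {c1 c2 q : ℝ} {D : ℕ} (hq : 0 < q)
    (hD : ∀ a ∈ T, #{b ∈ T | adj a b} ≤ D)
    (hqf : ∀ a ∈ T, q ≤ ∫ ω, f a ω ∂μ)
    (h1 : ∑ a ∈ T, ∑ b ∈ T with b ≠ a ∧ adj a b, -cov[f a, f b; μ] ≤ c1)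
    (h2 : ∀ a ∈ T, ∑ b ∈ T with b ≠ a ∧ ¬ adj a b, -cov[f a, f b; μ] ≤ c2) :
    (∏ a ∈ T, ∫ ω, f a ω ∂μ) * (1 - (q⁻¹) ^ (2 * D + 1) * c1) - #T * ((#T : ℝ) + 1) ^ 2 * c2 ≤
      ∫ ω, pr f T ω ∂μ := by
  have iX : ∀ i ∈ S, MemLp (f i) 2 μ := fun i hi => by
    have := pr_memLp (μ := μ) hm h0 (A := {i}) (by simpa using hi)
    rwa [pr_singleton] at this
  have cn : ∀ a ∈ T, ∀ b ∈ T, b ≠ a → 0 ≤ -cov[f a, f b; μ] := fun a ha b hb hab =>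
    neg_nonneg.2 (h.cov_single_nonpos (hT ha) (hT hb) hab.symm iX)
  have e1 : ∀ a ∈ T, ∫ ω, f a ω ∂μ ≤ 1 := fun a ha => by
    calc ∫ ω, f a ω ∂μ ≤ ∫ ω, (1 : ℝ) ∂μ :=
          integral_mono ((iX a (hT ha)).integrable (by norm_num)) (integrable_const _)
            fun ω => (h0 a (hT ha) ω).2
      _ = 1 := by simp
  set r1 : ι → ℝ := fun a => ∑ b ∈ T with b ≠ a ∧ adj a b, -cov[f a, f b; μ] with hr1
  have r10 : ∀ a ∈ T, 0 ≤ r1 a := fun a ha => Finset.sum_nonneg fun b hb => by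
    simp only [mem_filter] at hb; exact cn a ha b hb.1 hb.2.1
  rcases T.eq_empty_or_nonempty with rfl | ⟨k0, hk0⟩
  · simp only [sum_empty] at h1
    simp [pr]
    positivity
  have hq1 : q ≤ 1 := (hqf k0 hk0).trans (e1 k0 hk0)
  have c20 : 0 ≤ c2 := (Finset.sum_nonneg fun b hb => by
    simp only [mem_filter] at hb; exact cn k0 hk0 b hb.1 hb.2.1).trans (h2 k0 hk0)
  set P : Finset ι → ℝ := fun A => ∏ a ∈ A, ∫ ω, f a ω ∂μ with hP
  have hPpos : ∀ A ⊆ T, 0 < P A := fun A hA => Finset.prod_pos fun a ha => hq.trans_le (hqf a (hA ha))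
  have claim : ∀ T' ⊆ T, P T' * (1 - (q⁻¹) ^ (2 * D + 1) * ∑ a ∈ T', r1 a)
      - #T' * ((#T : ℝ) + 1) ^ 2 * c2 ≤ ∫ ω, pr f T' ω ∂μ := by
    intro T' 
    induction T' using Finset.induction_on with
    | empty => intro _; simp [pr, hP]
    | insert k T' hk ih =>
      intro hT'
      have hkT : k ∈ T := hT' (by simp)
      have hT'' : T' ⊆ T := (Finset.subset_insert _ _).trans hT'
      have hTS : (T' : Set ι) ⊆ S := (Finset.coe_subset.2 hT'').trans hT
      have ih' := ih hT''
      have st := h.decouple_step hm h0 adj hT hT'' hkT hk h2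
      have hcov := covariance_eq_sub (iX k (hT hkT)) (pr_memLp (μ := μ) hm h0 hTS)
      have hprod_eq : ∫ ω, (f k * pr f T') ω ∂μ = ∫ ω, pr f (insert k T') ω ∂μ := by
        refine integral_congr_ae (ae_of_all _ fun ω => ?_)
        simp only [Pi.mul_apply, pr]; rw [prod_insert hk]
      rw [hprod_eq] at hcov
      set ek := ∫ ω, f k ω ∂μ with hek
      have hekq : q ≤ ek := hqf k hkT
      have hek1 : ek ≤ 1 := e1 k hkT
      have hWb : ∀ i ∈ T', adj k i → ∫ ω, pr f {j ∈ T' | ¬ adj k j ∧ ¬ adj i j} ω ∂μ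
          ≤ (q⁻¹) ^ (2 * D) * P T' := by
        intro i hi hki
        set W := {j ∈ T' | ¬ adj k j ∧ ¬ adj i j} with hW
        have hWT' : W ⊆ T' := Finset.filter_subset _ _
        have h3 : ∫ ω, pr f W ω ∂μ ≤ P W :=
          h.prod_le W ((Finset.coe_subset.2 hWT').trans hTS) hm (C := 1)
            (fun i hi ω => (h0 i (hTS (hWT' hi)) ω).1) (fun i hi ω => (h0 i (hTS (hWT' hi)) ω).2)
        have h4 : P T' = P (T' \ W) * P W := (Finset.prod_sdiff hWT').symm
        have h5 : q ^ (2 * D) ≤ P (T' \ W) := by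
          have hcard : #(T' \ W) ≤ 2 * D := by
            have : T' \ W ⊆ {b ∈ T | adj k b} ∪ {b ∈ T | adj i b} := by
              intro j hj
              simp only [hW, Finset.mem_sdiff, mem_filter, mem_union, not_and, not_not] at hj ⊢
              by_cases hkj : adj k j
              · exact Or.inl ⟨hT'' hj.1, hkj⟩
              · exact Or.inr ⟨hT'' hj.1, hj.2 hj.1 hkj⟩
            calc #(T' \ W) ≤ _ := Finset.card_le_card this
              _ ≤ _ := Finset.card_union_le _ _
              _ ≤ D + D := add_le_add (hD k hkT) (hD i (hT'' hi))
              _ = 2 * D := by ring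
          calc q ^ (2 * D) ≤ q ^ #(T' \ W) := pow_le_pow_of_le_one hq.le hq1 hcard
            _ = ∏ a ∈ T' \ W, q := by simp
            _ ≤ P (T' \ W) := Finset.prod_le_prod (fun _ _ => hq.le)
                fun a ha => hqf a (hT'' (Finset.sdiff_subset ha))
        refine h3.trans ?_
        rw [inv_pow, ← div_eq_inv_mul, le_div_iff₀ (by positivity), h4, mul_comm]
        exact mul_le_mul_of_nonneg_right h5 (hPpos W (hWT'.trans hT'')).le
      have hsum : ∑ i ∈ T' with adj k i, -cov[f k, f i; μ] *
          ∫ ω, pr f {j ∈ T' | ¬ adj k j ∧ ¬ adj i j} ω ∂μ ≤ r1 k * ((q⁻¹) ^ (2 * D) * P T') := by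
        rw [hr1, Finset.sum_mul]
        calc _ ≤ ∑ i ∈ T' with adj k i, -cov[f k, f i; μ] * ((q⁻¹) ^ (2 * D) * P T') := by
              refine Finset.sum_le_sum fun i hi => ?_
              simp only [mem_filter] at hi
              exact mul_le_mul_of_nonneg_left (hWb i hi.1 hi.2)
                (cn k hkT i (hT'' hi.1) fun hik => hk (hik ▸ hi.1))
          _ ≤ _ := by
              refine Finset.sum_le_sum_of_subset_of_nonneg ?_ ?_
              · intro i hi
                simp only [mem_filter] at hi ⊢
                exact ⟨hT'' hi.1, fun hik => hk (hik ▸ hi.1), hi.2⟩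
              · intro i hi _
                simp only [mem_filter] at hi
                exact mul_nonneg (cn k hkT i hi.1 hi.2.1)
                  (mul_nonneg (by positivity) (hPpos T' hT'').le)
      have hPk : P (insert k T') = ek * P T' := prod_insert hk
      have hPq : (q⁻¹) ^ (2 * D) * P T' ≤ (q⁻¹) ^ (2 * D + 1) * P (insert k T') := by
        rw [hPk, pow_succ, mul_assoc]
        refine mul_le_mul_of_nonneg_left ?_ (by positivity)
        rw [← mul_assoc]
        refine le_mul_of_one_le_left (hPpos T' hT'').le ?_
        rw [← div_eq_inv_mul, le_div_iff₀ hq]; linarith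
      rw [sum_insert hk, card_insert_of_notMem hk]
      push_cast
      have h6 := mul_le_mul_of_nonneg_left hPq (r10 k hkT)
      have h7 := mul_le_mul_of_nonneg_left ih' (hq.le.trans hekq)
      have h8 : ek * (#T' * ((#T : ℝ) + 1) ^ 2 * c2) ≤ #T' * ((#T : ℝ) + 1) ^ 2 * c2 :=
        mul_le_of_le_one_left (by positivity) hek1
      rw [hPk] at h6 ⊢
      nlinarith
  have := claim T subset_rfl
  refine le_trans ?_ this
  have : (q⁻¹) ^ (2 * D + 1) * ∑ a ∈ T, r1 a ≤ (q⁻¹) ^ (2 * D + 1) * c1 :=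
    mul_le_mul_of_nonneg_left h1 (by positivity)
  have := mul_le_mul_of_nonneg_left this (hPpos T subset_rfl).le
  simp only [hP] at this ⊢
  linarith

end

section

variable {Ω : Type} [MeasurableSpace Ω] {μ : Measure Ω} {ι κ : Type} [IsProbabilityMeasure μ]

/-! ### A Gaussian lower bound for a fixed number of small blocks -/

lemma cube_mul_exp_le {x lam s : ℝ} (hl : 4 ≤ lam) (hs0 : 0 ≤ s) (hs : s ≤ 2) :
    |s * x| ^ 3 * Real.exp |s * x| ≤ 384 * (lam⁻¹) ^ 3 * Real.exp (lam * |x|) := by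
  have hx := abs_nonneg x
  rw [abs_mul, abs_of_nonneg hs0]
  have hu : 0 ≤ lam * |x| / 2 := by positivity
  have h1 := Real.pow_div_factorial_le_exp (lam * |x| / 2) hu 3
  have h2 : s * |x| ≤ lam * |x| / 2 := by nlinarith
  have h3 : Real.exp (lam * |x|) = Real.exp (lam * |x| / 2) * Real.exp (lam * |x| / 2) := by
    rw [← Real.exp_add]; congr 1; ring
  rw [h3]
  have h4 : (s * |x|) ^ 3 ≤ 384 * (lam⁻¹) ^ 3 * Real.exp (lam * |x| / 2) := by
    have h5 : (s * |x|) ^ 3 ≤ (2 * |x|) ^ 3 := by gcongr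
    have h6 : (2 * |x|) ^ 3 = 384 * (lam⁻¹) ^ 3 * ((lam * |x| / 2) ^ 3 / (Nat.factorial 3 : ℕ)) := by
      simp [Nat.factorial]; field_simp; ring
    rw [h6] at h5
    refine h5.trans ?_
    gcongr
  calc (s * |x|) ^ 3 * Real.exp (s * |x|)
      ≤ (384 * (lam⁻¹) ^ 3 * Real.exp (lam * |x| / 2)) * Real.exp (lam * |x| / 2) := by gcongr
    _ = _ := by ring

lemma min_exp_ge (x : ℝ) :
    1 + x + x ^ 2 / 2 - 3 * (|x| ^ 3 * Real.exp |x|) ≤ min (Real.exp x) (Real.exp 1) := by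
  have h0 : 0 ≤ |x| ^ 3 * Real.exp |x| := by positivity
  refine le_min (by linarith [exp_ge_taylor3 x]) ?_
  rcases le_or_gt x 1 with hx | hx
  · linarith [exp_ge_taylor3 x, Real.exp_le_exp.2 hx]
  · have : |x| = x := abs_of_pos (by linarith)
    rw [this]
    have h1 : 1 ≤ Real.exp x := Real.one_le_exp (by linarith)
    have h2 : x ^ 3 ≤ x ^ 3 * Real.exp x := le_mul_of_one_le_right (by positivity) h1
    have h3 : 1 ≤ x ^ 2 := by nlinarith
    have h4 : x ^ 2 ≤ x ^ 3 := by nlinarith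
    nlinarith [Real.exp_pos 1]

lemma exp_sub_le_one_add {u : ℝ} (hu : 0 ≤ u) : Real.exp (u - u ^ 2) ≤ 1 + u := by
  -- `1 + u ≥ exp (u / (1 + u)) ≥ exp (u - u ^ 2)`
  have h1 := Real.add_one_le_exp (-(u / (1 + u)))
  have h2 : -(u / (1 + u)) + 1 = (1 + u)⁻¹ := by field_simp; ring
  rw [h2, Real.exp_neg] at h1
  have h3 := (inv_le_inv₀ (by positivity) (Real.exp_pos _)).1 h1
  refine le_trans (Real.exp_le_exp.2 ?_) h3
  rw [le_div_iff₀ (by positivity)]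
  nlinarith [pow_nonneg hu 3]

lemma exp_neg_le_one_sub {v : ℝ} (hv0 : 0 ≤ v) (hv : v ≤ 1 / 2) : Real.exp (-(2 * v)) ≤ 1 - v := by
  have h1 := Real.add_one_le_exp (2 * v)
  rw [Real.exp_neg, inv_le_comm₀ (Real.exp_pos _) (by linarith)]
  refine le_trans ?_ h1
  rw [inv_le_iff_one_le_mul₀ (by linarith)]
  nlinarith

section single
variable {Y : Ω → ℝ} {B lam C0 : ℝ}

lemma single_upper (hY : Measurable Y) (hB : ∀ ω, |Y ω| ≤ B) (h0 : ∫ ω, Y ω ∂μ = 0)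
    (hl : 4 ≤ lam) (hC : ∫ ω, Real.exp (lam * |Y ω|) ∂μ ≤ C0) {s : ℝ} (hs0 : 0 ≤ s) (hs : s ≤ 2) :
    ∫ ω, Real.exp (s * Y ω) ∂μ ≤
      Real.exp (s ^ 2 * (∫ ω, Y ω ^ 2 ∂μ) / 2 + 384 * (lam⁻¹) ^ 3 * C0) := by
  have hiY : Integrable Y μ := integrable_of_bdd hY hB
  have hiY2 : Integrable (fun ω => Y ω ^ 2) μ :=
    integrable_of_bdd (hY.pow_const 2) (C := B ^ 2) fun ω => by
      rw [abs_pow]; exact pow_le_pow_left₀ (abs_nonneg _) (hB ω) 2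
  have hiE : Integrable (fun ω => Real.exp (lam * |Y ω|)) μ :=
    integrable_of_bdd (hY.abs.const_mul lam).exp (C := Real.exp (lam * B)) fun ω => by
      rw [abs_of_nonneg (Real.exp_nonneg _)]
      exact Real.exp_le_exp.2 (mul_le_mul_of_nonneg_left (hB ω) (by linarith))
  have hiS : Integrable (fun ω => Real.exp (s * Y ω)) μ :=
    integrable_of_bdd (hY.const_mul s).exp (C := Real.exp (s * B)) fun ω => by
      rw [abs_of_nonneg (Real.exp_nonneg _)]
      exact Real.exp_le_exp.2 (mul_le_mul_of_nonneg_left ((le_abs_self _).trans (hB ω)) hs0)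
  have i1 : Integrable (fun ω => 1 + s * Y ω) μ := (integrable_const _).add (hiY.const_mul s)
  have i2 : Integrable (fun ω => s ^ 2 / 2 * Y ω ^ 2) μ := hiY2.const_mul _
  have i3 : Integrable (fun ω => 384 * (lam⁻¹) ^ 3 * Real.exp (lam * |Y ω|)) μ := hiE.const_mul _
  have hp : ∀ ω, Real.exp (s * Y ω) ≤
      1 + s * Y ω + s ^ 2 / 2 * Y ω ^ 2 + 384 * (lam⁻¹) ^ 3 * Real.exp (lam * |Y ω|) := fun ω => by
    have h1 := exp_le_taylor3 (s * Y ω)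
    have h2 := cube_mul_exp_le (x := Y ω) hl hs0 hs
    have : (s * Y ω) ^ 2 / 2 = s ^ 2 / 2 * Y ω ^ 2 := by ring
    linarith
  have h3 := integral_mono hiS ((i1.add i2).add i3) hp
  have h4 : ∫ ω, ((((fun ω => 1 + s * Y ω) + fun ω => s ^ 2 / 2 * Y ω ^ 2) +
      fun ω => 384 * (lam⁻¹) ^ 3 * Real.exp (lam * |Y ω|) : Ω → ℝ) ω) ∂μ
      = 1 + s ^ 2 / 2 * (∫ ω, Y ω ^ 2 ∂μ) + 384 * (lam⁻¹) ^ 3 * ∫ ω, Real.exp (lam * |Y ω|) ∂μ := by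
    rw [integral_add' (i1.add i2) i3, integral_add' i1 i2,
      integral_add (integrable_const _) (hiY.const_mul s),
      integral_const_mul, integral_const_mul, integral_const_mul, h0]
    simp
  rw [h4] at h3
  have h5 : 384 * (lam⁻¹) ^ 3 * ∫ ω, Real.exp (lam * |Y ω|) ∂μ ≤ 384 * (lam⁻¹) ^ 3 * C0 := by
    gcongr
  have h6 := Real.add_one_le_exp (s ^ 2 * (∫ ω, Y ω ^ 2 ∂μ) / 2 + 384 * (lam⁻¹) ^ 3 * C0)
  linarith

lemma single_lower (hY : Measurable Y) (hB : ∀ ω, |Y ω| ≤ B) (h0 : ∫ ω, Y ω ∂μ = 0)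
    (hl : 4 ≤ lam) (hC : ∫ ω, Real.exp (lam * |Y ω|) ∂μ ≤ C0)
    (hsm : 3 * (384 * (lam⁻¹) ^ 3 * C0) ≤ 1 / 2) :
    Real.exp ((∫ ω, Y ω ^ 2 ∂μ) / 2 - (6 * (384 * (lam⁻¹) ^ 3 * C0) + (lam⁻¹) ^ 4 * C0 ^ 2)) ≤
      ∫ ω, min (Real.exp (Y ω)) (Real.exp 1) ∂μ := by
  have hiY : Integrable Y μ := integrable_of_bdd hY hB
  have hiY2 : Integrable (fun ω => Y ω ^ 2) μ :=
    integrable_of_bdd (hY.pow_const 2) (C := B ^ 2) fun ω => by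
      rw [abs_pow]; exact pow_le_pow_left₀ (abs_nonneg _) (hB ω) 2
  have hiE : Integrable (fun ω => Real.exp (lam * |Y ω|)) μ :=
    integrable_of_bdd (hY.abs.const_mul lam).exp (C := Real.exp (lam * B)) fun ω => by
      rw [abs_of_nonneg (Real.exp_nonneg _)]
      exact Real.exp_le_exp.2 (mul_le_mul_of_nonneg_left (hB ω) (by linarith))
  have hiS : Integrable (fun ω => min (Real.exp (Y ω)) (Real.exp 1)) μ :=
    integrable_of_bdd (hY.exp.min measurable_const) (C := Real.exp 1) fun ω => by
      rw [abs_of_nonneg (le_min (Real.exp_nonneg _) (Real.exp_nonneg _))]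
      exact min_le_right _ _
  have hC0 : 0 ≤ C0 := le_trans (integral_nonneg fun ω => Real.exp_nonneg _) hC
  have i1 : Integrable (fun ω => 1 + Y ω) μ := (integrable_const _).add hiY
  have i2 : Integrable (fun ω => 1 / 2 * Y ω ^ 2) μ := hiY2.const_mul _
  have i3 : Integrable (fun ω => 3 * (384 * (lam⁻¹) ^ 3) * Real.exp (lam * |Y ω|)) μ :=
    hiE.const_mul _
  have hp : ∀ ω, 1 + Y ω + 1 / 2 * Y ω ^ 2 - 3 * (384 * (lam⁻¹) ^ 3) * Real.exp (lam * |Y ω|) ≤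
      min (Real.exp (Y ω)) (Real.exp 1) := fun ω => by
    have h1 := min_exp_ge (Y ω)
    have h2 := cube_mul_exp_le (x := Y ω) (s := 1) hl (by norm_num) (by norm_num)
    rw [one_mul] at h2
    linarith
  have h3 := integral_mono ((i1.add i2).sub i3) hiS hp
  have h4 : ∫ ω, ((((fun ω => 1 + Y ω) + fun ω => 1 / 2 * Y ω ^ 2) -
      fun ω => 3 * (384 * (lam⁻¹) ^ 3) * Real.exp (lam * |Y ω|) : Ω → ℝ) ω) ∂μ
      = 1 + 1 / 2 * (∫ ω, Y ω ^ 2 ∂μ) -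
        3 * (384 * (lam⁻¹) ^ 3) * ∫ ω, Real.exp (lam * |Y ω|) ∂μ := by
    rw [integral_sub' (i1.add i2) i3, integral_add' i1 i2,
      integral_add (integrable_const _) hiY,
      integral_const_mul, integral_const_mul, h0]
    simp
  rw [h4] at h3
  set w := ∫ ω, Y ω ^ 2 ∂μ with hw
  have hw0 : 0 ≤ w := integral_nonneg fun ω => sq_nonneg _
  have hwC : w ≤ 2 * (lam⁻¹) ^ 2 * C0 := by
    have : ∀ ω, Y ω ^ 2 ≤ 2 * (lam⁻¹) ^ 2 * Real.exp (lam * |Y ω|) := fun ω => by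
      have h1 := Real.pow_div_factorial_le_exp (lam * |Y ω|) (by positivity) 2
      have h2 : Y ω ^ 2 = 2 * (lam⁻¹) ^ 2 * ((lam * |Y ω|) ^ 2 / (Nat.factorial 2 : ℕ)) := by
        rw [mul_pow, sq_abs]; simp [Nat.factorial]; field_simp
      rw [h2]; gcongr
    have h5 := integral_mono hiY2 (hiE.const_mul _) this
    rw [integral_const_mul] at h5
    refine h5.trans ?_
    gcongr
  set v := 384 * (lam⁻¹) ^ 3 * C0 with hv
  have hv0 : 0 ≤ v := by positivity
  have h5 : 3 * (384 * (lam⁻¹) ^ 3) * ∫ ω, Real.exp (lam * |Y ω|) ∂μ ≤ 3 * v := by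
    rw [hv]
    have : 384 * (lam⁻¹) ^ 3 * ∫ ω, Real.exp (lam * |Y ω|) ∂μ ≤ 384 * (lam⁻¹) ^ 3 * C0 := by
      gcongr
    linarith
  have h6 := exp_sub_le_one_add (u := w / 2) (by positivity)
  have h7 := exp_neg_le_one_sub (v := 3 * v) (by positivity) hsm
  have h8 : w ^ 2 / 4 ≤ (lam⁻¹) ^ 4 * C0 ^ 2 := by
    have : w ^ 2 ≤ (2 * (lam⁻¹) ^ 2 * C0) ^ 2 := by gcongr
    nlinarith
  calc Real.exp (w / 2 - (6 * v + (lam⁻¹) ^ 4 * C0 ^ 2))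
      ≤ Real.exp (w / 2 - (w / 2) ^ 2) * Real.exp (-(2 * (3 * v))) := by
        rw [← Real.exp_add]
        refine Real.exp_le_exp.2 ?_
        nlinarith
    _ ≤ (1 + w / 2) * (1 - 3 * v) := by
        refine mul_le_mul h6 h7 (Real.exp_nonneg _) (by positivity)
    _ ≤ 1 + 1 / 2 * w - 3 * v := by nlinarith [mul_nonneg hw0 hv0]
    _ ≤ _ := by linarith

end single

open ProbabilityTheory in
/-- Gaussian-type lower bound for the probability that a sum of variables exceeds `(1 - k) V`, where
`V` is the sum of their second moments. The exponential moment at `1` is bounded below by decoupling;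
the parts of it carried by sums at most `(1 - k) V` or above `(1 + k) V` are bounded above through the
exponential moments at `1 ± k`. -/
lemma NegAssocOn.block_lower [DecidableEq ι] {Y : ι → Ω → ℝ} {S : Set ι} (h : NegAssocOn μ Y S)
    (hm : ∀ i ∈ S, Measurable (Y i)) {B : ℝ} (hB : ∀ i ∈ S, ∀ ω, |Y i ω| ≤ B)
    {T : Finset ι} (hT : ↑T ⊆ S) (h0 : ∀ i ∈ T, ∫ ω, Y i ω ∂μ = 0)
    {lam C0 c k E : ℝ} (hl : 4 ≤ lam)
    (hC : ∀ i ∈ T, ∫ ω, Real.exp (lam * |Y i ω|) ∂μ ≤ C0)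
    (hsm : 3 * (384 * (lam⁻¹) ^ 3 * C0) ≤ 1 / 2)
    (hc : ∀ i ∈ T, ∑ j ∈ T with j ≠ i, -cov[Y i, Y j; μ] ≤ c)
    (hk0 : 0 ≤ k) (hk1 : k ≤ 1)
    (hE : E = #T * (6 * (384 * (lam⁻¹) ^ 3 * C0) + (lam⁻¹) ^ 4 * C0 ^ 2)) (V : ℝ)
    (hV : V = ∑ i ∈ T, ∫ ω, Y i ω ^ 2 ∂μ) :
    Real.exp (V / 2 - E) - Real.exp #T * (#T * ((#T : ℝ) + 1) ^ 2 * c)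
      - 2 * Real.exp ((1 - k ^ 2) * V / 2 + E) ≤
      Real.exp ((1 + k) * V) * μ.real {ω | (1 - k) * V < ∑ i ∈ T, Y i ω} := by
  rcases T.eq_empty_or_nonempty with rfl | ⟨k0, hk0T⟩
  · simp at hV hE
    subst hV; subst hE; simp
  have hC0 : 0 ≤ C0 := le_trans (integral_nonneg fun ω => Real.exp_nonneg _) (hC k0 hk0T)
  have hB0 : 0 ≤ B := by
    have : Nonempty Ω := by
      by_contra hne
      rw [not_nonempty_iff] at hne
      exact IsProbabilityMeasure.ne_zero μ (Measure.eq_zero_of_isEmpty μ)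
    exact (abs_nonneg _).trans (hB k0 (hT hk0T) this.some)
  have iY : ∀ i ∈ S, MemLp (Y i) 2 μ := fun i hi => memLp_of_bdd (hm i hi) (hB i hi)
  -- truncated exponentials
  set φ : ℝ → ℝ := fun x => min (Real.exp x) (Real.exp 1) / Real.exp 1 with hφ
  have φm : Monotone φ := fun x y hxy =>
    div_le_div_of_nonneg_right (min_le_min (Real.exp_le_exp.2 hxy) le_rfl) (Real.exp_nonneg _)
  have φ0 : ∀ x, 0 ≤ φ x := fun x => div_nonneg (le_min (Real.exp_nonneg _) (Real.exp_nonneg _)) (Real.exp_nonneg _)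
  have φ1 : ∀ x, φ x ≤ 1 := fun x => (div_le_one (Real.exp_pos _)).2 (min_le_right _ _)
  have φmeas : Measurable φ := (Real.measurable_exp.min measurable_const).div_const _
  have φL : Monotone (fun x => x - φ x) := by
    intro x y hxy
    simp only
    have : φ y - φ x ≤ y - x := by
      simp only [hφ]
      rw [← sub_div, div_le_iff₀ (Real.exp_pos _)]
      rcases le_or_gt x 1 with hx | hx
      · set z := min y 1 with hz
        have e1 : min (Real.exp y) (Real.exp 1) = Real.exp z := by
          rw [hz]; exact (Real.exp_monotone.map_min).symm
        have e2 : min (Real.exp x) (Real.exp 1) = Real.exp x := min_eq_left (Real.exp_le_exp.2 hx)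
        rw [e1, e2]
        have hz1 : z ≤ 1 := min_le_right _ _
        have hxz : x ≤ z := le_min hxy hx
        have hzy : z ≤ y := min_le_left _ _
        have h3 := Real.add_one_le_exp (x - z)
        have h4 : Real.exp x = Real.exp z * Real.exp (x - z) := by rw [← Real.exp_add]; congr 1; ring
        have h5 : Real.exp z ≤ Real.exp 1 := Real.exp_le_exp.2 hz1
        nlinarith [Real.exp_pos z, Real.exp_pos 1]
      · have e1 : min (Real.exp y) (Real.exp 1) = Real.exp 1 :=
          min_eq_right (Real.exp_le_exp.2 (by linarith))
        have e2 : min (Real.exp x) (Real.exp 1) = Real.exp 1 :=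
          min_eq_right (Real.exp_le_exp.2 (by linarith))
        rw [e1, e2]
        nlinarith [Real.exp_pos 1]
    linarith
  set f : ι → Ω → ℝ := fun i ω => φ (Y i ω) with hf
  have hNf : NegAssocOn μ f S := h.comp (fun _ => φ) (fun _ _ => φm)
  have hfm : ∀ i ∈ S, Measurable (f i) := fun i hi => φmeas.comp (hm i hi)
  have hf01 : ∀ i ∈ S, ∀ ω, 0 ≤ f i ω ∧ f i ω ≤ 1 := fun i _ ω => ⟨φ0 _, φ1 _⟩
  have if2 : ∀ i ∈ S, MemLp (f i) 2 μ := fun i hi => memLp_of_bdd (hfm i hi) (C := 1) fun ω => by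
    rw [abs_of_nonneg (hf01 i hi ω).1]; exact (hf01 i hi ω).2
  have covf : ∀ i ∈ T, ∀ j ∈ T, j ≠ i → -cov[f i, f j; μ] ≤ -cov[Y i, Y j; μ] := by
    intro i hi j hj hji
    have := h.newman (A := {i}) (B := {j}) (by simpa using hT hi) (by simpa using hT hj)
      (by simpa using hji.symm) (F := fun x => φ (x i)) (G := fun x => φ (x j))
      (fun x y hxy => φm (hxy j)) (fun x y hxy => by simp only [hxy i (by simp)])
      (fun x y hxy => by simp only [hxy j (by simp)])
      (fun x y hxy => by simpa using φL (hxy i)) (fun x y hxy => by simpa using φL (hxy j))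
      iY (if2 i (hT hi)) (if2 j (hT hj))
    simp only [sum_singleton] at this
    linarith
  have hq : ∀ a ∈ T, Real.exp (-B - 1) ≤ ∫ ω, f a ω ∂μ := by
    intro a ha
    have : ∀ ω, Real.exp (-B - 1) ≤ f a ω := fun ω => by
      simp only [hf, hφ]
      rw [Real.exp_sub]
      refine div_le_div_of_nonneg_right (le_min ?_ ?_) (Real.exp_nonneg _)
      · exact Real.exp_le_exp.2 (by linarith [neg_abs_le (Y a ω), hB a (hT ha) ω])
      · exact Real.exp_le_exp.2 (by linarith)
    calc Real.exp (-B - 1) = ∫ ω, Real.exp (-B - 1) ∂μ := by simp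
      _ ≤ _ := integral_mono (integrable_const _) ((if2 a (hT ha)).integrable (by norm_num)) this
  have hdec := hNf.decouple hfm hf01 (fun _ _ => False) hT (c1 := 0) (c2 := c) (D := 0)
    (Real.exp_pos _) (fun a _ => by simp) hq (by simp)
    (fun a ha => by
      simp only [not_false_eq_true, and_true]
      refine le_trans (Finset.sum_le_sum fun b hb => ?_) (hc a ha)
      simp only [mem_filter] at hb
      exact covf a ha b hb.1 hb.2)
  rw [mul_zero, sub_zero, mul_one] at hdec
  -- lower bound for the moment generating function at `1`
  set Sm : Ω → ℝ := fun ω => ∑ i ∈ T, Y i ω with hSm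
  have hSmeas : Measurable Sm := Finset.measurable_sum _ fun i hi => hm i (hT hi)
  have hSb : ∀ ω, |Sm ω| ≤ #T * B := fun ω => by
    calc |Sm ω| ≤ ∑ i ∈ T, |Y i ω| := Finset.abs_sum_le_sum_abs _ _
      _ ≤ ∑ i ∈ T, B := Finset.sum_le_sum fun i hi => hB i (hT hi) ω
      _ = _ := by simp
  have hiexp : ∀ s : ℝ, 0 ≤ s → Integrable (fun ω => Real.exp (s * Sm ω)) μ := fun s hs =>
    integrable_of_bdd (hSmeas.const_mul s).exp (C := Real.exp (s * (#T * B))) fun ω => by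
      rw [abs_of_nonneg (Real.exp_nonneg _)]
      exact Real.exp_le_exp.2 (mul_le_mul_of_nonneg_left ((le_abs_self _).trans (hSb ω)) hs)
  have hlow : Real.exp (V / 2 - E) - Real.exp #T * (#T * ((#T : ℝ) + 1) ^ 2 * c) ≤
      ∫ ω, Real.exp (1 * Sm ω) ∂μ := by
    have hp : ∀ ω, Real.exp #T * pr f T ω ≤ Real.exp (1 * Sm ω) := fun ω => by
      have : Real.exp #T = ∏ i ∈ T, Real.exp 1 := by
        rw [prod_const, ← Real.exp_nat_mul, mul_one]
      rw [this, pr, ← Finset.prod_mul_distrib, one_mul, hSm, Real.exp_sum]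
      refine Finset.prod_le_prod (fun i _ => mul_nonneg (Real.exp_nonneg _) (φ0 _)) fun i _ => ?_
      simp only [hf, hφ]
      rw [mul_div_cancel₀ _ (Real.exp_ne_zero _)]
      exact min_le_left _ _
    have h1 := integral_mono (((pr_memLp (μ := μ) hfm hf01 hT).integrable (by norm_num)).const_mul (Real.exp #T))
      (hiexp 1 zero_le_one) hp
    rw [integral_const_mul] at h1
    refine le_trans ?_ h1
    have h2 : Real.exp (V / 2 - E) ≤ Real.exp #T * ∏ a ∈ T, ∫ ω, f a ω ∂μ := by
      have : Real.exp #T = ∏ i ∈ T, Real.exp 1 := by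
        rw [prod_const, ← Real.exp_nat_mul, mul_one]
      rw [this, ← Finset.prod_mul_distrib]
      have e : V / 2 - E = ∑ i ∈ T, ((∫ ω, Y i ω ^ 2 ∂μ) / 2
          - (6 * (384 * (lam⁻¹) ^ 3 * C0) + (lam⁻¹) ^ 4 * C0 ^ 2)) := by
        rw [Finset.sum_sub_distrib, ← Finset.sum_div, ← hV, sum_const, nsmul_eq_mul, hE]
      rw [e, Real.exp_sum]
      refine Finset.prod_le_prod (fun i _ => Real.exp_nonneg _) fun i hi => ?_
      have := single_lower (hm i (hT hi)) (hB i (hT hi)) (h0 i hi) hl (hC i hi) hsm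
      refine this.trans (le_of_eq ?_)
      simp only [hf, hφ]
      rw [integral_div, mul_div_cancel₀ _ (Real.exp_ne_zero _)]
    have h3 := mul_le_mul_of_nonneg_left hdec (Real.exp_nonneg (#T : ℝ))
    rw [mul_sub] at h3
    linarith
  have hup : ∀ s : ℝ, 0 ≤ s → s ≤ 2 →
      ∫ ω, Real.exp (s * Sm ω) ∂μ ≤ Real.exp (s ^ 2 * V / 2 + E) := by
    intro s hs0 hs2
    have := (exp_sum_le_of_single h T hT hm hs0 hB
      (fun i => s ^ 2 * (∫ ω, Y i ω ^ 2 ∂μ) / 2 + 384 * (lam⁻¹) ^ 3 * C0)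
      (fun i hi => single_upper (hm i (hT hi)) (hB i (hT hi)) (h0 i hi) hl (hC i hi) hs0 hs2)).2
    refine this.trans (Real.exp_le_exp.2 ?_)
    rw [Finset.sum_add_distrib, ← Finset.sum_div, ← Finset.mul_sum, ← hV, sum_const, nsmul_eq_mul, hE]
    have hl0 : 0 ≤ lam⁻¹ := by positivity
    have : (#T : ℝ) * (384 * (lam⁻¹) ^ 3 * C0) ≤
        #T * (6 * (384 * (lam⁻¹) ^ 3 * C0) + (lam⁻¹) ^ 4 * C0 ^ 2) := by
      refine mul_le_mul_of_nonneg_left ?_ (Nat.cast_nonneg _)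
      have : 0 ≤ 384 * (lam⁻¹) ^ 3 * C0 := by positivity
      have : 0 ≤ (lam⁻¹) ^ 4 * C0 ^ 2 := by positivity
      linarith
    linarith
  -- the contribution of `Sm ≤ (1-k)V` and of `Sm > (1+k)V` to the mgf is negligible
  set G : Set Ω := {ω | (1 - k) * V < Sm ω} with hG
  have hGm : MeasurableSet G := measurableSet_lt measurable_const hSmeas
  have hpt : ∀ ω, Real.exp (1 * Sm ω) ≤ Real.exp (k * ((1 - k) * V)) * Real.exp ((1 - k) * Sm ω)
      + Real.exp (-(k * ((1 + k) * V))) * Real.exp ((1 + k) * Sm ω)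
      + Real.exp ((1 + k) * V) * G.indicator (fun _ => (1 : ℝ)) ω := by
    intro ω
    rw [← Real.exp_add, ← Real.exp_add]
    have p1 := Real.exp_pos (k * ((1 - k) * V) + (1 - k) * Sm ω)
    have p2 := Real.exp_pos (-(k * ((1 + k) * V)) + (1 + k) * Sm ω)
    rcases le_or_gt (Sm ω) ((1 - k) * V) with h1 | h1
    · have h2 : Real.exp (1 * Sm ω) ≤ Real.exp (k * ((1 - k) * V) + (1 - k) * Sm ω) :=
        Real.exp_le_exp.2 (by nlinarith)
      have h3 : 0 ≤ G.indicator (fun _ => (1 : ℝ)) ω := Set.indicator_nonneg (fun _ _ => zero_le_one) _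
      have := mul_nonneg (Real.exp_nonneg ((1 + k) * V)) h3
      linarith
    · have h3 : G.indicator (fun _ => (1 : ℝ)) ω = 1 := Set.indicator_of_mem (show ω ∈ G from h1) _
      rw [h3, mul_one]
      rcases le_or_gt (Sm ω) ((1 + k) * V) with h4 | h4
      · have h2 : Real.exp (1 * Sm ω) ≤ Real.exp ((1 + k) * V) :=
          Real.exp_le_exp.2 (by linarith)
        linarith
      · have h2 : Real.exp (1 * Sm ω) ≤ Real.exp (-(k * ((1 + k) * V)) + (1 + k) * Sm ω) :=
          Real.exp_le_exp.2 (by nlinarith)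
        have := Real.exp_pos ((1 + k) * V)
        linarith
  have j1 := (hiexp (1 - k) (by linarith)).const_mul (Real.exp (k * ((1 - k) * V)))
  have j2 := (hiexp (1 + k) (by linarith)).const_mul (Real.exp (-(k * ((1 + k) * V))))
  have j3 : Integrable (fun ω => Real.exp ((1 + k) * V) * G.indicator (fun _ => (1 : ℝ)) ω) μ :=
    ((integrable_const (1 : ℝ)).indicator hGm).const_mul _
  have h5 := integral_mono (hiexp 1 zero_le_one) ((j1.add j2).add j3) hpt
  rw [integral_add' (j1.add j2) j3, integral_add' j1 j2, integral_const_mul, integral_const_mul,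
    integral_const_mul, integral_indicator hGm] at h5
  simp only [integral_const, smul_eq_mul, mul_one, MeasurableSet.univ, measureReal_restrict_apply,
    Set.univ_inter] at h5
  have u1 := mul_le_mul_of_nonneg_left (hup (1 - k) (by linarith) (by linarith))
    (Real.exp_nonneg (k * ((1 - k) * V)))
  have u2 := mul_le_mul_of_nonneg_left (hup (1 + k) (by linarith) (by linarith))
    (Real.exp_nonneg (-(k * ((1 + k) * V))))
  rw [← Real.exp_add] at u1 u2
  have e1 : k * ((1 - k) * V) + ((1 - k) ^ 2 * V / 2 + E) = (1 - k ^ 2) * V / 2 + E := by ring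
  have e2 : -(k * ((1 + k) * V)) + ((1 + k) ^ 2 * V / 2 + E) = (1 - k ^ 2) * V / 2 + E := by ring
  rw [e1] at u1
  rw [e2] at u2
  linarith

end

section

variable {Ω : Type} [MeasurableSpace Ω] {μ : Measure Ω}

/-! ### The truncated logarithm -/

lemma one_le_plog (x : ℝ) : 1 ≤ plog x := by
  unfold plog
  rw [Real.le_log_iff_exp_le (lt_max_of_lt_right (Real.exp_pos 1))]
  exact le_max_right _ _

lemma plog_pos (x : ℝ) : 0 < plog x := zero_lt_one.trans_le (one_le_plog x)

lemma plog_mono : Monotone plog := fun x y h => by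
  unfold plog
  exact Real.log_le_log (lt_max_of_lt_right (Real.exp_pos 1)) (max_le_max h le_rfl)

lemma plog_le_self {x : ℝ} (hx : 1 ≤ x) : plog x ≤ x := by
  unfold plog
  rcases le_total x (Real.exp 1) with h | h
  · rw [max_eq_right h, Real.log_exp]; exact hx
  · rw [max_eq_left h]
    have := Real.log_le_sub_one_of_pos (zero_lt_one.trans_le hx)
    linarith

lemma log_le_plog {x : ℝ} (hx : 0 < x) : Real.log x ≤ plog x :=
  Real.log_le_log hx (le_max_left _ _)

lemma plog_measurable : Measurable plog :=
  Real.measurable_log.comp (measurable_id.max measurable_const)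

/-! ### Boxes, clipping, and the field -/

/-- The half-open box `∏ [aᵢ, bᵢ)` in `ℕ^d`. -/
def brick {d : ℕ} (a b : Fin d → ℕ) : Finset (Fin d → ℕ) :=
  Fintype.piFinset fun i => Finset.Ico (a i) (b i)

/-- The difference `y - x` in `ℤ^d` of two points of `ℕ^d`. -/
def zsub {d : ℕ} (y x : Fin d → ℕ) : Fin d → ℤ := fun t => (y t : ℤ) - (x t : ℤ)

/-- Truncation of a real number to `[-τ, τ]`. -/
def clip (τ x : ℝ) : ℝ := max (-τ) (min x τ)

/-- The hypotheses of the theorem for a field indexed by all of `ℕ^d` (coordinates starting at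
`0`); covariances are plain second moments because the field is centred. -/
structure NAField (μ : Measure Ω) {d : ℕ} (X : (Fin d → ℕ) → Ω → ℝ) (Υ : (Fin d → ℤ) → ℝ) :
    Prop where
  hd : 2 ≤ d
  meas : ∀ k, Measurable (X k)
  na : NegAssocOn μ X Set.univ
  idd : ∀ k, μ.map (X k) = μ.map (X 0)
  int : Integrable (X 0) μ
  mean : ∫ ω, X 0 ω ∂μ = 0
  mom : Integrable (fun ω => (X 0 ω) ^ 2 * (plog |X 0 ω|) ^ (d - 1) / plog (plog |X 0 ω|)) μ
  ws : ∀ x y, ∫ ω, X y ω * X x ω ∂μ = Υ (zsub y x)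

/-- The off-diagonal covariances with reversed sign; nonnegative by negative association. -/
def uu {d : ℕ} (Υ : (Fin d → ℤ) → ℝ) (j : Fin d → ℤ) : ℝ := if j = 0 then 0 else -Υ j

lemma clip_mono (τ : ℝ) : Monotone (clip τ) := fun _ _ h =>
  max_le_max le_rfl (min_le_min h le_rfl)

lemma clip_sub_mono {τ : ℝ} (hτ : 0 ≤ τ) : Monotone (fun x => x - clip τ x) := fun x y h => by
  simp only [clip]
  rcases le_total x τ with h1 | h1 <;> rcases le_total y τ with h2 | h2 <;>
  rcases le_total x (-τ) with h3 | h3 <;> rcases le_total y (-τ) with h4 | h4 <;>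
  simp only [h1, h2, h3, h4, min_eq_left, min_eq_right, max_eq_left, max_eq_right,
    neg_le_self hτ] <;> linarith

lemma abs_clip_le {τ : ℝ} (hτ : 0 ≤ τ) (x : ℝ) : |clip τ x| ≤ τ :=
  abs_le.2 ⟨le_max_left _ _, max_le (by linarith) (min_le_right _ _)⟩

lemma abs_clip_le_abs {τ : ℝ} (hτ : 0 ≤ τ) (x : ℝ) : |clip τ x| ≤ |x| := by
  refine abs_le.2 ⟨?_, ?_⟩
  · exact le_max_of_le_right (le_min (neg_abs_le x) (by linarith [abs_nonneg x]))
  · exact max_le (by linarith [abs_nonneg x]) ((min_le_left _ _).trans (le_abs_self x))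

lemma clip_measurable (τ : ℝ) : Measurable (clip τ) :=
  measurable_const.max (measurable_id.min measurable_const)

lemma le_clip_add {τ : ℝ} (x : ℝ) : x ≤ clip τ x + max (x - τ) 0 := by
  simp only [clip]
  rcases le_total x τ with h1 | h1
  · rw [min_eq_left h1]; linarith [le_max_right (-τ) x, le_max_right (x - τ) 0]
  · rw [min_eq_right h1]; linarith [le_max_right (-τ) τ, le_max_left (x - τ) 0]

lemma abs_sub_clip {τ : ℝ} (hτ : 0 ≤ τ) (x : ℝ) : |x - clip τ x| = max (|x| - τ) 0 := by
  simp only [clip]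
  rcases le_total x τ with h1 | h1
  · rw [min_eq_left h1]
    rcases le_total x (-τ) with h3 | h3
    · rw [max_eq_left h3, abs_of_nonpos (by linarith : x ≤ 0), max_eq_left (by linarith),
        abs_of_nonpos (by linarith)]
      ring
    · rw [max_eq_right h3, sub_self, abs_zero, max_eq_right]
      linarith [abs_le.2 ⟨h3, h1⟩]
  · rw [min_eq_right h1, max_eq_right (by linarith), abs_of_nonneg (by linarith : 0 ≤ x),
      max_eq_left (by linarith), abs_of_nonneg (by linarith)]

lemma mem_brick {d : ℕ} {a b x : Fin d → ℕ} : x ∈ brick a b ↔ ∀ i, a i ≤ x i ∧ x i < b i := by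
  simp [brick, Fintype.mem_piFinset]

lemma card_brick {d : ℕ} (a b : Fin d → ℕ) : #(brick a b) = ∏ i, (b i - a i) := by
  simp [brick]

lemma card_brick0 {d : ℕ} (b : Fin d → ℕ) : #(brick 0 b) = ∏ i, b i := by
  simp [card_brick]

/-- Constraining one coordinate of a box scales its cardinality proportionally. -/
lemma card_brick_filter {d : ℕ} (a b : Fin d → ℕ) (i : Fin d) (P : ℕ → Prop) [DecidablePred P] :
    #{x ∈ brick a b | P (x i)} * (b i - a i) = #{k ∈ Ico (a i) (b i) | P k} * #(brick a b) := by
  classical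
  have h : ({x ∈ brick a b | P (x i)} : Finset _) = Fintype.piFinset
      (Function.update (fun i => Finset.Ico (a i) (b i)) i {k ∈ Ico (a i) (b i) | P k}) := by
    ext x
    simp only [Finset.mem_filter, brick, Fintype.mem_piFinset]
    constructor
    · rintro ⟨h1, h2⟩ t
      by_cases ht : t = i
      · subst ht; simpa using ⟨by simpa using h1 t, h2⟩
      · simpa [Function.update_of_ne ht] using h1 t
    · intro h1
      have h2 := h1 i
      simp only [Function.update_self, Finset.mem_filter] at h2
      refine ⟨fun t => ?_, h2.2⟩
      by_cases ht : t = i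
      · subst ht; exact h2.1
      · simpa [Function.update_of_ne ht] using h1 t
  rw [h, Fintype.card_piFinset, card_brick, ← Finset.mul_prod_erase univ _ (mem_univ i),
    ← Finset.mul_prod_erase univ (fun i => b i - a i) (mem_univ i)]
  have : ∏ x ∈ univ.erase i, #(Function.update (fun i => Finset.Ico (a i) (b i)) i
      {k ∈ Ico (a i) (b i) | P k} x) = ∏ x ∈ univ.erase i, (b x - a x) :=
    Finset.prod_congr rfl fun x hx => by
      rw [Function.update_of_ne (Finset.ne_of_mem_erase hx)]; simp
  rw [this, Function.update_self]
  ring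

namespace NAField

variable [IsProbabilityMeasure μ] {d : ℕ} {X : (Fin d → ℕ) → Ω → ℝ} {Υ : (Fin d → ℤ) → ℝ}

lemma integral_eq (h : NAField μ X Υ) {g : ℝ → ℝ} (hg : Measurable g) (k : Fin d → ℕ) :
    ∫ ω, g (X k ω) ∂μ = ∫ ω, g (X 0 ω) ∂μ := by
  rw [← integral_map (h.meas k).aemeasurable hg.aestronglyMeasurable,
    ← integral_map (h.meas 0).aemeasurable hg.aestronglyMeasurable, h.idd k]

lemma integrable_iff (h : NAField μ X Υ) {g : ℝ → ℝ} (hg : Measurable g) (k : Fin d → ℕ) :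
    Integrable (fun ω => g (X k ω)) μ ↔ Integrable (fun ω => g (X 0 ω)) μ := by
  have := integrable_map_measure (μ := μ) (f := X k) (g := g) hg.aestronglyMeasurable
    (h.meas k).aemeasurable
  rw [h.idd k] at this
  have h0 := integrable_map_measure (μ := μ) (f := X 0) (g := g) hg.aestronglyMeasurable
    (h.meas 0).aemeasurable
  exact this.symm.trans h0

lemma prob_eq (h : NAField μ X Υ) {s : Set ℝ} (hs : MeasurableSet s) (k : Fin d → ℕ) :
    μ.real {ω | X k ω ∈ s} = μ.real {ω | X 0 ω ∈ s} := by
  have h1 := Measure.map_apply (μ := μ) (h.meas k) hs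
  have h2 := Measure.map_apply (μ := μ) (h.meas 0) hs
  rw [h.idd k, h2] at h1
  simp only [Measure.real]
  exact congrArg _ h1.symm

/-- The weight `log^{d-1}|x| / log log |x|` is at least `√(log |x|)`. -/
lemma weight_ge (hd : 2 ≤ d) (x : ℝ) :
    Real.sqrt (plog x) ≤ (plog x) ^ (d - 1) / plog (plog x) := by
  have h1 := one_le_plog x
  have hp := plog_pos (plog x)
  have hs : 1 ≤ Real.sqrt (plog x) := by rw [Real.one_le_sqrt]; exact h1
  have h2 : plog (plog x) ≤ Real.sqrt (plog x) := by
    -- `log L ≤ √L` for `L ≥ e`, from `log L = 2 log √L ≤ 2 √L / e`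
    unfold plog
    set L := Real.log (max x (Real.exp 1)) with hL
    have hL1 : 1 ≤ L := h1
    rcases le_total L (Real.exp 1) with h | h
    · rw [max_eq_right h, Real.log_exp]; exact hs
    · rw [max_eq_left h]
      set s := Real.sqrt L
      have hLs : L = s ^ 2 := (Real.sq_sqrt (by linarith)).symm
      have hs0 : 0 < s := by positivity
      have h3 := Real.log_le_sub_one_of_pos (div_pos hs0 (Real.exp_pos 1))
      rw [Real.log_div hs0.ne' (Real.exp_pos 1).ne', Real.log_exp] at h3
      rw [hLs, Real.log_pow]
      have h4 : s / Real.exp 1 ≤ s / 2 := by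
        gcongr; linarith [Real.add_one_le_exp 1]
      push_cast
      linarith
  rw [le_div_iff₀ hp]
  calc Real.sqrt (plog x) * plog (plog x) ≤ Real.sqrt (plog x) * Real.sqrt (plog x) := by gcongr
    _ = plog x := Real.mul_self_sqrt (by linarith)
    _ ≤ _ := le_self_pow₀ h1 (by omega)

lemma weight_ge' (hd : 2 ≤ d) (x : ℝ) :
    x ^ 2 * Real.sqrt (plog |x|) ≤ x ^ 2 * (plog |x|) ^ (d - 1) / plog (plog |x|) := by
  rw [mul_div_assoc]
  exact mul_le_mul_of_nonneg_left (weight_ge hd _) (sq_nonneg x)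

lemma integrable_sq_sqrt (h : NAField μ X Υ) :
    Integrable (fun ω => X 0 ω ^ 2 * Real.sqrt (plog |X 0 ω|)) μ := by
  refine h.mom.mono' ?_ (ae_of_all _ fun ω => ?_)
  · exact (((h.meas 0).pow_const 2).mul
      ((plog_measurable.comp (h.meas 0).abs).sqrt)).aestronglyMeasurable
  · rw [Real.norm_of_nonneg (by positivity)]
    exact weight_ge' h.hd _

lemma integrable_sq0 (h : NAField μ X Υ) : Integrable (fun ω => X 0 ω ^ 2) μ := by
  refine h.integrable_sq_sqrt.mono' ((h.meas 0).pow_const 2).aestronglyMeasurable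
    (ae_of_all _ fun ω => ?_)
  rw [Real.norm_of_nonneg (by positivity)]
  have : 1 ≤ Real.sqrt (plog |X 0 ω|) := by rw [Real.one_le_sqrt]; exact one_le_plog _
  nlinarith [sq_nonneg (X 0 ω)]

lemma integrable_sq (h : NAField μ X Υ) (k) : Integrable (fun ω => X k ω ^ 2) μ :=
  (h.integrable_iff (g := fun x => x ^ 2) (by fun_prop) k).2 h.integrable_sq0

lemma memLp (h : NAField μ X Υ) (k) : MemLp (X k) 2 μ :=
  (memLp_two_iff_integrable_sq (h.meas k).aestronglyMeasurable).2 (h.integrable_sq k)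

lemma integrable (h : NAField μ X Υ) (k) : Integrable (X k) μ :=
  (h.memLp k).integrable (by norm_num)

lemma mean' (h : NAField μ X Υ) (k) : ∫ ω, X k ω ∂μ = 0 := by
  rw [h.integral_eq (g := fun x => x) measurable_id k, h.mean]

lemma zsub_surj (j : Fin d → ℤ) : ∃ x y : Fin d → ℕ, zsub y x = j ∧ (x = y → j = 0) :=
  ⟨fun t => (-j t).toNat, fun t => (j t).toNat, by ext t; simp only [zsub]; omega, fun e => by
    ext t
    have := congrFun e t
    simp only [Pi.zero_apply] at *
    omega⟩

open ProbabilityTheory in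
lemma cov_eq (h : NAField μ X Υ) (x y) : cov[X x, X y; μ] = Υ (zsub y x) := by
  rw [covariance_comm, covariance_eq_sub (h.memLp y) (h.memLp x), h.mean', zero_mul, sub_zero, ← h.ws]
  rfl

lemma zsub_self (x : Fin d → ℕ) : zsub x x = 0 := by ext; simp [zsub]

lemma zsub_eq_zero {x y : Fin d → ℕ} : zsub y x = 0 ↔ y = x := by
  constructor
  · intro e; ext t; have := congrFun e t; simp only [zsub, Pi.zero_apply] at this; omega
  · rintro rfl; exact zsub_self _

lemma uu_nonneg (h : NAField μ X Υ) (j) : 0 ≤ uu Υ j := by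
  unfold uu
  split_ifs with hj
  · exact le_rfl
  obtain ⟨x, y, rfl, hxy⟩ := zsub_surj j
  have hne : x ≠ y := fun e => hj (hxy e)
  have := h.na.cov_nonpos (A := {x}) (B := {y}) (by simp) (by simp) (by simpa using hne)
    (monotone_sum {x}) (monotone_sum {y}) (dependsOn_sum {x}) (dependsOn_sum {y})
    (by simpa using h.memLp x) (by simpa using h.memLp y)
  simp only [sum_singleton] at this
  have e := h.cov_eq x y
  linarith [show ProbabilityTheory.covariance (X x) (X y) μ ≤ 0 from this]

lemma s2_eq (h : NAField μ X Υ) (k) : ∫ ω, X k ω ^ 2 ∂μ = Υ 0 := by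
  have := h.ws k k
  rw [zsub_self] at this
  rw [← this]; congr 1; ext ω; ring

lemma s2_nonneg (h : NAField μ X Υ) : 0 ≤ Υ 0 := by
  rw [← h.s2_eq 0]; exact integral_nonneg fun ω => sq_nonneg _

lemma Υ_eq_neg_uu {x y : Fin d → ℕ} (hxy : y ≠ x) : Υ (zsub y x) = -uu Υ (zsub y x) := by
  rw [uu, if_neg (by rwa [zsub_eq_zero]), neg_neg]

/-- Row sums of the covariance matrix of a finite set `D` of indices. -/
lemma sum_Υ {D : Finset (Fin d → ℕ)} {x : Fin d → ℕ} (hx : x ∈ D) :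
    ∑ y ∈ D, Υ (zsub y x) = Υ 0 - ∑ y ∈ D, uu Υ (zsub y x) := by
  classical
  rw [← Finset.add_sum_erase D _ hx, ← Finset.add_sum_erase D (fun y => uu Υ (zsub y x)) hx]
  rw [zsub_self, Finset.sum_congr rfl fun y hy => Υ_eq_neg_uu (Finset.ne_of_mem_erase hy)]
  simp [uu]
  ring

lemma var_sum (h : NAField μ X Υ) (D : Finset (Fin d → ℕ)) :
    ∫ ω, (∑ x ∈ D, X x ω) ^ 2 ∂μ = ∑ x ∈ D, (Υ 0 - ∑ y ∈ D, uu Υ (zsub y x)) := by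
  rw [← Finset.sum_congr rfl fun x hx => sum_Υ hx]
  simp_rw [pow_two, Finset.sum_mul_sum]
  have im : ∀ x y, Integrable (fun ω => X x ω * X y ω) μ := fun x y =>
    (h.memLp x).integrable_mul (h.memLp y)
  rw [integral_finset_sum _ fun x _ => integrable_finset_sum _ fun y _ => im x y]
  refine Finset.sum_congr rfl fun x _ => ?_
  rw [integral_finset_sum _ fun y _ => im x y]
  refine Finset.sum_congr rfl fun y _ => ?_
  rw [← h.ws]
  congr 1; ext ω; ring

end NAField

/-! ### Summability of the covariances and variances of box sums -/

namespace NAField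

variable [IsProbabilityMeasure μ] {d : ℕ} {X : (Fin d → ℕ) → Ω → ℝ} {Υ : (Fin d → ℤ) → ℝ}

lemma exists_bound (J : Finset (Fin d → ℤ)) : ∃ R : ℕ, 1 ≤ R ∧ ∀ j ∈ J, ∀ t, |j t| ≤ R := by
  refine ⟨1 + ∑ j ∈ J, ∑ t, (j t).natAbs, by omega, fun j hj t => ?_⟩
  have h1 : (j t).natAbs ≤ ∑ t, (j t).natAbs :=
    Finset.single_le_sum (f := fun t => (j t).natAbs) (fun _ _ => Nat.zero_le _) (mem_univ t)
  have h2 : ∑ t, (j t).natAbs ≤ ∑ j ∈ J, ∑ t, (j t).natAbs :=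
    Finset.single_le_sum (f := fun j : Fin d → ℤ => ∑ t, (j t).natAbs)
      (fun _ _ => Nat.zero_le _) hj
  rw [Int.abs_eq_natAbs]
  exact_mod_cast (by omega : (j t).natAbs ≤ 1 + ∑ j ∈ J, ∑ t, (j t).natAbs)

lemma inner_le (h : NAField μ X Υ) {J : Finset (Fin d → ℤ)} {R : ℕ}
    (hR : ∀ j ∈ J, ∀ t, |j t| ≤ R) {a b x : Fin d → ℕ}
    (hx : ∀ t, a t + R ≤ x t ∧ x t + R < b t) :
    ∑ j ∈ J, uu Υ j ≤ ∑ y ∈ brick a b, uu Υ (zsub y x) := by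
  classical
  obtain ⟨φ, hφ0⟩ : ∃ φ : (Fin d → ℤ) → (Fin d → ℕ), ∀ j t, φ j t = ((x t : ℤ) + j t).toNat :=
    ⟨fun j t => ((x t : ℤ) + j t).toNat, fun _ _ => rfl⟩
  have hφ : ∀ j ∈ J, zsub (φ j) x = j := fun j hj => by
    ext t
    have h1 := abs_le.1 (hR j hj t)
    have h2 := hx t
    have h3 : ((φ j t : ℕ) : ℤ) = x t + j t := by
      rw [hφ0, Int.toNat_of_nonneg]; omega
    simp only [zsub]
    rw [h3]; ring
  have hinj : Set.InjOn φ J := fun j hj k hk e => by rw [← hφ j hj, ← hφ k hk, e]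
  have e1 : ∑ j ∈ J, uu Υ j = ∑ y ∈ J.image φ, uu Υ (zsub y x) := by
    rw [Finset.sum_image hinj]
    exact Finset.sum_congr rfl fun j hj => by rw [hφ j hj]
  have e2 : J.image φ ⊆ brick a b := by
    intro y hy
    obtain ⟨j, hj, rfl⟩ := Finset.mem_image.1 hy
    rw [mem_brick]
    intro t
    have h1 := abs_le.1 (hR j hj t)
    have h2 := hx t
    rw [hφ0]
    omega
  rw [e1]
  exact Finset.sum_le_sum_of_subset_of_nonneg e2 fun y _ _ => h.uu_nonneg _

/-- The covariances are summable, because the variance of the sum over a large cube is nonnegative. -/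
lemma summable_uu (h : NAField μ X Υ) : Summable (uu Υ) := by
  refine summable_of_sum_le (c := 2 ^ d * Υ 0) h.uu_nonneg fun J => ?_
  obtain ⟨R, hR1, hR⟩ := exists_bound J
  have hv : 0 ≤ ∑ x ∈ brick (0 : Fin d → ℕ) (fun _ => 4 * R),
      (Υ 0 - ∑ y ∈ brick 0 (fun _ => 4 * R), uu Υ (zsub y x)) := by
    rw [← h.var_sum]; exact integral_nonneg fun ω => sq_nonneg _
  rw [Finset.sum_sub_distrib, Finset.sum_const, nsmul_eq_mul] at hv
  have h1 : ∑ x ∈ brick (fun _ : Fin d => R) (fun _ => 3 * R), ∑ j ∈ J, uu Υ j ≤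
      ∑ x ∈ brick (0 : Fin d → ℕ) (fun _ => 4 * R),
        ∑ y ∈ brick 0 (fun _ => 4 * R), uu Υ (zsub y x) := by
    refine (Finset.sum_le_sum fun x hx => h.inner_le hR (a := 0) (b := fun _ => 4 * R) fun t => ?_).trans
      (Finset.sum_le_sum_of_subset_of_nonneg (fun x hx => ?_) fun x _ _ =>
        Finset.sum_nonneg fun y _ => h.uu_nonneg _)
    · have := (mem_brick.1 hx) t
      simp only [Pi.zero_apply]
      omega
    · rw [mem_brick] at hx ⊢
      intro t
      have := hx t
      simp only [Pi.zero_apply]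
      omega
  rw [Finset.sum_const, nsmul_eq_mul] at h1
  have e1 : (#(brick (fun _ : Fin d => R) (fun _ => 3 * R)) : ℝ) = (2 * R) ^ d := by
    rw [card_brick]; simp [show 3 * R - R = 2 * R by omega]
  have e2 : (#(brick (0 : Fin d → ℕ) (fun _ => 4 * R)) : ℝ) = 2 ^ d * (2 * R) ^ d := by
    rw [card_brick0]; simp [← mul_pow]; norm_num [← mul_assoc]
  rw [e1] at h1
  rw [e2] at hv
  have hp : (0 : ℝ) < (2 * R) ^ d := by
    have : (0 : ℝ) < R := by exact_mod_cast hR1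
    positivity
  have : (2 * (R : ℝ)) ^ d * ∑ j ∈ J, uu Υ j ≤ (2 * R) ^ d * (2 ^ d * Υ 0) := by linarith
  exact le_of_mul_le_mul_left this hp

lemma zsub_inj (x : Fin d → ℕ) : Function.Injective fun y => zsub y x := fun y z e => by
  ext t
  have := congrFun e t
  simp only [zsub] at this
  omega

lemma row_le (h : NAField μ X Υ) (D : Finset (Fin d → ℕ)) (x : Fin d → ℕ) :
    ∑ y ∈ D, uu Υ (zsub y x) ≤ ∑' j, uu Υ j := by
  classical
  rw [← Finset.sum_image (f := uu Υ) (g := fun y => zsub y x) ((zsub_inj x).injOn)]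
  exact h.summable_uu.sum_le_tsum _ fun j _ => h.uu_nonneg j

lemma tsum_eq (h : NAField μ X Υ) : ∑' j, Υ j = Υ 0 - ∑' j, uu Υ j := by
  classical
  have : Υ = fun j => (if j = 0 then Υ 0 else 0) - uu Υ j := by
    ext j
    by_cases hj : j = 0 <;> simp [uu, hj]
  conv_lhs => rw [this]
  rw [Summable.tsum_sub (hasSum_ite_eq 0 (Υ 0)).summable h.summable_uu, tsum_ite_eq]

/-- The total covariance between a box and its complement is `o(|box|)` as all sides grow. -/
lemma out_le (h : NAField μ X Υ) {ε : ℝ} (hε : 0 < ε) : ∃ l0 : ℕ, 1 ≤ l0 ∧ ∀ a b : Fin d → ℕ,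
    (∀ i, a i + l0 ≤ b i) →
    ∑ x ∈ brick a b, (∑' j, uu Υ j - ∑ y ∈ brick a b, uu Υ (zsub y x)) ≤ ε * #(brick a b) := by
  classical
  set U := ∑' j, uu Υ j with hU
  have hU0 : 0 ≤ U := tsum_nonneg h.uu_nonneg
  obtain ⟨J, hJ⟩ : ∃ J : Finset (Fin d → ℤ), U - ε / 2 < ∑ j ∈ J, uu Υ j :=
    ((h.summable_uu.hasSum.eventually (lt_mem_nhds (by linarith : U - ε / 2 < U)))).exists
  obtain ⟨R, hR1, hR⟩ := exists_bound J
  obtain ⟨l0, hl0⟩ := exists_nat_ge (U * (d * (2 * R)) * (2 / ε) + 1)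
  have hl1 : 1 ≤ l0 := by
    have : (1 : ℝ) ≤ l0 := le_trans (le_add_of_nonneg_left (by positivity)) hl0
    exact_mod_cast this
  refine ⟨l0, hl1, fun a b hab => ?_⟩
  set D := brick a b
  have hpt : ∀ x ∈ D, U - ∑ y ∈ D, uu Υ (zsub y x) ≤
      ε / 2 + U * ∑ i, (if x i < a i + R ∨ b i ≤ x i + R then (1 : ℝ) else 0) := by
    intro x hx
    by_cases hin : ∀ t, a t + R ≤ x t ∧ x t + R < b t
    · have h1 := h.inner_le hR hin
      have : 0 ≤ U * ∑ i, (if x i < a i + R ∨ b i ≤ x i + R then (1 : ℝ) else 0) :=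
        mul_nonneg hU0 (Finset.sum_nonneg fun i _ => by split_ifs <;> norm_num)
      linarith
    · push Not at hin
      obtain ⟨t, ht⟩ := hin
      have h2 : (1 : ℝ) ≤ ∑ i, (if x i < a i + R ∨ b i ≤ x i + R then (1 : ℝ) else 0) := by
        refine le_trans ?_ (Finset.single_le_sum (f := fun i => (if x i < a i + R ∨ b i ≤ x i + R
          then (1 : ℝ) else 0)) (fun i _ => by split_ifs <;> norm_num) (mem_univ t))
        rw [if_pos]
        by_cases h3 : a t + R ≤ x t
        · exact Or.inr (ht h3)
        · exact Or.inl (by omega)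
      have h3 : 0 ≤ ∑ y ∈ D, uu Υ (zsub y x) := Finset.sum_nonneg fun y _ => h.uu_nonneg _
      nlinarith
  refine (Finset.sum_le_sum hpt).trans ?_
  rw [Finset.sum_add_distrib, Finset.sum_const, nsmul_eq_mul, ← Finset.mul_sum, Finset.sum_comm]
  have hcount : ∀ i, (∑ x ∈ D, (if x i < a i + R ∨ b i ≤ x i + R then (1 : ℝ) else 0)) * l0 ≤
      2 * R * #D := by
    intro i
    rw [Finset.sum_boole]
    have e := card_brick_filter a b i (fun k => k < a i + R ∨ b i ≤ k + R)
    have c1 : #{k ∈ Ico (a i) (b i) | k < a i + R ∨ b i ≤ k + R} ≤ 2 * R := by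
      refine (Finset.card_le_card (t := Ico (a i) (a i + R) ∪ Ico (b i - R) (b i)) ?_).trans ?_
      · intro k hk
        simp only [Finset.mem_filter, Finset.mem_Ico, Finset.mem_union] at hk ⊢
        omega
      · refine (Finset.card_union_le _ _).trans ?_
        simp only [Nat.card_Ico]
        omega
    have c2 : #{x ∈ D | x i < a i + R ∨ b i ≤ x i + R} * l0 ≤ 2 * R * #D :=
      calc _ ≤ #{x ∈ D | x i < a i + R ∨ b i ≤ x i + R} * (b i - a i) :=
            Nat.mul_le_mul_left _ (by have := hab i; omega)
        _ = _ := e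
        _ ≤ _ := Nat.mul_le_mul_right _ c1
    exact_mod_cast c2
  have hl0' : (0 : ℝ) < l0 := by exact_mod_cast hl1
  have htot : (∑ i, ∑ x ∈ D, (if x i < a i + R ∨ b i ≤ x i + R then (1 : ℝ) else 0)) * l0 ≤
      d * (2 * R) * #D := by
    rw [Finset.sum_mul]
    refine (Finset.sum_le_sum fun i _ => hcount i).trans (le_of_eq ?_)
    simp; ring
  set Z := ∑ i, ∑ x ∈ D, (if x i < a i + R ∨ b i ≤ x i + R then (1 : ℝ) else 0)
  have hfin : U * Z ≤ ε / 2 * #D := by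
    have h5 : U * (d * (2 * R)) ≤ ε / 2 * l0 := by
      have : U * (d * (2 * R)) = ε / 2 * (U * (d * (2 * R)) * (2 / ε)) := by field_simp
      rw [this]
      gcongr
      linarith
    refine le_of_mul_le_mul_right ?_ hl0'
    calc U * Z * l0 = U * (Z * l0) := by ring
      _ ≤ U * (d * (2 * R) * #D) := by gcongr
      _ = U * (d * (2 * R)) * #D := by ring
      _ ≤ ε / 2 * l0 * #D := by gcongr
      _ = _ := by ring
  linarith

/-- Variances of sums over boxes with long sides are at most `|box| (σ² + ε)`. -/
lemma var_le (h : NAField μ X Υ) {ε : ℝ} (hε : 0 < ε) : ∃ l0 : ℕ, 1 ≤ l0 ∧ ∀ a b : Fin d → ℕ,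
    (∀ i, a i + l0 ≤ b i) →
    ∫ ω, (∑ x ∈ brick a b, X x ω) ^ 2 ∂μ ≤ #(brick a b) * ((∑' j, Υ j) + ε) := by
  obtain ⟨l0, hl, H⟩ := h.out_le hε
  refine ⟨l0, hl, fun a b hab => ?_⟩
  have := H a b hab
  rw [h.var_sum, h.tsum_eq]
  rw [Finset.sum_sub_distrib, Finset.sum_const, nsmul_eq_mul] at this ⊢
  linarith

lemma var_ge (h : NAField μ X Υ) (D : Finset (Fin d → ℕ)) :
    #D * (∑' j, Υ j) ≤ ∫ ω, (∑ x ∈ D, X x ω) ^ 2 ∂μ := by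
  rw [h.var_sum, h.tsum_eq, ← nsmul_eq_mul, ← Finset.sum_const]
  exact Finset.sum_le_sum fun x _ => by linarith [h.row_le D x]

lemma var_le_s2 (h : NAField μ X Υ) (D : Finset (Fin d → ℕ)) :
    ∫ ω, (∑ x ∈ D, X x ω) ^ 2 ∂μ ≤ #D * Υ 0 := by
  rw [h.var_sum, ← nsmul_eq_mul, ← Finset.sum_const]
  exact Finset.sum_le_sum fun x _ => by
    linarith [Finset.sum_nonneg fun y (_ : y ∈ D) => h.uu_nonneg (zsub y x)]

lemma tsum_nonneg (h : NAField μ X Υ) : 0 ≤ ∑' j, Υ j := by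
  refine le_of_forall_pos_le_add fun ε hε => ?_
  obtain ⟨l0, hl, H⟩ := h.var_le hε
  have h1 := H 0 (fun _ => l0) (fun i => by simp)
  have h2 : 0 ≤ ∫ ω, (∑ x ∈ brick (0 : Fin d → ℕ) (fun _ => l0), X x ω) ^ 2 ∂μ :=
    integral_nonneg fun ω => sq_nonneg _
  have h3 : (0 : ℝ) < #(brick (0 : Fin d → ℕ) (fun _ => l0)) := by
    rw [card_brick0]; simp only [Finset.prod_const]
    have : (0 : ℝ) < l0 := by exact_mod_cast hl
    push_cast; positivity
  exact nonneg_of_mul_nonneg_right (h2.trans h1) h3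

/-! ### Clipped fields -/

lemma memLp_clip (h : NAField μ X Υ) {τ : ℝ} (hτ : 0 ≤ τ) (k) :
    MemLp (fun ω => clip τ (X k ω)) 2 μ :=
  memLp_of_bdd ((clip_measurable τ).comp (h.meas k)) fun ω => abs_clip_le hτ _

lemma na_clip (h : NAField μ X Υ) (τ e : ℝ) :
    NegAssocOn μ (fun k ω => clip τ (X k ω) - e) Set.univ :=
  h.na.comp (fun _ x => clip τ x - e) fun _ _ _ _ hxy => sub_le_sub_right (clip_mono τ hxy) _

open ProbabilityTheory in
/-- Clipping only weakens negative covariances. -/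
lemma cov_clip (h : NAField μ X Υ) {τ : ℝ} (hτ : 0 ≤ τ) {x y : Fin d → ℕ} (hxy : x ≠ y) :
    -uu Υ (zsub y x) ≤ cov[fun ω => clip τ (X x ω), fun ω => clip τ (X y ω); μ] ∧
      cov[fun ω => clip τ (X x ω), fun ω => clip τ (X y ω); μ] ≤ 0 := by
  have dep : ∀ z : Fin d → ℕ, DependsOn (fun w : (Fin d → ℕ) → ℝ => clip τ (w z))
      (({z} : Finset (Fin d → ℕ)) : Set (Fin d → ℕ)) := fun z u v e => by
    simp only []; rw [e z (by simp)]
  have mon : ∀ z : Fin d → ℕ, Monotone (fun w : (Fin d → ℕ) → ℝ => clip τ (w z)) :=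
    fun z u v e => clip_mono τ (e z)
  have mon' : ∀ z : Fin d → ℕ, Monotone (fun w : (Fin d → ℕ) → ℝ =>
      (∑ i ∈ ({z} : Finset (Fin d → ℕ)), w i) - clip τ (w z)) :=
    fun z u v e => by simpa using clip_sub_mono hτ (e z)
  have hdis : Disjoint ({x} : Finset (Fin d → ℕ)) {y} := by simpa using hxy
  constructor
  · have := h.na.newman (A := {x}) (B := {y}) (by simp) (by simp) hdis (mon y) (dep x) (dep y)
      (mon' x) (mon' y) (fun i _ => h.memLp i) (h.memLp_clip hτ x) (h.memLp_clip hτ y)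
    simp only [Finset.sum_singleton] at this
    rwa [h.cov_eq, Υ_eq_neg_uu (Υ := Υ) hxy.symm] at this
  · exact h.na.cov_nonpos (A := {x}) (B := {y}) (by simp) (by simp) hdis (mon x) (mon y) (dep x)
      (dep y) (h.memLp_clip hτ x) (h.memLp_clip hτ y)

/-- The common mean of the clipped variables. -/
def cm (μ : Measure Ω) (X : (Fin d → ℕ) → Ω → ℝ) (τ : ℝ) : ℝ := ∫ ω, clip τ (X 0 ω) ∂μ

lemma mean_clip (h : NAField μ X Υ) (τ : ℝ) (k) : ∫ ω, clip τ (X k ω) ∂μ = cm μ X τ :=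
  h.integral_eq (clip_measurable τ) k

lemma mean_clip_sub (h : NAField μ X Υ) {τ : ℝ} (hτ : 0 ≤ τ) (k) :
    ∫ ω, (clip τ (X k ω) - cm μ X τ) ∂μ = 0 := by
  rw [integral_sub ((h.memLp_clip hτ k).integrable (by norm_num)) (integrable_const _),
    h.mean_clip]
  simp

lemma neg (h : NAField μ X Υ) : NAField μ (fun k ω => -X k ω) Υ where
  hd := h.hd
  meas k := (h.meas k).neg
  na := h.na.neg
  idd k := by
    have e : ∀ k, μ.map (fun ω => -X k ω) = (μ.map (X k)).map (fun x => -x) := fun k => by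
      rw [Measure.map_map measurable_neg (h.meas k)]; rfl
    rw [e k, e 0, h.idd k]
  int := h.int.neg
  mean := by rw [integral_neg, h.mean, neg_zero]
  mom := by simpa using h.mom
  ws x y := by rw [← h.ws]; simp

end NAField

/-! ### Summation over `ℕ^d` -/

/-- The sum of the coordinates. -/
def tot {d : ℕ} (m : Fin d → ℕ) : ℕ := ∑ i, m i

lemma summable_pi_prod {d : ℕ} {f : ℕ → ℝ} (h0 : ∀ n, 0 ≤ f n) (hf : Summable f) :
    Summable fun m : Fin d → ℕ => ∏ i, f (m i) := by
  classical
  refine summable_of_sum_le (c := (∑' n, f n) ^ d) (fun m => Finset.prod_nonneg fun i _ => h0 _)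
    fun F => ?_
  have hsub : F ⊆ Fintype.piFinset fun i => F.image fun m => m i := fun m hm => by
    rw [Fintype.mem_piFinset]; exact fun i => Finset.mem_image_of_mem (fun m => m i) hm
  refine (Finset.sum_le_sum_of_subset_of_nonneg hsub fun m _ _ =>
    Finset.prod_nonneg fun i _ => h0 _).trans ?_
  rw [← Finset.prod_univ_sum (fun i => F.image fun m => m i) (fun _ n => f n)]
  refine (Finset.prod_le_prod (fun i _ => Finset.sum_nonneg fun n _ => h0 n) fun i _ =>
    hf.sum_le_tsum _ fun n _ => h0 n).trans ?_
  simp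

lemma exp_plog (x : ℝ) : Real.exp (plog x) = max x (Real.exp 1) :=
  Real.exp_log (lt_max_of_lt_right (Real.exp_pos 1))

lemma summable_exp_plog {d : ℕ} (hd : 0 < d) {s : ℝ} (hs : d < s) :
    Summable fun m : Fin d → ℕ => Real.exp (-s * plog (tot m)) := by
  have hd' : (0 : ℝ) < d := by exact_mod_cast hd
  have hs0 : 0 < s := hd'.trans hs
  have h1 : Summable fun n : ℕ => ((n : ℝ) + 1) ^ (-(s / d)) := by
    have := (Real.summable_nat_rpow (p := -(s / d))).2 (by
      rw [neg_lt_neg_iff, lt_div_iff₀ hd']; linarith)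
    have h2 := (summable_nat_add_iff 1).2 this
    simpa using h2
  have h2 := (summable_pi_prod (d := d) (fun n => by positivity) h1).mul_left ((2 : ℝ) ^ s)
  refine Summable.of_nonneg_of_le (fun m => (Real.exp_pos _).le) (fun m => ?_) h2
  have e1 : Real.exp (-s * plog (tot m)) = (max (tot m : ℝ) (Real.exp 1)) ^ (-s) := by
    rw [← exp_plog, ← Real.exp_mul]; ring_nf
  have hge : ((tot m : ℝ) + 1) / 2 ≤ max (tot m : ℝ) (Real.exp 1) := by
    have := Real.add_one_le_exp 1
    rcases le_total (tot m : ℝ) 1 with h | h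
    · exact le_max_of_le_right (by linarith)
    · exact le_max_of_le_left (by linarith)
  have hp : (0 : ℝ) < ((tot m : ℝ) + 1) / 2 := by positivity
  rw [e1]
  calc (max (tot m : ℝ) (Real.exp 1)) ^ (-s) ≤ (((tot m : ℝ) + 1) / 2) ^ (-s) :=
        Real.rpow_le_rpow_of_nonpos hp hge (by linarith)
    _ = 2 ^ s * ((tot m : ℝ) + 1) ^ (-s) := by
        rw [Real.div_rpow (by positivity) (by norm_num), Real.rpow_neg (by norm_num : (0:ℝ) ≤ 2)]
        field_simp
    _ = 2 ^ s * ∏ _i : Fin d, ((tot m : ℝ) + 1) ^ (-(s / d)) := by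
        rw [Finset.prod_const, ← Real.rpow_natCast, ← Real.rpow_mul (by positivity)]
        simp only [Finset.card_univ, Fintype.card_fin]
        congr 2; field_simp
    _ ≤ _ := by
        refine mul_le_mul_of_nonneg_left (Finset.prod_le_prod (fun i _ => by positivity)
          fun i _ => ?_) (by positivity)
        refine Real.rpow_le_rpow_of_nonpos (by positivity) ?_ (by
          have : 0 < s / d := by positivity
          linarith)
        have : m i ≤ tot m := Finset.single_le_sum (f := m) (fun _ _ => Nat.zero_le _) (mem_univ i)
        have : (m i : ℝ) ≤ tot m := by exact_mod_cast this
        linarith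

lemma card_tot_le {d : ℕ} (hd : 1 ≤ d) (F : Finset (Fin d → ℕ)) (M : ℕ) :
    #{m ∈ F | tot m = M} ≤ (M + 1) ^ (d - 1) := by
  classical
  obtain ⟨e, rfl⟩ : ∃ e, d = e + 1 := ⟨d - 1, by omega⟩
  have h1 : #(Fintype.piFinset fun _ : Fin e => Finset.range (M + 1)) = (M + 1) ^ (e + 1 - 1) := by
    simp
  rw [← h1]
  refine Finset.card_le_card_of_injOn (fun m => Fin.tail m) (fun m hm => ?_) fun m hm m' hm' e => ?_
  · have hm2 := (Finset.mem_filter.1 hm).2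
    simp only [Fintype.coe_piFinset, Set.mem_pi, Set.mem_univ, true_implies, Finset.coe_range,
      Set.mem_Iio]
    intro i
    have : m i.succ ≤ tot m := Finset.single_le_sum (f := m) (fun _ _ => Nat.zero_le _) (mem_univ _)
    simp only [Fin.tail]
    omega
  · have hm2 := (Finset.mem_filter.1 hm).2
    have hm2' := (Finset.mem_filter.1 hm').2
    simp only [tot, Fin.sum_univ_succ] at hm2 hm2'
    have e' : ∀ i : Fin _, m i.succ = m' i.succ := fun i => congrFun e i
    ext i
    refine Fin.cases ?_ (fun i => e' i) i
    rw [Finset.sum_congr rfl fun i _ => e' i] at hm2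
    omega

/-! ### The moment condition in summed form -/

lemma div_plog_mono {a b : ℝ} (ha : 1 ≤ a) (hab : a ≤ b) : a / plog a ≤ b / plog b := by
  rw [div_le_div_iff₀ (plog_pos _) (plog_pos _)]
  have ha0 : 0 < a := by linarith
  have h1 : plog b ≤ plog a + (b / a - 1) := by
    have hb : max b (Real.exp 1) ≤ max a (Real.exp 1) * (b / a) := by
      have h1 : 1 ≤ b / a := by rwa [le_div_iff₀ ha0, one_mul]
      refine max_le ?_ ?_
      · calc b = a * (b / a) := by field_simp
          _ ≤ _ := by gcongr; exact le_max_left _ _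
      · calc Real.exp 1 ≤ max a (Real.exp 1) := le_max_right _ _
          _ ≤ _ := le_mul_of_one_le_right (by positivity) h1
    have hb0 : 0 < b / a := by have : 0 < b := by linarith
                               positivity
    have := Real.log_le_log (lt_max_of_lt_right (Real.exp_pos 1)) hb
    rw [Real.log_mul (by positivity) hb0.ne'] at this
    have h2 := Real.log_le_sub_one_of_pos hb0
    unfold plog
    linarith
  have h2 : a * plog b ≤ a * plog a + (b - a) := by
    have := mul_le_mul_of_nonneg_left h1 ha0.le
    have e : a * (plog a + (b / a - 1)) = a * plog a + (b - a) := by field_simp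
    linarith
  nlinarith [one_le_plog a]

lemma plog_succ_le (M : ℕ) : plog ((M : ℝ) + 1) ≤ 2 * plog M := by
  unfold plog
  rw [← Nat.cast_ofNat (R := ℝ) (n := 2), ← Real.log_pow]
  refine Real.log_le_log (lt_max_of_lt_right (Real.exp_pos 1)) ?_
  have h1 := le_max_left (M : ℝ) (Real.exp 1)
  have h2 := le_max_right (M : ℝ) (Real.exp 1)
  have h3 := Real.add_one_le_exp 1
  refine max_le ?_ ?_ <;> nlinarith

/-- Pointwise form of the moment condition: the blocks `m` with `2^M log M`, `M = tot m`,
below a multiple of `x²` contribute at most a constant times `x² log^(d-1) |x| / log log |x|`. -/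
lemma sum_two_pow_le {d : ℕ} (hd : 2 ≤ d) {c : ℝ} (hc : 0 < c) (x : ℝ) (F : Finset (Fin d → ℕ)) :
    ∑ m ∈ F, (2 : ℝ) ^ tot m * (if c ^ 2 * (2 ^ tot m * plog (tot m)) < x ^ 2 then 1 else 0) ≤
      4 / c ^ 2 * (5 + 4 * |Real.log c|) ^ (d - 1) *
        (x ^ 2 * plog |x| ^ (d - 1) / plog (plog |x|)) := by
  classical
  have hL := one_le_plog |x|
  have hpp := plog_pos (plog |x|)
  simp only [mul_ite, mul_one, mul_zero]
  rw [← Finset.sum_filter]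
  set F' := {m ∈ F | c ^ 2 * (2 ^ tot m * plog (tot m)) < x ^ 2} with hF'
  rcases F'.eq_empty_or_nonempty with h | h
  · rw [h]; simp; positivity
  obtain ⟨m0, hm0, hmax⟩ := Finset.exists_max_image F' tot h
  set M := tot m0 with hM
  have hcond : c ^ 2 * (2 ^ M * plog M) < x ^ 2 := (Finset.mem_filter.1 hm0).2
  have step1 : ∑ m ∈ F', (2 : ℝ) ^ tot m ≤ ((M : ℝ) + 1) ^ (d - 1) * (2 * 2 ^ M) := by
    rw [← Finset.sum_fiberwise_of_maps_to (t := Finset.range (M + 1)) (g := tot)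
      (fun m hm => by rw [Finset.mem_range]; have := hmax m hm; omega)]
    have : ∀ k ∈ Finset.range (M + 1), ∑ m ∈ F' with tot m = k, (2 : ℝ) ^ tot m ≤
        ((M : ℝ) + 1) ^ (d - 1) * 2 ^ k := by
      intro k hk
      rw [Finset.sum_congr rfl fun m hm => by rw [(Finset.mem_filter.1 hm).2], Finset.sum_const,
        nsmul_eq_mul]
      gcongr
      have h1 := card_tot_le (by omega) F' k
      have h2 : (k + 1) ^ (d - 1) ≤ (M + 1) ^ (d - 1) :=
        Nat.pow_le_pow_left (by have := Finset.mem_range.1 hk; omega) _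
      exact_mod_cast h1.trans h2
    refine (Finset.sum_le_sum this).trans ?_
    rw [← Finset.mul_sum]
    gcongr
    rw [geom_sum_eq (by norm_num)]
    rw [pow_succ]
    norm_num
    linarith
  refine step1.trans ?_
  set L := plog |x|
  set K := 5 + 4 * |Real.log c| with hK
  have hK1 : 1 ≤ K := by have := abs_nonneg (Real.log c); linarith
  have hpM := one_le_plog M
  have h2M : (2 : ℝ) ^ M ≤ x ^ 2 / (c ^ 2 * plog M) := by
    rw [le_div_iff₀ (by positivity)]; linarith
  have hu : (M : ℝ) + 1 ≤ K * L := by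
    have h1 : c ^ 2 * 2 ^ M ≤ x ^ 2 := by
      have : c ^ 2 * 2 ^ M * 1 ≤ c ^ 2 * 2 ^ M * plog M := by gcongr
      linarith
    have hx : 0 < |x| := by
      rw [abs_pos]; rintro rfl
      have : (0 : ℝ) < c ^ 2 * 2 ^ M := by positivity
      simp at h1; linarith
    have h2 := Real.log_le_log (by positivity) h1
    rw [Real.log_mul (by positivity) (by positivity), Real.log_pow, Real.log_pow, ← sq_abs x,
      Real.log_pow] at h2
    have h3 := log_le_plog hx
    have h4 := neg_abs_le (Real.log c)
    have h5 := Real.log_two_gt_d9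
    have h6 : (M : ℝ) * (1 / 2) ≤ M * Real.log 2 := by gcongr; linarith
    have h7 : |Real.log c| ≤ |Real.log c| * L := le_mul_of_one_le_right (abs_nonneg _) hL
    push_cast at h2
    rw [hK]
    nlinarith
  have hmono := div_plog_mono (by linarith [Nat.cast_nonneg (α := ℝ) M] : (1 : ℝ) ≤ (M : ℝ) + 1) hu
  have hKL : plog L ≤ plog (K * L) := plog_mono (le_mul_of_one_le_left (by linarith) hK1)
  have hfrac : ((M : ℝ) + 1) ^ (d - 1) / plog ((M : ℝ) + 1) ≤ K ^ (d - 1) * (L ^ (d - 1) / plog L) := by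
    have e : d - 1 = (d - 2) + 1 := by omega
    rw [e, pow_succ, mul_div_assoc]
    calc ((M : ℝ) + 1) ^ (d - 2) * (((M : ℝ) + 1) / plog ((M : ℝ) + 1))
        ≤ (K * L) ^ (d - 2) * (K * L / plog (K * L)) := by
          gcongr
          exact div_nonneg (by positivity) (plog_pos _).le
      _ ≤ (K * L) ^ (d - 2) * (K * L / plog L) := by
          gcongr
      _ = _ := by rw [pow_succ, pow_succ, mul_pow]; ring
  have hps := plog_succ_le M
  calc ((M : ℝ) + 1) ^ (d - 1) * (2 * 2 ^ M)
      ≤ ((M : ℝ) + 1) ^ (d - 1) * (2 * (x ^ 2 / (c ^ 2 * plog M))) := by gcongr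
    _ ≤ ((M : ℝ) + 1) ^ (d - 1) * (2 * (x ^ 2 / (c ^ 2 * (plog ((M : ℝ) + 1) / 2)))) := by
        have := plog_pos ((M : ℝ) + 1)
        gcongr
        linarith
    _ = 4 / c ^ 2 * x ^ 2 * (((M : ℝ) + 1) ^ (d - 1) / plog ((M : ℝ) + 1)) := by
        have := plog_pos ((M : ℝ) + 1)
        field_simp; ring
    _ ≤ 4 / c ^ 2 * x ^ 2 * (K ^ (d - 1) * (L ^ (d - 1) / plog L)) := by gcongr
    _ = _ := by ring

namespace NAField

variable [IsProbabilityMeasure μ] {d : ℕ} {X : (Fin d → ℕ) → Ω → ℝ} {Υ : (Fin d → ℤ) → ℝ}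

/-- The moment condition in summed form: the expected number of exceedances of the level
`c √(2^M log M)` in a dyadic block with `M = tot m` is summable over the blocks. -/
lemma summable_two_pow (h : NAField μ X Υ) {c : ℝ} (hc : 0 < c) :
    Summable fun m : Fin d → ℕ => (2 : ℝ) ^ tot m *
      μ.real {ω | c ^ 2 * (2 ^ tot m * plog (tot m)) < X 0 ω ^ 2} := by
  refine summable_of_sum_le (c := 4 / c ^ 2 * (5 + 4 * |Real.log c|) ^ (d - 1) *
    ∫ ω, X 0 ω ^ 2 * plog |X 0 ω| ^ (d - 1) / plog (plog |X 0 ω|) ∂μ)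
    (fun m => by positivity) fun F => ?_
  have hms : ∀ m : Fin d → ℕ, MeasurableSet {ω | c ^ 2 * (2 ^ tot m * plog (tot m)) < X 0 ω ^ 2} :=
    fun m => measurableSet_lt measurable_const ((h.meas 0).pow_const 2)
  have e : ∀ m : Fin d → ℕ, (2 : ℝ) ^ tot m *
      μ.real {ω | c ^ 2 * (2 ^ tot m * plog (tot m)) < X 0 ω ^ 2} =
      ∫ ω, (2 : ℝ) ^ tot m * (if c ^ 2 * (2 ^ tot m * plog (tot m)) < X 0 ω ^ 2 then 1 else 0) ∂μ := by
    intro m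
    rw [integral_const_mul, ← integral_indicator_one (hms m)]
    congr 1
  have ii : ∀ m : Fin d → ℕ, Integrable (fun ω => (2 : ℝ) ^ tot m *
      (if c ^ 2 * (2 ^ tot m * plog (tot m)) < X 0 ω ^ 2 then 1 else 0)) μ := fun m =>
    ((integrable_const (1 : ℝ)).indicator (hms m)).const_mul _
  rw [Finset.sum_congr rfl fun m _ => e m, ← integral_finset_sum _ fun m _ => ii m,
    ← integral_const_mul]
  exact integral_mono (integrable_finset_sum _ fun m _ => ii m) (h.mom.const_mul _)
    fun ω => sum_two_pow_le h.hd hc _ F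

end NAField

/-! ### The truncation level and the tails above it -/

/-- The truncation level `2^{M/2} M^{-1/4}` for indices of volume about `2^M`. -/
def tau (M : ℕ) : ℝ := Real.sqrt (2 ^ M) / Real.sqrt (Real.sqrt M)

lemma tau_nonneg (M : ℕ) : 0 ≤ tau M := by unfold tau; positivity

lemma tau_pos {M : ℕ} (hM : 1 ≤ M) : 0 < tau M := by
  have : (0 : ℝ) < M := by exact_mod_cast hM
  unfold tau; positivity

lemma plog_ge_of_tau {M : ℕ} (hM : 1 ≤ M) {x : ℝ} (hx : tau M < x) : (M : ℝ) / 16 ≤ plog x := by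
  have hM0 : (0 : ℝ) < M := by exact_mod_cast hM
  have h1 := Real.log_le_log (tau_pos hM) hx.le
  have h2 := log_le_plog ((tau_pos hM).trans hx)
  unfold tau at h1
  rw [Real.log_div (by positivity) (by positivity), Real.log_sqrt (by positivity), Real.log_pow,
    Real.log_sqrt (by positivity), Real.log_sqrt (by positivity)] at h1
  have h3 := Real.log_le_sub_one_of_pos hM0
  have h4 := Real.log_two_gt_d9
  nlinarith

lemma max_sub_tau_le {M : ℕ} (hM : 1 ≤ M) (x : ℝ) : max (|x| - tau M) 0 ≤
    4 / (Real.sqrt (Real.sqrt M) * Real.sqrt (2 ^ M)) * (x ^ 2 * Real.sqrt (plog |x|)) := by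
  have hM0 : (0 : ℝ) < M := by exact_mod_cast hM
  have hp := one_le_plog |x|
  refine max_le ?_ (by positivity)
  rcases le_or_gt |x| (tau M) with h | h
  · exact le_trans (by linarith) (by positivity : (0:ℝ) ≤ _)
  have h1 := plog_ge_of_tau hM h
  have h2 : Real.sqrt M / 4 ≤ Real.sqrt (plog |x|) := by
    rw [show Real.sqrt M / 4 = Real.sqrt (M / 16) by
      rw [Real.sqrt_div hM0.le, show (16 : ℝ) = 4 ^ 2 by norm_num, Real.sqrt_sq (by norm_num)]]
    exact Real.sqrt_le_sqrt h1
  have ht := tau_pos hM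
  have e : 4 / (Real.sqrt (Real.sqrt M) * Real.sqrt (2 ^ M)) = 4 / (Real.sqrt M * tau M) := by
    unfold tau
    have e1 : Real.sqrt (M : ℝ) = Real.sqrt (Real.sqrt M) * Real.sqrt (Real.sqrt M) :=
      (Real.mul_self_sqrt (by positivity)).symm
    have h3 : 0 < Real.sqrt (Real.sqrt M) := by positivity
    have h4 : (0 : ℝ) < Real.sqrt (2 ^ M) := by positivity
    congr 1
    rw [e1]
    field_simp
    rw [Real.sqrt_sq h3.le]
  rw [e]
  have hs : 0 < Real.sqrt M := by positivity
  have h3 : |x| ≤ x ^ 2 / tau M := by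
    rw [le_div_iff₀ ht, ← sq_abs, pow_two]
    gcongr
  calc |x| - tau M ≤ x ^ 2 / tau M := by linarith
    _ = 4 / (Real.sqrt M * tau M) * (x ^ 2 * (Real.sqrt M / 4)) := by field_simp
    _ ≤ _ := by gcongr

lemma exp_plog_le_sqrt_sqrt {M : ℕ} (hM : 1 ≤ M) :
    Real.exp (plog M / 4) ≤ Real.exp (1 / 4) * Real.sqrt (Real.sqrt M) := by
  have hM0 : (0 : ℝ) < M := by exact_mod_cast hM
  have hM1 : (1 : ℝ) ≤ M := by exact_mod_cast hM
  have h1 : plog M ≤ 1 + Real.log M := by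
    unfold plog
    rcases le_total (M : ℝ) (Real.exp 1) with h | h
    · rw [max_eq_right h, Real.log_exp]; linarith [Real.log_nonneg hM1]
    · rw [max_eq_left h]; linarith
  have h2 : Real.sqrt (Real.sqrt M) = Real.exp (Real.log M / 4) := by
    rw [← Real.exp_log (by positivity : 0 < Real.sqrt (Real.sqrt M)),
      Real.log_sqrt (by positivity), Real.log_sqrt (by positivity)]
    ring_nf
  rw [h2, ← Real.exp_add]
  exact Real.exp_le_exp.2 (by linarith)

namespace NAField

variable [IsProbabilityMeasure μ] {d : ℕ} {X : (Fin d → ℕ) → Ω → ℝ} {Υ : (Fin d → ℤ) → ℝ}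

/-- Four times the moment `E[X² √(log |X|)]`. -/
def KT (μ : Measure Ω) (X : (Fin d → ℕ) → Ω → ℝ) : ℝ :=
  4 * ∫ ω, X 0 ω ^ 2 * Real.sqrt (plog |X 0 ω|) ∂μ

lemma KT_nonneg (X : (Fin d → ℕ) → Ω → ℝ) : 0 ≤ KT μ X :=
  mul_nonneg (by norm_num) (integral_nonneg fun ω => by positivity)

lemma integrable_max (h : NAField μ X Υ) (τ : ℝ) (k) :
    Integrable (fun ω => max (|X k ω| - τ) 0) μ :=
  (((h.integrable k).abs.sub (integrable_const τ)).sup (integrable_const 0))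

lemma mean_max_le (h : NAField μ X Υ) {M : ℕ} (hM : 1 ≤ M) (k) :
    ∫ ω, max (|X k ω| - tau M) 0 ∂μ ≤ KT μ X / (Real.sqrt (Real.sqrt M) * Real.sqrt (2 ^ M)) := by
  rw [h.integral_eq (g := fun x => max (|x| - tau M) 0) (by fun_prop) k]
  refine (integral_mono (h.integrable_max _ 0) (h.integrable_sq_sqrt.const_mul _)
    fun ω => max_sub_tau_le hM _).trans (le_of_eq ?_)
  rw [integral_const_mul, KT]
  ring

lemma abs_cm_le' (h : NAField μ X Υ) {τ : ℝ} (hτ : 0 ≤ τ) :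
    |cm μ X τ| ≤ ∫ ω, max (|X 0 ω| - τ) 0 ∂μ := by
  have e : cm μ X τ = - ∫ ω, (X 0 ω - clip τ (X 0 ω)) ∂μ := by
    rw [integral_sub h.int ((h.memLp_clip hτ 0).integrable (by norm_num)), h.mean, cm]; ring
  rw [e, abs_neg]
  refine (abs_integral_le_integral_abs).trans (le_of_eq ?_)
  congr 1; ext ω; exact abs_sub_clip hτ _

lemma abs_cm_le (h : NAField μ X Υ) {M : ℕ} (hM : 1 ≤ M) :
    |cm μ X (tau M)| ≤ KT μ X / (Real.sqrt (Real.sqrt M) * Real.sqrt (2 ^ M)) :=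
  (h.abs_cm_le' (tau_nonneg M)).trans (h.mean_max_le hM 0)

/-- A crude second-moment bound for the mean above level `τ`. -/
lemma mean_max_le_s2 (h : NAField μ X Υ) {τ : ℝ} (hτ : 0 < τ) (k) :
    ∫ ω, max (|X k ω| - τ) 0 ∂μ ≤ Υ 0 / τ := by
  rw [← h.s2_eq k, ← integral_div]
  refine integral_mono (h.integrable_max _ k) ((h.integrable_sq k).div_const _) fun ω => ?_
  simp only []
  refine max_le ?_ (by positivity)
  rw [le_div_iff₀ hτ, ← sq_abs]
  nlinarith [abs_nonneg (X k ω), sq_nonneg (|X k ω| - τ)]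

/-- The dyadic corner `2^m`. -/
def dy (m : Fin d → ℕ) : Fin d → ℕ := fun i => 2 ^ m i

lemma card_dy (m : Fin d → ℕ) : #(brick 0 (dy m)) = 2 ^ tot m := by
  rw [card_brick0, tot, ← Finset.prod_pow_eq_pow_sum]; rfl

/-- The contribution of the values above `tau` is negligible, with summable probabilities. -/
lemma tail_summable (h : NAField μ X Υ) {ε : ℝ} (hε : 0 < ε) :
    Summable fun m : Fin d → ℕ => μ.real {ω | ε * Real.sqrt (2 ^ tot m * plog (tot m)) ≤
      ∑ k ∈ brick 0 (dy m), max (X k ω - tau (tot m)) 0} := by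
  set c := ε / (8 * (d + 1)) with hc
  have hc0 : 0 < c := by positivity
  set K := KT μ X with hK
  have hK0 : 0 ≤ K := KT_nonneg X
  set C := Real.exp (K * Real.exp (1 / 4) / c) + Real.exp (d + 1) with hC
  have hsum := (h.summable_two_pow hc0).add
    ((summable_exp_plog (d := d) (s := d + 1) (by have := h.hd; omega) (by linarith)).mul_left C)
  refine Summable.of_nonneg_of_le (fun m => measureReal_nonneg) (fun m => ?_) hsum
  set M := tot m with hM
  set ℓ := plog M with hℓ
  have hℓ1 : 1 ≤ ℓ := one_le_plog _
  have hp2 : (0 : ℝ) < 2 ^ M := by positivity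
  rcases Nat.eq_zero_or_pos M with h0 | hM1
  · have e1 : ℓ = 1 := by
      rw [hℓ, h0, plog, Nat.cast_zero, max_eq_right (Real.exp_pos 1).le, Real.log_exp]
    have h2 : (1 : ℝ) ≤ C * Real.exp (-(d + 1) * ℓ) := by
      rw [e1, hC, add_mul, ← Real.exp_add, ← Real.exp_add]
      have : Real.exp ((d : ℝ) + 1 + -(d + 1) * 1) = 1 := by simp
      rw [this]
      linarith [Real.exp_pos (K * Real.exp (1 / 4) / c + -(d + 1) * 1)]
    refine (measureReal_le_one).trans (h2.trans ?_)
    exact le_add_of_nonneg_left (by positivity)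
  set y := c * Real.sqrt (2 ^ M * ℓ) with hy
  have hy0 : 0 < y := by positivity
  set Z : (Fin d → ℕ) → Ω → ℝ := fun k ω => min (max (X k ω - tau M) 0) y with hZ
  have hZna : NegAssocOn μ Z Set.univ := h.na.comp (fun _ x => min (max (x - tau M) 0) y)
    fun _ _ a b hab => min_le_min (max_le_max (by linarith) le_rfl) le_rfl
  have hZm : ∀ k, Measurable (Z k) := fun k =>
    (((h.meas k).sub_const _).max measurable_const).min measurable_const
  have hZb : ∀ k ω, 0 ≤ Z k ω ∧ Z k ω ≤ y := fun k ω =>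
    ⟨le_min (le_max_right _ _) hy0.le, min_le_right _ _⟩
  have hmeanZ : ∀ k, ∫ ω, Z k ω ∂μ ≤ K / (Real.sqrt (Real.sqrt M) * Real.sqrt (2 ^ M)) := fun k => by
    refine le_trans (integral_mono (integrable_of_bdd (C := y) (hZm k) fun ω => by
      rw [abs_of_nonneg (hZb k ω).1]; exact (hZb k ω).2) (h.integrable_max (tau M) k)
      fun ω => ?_) (h.mean_max_le hM1 k)
    exact (min_le_left _ _).trans (max_le_max (by linarith [le_abs_self (X k ω)]) le_rfl)
  have hsub : {ω | ε * Real.sqrt (2 ^ M * ℓ) ≤ ∑ k ∈ brick 0 (dy m), max (X k ω - tau M) 0} ⊆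
      (⋃ k ∈ brick 0 (dy m), {ω | c ^ 2 * (2 ^ M * ℓ) < X k ω ^ 2}) ∪
        {ω | ε * Real.sqrt (2 ^ M * ℓ) ≤ ∑ k ∈ brick 0 (dy m), Z k ω} := by
    intro ω hω
    by_cases hex : ∃ k ∈ brick 0 (dy m), c ^ 2 * (2 ^ M * ℓ) < X k ω ^ 2
    · left; simpa using hex
    · right
      push Not at hex
      have : ∑ k ∈ brick 0 (dy m), Z k ω = ∑ k ∈ brick 0 (dy m), max (X k ω - tau M) 0 := by
        refine Finset.sum_congr rfl fun k hk => min_eq_left (max_le ?_ hy0.le)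
        have h1 : X k ω ≤ y := by
          refine le_of_sq_le_sq ?_ hy0.le
          rw [hy, mul_pow, Real.sq_sqrt (by positivity)]
          exact hex k hk
        linarith [tau_nonneg M]
      simp only [Set.mem_setOf_eq] at hω ⊢
      rw [this]; exact hω
  refine (measureReal_mono hsub).trans ((measureReal_union_le _ _).trans (add_le_add ?_ ?_))
  · refine (measureReal_biUnion_finset_le _ _).trans ?_
    have e : ∀ k, μ.real {ω | c ^ 2 * (2 ^ M * ℓ) < X k ω ^ 2} =
        μ.real {ω | c ^ 2 * (2 ^ M * ℓ) < X 0 ω ^ 2} := fun k => by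
      have := h.prob_eq (s := {x : ℝ | c ^ 2 * (2 ^ M * ℓ) < x ^ 2})
        (measurableSet_lt measurable_const (by fun_prop)) k
      simpa only [Set.mem_setOf_eq] using this
    rw [Finset.sum_congr rfl fun k _ => e k, Finset.sum_const, card_dy, nsmul_eq_mul]
    push_cast
    exact le_rfl
  · set lam := ℓ / (8 * y) with hlam
    have hlam0 : 0 ≤ lam := by positivity
    have ht := hZna.tail_le_nonneg (brick 0 (dy m)) (by simp) (fun k _ => hZm k) hlam0
      (fun k _ => hZb k) (x := ε * Real.sqrt (2 ^ M * ℓ)) _ (fun k _ => hmeanZ k)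
    refine ht.trans ?_
    have hly : lam * y = ℓ / 8 := by rw [hlam]; field_simp
    have e1 : lam * (ε * Real.sqrt (2 ^ M * ℓ)) = (d + 1) * ℓ := by
      have hsq : 0 < Real.sqrt (2 ^ M * ℓ) := by positivity
      rw [hlam, hy, hc]; field_simp
    have e2 : lam * Real.exp (lam * y) * (#(brick 0 (dy m)) *
        (K / (Real.sqrt (Real.sqrt M) * Real.sqrt (2 ^ M)))) ≤ K * Real.exp (1 / 4) / c := by
      rw [hly, card_dy]
      push_cast
      have hs2 : (2 : ℝ) ^ M = Real.sqrt (2 ^ M) * Real.sqrt (2 ^ M) :=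
        (Real.mul_self_sqrt hp2.le).symm
      have hq : 0 < Real.sqrt (Real.sqrt M) := by
        have : (0 : ℝ) < M := by exact_mod_cast hM1
        positivity
      have hs0 : 0 < Real.sqrt (2 ^ M) := by positivity
      have hl0 : 0 < Real.sqrt ℓ := by positivity
      have hl2 : ℓ = Real.sqrt ℓ * Real.sqrt ℓ := (Real.mul_self_sqrt (by linarith)).symm
      have h1 : lam = Real.sqrt ℓ / (8 * c * Real.sqrt (2 ^ M)) := by
        rw [hlam, hy, Real.sqrt_mul hp2.le]
        nth_rw 1 [hl2]
        field_simp
      have h2 := exp_plog_le_sqrt_sqrt hM1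
      have h3 : Real.sqrt ℓ ≤ 8 * Real.exp (ℓ / 8) := by
        have h4 : Real.sqrt ℓ ≤ ℓ := by
          rw [Real.sqrt_le_left (by linarith)]; nlinarith
        linarith [Real.add_one_le_exp (ℓ / 8)]
      have h5 : Real.sqrt ℓ * Real.exp (ℓ / 8) ≤ 8 * (Real.exp (1 / 4) * Real.sqrt (Real.sqrt M)) := by
        calc Real.sqrt ℓ * Real.exp (ℓ / 8) ≤ 8 * Real.exp (ℓ / 8) * Real.exp (ℓ / 8) := by gcongr
          _ = 8 * Real.exp (ℓ / 4) := by rw [mul_assoc, ← Real.exp_add]; ring_nf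
          _ ≤ _ := by gcongr
      have e3 : lam * Real.exp (ℓ / 8) * (2 ^ M * (K / (Real.sqrt (Real.sqrt M) * Real.sqrt (2 ^ M))))
          = (Real.sqrt ℓ * Real.exp (ℓ / 8)) * (K / (8 * c * Real.sqrt (Real.sqrt M))) := by
        rw [h1]
        nth_rw 2 [hs2]
        field_simp
      rw [e3]
      calc _ ≤ (8 * (Real.exp (1 / 4) * Real.sqrt (Real.sqrt M))) *
            (K / (8 * c * Real.sqrt (Real.sqrt M))) := by gcongr
        _ = _ := by field_simp
    calc Real.exp (-lam * (ε * Real.sqrt (2 ^ M * ℓ)) + _)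
        ≤ Real.exp (K * Real.exp (1 / 4) / c + -(d + 1) * ℓ) := Real.exp_le_exp.2 (by linarith)
      _ = Real.exp (K * Real.exp (1 / 4) / c) * Real.exp (-(d + 1) * ℓ) := Real.exp_add _ _
      _ ≤ _ := by
        gcongr
        rw [hC]; linarith [Real.exp_pos ((d : ℝ) + 1)]

end NAField

/-! ### Growth of the logarithmic factors -/

lemma tendsto_plog : Tendsto (fun M : ℕ => plog M) atTop atTop := by
  refine tendsto_atTop_mono' atTop ?_ (Real.tendsto_log_atTop.comp tendsto_natCast_atTop_atTop)
  filter_upwards [eventually_gt_atTop 0] with M hM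
  exact log_le_plog (by exact_mod_cast hM)

lemma tendsto_ratio :
    Tendsto (fun M : ℕ => Real.sqrt (plog M) / Real.sqrt (Real.sqrt M)) atTop (nhds 0) := by
  have h1 : Tendsto (fun M : ℕ => 8 * Real.exp (1 / 4) * Real.exp (-(plog M / 8))) atTop (nhds 0) := by
    have := (Real.tendsto_exp_neg_atTop_nhds_zero.comp
      (tendsto_plog.atTop_div_const (by norm_num : (0:ℝ) < 8))).const_mul (8 * Real.exp (1 / 4))
    simpa using this
  refine squeeze_zero' (Eventually.of_forall fun M => by positivity) ?_ h1
  filter_upwards [eventually_ge_atTop 1] with M hM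
  have hM0 : (0 : ℝ) < M := by exact_mod_cast hM
  set ℓ := plog M
  have hℓ1 : 1 ≤ ℓ := one_le_plog _
  have h2 := exp_plog_le_sqrt_sqrt hM
  have h3 : Real.sqrt ℓ ≤ 8 * Real.exp (ℓ / 8) := by
    have h4 : Real.sqrt ℓ ≤ ℓ := by
      rw [Real.sqrt_le_left (by linarith)]; nlinarith
    linarith [Real.add_one_le_exp (ℓ / 8)]
  rw [div_le_iff₀ (by positivity)]
  calc Real.sqrt ℓ ≤ 8 * Real.exp (ℓ / 8) := h3
    _ = 8 * Real.exp (-(ℓ / 8)) * Real.exp (ℓ / 4) := by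
        rw [mul_assoc, ← Real.exp_add]; ring_nf
    _ ≤ 8 * Real.exp (-(ℓ / 8)) * (Real.exp (1 / 4) * Real.sqrt (Real.sqrt M)) := by gcongr
    _ = _ := by ring

lemma tendsto_tau : Tendsto tau atTop atTop := by
  have h1 : Tendsto (fun M : ℕ => Real.exp ((M : ℝ) / 16)) atTop atTop :=
    Real.tendsto_exp_atTop.comp
      (tendsto_natCast_atTop_atTop.atTop_div_const (by norm_num))
  refine tendsto_atTop_mono' atTop ?_ h1
  filter_upwards [eventually_ge_atTop 1] with M hM
  have hM0 : (0 : ℝ) < M := by exact_mod_cast hM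
  rw [← Real.le_log_iff_exp_le (tau_pos hM)]
  unfold tau
  rw [Real.log_div (by positivity) (by positivity), Real.log_sqrt (by positivity), Real.log_pow,
    Real.log_sqrt (by positivity), Real.log_sqrt (by positivity)]
  have h3 := Real.log_le_sub_one_of_pos hM0
  have h4 := Real.log_two_gt_d9
  nlinarith

/-! ### Cutting a box into equal sub-boxes -/

/-- The `k`-th sub-box of side lengths `L` counted from the corner `a`. -/
def sub {d : ℕ} (L a k : Fin d → ℕ) : Finset (Fin d → ℕ) :=
  brick (fun i => a i + L i * k i) (fun i => a i + L i * k i + L i)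

lemma mem_sub {d : ℕ} {L a k x : Fin d → ℕ} (hL : ∀ i, 0 < L i) :
    x ∈ sub L a k ↔ a ≤ x ∧ ∀ i, (x i - a i) / L i = k i := by
  rw [sub, mem_brick]
  constructor
  · intro h
    refine ⟨fun i => le_trans (Nat.le_add_right _ _) (h i).1, fun i => ?_⟩
    have h0 := h i
    have h01 := h0.1
    have h02 := h0.2
    clear h0
    have h7 : (x i - a i) = L i * k i + (x i - a i - L i * k i) := by omega
    rw [h7, Nat.mul_add_div (hL i), Nat.div_eq_of_lt (by omega), add_zero]
  · rintro ⟨h1, h2⟩ i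
    have h3 := h2 i
    have h4 : a i ≤ x i := h1 i
    have h5 := Nat.div_add_mod (x i - a i) (L i)
    have h6 := Nat.mod_lt (x i - a i) (hL i)
    rw [h3] at h5
    constructor <;> omega

lemma sub_disjoint {d : ℕ} {L a : Fin d → ℕ} (hL : ∀ i, 0 < L i) {k l : Fin d → ℕ} (h : k ≠ l) :
    Disjoint (sub L a k) (sub L a l) := by
  rw [Finset.disjoint_left]
  intro x hx hx'
  rw [mem_sub hL] at hx hx'
  exact h (funext fun i => by rw [← hx.2 i, ← hx'.2 i])

lemma card_sub {d : ℕ} (L a k : Fin d → ℕ) : #(sub L a k) = ∏ i, L i := by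
  rw [sub, card_brick]; simp

lemma sub_subset {d : ℕ} {L a c k : Fin d → ℕ} (hk : k ∈ brick 0 c) :
    sub L a k ⊆ brick a (fun i => a i + L i * c i) := by
  intro x hx
  rw [sub, mem_brick] at hx
  rw [mem_brick] at hk ⊢
  intro i
  have h1 := hx i
  have h2 := hk i
  have h3 : L i * (k i + 1) ≤ L i * c i := Nat.mul_le_mul_left _ h2.2
  rw [mul_add, mul_one] at h3
  exact ⟨by omega, by omega⟩

lemma sum_sub {d : ℕ} {L : Fin d → ℕ} (hL : ∀ i, 0 < L i) (a c : Fin d → ℕ)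
    (f : (Fin d → ℕ) → ℝ) :
    ∑ x ∈ brick a (fun i => a i + L i * c i), f x = ∑ k ∈ brick 0 c, ∑ x ∈ sub L a k, f x := by
  classical
  rw [← Finset.sum_fiberwise_of_maps_to (s := brick a (fun i => a i + L i * c i)) (t := brick 0 c)
    (g := fun x i => (x i - a i) / L i)]
  · refine Finset.sum_congr rfl fun k hk => Finset.sum_congr ?_ fun _ _ => rfl
    ext x
    rw [Finset.mem_filter, mem_sub hL]
    constructor
    · rintro ⟨h1, h2⟩
      exact ⟨fun i => (mem_brick.1 h1 i).1, fun i => congrFun h2 i⟩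
    · intro h
      exact ⟨sub_subset hk ((mem_sub hL).2 h), funext h.2⟩
  · intro x hx
    rw [mem_brick] at hx ⊢
    intro i
    refine ⟨Nat.zero_le _, ?_⟩
    rw [Nat.div_lt_iff_lt_mul (hL i), mul_comm]
    have := hx i
    omega

lemma sub_eq_brick {d : ℕ} (q : ℕ) (k : Fin d → ℕ) : sub (fun _ => q) 0 k =
    brick (fun i => q * k i) (fun i => q * k i + q) := by
  simp [sub]

namespace NAField

variable [IsProbabilityMeasure μ] {d : ℕ} {X : (Fin d → ℕ) → Ω → ℝ} {Υ : (Fin d → ℤ) → ℝ}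

/-- The clipping error tends to zero in `L²`. -/
lemma v2_le (h : NAField μ X Υ) {δ : ℝ} (hδ : 0 < δ) : ∃ τ0 : ℝ, 0 < τ0 ∧ ∀ τ, τ0 ≤ τ → ∀ k,
    ∫ ω, (X k ω - clip τ (X k ω)) ^ 2 ∂μ ≤ δ := by
  set W := ∫ ω, X 0 ω ^ 2 * Real.sqrt (plog |X 0 ω|) ∂μ with hW
  have hW0 : 0 ≤ W := integral_nonneg fun ω => by positivity
  refine ⟨Real.exp ((W / δ) ^ 2 + 1), Real.exp_pos _, fun τ hτ k => ?_⟩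
  have hτ0 : 0 < τ := (Real.exp_pos _).trans_le hτ
  rw [h.integral_eq (g := fun x => (x - clip τ x) ^ 2)
    ((measurable_id.sub (clip_measurable τ)).pow_const 2) k]
  have hs : (0:ℝ) < Real.sqrt ((W / δ) ^ 2 + 1) := by positivity
  have hpt : ∀ x : ℝ, (x - clip τ x) ^ 2 ≤
      (Real.sqrt ((W / δ) ^ 2 + 1))⁻¹ * (x ^ 2 * Real.sqrt (plog |x|)) := by
    intro x
    have hp := plog_pos |x|
    rw [← sq_abs, abs_sub_clip hτ0.le]
    rcases le_or_gt |x| τ with h1 | h1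
    · rw [max_eq_right (by linarith), zero_pow two_ne_zero]
      positivity
    · rw [max_eq_left (by linarith)]
      have h2 : (W / δ) ^ 2 + 1 ≤ plog |x| := by
        have h3 := Real.log_le_log (Real.exp_pos _) (hτ.trans h1.le)
        rw [Real.log_exp] at h3
        exact h3.trans (log_le_plog (hτ0.trans h1))
      have h4 : 1 ≤ (Real.sqrt ((W / δ) ^ 2 + 1))⁻¹ * Real.sqrt (plog |x|) := by
        rw [inv_mul_eq_div, le_div_iff₀ hs, one_mul]
        exact Real.sqrt_le_sqrt h2
      have h5 : (|x| - τ) ^ 2 ≤ x ^ 2 := by rw [← sq_abs x]; gcongr <;> linarith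
      nlinarith [sq_nonneg x]
  have hi : Integrable (fun ω => (X 0 ω - clip τ (X 0 ω)) ^ 2) μ :=
    ((h.memLp 0).sub (h.memLp_clip hτ0.le 0)).integrable_sq
  refine (integral_mono hi (h.integrable_sq_sqrt.const_mul _) fun ω => hpt _).trans ?_
  rw [integral_const_mul, ← hW, inv_mul_eq_div, div_le_iff₀ hs]
  have : W / δ ≤ Real.sqrt ((W / δ) ^ 2 + 1) := by
    refine Real.le_sqrt_of_sq_le (by linarith)
  rw [div_le_iff₀ hδ] at this
  linarith

lemma clip_sq_le (h : NAField μ X Υ) {τ : ℝ} (hτ : 0 ≤ τ) (k) :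
    ∫ ω, (clip τ (X k ω) - cm μ X τ) ^ 2 ∂μ ≤ Υ 0 := by
  have hL := h.memLp_clip hτ k
  have h1 : ∫ ω, (clip τ (X k ω) - cm μ X τ) ^ 2 ∂μ = ∫ ω, clip τ (X k ω) ^ 2 ∂μ - (cm μ X τ) ^ 2 := by
    have h1 := ProbabilityTheory.variance_eq_integral (μ := μ) hL.aestronglyMeasurable.aemeasurable
    have h2 := ProbabilityTheory.variance_eq_sub hL
    rw [h.mean_clip] at h1 h2
    rw [← h1, h2]; rfl
  rw [h1, ← h.s2_eq k]
  have := integral_mono hL.integrable_sq (h.integrable_sq k) fun ω => by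
    simp only []
    rw [← sq_abs, ← sq_abs (X k ω)]
    exact pow_le_pow_left₀ (abs_nonneg _) (abs_clip_le_abs hτ _) 2
  nlinarith [sq_nonneg (cm μ X τ)]

lemma abs_cm_le_tau {τ : ℝ} (hτ : 0 ≤ τ) : |cm μ X τ| ≤ τ := by
  have := norm_integral_le_of_norm_le_const (μ := μ) (f := fun ω => clip τ (X 0 ω)) (C := τ)
    (ae_of_all _ fun ω => abs_clip_le hτ _)
  simpa [cm] using this

lemma abs_clip_sub_le {τ : ℝ} (hτ : 0 ≤ τ) (x : ℝ) : |clip τ x - cm μ X τ| ≤ 2 * τ := by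
  have h1 := abs_clip_le hτ x
  have h2 := abs_cm_le_tau (μ := μ) (X := X) hτ
  have := abs_sub (clip τ x) (cm μ X τ)
  linarith

/-- Centring a square-integrable variable does not increase its second moment. -/
lemma sq_sub_mean_le {Y : Ω → ℝ} (hY : MemLp Y 2 μ) :
    ∫ ω, (Y ω - ∫ ω', Y ω' ∂μ) ^ 2 ∂μ ≤ ∫ ω, Y ω ^ 2 ∂μ := by
  have h1 := ProbabilityTheory.variance_eq_integral (μ := μ) hY.aestronglyMeasurable.aemeasurable
  have h2 := ProbabilityTheory.variance_eq_sub hY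
  rw [← h1, h2]
  have : ∫ ω, (Y ^ 2) ω ∂μ = ∫ ω, Y ω ^ 2 ∂μ := rfl
  rw [this]
  nlinarith [sq_nonneg (∫ ω, Y ω ∂μ)]

/-- Variances of clipped sums over large cubes are at most `q^d (σ² + ε)`. -/
lemma var_clip_le (h : NAField μ X Υ) {ε : ℝ} (hε : 0 < ε) : ∃ l0 : ℕ, 1 ≤ l0 ∧
    ∀ q : ℕ, l0 ≤ q → ∃ τ0 : ℝ, 0 < τ0 ∧ ∀ τ, τ0 ≤ τ → ∀ k,
    ∫ ω, (∑ x ∈ sub (fun _ => q) 0 k, (clip τ (X x ω) - cm μ X τ)) ^ 2 ∂μ ≤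
      (q : ℝ) ^ d * ((∑' j, Υ j) + ε) := by
  obtain ⟨l0, hl0, H⟩ := h.var_le (half_pos hε)
  set sg2 := ∑' j, Υ j with hsg
  have hsg0 : 0 ≤ sg2 := h.tsum_nonneg
  refine ⟨l0, hl0, fun q hq => ?_⟩
  have hq1 : 1 ≤ q := hl0.trans hq
  set Q : ℝ := (q : ℝ) ^ d with hQ
  have hQ0 : 0 < Q := by
    have : (0 : ℝ) < q := by exact_mod_cast hq1
    positivity
  -- `(A)² ≤ (1 + η) B² + (1 + 1/η) (A - B)²`
  set η := ε / (4 * (sg2 + ε)) with hη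
  have hη0 : 0 < η := by positivity
  obtain ⟨τ0, hτ0, Hτ⟩ := h.v2_le (δ := ε / (4 * (1 + 1 / η) * Q)) (by positivity)
  refine ⟨τ0, hτ0, fun τ hτ k => ?_⟩
  have hτ' : 0 ≤ τ := hτ0.le.trans hτ
  set D := sub (fun _ => q) 0 k with hD
  have hcard : (#D : ℝ) = Q := by rw [hD, card_sub]; simp [hQ]
  have hA : MemLp (fun ω => ∑ x ∈ D, clip τ (X x ω)) 2 μ :=
    memLp_finsetSum D fun x _ => h.memLp_clip hτ' x
  have hB : MemLp (fun ω => ∑ x ∈ D, X x ω) 2 μ := memLp_finsetSum D fun x _ => h.memLp x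
  have hE : ∀ x, MemLp (fun ω => X x ω - clip τ (X x ω)) 2 μ := fun x =>
    (h.memLp x).sub (h.memLp_clip hτ' x)
  have hmean : ∫ ω, ∑ x ∈ D, clip τ (X x ω) ∂μ = ∑ x ∈ D, cm μ X τ := by
    rw [integral_finset_sum _ fun x _ => (h.memLp_clip hτ' x).integrable (by norm_num)]
    exact Finset.sum_congr rfl fun x _ => h.mean_clip τ x
  have step1 : ∫ ω, (∑ x ∈ D, (clip τ (X x ω) - cm μ X τ)) ^ 2 ∂μ ≤
      ∫ ω, (∑ x ∈ D, clip τ (X x ω)) ^ 2 ∂μ := by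
    have := sq_sub_mean_le hA
    rw [hmean] at this
    simpa [Finset.sum_sub_distrib] using this
  have step2 : ∫ ω, (∑ x ∈ D, clip τ (X x ω)) ^ 2 ∂μ ≤
      ∫ ω, ((1 + η) * (∑ x ∈ D, X x ω) ^ 2 +
        (1 + 1 / η) * (Q * ∑ x ∈ D, (X x ω - clip τ (X x ω)) ^ 2)) ∂μ := by
    refine integral_mono hA.integrable_sq ((hB.integrable_sq.const_mul _).add
      ((integrable_finset_sum _ fun x _ => (hE x).integrable_sq).const_mul Q |>.const_mul _))
      fun ω => ?_
    simp only []
    set A := ∑ x ∈ D, clip τ (X x ω)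
    set B := ∑ x ∈ D, X x ω
    have hc : (∑ x ∈ D, (X x ω - clip τ (X x ω))) ^ 2 ≤
        Q * ∑ x ∈ D, (X x ω - clip τ (X x ω)) ^ 2 := by
      rw [← hcard]; exact sq_sum_le_card_mul_sum_sq
    rw [Finset.sum_sub_distrib] at hc
    have h1 : A ^ 2 ≤ (1 + η) * B ^ 2 + (1 + 1 / η) * (B - A) ^ 2 := by
      have : (1 + η) * B ^ 2 + (1 + 1 / η) * (B - A) ^ 2 - A ^ 2 =
          1 / η * (η * B + (B - A)) ^ 2 := by field_simp; ring
      have h2 : 0 ≤ 1 / η * (η * B + (B - A)) ^ 2 := by positivity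
      linarith
    have h3 : (1 + 1 / η) * (B - A) ^ 2 ≤
        (1 + 1 / η) * (Q * ∑ x ∈ D, (X x ω - clip τ (X x ω)) ^ 2) :=
      mul_le_mul_of_nonneg_left hc (by positivity)
    linarith
  rw [integral_add (hB.integrable_sq.const_mul _)
    ((integrable_finset_sum _ fun x _ => (hE x).integrable_sq).const_mul Q |>.const_mul _),
    integral_const_mul, integral_const_mul, integral_const_mul,
    integral_finset_sum _ fun x _ => (hE x).integrable_sq] at step2
  have h3 : ∫ ω, (∑ x ∈ D, X x ω) ^ 2 ∂μ ≤ Q * (sg2 + ε / 2) := by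
    have := H _ _ (fun i : Fin d => (Nat.add_le_add_left hq (0 + q * k i) :
      (0 + q * k i) + l0 ≤ (0 + q * k i) + q))
    rw [← hcard]
    exact this
  have h4 : ∑ x ∈ D, ∫ ω, (X x ω - clip τ (X x ω)) ^ 2 ∂μ ≤ Q * (ε / (4 * (1 + 1 / η) * Q)) := by
    rw [← hcard, ← nsmul_eq_mul, ← Finset.sum_const]
    exact Finset.sum_le_sum fun x _ => by rw [hcard]; exact Hτ τ hτ x
  calc _ ≤ _ := step1
    _ ≤ _ := step2
    _ ≤ (1 + η) * (Q * (sg2 + ε / 2)) + (1 + 1 / η) * (Q * (Q * (ε / (4 * (1 + 1 / η) * Q)))) := by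
        gcongr
    _ = Q * (sg2 + ε / 2 + η * (sg2 + ε / 2) + ε / 4) := by field_simp
    _ ≤ Q * (sg2 + ε) := by
        have : η * (sg2 + ε / 2) ≤ ε / 4 := by
          calc η * (sg2 + ε / 2) ≤ η * (sg2 + ε) :=
                mul_le_mul_of_nonneg_left (by linarith) hη0.le
            _ = ε / 4 := by rw [hη]; field_simp
        refine mul_le_mul_of_nonneg_left ?_ hQ0.le
        linarith

end NAField

/-! ### Exponential bounds for the pieces of a dyadic block -/

/-- The lower truncation level `√(2^M) / M²`. -/
def tau2 (M : ℕ) : ℝ := Real.sqrt (2 ^ M) / (M : ℝ) ^ 2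

lemma tau2_pos {M : ℕ} (hM : 1 ≤ M) : 0 < tau2 M := by
  have hM0 : (0 : ℝ) < M := by exact_mod_cast hM
  unfold tau2; positivity

namespace NAField

variable [IsProbabilityMeasure μ] {d : ℕ} {X : (Fin d → ℕ) → Ω → ℝ} {Υ : (Fin d → ℤ) → ℝ}

/-- If `y ≤ min 1 (δ/6)` then the error factor `y e^y` is at most `δ/2`. -/
lemma mul_exp_le {y δ : ℝ} (h0 : 0 ≤ y) (h1 : y ≤ 1) (h2 : y ≤ δ / 6) : y * Real.exp y ≤ δ / 2 := by
  have h3 : Real.exp y ≤ 3 := (Real.exp_le_exp.2 h1).trans (by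
    have := Real.exp_one_lt_d9; linarith)
  have : y * Real.exp y ≤ y * 3 := mul_le_mul_of_nonneg_left h3 h0
  linarith

set_option maxHeartbeats 800000 in
/-- Sums over boxes cut into cubes of side `2^ρ` have the Gaussian exponent of the law of the
iterated logarithm, with a constant exceeding `d`. -/
lemma coarse (h : NAField μ X Υ) {ε : ℝ} (hε : 0 < ε) : ∃ ρ : ℕ, ∃ s : ℝ, d < s ∧
    ∀ᶠ M : ℕ in atTop, ∀ c p : Fin d → ℕ, (∀ i, p i = 2 ^ ρ * c i) →
      (2 : ℝ) ^ M ≤ 4 ^ d * (#(brick 0 p) : ℝ) →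
      μ.real {ω | (Real.sqrt (∑' j, Υ j) + ε) * Real.sqrt (2 * d * (#(brick 0 p) : ℝ) * plog M) ≤
        ∑ x ∈ brick 0 p, (clip (tau M) (X x ω) - cm μ X (tau M))} ≤
      Real.exp (-s * plog M) := by
  set σ := Real.sqrt (∑' j, Υ j) with hσ
  have hσ0 : 0 ≤ σ := Real.sqrt_nonneg _
  have hσ2 : σ ^ 2 = ∑' j, Υ j := Real.sq_sqrt h.tsum_nonneg
  have hd0 : (0 : ℝ) < d := by have := h.hd; exact_mod_cast (by omega : 0 < d)
  set s0 := σ + ε / 2 with hs0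
  have hs0p : 0 < s0 := by positivity
  set δ := ε / 2 / s0 with hδ
  have hδp : 0 < δ := by positivity
  obtain ⟨l0, hl0, H⟩ := h.var_clip_le (ε := ε ^ 2 / 4) (by positivity)
  obtain ⟨τ0, hτ0, Hτ⟩ := H (2 ^ l0) (Nat.lt_two_pow_self).le
  set q : ℕ := 2 ^ l0 with hq
  have hq0 : 0 < q := by positivity
  set K := 2 * (q : ℝ) ^ d * Real.sqrt (2 * d * 4 ^ d) / s0 with hK
  have hK0 : 0 ≤ K := by positivity
  refine ⟨l0, d * (1 + δ), by nlinarith, ?_⟩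
  have hlim : Tendsto (fun M : ℕ => K * (Real.sqrt (plog M) / Real.sqrt (Real.sqrt M))) atTop
      (nhds 0) := by simpa using tendsto_ratio.const_mul K
  filter_upwards [hlim.eventually_lt_const (show (0:ℝ) < min 1 (δ / 6) by positivity),
    tendsto_tau.eventually_ge_atTop τ0, eventually_ge_atTop 1] with M hM1 hM2 hM3 c p hp hcard
  have hM0 : (0 : ℝ) < M := by exact_mod_cast hM3
  set ℓ := plog M with hℓ
  have hℓ1 : 1 ≤ ℓ := one_le_plog _
  set τ := tau M with hτ
  have hτn : 0 ≤ τ := tau_nonneg M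
  set P : ℝ := (#(brick 0 p) : ℝ) with hP
  have hP0 : 0 < P := by
    have : (0:ℝ) < 2 ^ M := by positivity
    have h4 : (0:ℝ) < 4 ^ d := by positivity
    by_contra hh
    push Not at hh
    nlinarith
  have hpp : p = fun i => (0 : Fin d → ℕ) i + (fun _ : Fin d => q) i * c i := by
    funext i; rw [hp i]; simp [hq]
  have hPc : P = (#(brick 0 c) : ℝ) * (q : ℝ) ^ d := by
    rw [hP, card_brick0, card_brick0]
    simp only [hp, Finset.prod_mul_distrib]
    simp [hq]; ring
  have hLq : ∀ i : Fin d, 0 < (fun _ : Fin d => q) i := fun _ => hq0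
  have hNA := (h.na_clip τ (cm μ X τ)).sum_block (T := (Set.univ : Set (Fin d → ℕ)))
    (fun k => sub (fun _ => q) 0 k) (fun _ _ => Set.subset_univ _)
    (fun k _ l _ hkl => sub_disjoint hLq hkl)
  have key := hNA.tail_le (brick 0 c) (Set.subset_univ _)
    (fun k _ => Finset.measurable_sum _ fun x _ =>
      ((clip_measurable τ).comp (h.meas x)).sub_const _)
    (b := (q : ℝ) ^ d * (2 * τ)) (lam := Real.sqrt (2 * d * ℓ / P) / s0)
    (x := (σ + ε) * Real.sqrt (2 * d * P * ℓ)) (by positivity)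
    (fun k _ ω => by
      refine (Finset.abs_sum_le_sum_abs _ _).trans ?_
      refine (Finset.sum_le_sum fun x _ => abs_clip_sub_le (μ := μ) (X := X) hτn (X x ω)).trans ?_
      rw [Finset.sum_const, card_sub]; simp)
    (fun k _ => by
      have him : ∀ x, Integrable (fun ω => clip τ (X x ω) - cm μ X τ) μ := fun x =>
        ((h.memLp_clip hτn x).integrable (by norm_num)).sub (integrable_const _)
      rw [integral_finset_sum _ fun x _ => him x]
      exact Finset.sum_eq_zero fun x _ => h.mean_clip_sub hτn x)
    ((q : ℝ) ^ d * s0 ^ 2) (fun k _ => by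
      refine (Hτ τ hM2 k).trans ?_
      refine mul_le_mul_of_nonneg_left ?_ (by positivity)
      rw [← hσ2]; nlinarith [mul_nonneg hσ0 hε.le])
  have hset : ∀ ω, ∑ x ∈ brick 0 p, (clip τ (X x ω) - cm μ X τ) =
      ∑ k ∈ brick 0 c, ∑ x ∈ sub (fun _ => q) 0 k, (clip τ (X x ω) - cm μ X τ) := fun ω => by
    rw [hpp]; exact sum_sub hLq 0 c _
  simp only [hset]
  refine key.trans (Real.exp_le_exp.2 ?_)
  set lam := Real.sqrt (2 * d * ℓ / P) / s0 with hlam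
  have hl0' : 0 ≤ lam := by positivity
  have e1 : Real.sqrt (2 * d * ℓ / P) * Real.sqrt (2 * d * P * ℓ) = 2 * d * ℓ := by
    rw [← Real.sqrt_mul (by positivity)]
    have : 2 * d * ℓ / P * (2 * d * P * ℓ) = (2 * d * ℓ) ^ 2 := by field_simp
    rw [this, Real.sqrt_sq (by positivity)]
  have e2 : lam * ((σ + ε) * Real.sqrt (2 * d * P * ℓ)) = (1 + δ) * (2 * d * ℓ) := by
    have : lam * ((σ + ε) * Real.sqrt (2 * d * P * ℓ)) = (σ + ε) / s0 *
      (Real.sqrt (2 * d * ℓ / P) * Real.sqrt (2 * d * P * ℓ)) := by rw [hlam]; ring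
    rw [this, e1]
    have : (σ + ε) / s0 = 1 + δ := by rw [hδ]; field_simp; rw [hs0]; ring
    rw [this]
  have e3 : lam ^ 2 * ((#(brick 0 c) : ℝ) * ((q : ℝ) ^ d * s0 ^ 2)) = 2 * d * ℓ := by
    have : (#(brick 0 c) : ℝ) * ((q : ℝ) ^ d * s0 ^ 2) = P * s0 ^ 2 := by rw [hPc]; ring
    rw [this, hlam, div_pow, Real.sq_sqrt (by positivity)]
    field_simp
  have hlb : lam * ((q : ℝ) ^ d * (2 * τ)) ≤
      K * (Real.sqrt ℓ / Real.sqrt (Real.sqrt M)) := by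
    have h1 : Real.sqrt (2 * d * ℓ / P) ≤ Real.sqrt (2 * d * 4 ^ d) * Real.sqrt ℓ / Real.sqrt (2 ^ M) := by
      rw [← Real.sqrt_mul (by positivity), ← Real.sqrt_div (by positivity)]
      apply Real.sqrt_le_sqrt
      rw [div_le_div_iff₀ hP0 (by positivity)]
      have := mul_le_mul_of_nonneg_left hcard (show (0:ℝ) ≤ 2 * d * ℓ by positivity)
      nlinarith
    have hr : (0:ℝ) < Real.sqrt (2 ^ M) := by positivity
    calc lam * ((q : ℝ) ^ d * (2 * τ))
        ≤ (Real.sqrt (2 * d * 4 ^ d) * Real.sqrt ℓ / Real.sqrt (2 ^ M)) / s0 *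
          ((q : ℝ) ^ d * (2 * τ)) := by rw [hlam]; gcongr
      _ = K * (Real.sqrt ℓ / Real.sqrt (Real.sqrt M)) := by
          rw [hK, hτ, tau]; field_simp
  have hlb' := hlb.trans hM1.le
  have e4 := mul_exp_le (δ := δ) (y := lam * ((q : ℝ) ^ d * (2 * τ))) (by positivity)
    (hlb'.trans (min_le_left _ _)) (hlb'.trans (min_le_right _ _))
  set θ := lam * ((q : ℝ) ^ d * (2 * τ)) * Real.exp (lam * ((q : ℝ) ^ d * (2 * τ)))
  have e5 : (1 / 2 + θ) * lam ^ 2 * ((#(brick 0 c) : ℝ) * ((q : ℝ) ^ d * s0 ^ 2)) =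
      (1 / 2 + θ) * (2 * d * ℓ) := by rw [← e3]; ring
  rw [e5, neg_mul, e2]
  nlinarith [mul_le_mul_of_nonneg_right e4 (show (0:ℝ) ≤ 2 * d * ℓ by positivity)]

/-- Sums over sets of small density have arbitrarily good iterated-logarithm exponents. -/
lemma mid (h : NAField μ X Υ) {ε R : ℝ} (hε : 0 < ε) (hR : 0 < R) : ∃ η : ℝ, 0 < η ∧
    ∀ᶠ M : ℕ in atTop, ∀ D : Finset (Fin d → ℕ), (#D : ℝ) ≤ η * 2 ^ M →
      μ.real {ω | ε * Real.sqrt (2 ^ M * plog M) ≤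
        ∑ x ∈ D, (clip (tau M) (X x ω) - cm μ X (tau M))} ≤ Real.exp (-R * plog M) := by
  have hs2 := h.s2_nonneg
  set κ := 2 * R / ε with hκ
  have hκ0 : 0 < κ := by positivity
  refine ⟨R / (κ ^ 2 * (Υ 0 + 1)), by positivity, ?_⟩
  have hlim : Tendsto (fun M : ℕ => 2 * κ * (Real.sqrt (plog M) / Real.sqrt (Real.sqrt M))) atTop
      (nhds 0) := by simpa using tendsto_ratio.const_mul (2 * κ)
  filter_upwards [hlim.eventually_lt_const (show (0:ℝ) < min 1 (1 / 6) by norm_num),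
    eventually_ge_atTop 1] with M hM1 hM3 D hD
  have hM0 : (0 : ℝ) < M := by exact_mod_cast hM3
  set ℓ := plog M with hℓ
  have hℓ1 : 1 ≤ ℓ := one_le_plog _
  set τ := tau M with hτ
  have hτn : 0 ≤ τ := tau_nonneg M
  have hr : (0:ℝ) < Real.sqrt (2 ^ M) := by positivity
  have key := (h.na_clip τ (cm μ X τ)).tail_le D (Set.subset_univ _)
    (fun x _ => ((clip_measurable τ).comp (h.meas x)).sub_const _)
    (b := 2 * τ) (lam := κ * Real.sqrt ℓ / Real.sqrt (2 ^ M))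
    (x := ε * Real.sqrt (2 ^ M * ℓ)) (by positivity)
    (fun x _ ω => abs_clip_sub_le (μ := μ) (X := X) hτn (X x ω))
    (fun x _ => h.mean_clip_sub hτn x) (Υ 0 + 1)
    (fun x _ => (h.clip_sq_le hτn x).trans (by linarith))
  refine key.trans (Real.exp_le_exp.2 ?_)
  set lam := κ * Real.sqrt ℓ / Real.sqrt (2 ^ M) with hlam
  have hl0' : 0 ≤ lam := by positivity
  have e2 : lam * (ε * Real.sqrt (2 ^ M * ℓ)) = 2 * R * ℓ := by
    rw [Real.sqrt_mul (by positivity), hlam]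
    have : κ * Real.sqrt ℓ / Real.sqrt (2 ^ M) * (ε * (Real.sqrt (2 ^ M) * Real.sqrt ℓ)) =
      κ * ε * (Real.sqrt ℓ * Real.sqrt ℓ) := by field_simp
    rw [this, Real.mul_self_sqrt (by positivity), hκ]; field_simp
  have e3 : lam ^ 2 * ((#D : ℝ) * (Υ 0 + 1)) ≤ R * ℓ := by
    have hs : lam ^ 2 = κ ^ 2 * ℓ / 2 ^ M := by
      rw [hlam, div_pow, mul_pow, Real.sq_sqrt (by positivity), Real.sq_sqrt (by positivity)]
    calc lam ^ 2 * ((#D : ℝ) * (Υ 0 + 1)) ≤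
        lam ^ 2 * ((R / (κ ^ 2 * (Υ 0 + 1)) * 2 ^ M) * (Υ 0 + 1)) := by gcongr
      _ = R * ℓ := by rw [hs]; field_simp
  have hlb : lam * (2 * τ) = 2 * κ * (Real.sqrt ℓ / Real.sqrt (Real.sqrt M)) := by
    rw [hlam, hτ, tau]; field_simp
  rw [← hlb] at hM1
  have e4 := mul_exp_le (δ := 1) (y := lam * (2 * τ)) (by positivity)
    (hM1.le.trans (min_le_left _ _)) (hM1.le.trans (min_le_right _ _))
  set θ := lam * (2 * τ) * Real.exp (lam * (2 * τ))
  have h5 : 0 ≤ lam ^ 2 * ((#D : ℝ) * (Υ 0 + 1)) := by positivity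
  have e5 : (1 / 2 + θ) * lam ^ 2 * ((#D : ℝ) * (Υ 0 + 1)) =
      (1 / 2 + θ) * (lam ^ 2 * ((#D : ℝ) * (Υ 0 + 1))) := by ring
  rw [e5, neg_mul, e2]
  nlinarith [mul_le_mul_of_nonneg_right e4 h5]

/-- Sums of strongly clipped variables over sets of density `O(M⁻⁴)`; the bound beats the number
`2^M` of such sets that are needed. -/
lemma fine (h : NAField μ X Υ) {ε : ℝ} (hε : 0 < ε) : ∃ C : ℝ,
    ∀ M : ℕ, 1 ≤ M → ∀ D : Finset (Fin d → ℕ), (#D : ℝ) * M ^ 4 ≤ d * 2 ^ M →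
      μ.real {ω | ε * Real.sqrt (2 ^ M * plog M) ≤
        ∑ x ∈ D, (clip (tau2 M) (X x ω) - cm μ X (tau2 M))} ≤
      Real.exp (-ε * M ^ 2 + C) := by
  have hs2 := h.s2_nonneg
  refine ⟨(1 / 2 + 2 * Real.exp 2) * (d * Υ 0), fun M hM D hD => ?_⟩
  have hM0 : (0 : ℝ) < M := by exact_mod_cast hM
  have hℓ1 : 1 ≤ plog M := one_le_plog _
  set τ := tau2 M with hτ
  have hτn : 0 ≤ τ := (tau2_pos hM).le
  have hr : (0:ℝ) < Real.sqrt (2 ^ M) := by positivity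
  have key := (h.na_clip τ (cm μ X τ)).tail_le D (Set.subset_univ _)
    (fun x _ => ((clip_measurable τ).comp (h.meas x)).sub_const _)
    (b := 2 * τ) (lam := (M : ℝ) ^ 2 / Real.sqrt (2 ^ M))
    (x := ε * Real.sqrt (2 ^ M * plog M)) (by positivity)
    (fun x _ ω => abs_clip_sub_le (μ := μ) (X := X) hτn (X x ω))
    (fun x _ => h.mean_clip_sub hτn x) (Υ 0)
    (fun x _ => h.clip_sq_le hτn x)
  refine key.trans (Real.exp_le_exp.2 ?_)
  set lam := (M : ℝ) ^ 2 / Real.sqrt (2 ^ M) with hlam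
  have hlb : lam * (2 * τ) = 2 := by rw [hlam, hτ, tau2]; field_simp
  have e2 : ε * (M : ℝ) ^ 2 ≤ lam * (ε * Real.sqrt (2 ^ M * plog M)) := by
    rw [Real.sqrt_mul (by positivity), hlam]
    have : (M : ℝ) ^ 2 / Real.sqrt (2 ^ M) * (ε * (Real.sqrt (2 ^ M) * Real.sqrt (plog M))) =
      ε * M ^ 2 * Real.sqrt (plog M) := by field_simp
    rw [this]
    exact le_mul_of_one_le_right (by positivity) (Real.one_le_sqrt.2 hℓ1)
  have e3 : lam ^ 2 * ((#D : ℝ) * Υ 0) ≤ d * Υ 0 := by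
    have hs : lam ^ 2 = M ^ 4 / 2 ^ M := by
      rw [hlam, div_pow, Real.sq_sqrt (by positivity)]; ring
    rw [hs, div_mul_eq_mul_div, div_le_iff₀ (by positivity)]
    nlinarith [mul_le_mul_of_nonneg_right hD hs2]
  rw [hlb, mul_assoc, neg_mul, neg_mul]
  have := mul_le_mul_of_nonneg_left e3 (show 0 ≤ 1 / 2 + 2 * Real.exp 2 by positivity)
  linarith

/-- Sums of intermediate overshoots over sets of density `O(M⁻⁴)`. -/
lemma overshoot (h : NAField μ X Υ) {ε : ℝ} (hε : 0 < ε) : ∃ C : ℝ,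
    ∀ M : ℕ, 1 ≤ M → ∀ D : Finset (Fin d → ℕ), (#D : ℝ) * M ^ 4 ≤ d * 2 ^ M →
      μ.real {ω | ε * Real.sqrt (2 ^ M * plog M) ≤
        ∑ x ∈ D, min (max (X x ω - tau2 M) 0) (tau M)} ≤
      Real.exp (-ε * Real.sqrt (Real.sqrt M) + C) := by
  have hs2 := h.s2_nonneg
  refine ⟨Real.exp 1 * (d * Υ 0), fun M hM D hD => ?_⟩
  have hM0 : (0 : ℝ) < M := by exact_mod_cast hM
  have hM1 : (1 : ℝ) ≤ M := by exact_mod_cast hM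
  have hℓ1 : 1 ≤ plog M := one_le_plog _
  have hτ2 := tau2_pos hM
  have hτ := tau_pos hM
  have hr : (0:ℝ) < Real.sqrt (2 ^ M) := by positivity
  have hNA := h.na.comp (fun _ x => min (max (x - tau2 M) 0) (tau M))
    (fun _ _ x y hxy => min_le_min (max_le_max (by linarith) le_rfl) le_rfl)
  have hmz : ∀ x, Measurable fun ω => min (max (X x ω - tau2 M) 0) (tau M) := fun x =>
    (((h.meas x).sub_const _).max measurable_const).min measurable_const
  have hbz : ∀ x ω, 0 ≤ min (max (X x ω - tau2 M) 0) (tau M) ∧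
    min (max (X x ω - tau2 M) 0) (tau M) ≤ tau M := fun x ω =>
      ⟨le_min (le_max_right _ _) hτ.le, min_le_right _ _⟩
  have key := hNA.tail_le_nonneg D (Set.subset_univ _) (fun x _ => hmz x)
    (b := tau M) (lam := 1 / tau M)
    (x := ε * Real.sqrt (2 ^ M * plog M)) (by positivity) (fun x _ ω => hbz x ω) (Υ 0 / tau2 M)
    (fun x _ => by
      refine le_trans ?_ (h.mean_max_le_s2 hτ2 x)
      refine integral_mono (integrable_of_bdd (hmz x) fun ω => by
        rw [abs_of_nonneg (hbz x ω).1]; exact (hbz x ω).2) (h.integrable_max _ x) fun ω => ?_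
      exact (min_le_left _ _).trans (max_le_max (by linarith [le_abs_self (X x ω)]) le_rfl))
  refine key.trans (Real.exp_le_exp.2 ?_)
  have hlb : 1 / tau M * tau M = 1 := by field_simp
  have e1 : 1 / tau M = Real.sqrt (Real.sqrt M) / Real.sqrt (2 ^ M) := by
    rw [tau, one_div_div]
  have hss : (0:ℝ) < Real.sqrt (Real.sqrt M) := by positivity
  have e2 : ε * Real.sqrt (Real.sqrt M) ≤ 1 / tau M * (ε * Real.sqrt (2 ^ M * plog M)) := by
    rw [Real.sqrt_mul (by positivity), e1]
    have : Real.sqrt (Real.sqrt M) / Real.sqrt (2 ^ M) *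
        (ε * (Real.sqrt (2 ^ M) * Real.sqrt (plog M))) =
      ε * Real.sqrt (Real.sqrt M) * Real.sqrt (plog M) := by field_simp
    rw [this]
    exact le_mul_of_one_le_right (by positivity) (Real.one_le_sqrt.2 hℓ1)
  have hss1 : Real.sqrt (Real.sqrt M) ≤ (M : ℝ) ^ 2 := by
    have h1 : Real.sqrt M ≤ M := by rw [Real.sqrt_le_left hM0.le]; nlinarith
    calc Real.sqrt (Real.sqrt M) ≤ Real.sqrt M := Real.sqrt_le_sqrt h1
      _ ≤ M := h1
      _ ≤ (M : ℝ) ^ 2 := by nlinarith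
  have e3 : 1 / tau M * ((#D : ℝ) * (Υ 0 / tau2 M)) ≤ d * Υ 0 := by
    have hs : 1 / tau M * ((#D : ℝ) * (Υ 0 / tau2 M)) =
        Real.sqrt (Real.sqrt M) * M ^ 2 * #D * Υ 0 / (Real.sqrt (2 ^ M)) ^ 2 := by
      rw [e1, tau2]; field_simp
    rw [hs, Real.sq_sqrt (by positivity), div_le_iff₀ (by positivity)]
    calc Real.sqrt (Real.sqrt M) * M ^ 2 * #D * Υ 0 ≤ M ^ 2 * M ^ 2 * #D * Υ 0 := by gcongr
      _ = (#D * M ^ 4) * Υ 0 := by ring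
      _ ≤ d * 2 ^ M * Υ 0 := by gcongr
      _ = _ := by ring
  rw [hlb, neg_mul, neg_mul]
  have := mul_le_mul_of_nonneg_left e3 (Real.exp_pos 1).le
  nlinarith

end NAField

/-! ### Rounding corners to dyadic grids -/

/-- The corner `n`, rounded down to the grid of mesh `2^(m - c)` inside the dyadic box `2^m`. -/
def rd {d : ℕ} (c : ℕ) (m n : Fin d → ℕ) : Fin d → ℕ :=
  fun i => 2 ^ (m i - c) * (n i / 2 ^ (m i - c))

/-- The points of the dyadic box lying in a layer of thickness `2^(mᵢ - c)` above `pᵢ` in some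
direction `i`. -/
def shell {d : ℕ} (c : ℕ) (m p : Fin d → ℕ) : Finset (Fin d → ℕ) :=
  {x ∈ brick 0 (NAField.dy m) | ∃ i, c ≤ m i ∧ p i ≤ x i ∧ x i < p i + 2 ^ (m i - c)}

/-- The possible values of `rd c m`. -/
def grid {d : ℕ} (c : ℕ) (m : Fin d → ℕ) : Finset (Fin d → ℕ) :=
  (brick 0 (fun _ : Fin d => 2 ^ c + 1)).image fun j i => 2 ^ (m i - c) * j i

lemma card_grid {d : ℕ} (c : ℕ) (m : Fin d → ℕ) : #(grid c m) ≤ (2 ^ c + 1) ^ d := by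
  refine card_image_le.trans ?_
  rw [card_brick0]; simp

lemma rd_le {d : ℕ} (c : ℕ) (m n : Fin d → ℕ) : rd c m n ≤ n := fun i => Nat.mul_div_le _ _

lemma rd_mem_grid {d : ℕ} (c : ℕ) {m n : Fin d → ℕ} (hn : n ≤ NAField.dy m) :
    rd c m n ∈ grid c m := by
  refine Finset.mem_image.2 ⟨fun i => n i / 2 ^ (m i - c), ?_, rfl⟩
  rw [mem_brick]
  refine fun i => ⟨Nat.zero_le _, ?_⟩
  rw [Nat.lt_succ_iff]
  refine Nat.div_le_of_le_mul ?_
  rw [← pow_add]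
  exact (hn i).trans (Nat.pow_le_pow_right (by norm_num) (by omega))

/-- Multiples of the mesh below `n` are below the rounded corner. -/
lemma le_rd {d : ℕ} {c : ℕ} {m n : Fin d → ℕ} {i : Fin d} {t : ℕ} (ht : 2 ^ (m i - c) ∣ t)
    (htn : t ≤ n i) : t ≤ rd c m n i := by
  obtain ⟨u, rfl⟩ := ht
  exact Nat.mul_le_mul_left _ ((Nat.le_div_iff_mul_le (by positivity)).2 (by rwa [mul_comm]))

lemma rd_mono {d : ℕ} {a c : ℕ} (hac : a ≤ c) (m n : Fin d → ℕ) : rd a m n ≤ rd c m n := fun i =>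
  le_rd (Dvd.dvd.mul_right (pow_dvd_pow 2 (by omega)) _) (rd_le a m n i)

lemma brick_subset {d : ℕ} {a p n : Fin d → ℕ} (h : p ≤ n) : brick a p ⊆ brick a n := fun x hx => by
  rw [mem_brick] at hx ⊢
  exact fun i => ⟨(hx i).1, (hx i).2.trans_le (h i)⟩

lemma sdiff_subset_shell {d : ℕ} (c : ℕ) {m n : Fin d → ℕ} (hn : n ≤ NAField.dy m) :
    brick 0 n \ brick 0 (rd c m n) ⊆ shell c m (rd c m n) := by
  intro x hx
  rw [Finset.mem_sdiff] at hx
  refine Finset.mem_filter.2 ⟨brick_subset hn hx.1, ?_⟩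
  have h1 := hx.2
  have h2 := mem_brick.1 hx.1
  rw [mem_brick] at h1
  push Not at h1
  obtain ⟨i, hi⟩ := h1
  have hi' := hi (Nat.zero_le _)
  have hlt : n i < rd c m n i + 2 ^ (m i - c) := by
    have := Nat.lt_mul_div_succ (n i) (show 0 < 2 ^ (m i - c) by positivity)
    unfold rd
    rw [mul_add, mul_one] at this
    exact this
  refine ⟨i, ?_, hi', (h2 i).2.trans hlt⟩
  by_contra hc
  have h0 : m i - c = 0 := by omega
  have : rd c m n i = n i := by simp [rd, h0]
  have := (h2 i).2
  omega

lemma card_shell {d : ℕ} (c : ℕ) (m p : Fin d → ℕ) : #(shell c m p) * 2 ^ c ≤ d * 2 ^ tot m := by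
  classical
  have h1 : shell c m p ⊆ (univ.filter fun i => c ≤ m i).biUnion fun i =>
      {x ∈ brick 0 (NAField.dy m) | p i ≤ x i ∧ x i < p i + 2 ^ (m i - c)} := by
    intro x hx
    obtain ⟨hx1, i, hi1, hi2⟩ := Finset.mem_filter.1 hx
    exact Finset.mem_biUnion.2 ⟨i, by simpa using hi1, Finset.mem_filter.2 ⟨hx1, hi2⟩⟩
  have h2 : ∀ i, c ≤ m i →
      #{x ∈ brick 0 (NAField.dy m) | p i ≤ x i ∧ x i < p i + 2 ^ (m i - c)} * 2 ^ c ≤ 2 ^ tot m := by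
    intro i hi
    have h3 := card_brick_filter 0 (NAField.dy m) i (fun t => p i ≤ t ∧ t < p i + 2 ^ (m i - c))
    rw [NAField.card_dy] at h3
    have h4 : #{k ∈ Ico ((0 : Fin d → ℕ) i) (NAField.dy m i) | p i ≤ k ∧ k < p i + 2 ^ (m i - c)} ≤
        2 ^ (m i - c) := by
      refine (card_le_card (t := Ico (p i) (p i + 2 ^ (m i - c))) fun k hk => ?_).trans (by simp)
      simp only [Finset.mem_filter, Finset.mem_Ico] at hk ⊢
      exact hk.2
    have h5 : NAField.dy m i - (0 : Fin d → ℕ) i = 2 ^ c * 2 ^ (m i - c) := by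
      rw [← pow_add, Nat.add_sub_cancel' hi]; simp [NAField.dy]
    rw [h5, ← mul_assoc] at h3
    refine Nat.le_of_mul_le_mul_right (c := 2 ^ (m i - c)) ?_ (by positivity)
    rw [h3, mul_comm (2 ^ tot m)]
    exact Nat.mul_le_mul_right _ h4
  calc #(shell c m p) * 2 ^ c ≤ (∑ i ∈ univ.filter fun i => c ≤ m i,
      #{x ∈ brick 0 (NAField.dy m) | p i ≤ x i ∧ x i < p i + 2 ^ (m i - c)}) * 2 ^ c :=
        Nat.mul_le_mul_right _ ((card_le_card h1).trans card_biUnion_le)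
    _ = ∑ i ∈ univ.filter fun i => c ≤ m i,
      #{x ∈ brick 0 (NAField.dy m) | p i ≤ x i ∧ x i < p i + 2 ^ (m i - c)} * 2 ^ c := sum_mul _ _ _
    _ ≤ ∑ i ∈ univ.filter fun i => c ≤ m i, 2 ^ tot m :=
        sum_le_sum fun i hi => h2 i (by simpa using hi)
    _ ≤ ∑ i : Fin d, 2 ^ tot m := sum_le_sum_of_subset (filter_subset _ _)
    _ = d * 2 ^ tot m := by simp

/-! ### Further growth estimates -/

lemma sqrt_sqrt_ge (K : ℝ) : ∀ᶠ M : ℕ in atTop, K * plog M ≤ Real.sqrt (Real.sqrt M) := by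
  have h1 : Tendsto (fun x : ℝ => Real.exp x / x ^ 1) atTop atTop :=
    Real.tendsto_exp_div_pow_atTop 1
  have h2 := (h1.comp (tendsto_plog.atTop_div_const (by norm_num : (0:ℝ) < 4))).eventually_ge_atTop
    (4 * K * Real.exp (1 / 4))
  filter_upwards [h2, eventually_ge_atTop 1] with M hM hM1
  have h3 := exp_plog_le_sqrt_sqrt hM1
  have hp := plog_pos M
  simp only [Function.comp, pow_one] at hM
  rw [le_div_iff₀ (by positivity)] at hM
  have h4 : Real.exp (1 / 4) * (K * plog M) ≤ Real.exp (1 / 4) * Real.sqrt (Real.sqrt M) := by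
    refine le_trans ?_ h3
    refine le_trans (le_of_eq ?_) hM
    ring
  exact le_of_mul_le_mul_left h4 (Real.exp_pos _)

lemma le_exp_plog {M : ℕ} : (M : ℝ) ≤ Real.exp (plog M) := by
  rw [exp_plog]; exact le_max_left _ _

/-- `log M` is asymptotically at most `log log N` when `N ≥ 2^(M-d)`. -/
lemma plog_le_plog_plog (d : ℕ) {ε : ℝ} (hε : 0 < ε) : ∀ᶠ M : ℕ in atTop, ∀ N : ℝ,
    (2 : ℝ) ^ M ≤ 2 ^ d * N → plog M ≤ (1 + ε) * plog (plog N) := by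
  filter_upwards [tendsto_plog.eventually_ge_atTop ((1 + ε) / ε * Real.log 2),
    eventually_ge_atTop (4 * d + 3)] with M h1 h2 N hN
  have hM0 : (0 : ℝ) < M := by exact_mod_cast (by omega : 0 < M)
  have hM3 : (3 : ℝ) ≤ M := by exact_mod_cast (by omega : 3 ≤ M)
  have hM4 : (4 : ℝ) * d + 3 ≤ M := by exact_mod_cast h2
  have hN0 : 0 < N := by
    have h1 : (0:ℝ) < 2 ^ M := by positivity
    have h2 : (0:ℝ) < 2 ^ d := by positivity
    by_contra hh
    push Not at hh
    nlinarith
  have e1 : plog M = Real.log M := by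
    unfold plog
    rw [max_eq_left]
    have := Real.exp_one_lt_d9
    linarith
  have h3 : (M : ℝ) * Real.log 2 ≤ d * Real.log 2 + Real.log N := by
    have := Real.log_le_log (by positivity) hN
    rwa [Real.log_mul (by positivity) hN0.ne', Real.log_pow, Real.log_pow] at this
  have h4 := Real.log_two_gt_d9
  have h5 : (M : ℝ) / 2 ≤ plog N := by
    refine le_trans ?_ (log_le_plog hN0)
    nlinarith
  have h6 : Real.log M - Real.log 2 ≤ plog (plog N) := by
    rw [← Real.log_div hM0.ne' (by norm_num)]
    exact (Real.log_le_log (by positivity) h5).trans (log_le_plog (plog_pos _))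
  rw [← e1] at h6
  have h7 : (1 + ε) * Real.log 2 ≤ ε * plog M := by
    rw [div_mul_eq_mul_div, div_le_iff₀ hε] at h1
    linarith
  nlinarith

lemma le_three_parts {x a b : ℝ} (ha : 0 ≤ a) (hb : 0 ≤ b) :
    x ≤ clip a x + min (max (x - a) 0) b + max (x - b) 0 := by
  simp only [clip]
  rcases le_total x a with h1 | h1
  · rw [min_eq_left h1, max_eq_right (show x - a ≤ 0 by linarith)]
    rw [min_eq_left hb]
    linarith [le_max_right (-a) x, le_max_right (x - b) 0]
  · rw [min_eq_right h1, max_eq_left (show 0 ≤ x - a by linarith), max_eq_right (by linarith)]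
    rcases le_total (x - a) b with h2 | h2
    · rw [min_eq_left h2]; linarith [le_max_right (x - b) 0]
    · rw [min_eq_right h2]; linarith [le_max_left (x - b) 0]

/-! ### The upper half of the law of the iterated logarithm -/

namespace NAField

variable [IsProbabilityMeasure μ] {d : ℕ} {X : (Fin d → ℕ) → Ω → ℝ} {Υ : (Fin d → ℤ) → ℝ}

/-- Decomposition of a partial sum along two grids: a coarse box, an intermediate layer, and a thin
layer, together with overshoots and centring errors. -/
lemma decomp {a c : ℕ} (hac : a ≤ c) {m n : Fin d → ℕ} (hn : n ≤ dy m) (x : (Fin d → ℕ) → ℝ)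
    {τ τ' e e' : ℝ} (hτ : 0 ≤ τ) (hτ' : 0 ≤ τ') :
    ∑ k ∈ brick 0 n, x k ≤ ∑ k ∈ brick 0 (rd a m n), (clip τ (x k) - e) +
      ∑ k ∈ shell a m (rd a m n) ∩ (brick 0 (rd c m n) \ brick 0 (rd a m n)), (clip τ (x k) - e) +
      ∑ k ∈ shell c m (rd c m n) ∩ (brick 0 n \ brick 0 (rd c m n)), (clip τ' (x k) - e') +
      ∑ k ∈ shell c m (rd c m n), min (max (x k - τ') 0) τ +
      ∑ k ∈ brick 0 (dy m), max (x k - τ) 0 +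
      2 ^ tot m * |e| + #(shell c m (rd c m n)) * |e'| := by
  classical
  set p0 := rd a m n with hp0
  set p1 := rd c m n with hp1
  have s01 : brick 0 p0 ⊆ brick 0 p1 := brick_subset (rd_mono hac m n)
  have s1n : brick 0 p1 ⊆ brick 0 n := brick_subset (rd_le c m n)
  have snm : brick 0 n ⊆ brick 0 (dy m) := brick_subset hn
  have hD1 : shell a m p0 ∩ (brick 0 p1 \ brick 0 p0) = brick 0 p1 \ brick 0 p0 :=
    Finset.inter_eq_right.2 ((Finset.sdiff_subset_sdiff s1n le_rfl).trans (sdiff_subset_shell a hn))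
  have hD2 : shell c m p1 ∩ (brick 0 n \ brick 0 p1) = brick 0 n \ brick 0 p1 :=
    Finset.inter_eq_right.2 (sdiff_subset_shell c hn)
  rw [hD1, hD2]
  set D2 := brick 0 n \ brick 0 p1 with hD2'
  have e0 : ∑ k ∈ brick 0 n, x k = ∑ k ∈ D2, x k + ∑ k ∈ brick 0 p1, x k :=
    (Finset.sum_sdiff s1n).symm
  have e1 : ∑ k ∈ brick 0 p1 \ brick 0 p0, (clip τ (x k) - e) +
      ∑ k ∈ brick 0 p0, (clip τ (x k) - e) = ∑ k ∈ brick 0 p1, (clip τ (x k) - e) :=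
    Finset.sum_sdiff s01
  have e2 : ∑ k ∈ D2, max (x k - τ) 0 + ∑ k ∈ brick 0 p1, max (x k - τ) 0 =
      ∑ k ∈ brick 0 n, max (x k - τ) 0 := Finset.sum_sdiff s1n
  have e3 : ∑ k ∈ brick 0 n, max (x k - τ) 0 ≤ ∑ k ∈ brick 0 (dy m), max (x k - τ) 0 :=
    Finset.sum_le_sum_of_subset_of_nonneg snm fun _ _ _ => le_max_right _ _
  have e4 : ∑ k ∈ D2, min (max (x k - τ') 0) τ ≤ ∑ k ∈ shell c m p1, min (max (x k - τ') 0) τ :=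
    Finset.sum_le_sum_of_subset_of_nonneg (sdiff_subset_shell c hn)
      fun _ _ _ => le_min (le_max_right _ _) hτ
  have e5 : ∑ k ∈ brick 0 p1, x k ≤ ∑ k ∈ brick 0 p1, (clip τ (x k) - e) +
      ∑ k ∈ brick 0 p1, max (x k - τ) 0 + 2 ^ tot m * |e| := by
    have h1 : ∑ k ∈ brick 0 p1, x k ≤
        ∑ k ∈ brick 0 p1, ((clip τ (x k) - e) + max (x k - τ) 0 + |e|) :=
      Finset.sum_le_sum fun k _ => by
        have := le_clip_add (τ := τ) (x k)
        have := le_abs_self e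
        linarith
    rw [Finset.sum_add_distrib, Finset.sum_add_distrib, Finset.sum_const, nsmul_eq_mul] at h1
    have h2 : (#(brick 0 p1) : ℝ) ≤ 2 ^ tot m := by
      have := card_le_card (s1n.trans snm)
      rw [card_dy] at this
      exact_mod_cast this
    have := mul_le_mul_of_nonneg_right h2 (abs_nonneg e)
    linarith
  have e6 : ∑ k ∈ D2, x k ≤ ∑ k ∈ D2, (clip τ' (x k) - e') + ∑ k ∈ D2, min (max (x k - τ') 0) τ +
      ∑ k ∈ D2, max (x k - τ) 0 + #(shell c m p1) * |e'| := by
    have h1 : ∑ k ∈ D2, x k ≤ ∑ k ∈ D2, ((clip τ' (x k) - e') + min (max (x k - τ') 0) τ +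
        max (x k - τ) 0 + |e'|) :=
      Finset.sum_le_sum fun k _ => by
        have := le_three_parts (x := x k) hτ' hτ
        have := le_abs_self e'
        linarith
    rw [Finset.sum_add_distrib, Finset.sum_add_distrib, Finset.sum_add_distrib, Finset.sum_const,
      nsmul_eq_mul] at h1
    have h2 : (#D2 : ℝ) ≤ #(shell c m p1) := by
      exact_mod_cast card_le_card (sdiff_subset_shell c hn)
    have := mul_le_mul_of_nonneg_right h2 (abs_nonneg e')
    linarith
  linarith

/-- The level of the fine grid: `M⁴ ≤ 2^(fineLevel M) ≤ 16 M⁴` for `M ≥ 1`. -/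
def fineLevel (M : ℕ) : ℕ := 4 * Nat.clog 2 M

lemma le_two_pow_fineLevel (M : ℕ) : M ^ 4 ≤ 2 ^ fineLevel M := by
  rw [fineLevel, mul_comm, pow_mul]
  exact Nat.pow_le_pow_left (Nat.le_pow_clog (by norm_num) M) 4

lemma two_pow_fineLevel_le {M : ℕ} (hM : 1 ≤ M) : 2 ^ fineLevel M ≤ 16 * M ^ 4 := by
  have h1 : 2 ^ Nat.clog 2 M ≤ 2 * M := by
    rcases Nat.lt_or_ge 1 M with h | h
    · have h2 := Nat.pow_pred_clog_lt_self (b := 2) (by norm_num) h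
      have h3 : 0 < Nat.clog 2 M := Nat.clog_pos (by norm_num) h
      obtain ⟨t, ht⟩ : ∃ t, Nat.clog 2 M = t + 1 := ⟨Nat.clog 2 M - 1, by omega⟩
      rw [ht] at h2 ⊢
      simp only [Nat.pred_succ] at h2
      rw [pow_succ]; omega
    · have : M = 1 := by omega
      subst this; simp
  rw [fineLevel, mul_comm, pow_mul]
  calc (2 ^ Nat.clog 2 M) ^ 4 ≤ (2 * M) ^ 4 := Nat.pow_le_pow_left h1 4
    _ = 16 * M ^ 4 := by ring

lemma tendsto_fineLevel : Tendsto fineLevel atTop atTop := by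
  refine tendsto_atTop_mono (f := fun M => Nat.clog 2 M) (fun M => by unfold fineLevel; omega) ?_
  refine tendsto_atTop.2 fun b => ?_
  filter_upwards [eventually_ge_atTop (2 ^ b)] with M hM
  calc b = Nat.clog 2 (2 ^ b) := (Nat.clog_pow 2 b (by norm_num)).symm
    _ ≤ Nat.clog 2 M := Nat.clog_mono_right 2 hM

lemma tot_ge (hd : 2 ≤ d) {K : ℕ} {m : Fin d → ℕ} (hm : ∀ i, K ≤ m i) : K ≤ tot m := by
  have i0 : Fin d := ⟨0, by omega⟩
  exact (hm i0).trans (Finset.single_le_sum (f := m) (fun _ _ => Nat.zero_le _) (mem_univ i0))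

set_option maxHeartbeats 1600000 in
/-- The probability that some partial sum with corner in the dyadic block of `m` is too large is
summable over `m`. -/
lemma block_bound (h : NAField μ X Υ) {ε : ℝ} (hε : 0 < ε) : ∃ K0 : ℕ, ∃ g : (Fin d → ℕ) → ℝ,
    Summable g ∧ ∀ m : Fin d → ℕ, (∀ i, K0 ≤ m i) →
    μ.real {ω | ∃ n, n ≤ dy m ∧ (∀ i, dy m i < 2 * n i) ∧
      (Real.sqrt (∑' j, Υ j) + ε) * Real.sqrt (2 * d * (#(brick 0 n) : ℝ) * plog (tot m)) +
        6 * ε * Real.sqrt (2 ^ tot m * plog (tot m)) < ∑ k ∈ brick 0 n, X k ω} ≤ g m := by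
  classical
  have hd := h.hd
  have hd0 : (0 : ℝ) < d := by exact_mod_cast (by omega : 0 < d)
  set σ := Real.sqrt (∑' j, Υ j) with hσ
  have hσ0 : 0 ≤ σ := Real.sqrt_nonneg _
  obtain ⟨ρ, s, hs, Hc⟩ := h.coarse hε
  obtain ⟨η, hη, Hm⟩ := h.mid (R := 5 * d + 1) hε (by positivity)
  obtain ⟨C3, H3⟩ := h.fine hε
  obtain ⟨C4, H4⟩ := h.overshoot hε
  obtain ⟨a, ha2, ha⟩ : ∃ a : ℕ, 2 ≤ a ∧ (d : ℝ) ≤ η * 2 ^ a := by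
    obtain ⟨t, ht⟩ := exists_nat_ge (d / η)
    refine ⟨t + 2, by omega, ?_⟩
    rw [div_le_iff₀ hη] at ht
    have : (t : ℝ) ≤ 2 ^ (t + 2) := by
      exact_mod_cast ((Nat.lt_two_pow_self).le.trans (Nat.pow_le_pow_right (by norm_num)
        (by omega : t ≤ t + 2)))
    nlinarith
  have hlim1 := (tendsto_natCast_atTop_atTop (R := ℝ)).eventually_ge_atTop ((d + 2) / ε)
  have hss : Tendsto (fun M : ℕ => Real.sqrt (Real.sqrt M)) atTop atTop :=
    Real.tendsto_sqrt_atTop.comp (Real.tendsto_sqrt_atTop.comp tendsto_natCast_atTop_atTop)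
  have hall := Hc.and <| Hm.and <| (tendsto_fineLevel.eventually_ge_atTop a).and <|
    (sqrt_sqrt_ge ((5 * d + 1) / ε)).and <| hlim1.and <|
    (hss.eventually_ge_atTop (KT μ X / ε)).and <|
    ((tendsto_natCast_atTop_atTop (R := ℝ)).eventually_ge_atTop (d * Υ 0 / ε))
  obtain ⟨K1, hK1⟩ := eventually_atTop.1 hall
  set B1 : ℝ := (2 ^ a + 1) ^ d with hB1
  set B2 : ℝ := (2 ^ a + 1) ^ d * 17 ^ d + 2 ^ d * Real.exp C3 + 17 ^ d * Real.exp C4 with hB2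
  refine ⟨K1 + a + ρ + 1, fun m => μ.real {ω | ε * Real.sqrt (2 ^ tot m * plog (tot m)) ≤
      ∑ k ∈ brick 0 (dy m), max (X k ω - tau (tot m)) 0} +
      B1 * Real.exp (-s * plog (tot m)) + B2 * Real.exp (-(d + 1) * plog (tot m)), ?_, ?_⟩
  · refine ((h.tail_summable hε).add ((summable_exp_plog (by omega) hs).mul_left _)).add ?_
    exact (summable_exp_plog (s := d + 1) (by omega) (by linarith)).mul_left _
  intro m hm
  have hM := tot_ge hd hm
  set M := tot m with hMdef
  obtain ⟨Ec, Em, ea, ess, eM, eKT, es2⟩ := hK1 M (by omega)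
  have hM1 : 1 ≤ M := by omega
  have hM0 : (0 : ℝ) < M := by exact_mod_cast hM1
  have hM1' : (1 : ℝ) ≤ M := by exact_mod_cast hM1
  set ℓ := plog M with hℓ
  have hℓ1 : 1 ≤ ℓ := one_le_plog _
  have hℓM : ℓ ≤ M := plog_le_self hM1'
  set c := fineLevel M with hc
  set T := Real.sqrt (2 ^ M * ℓ) with hT
  have hcM : (M : ℝ) ^ 4 ≤ 2 ^ c := by exact_mod_cast le_two_pow_fineLevel M
  have hcM' : (2 : ℝ) ^ c + 1 ≤ 17 * M ^ 4 := by
    have h1 : (2 : ℝ) ^ c ≤ 16 * M ^ 4 := by exact_mod_cast two_pow_fineLevel_le hM1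
    have : (1 : ℝ) ≤ M ^ 4 := one_le_pow₀ hM1'
    linarith
  have hM4d : ((2 : ℝ) ^ c + 1) ^ d ≤ 17 ^ d * Real.exp (4 * d * ℓ) := by
    calc ((2 : ℝ) ^ c + 1) ^ d ≤ (17 * M ^ 4) ^ d := by gcongr
      _ = 17 ^ d * (M : ℝ) ^ (4 * d) := by rw [mul_pow, ← pow_mul]
      _ ≤ 17 ^ d * (Real.exp ℓ) ^ (4 * d) := by gcongr; exact le_exp_plog
      _ = _ := by rw [← Real.exp_nat_mul]; push_cast; ring_nf
  have hsh : ∀ p : Fin d → ℕ, (#(shell c m p) : ℝ) * M ^ 4 ≤ d * 2 ^ M := fun p => by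
    have h1 : (#(shell c m p) : ℝ) * 2 ^ c ≤ d * 2 ^ M := by exact_mod_cast card_shell c m p
    exact (mul_le_mul_of_nonneg_left hcM (by positivity)).trans h1
  have hsha : ∀ p : Fin d → ℕ, (#(shell a m p) : ℝ) ≤ η * 2 ^ M := fun p => by
    have h1 : (#(shell a m p) : ℝ) * 2 ^ a ≤ d * 2 ^ M := by exact_mod_cast card_shell a m p
    have h2 : (d : ℝ) * 2 ^ M ≤ η * 2 ^ a * 2 ^ M := by gcongr
    have h3 : (0 : ℝ) < 2 ^ a := by positivity
    exact le_of_mul_le_mul_right (h1.trans (h2.trans (le_of_eq (by ring)))) h3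
  -- the exceptional events
  set e := cm μ X (tau M) with he
  set e' := cm μ X (tau2 M) with he'
  set E0 : Set Ω := {ω | ε * T ≤ ∑ k ∈ brick 0 (dy m), max (X k ω - tau M) 0} with hE0
  set E1 : (Fin d → ℕ) → Set Ω := fun p => {ω | (σ + ε) *
    Real.sqrt (2 * d * (#(brick 0 p) : ℝ) * ℓ) ≤ ∑ k ∈ brick 0 p, (clip (tau M) (X k ω) - e)} with hE1
  set E2 : (Fin d → ℕ) × (Fin d → ℕ) → Set Ω := fun p => {ω | ε * T ≤
    ∑ k ∈ shell a m p.1 ∩ (brick 0 p.2 \ brick 0 p.1), (clip (tau M) (X k ω) - e)} with hE2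
  set E3 : (Fin d → ℕ) → Set Ω := fun n => {ω | ε * T ≤
    ∑ k ∈ shell c m (rd c m n) ∩ (brick 0 n \ brick 0 (rd c m n)), (clip (tau2 M) (X k ω) - e')}
    with hE3
  set E4 : (Fin d → ℕ) → Set Ω := fun p => {ω | ε * T ≤
    ∑ k ∈ shell c m p, min (max (X k ω - tau2 M) 0) (tau M)} with hE4
  set G1 := (grid a m).filter fun p => (∃ c' : Fin d → ℕ, ∀ i, p i = 2 ^ ρ * c' i) ∧
    (2 : ℝ) ^ M ≤ 4 ^ d * (#(brick 0 p) : ℝ) with hG1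
  set G3 := brick 0 (fun i => dy m i + 1) with hG3
  set V : Set Ω := E0 ∪ (⋃ p ∈ G1, E1 p) ∪ (⋃ p ∈ grid a m ×ˢ grid c m, E2 p) ∪
    (⋃ n ∈ G3, E3 n) ∪ ⋃ p ∈ grid c m, E4 p with hV
  have hsub : {ω | ∃ n, n ≤ dy m ∧ (∀ i, dy m i < 2 * n i) ∧
      (σ + ε) * Real.sqrt (2 * d * (#(brick 0 n) : ℝ) * ℓ) + 6 * ε * T <
        ∑ k ∈ brick 0 n, X k ω} ⊆ V := by
    rintro ω ⟨n, hn, hn2, hbig⟩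
    by_contra hω
    simp only [hV, Set.mem_union, Set.mem_iUnion, not_or, not_exists] at hω
    obtain ⟨⟨⟨⟨n0, n1⟩, n2⟩, n3⟩, n4⟩ := hω
    have hmi : ∀ i, a + ρ ≤ m i := fun i => by have := hm i; omega
    have i1 : rd a m n ∈ G1 := by
      refine Finset.mem_filter.2 ⟨rd_mem_grid a hn, ⟨fun i => 2 ^ (m i - a - ρ) *
        (n i / 2 ^ (m i - a)), fun i => ?_⟩, ?_⟩
      · rw [← mul_assoc, ← pow_add]
        have : ρ + (m i - a - ρ) = m i - a := by have := hmi i; omega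
        rw [this]; rfl
      · have h1 : ∀ i, 2 ^ m i ≤ 4 * rd a m n i := fun i => by
          have h3 : 2 ^ (m i - 2) * 4 = 2 ^ m i := by
            rw [show (4:ℕ) = 2 ^ 2 by norm_num, ← pow_add]
            congr 1; have := hmi i; omega
          have h2 : 2 ^ (m i - 2) ≤ rd a m n i := by
            refine le_rd (pow_dvd_pow 2 (by omega)) ?_
            have : 2 ^ m i < 2 * n i := hn2 i
            omega
          omega
        have h2 : 2 ^ M ≤ 4 ^ d * #(brick 0 (rd a m n)) := by
          rw [card_brick0, hMdef, tot, ← Finset.prod_pow_eq_pow_sum]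
          calc ∏ i, 2 ^ m i ≤ ∏ i, (4 * rd a m n i) := Finset.prod_le_prod' fun i _ => h1 i
            _ = _ := by rw [Finset.prod_mul_distrib]; simp
        exact_mod_cast h2
    have j1 := n1 _ i1
    have j2 := n2 (rd a m n, rd c m n) (Finset.mem_product.2 ⟨rd_mem_grid a hn, rd_mem_grid c hn⟩)
    have j3 := n3 n (mem_brick.2 fun i => ⟨Nat.zero_le _, Nat.lt_succ_of_le (hn i)⟩)
    have j4 := n4 _ (rd_mem_grid c hn)
    simp only [hE0, hE1, hE2, hE3, hE4, Set.mem_setOf_eq, not_le] at n0 j1 j2 j3 j4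
    have hdec := decomp (a := a) (c := c) ea hn (fun k => X k ω) (τ := tau M) (τ' := tau2 M)
      (e := e) (e' := e') (tau_nonneg M) (tau2_pos hM1).le
    have k1 : (σ + ε) * Real.sqrt (2 * d * (#(brick 0 (rd a m n)) : ℝ) * ℓ) ≤
        (σ + ε) * Real.sqrt (2 * d * (#(brick 0 n) : ℝ) * ℓ) := by
      gcongr
      exact brick_subset (rd_le a m n)
    have hr : (0:ℝ) < Real.sqrt (2 ^ M) := by positivity
    have hrT : Real.sqrt (2 ^ M) ≤ T := by
      apply Real.sqrt_le_sqrt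
      exact le_mul_of_one_le_right (by positivity) hℓ1
    have hr2 : Real.sqrt (2 ^ M) * Real.sqrt (2 ^ M) = 2 ^ M := Real.mul_self_sqrt (by positivity)
    have k2 : 2 ^ M * |e| ≤ ε * T := by
      have h1 := h.abs_cm_le hM1
      have h4 : (0:ℝ) < Real.sqrt (Real.sqrt M) := by positivity
      calc 2 ^ M * |e| ≤ 2 ^ M * (KT μ X / (Real.sqrt (Real.sqrt M) * Real.sqrt (2 ^ M))) := by gcongr
        _ = KT μ X / Real.sqrt (Real.sqrt M) * Real.sqrt (2 ^ M) := by
            rw [← mul_div_assoc]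
            nth_rw 1 [← hr2]
            field_simp
        _ ≤ ε * Real.sqrt (2 ^ M) := by
            gcongr
            rw [div_le_iff₀ h4]
            rw [div_le_iff₀ hε] at eKT
            linarith
        _ ≤ ε * T := by gcongr
    have k3 : (#(shell c m (rd c m n)) : ℝ) * |e'| ≤ ε * T := by
      have h1 : |e'| ≤ Υ 0 / tau2 M := (h.abs_cm_le' (tau2_pos hM1).le).trans
        (h.mean_max_le_s2 (tau2_pos hM1) 0)
      have h2 := hsh (rd c m n)
      have hs2 := h.s2_nonneg
      set S : ℝ := (#(shell c m (rd c m n)) : ℝ)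
      have h3 : S ≤ d * 2 ^ M / M ^ 4 := by rwa [le_div_iff₀ (by positivity)]
      calc S * |e'| ≤ (d * 2 ^ M / M ^ 4) * (Υ 0 / tau2 M) := by gcongr
        _ = d * Υ 0 / M ^ 2 * Real.sqrt (2 ^ M) := by
            rw [tau2]
            nth_rw 1 [← hr2]
            field_simp
        _ ≤ ε * Real.sqrt (2 ^ M) := by
            gcongr
            rw [div_le_iff₀ (by positivity)]
            rw [div_le_iff₀ hε] at es2
            have hM1' : (1 : ℝ) ≤ M := by exact_mod_cast hM1
            have hM2' : (M : ℝ) ≤ M ^ 2 := by nlinarith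
            calc (d : ℝ) * Υ 0 ≤ M * ε := es2
              _ ≤ M ^ 2 * ε := by gcongr
              _ = ε * M ^ 2 := by ring
        _ ≤ ε * T := by gcongr
    linarith
  refine (measureReal_mono hsub).trans ?_
  have u1 : μ.real (⋃ p ∈ G1, E1 p) ≤ B1 * Real.exp (-s * ℓ) := by
    refine (measureReal_biUnion_finset_le _ _).trans ?_
    refine (Finset.sum_le_sum (g := fun _ => Real.exp (-s * ℓ)) fun p hp => ?_).trans ?_
    · obtain ⟨-, ⟨c', hc'⟩, h2⟩ := Finset.mem_filter.1 hp
      exact Ec c' p hc' h2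
    · rw [Finset.sum_const, nsmul_eq_mul]
      gcongr
      have h1 : #G1 ≤ (2 ^ a + 1) ^ d :=
        (card_le_card (Finset.filter_subset _ _)).trans (card_grid a m)
      rw [hB1]; exact_mod_cast h1
  have u2 : μ.real (⋃ p ∈ grid a m ×ˢ grid c m, E2 p) ≤
      (2 ^ a + 1) ^ d * 17 ^ d * Real.exp (-(d + 1) * ℓ) := by
    refine (measureReal_biUnion_finset_le _ _).trans ?_
    refine (Finset.sum_le_sum (g := fun _ => Real.exp (-(5 * d + 1) * ℓ)) fun p hp => ?_).trans ?_
    · refine Em _ (le_trans ?_ (hsha p.1))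
      exact_mod_cast card_le_card Finset.inter_subset_left
    · rw [Finset.sum_const, nsmul_eq_mul, card_product]
      have h1 : (#(grid a m) : ℝ) ≤ (2 ^ a + 1) ^ d := by exact_mod_cast card_grid a m
      have h2 : (#(grid c m) : ℝ) ≤ (2 ^ c + 1) ^ d := by exact_mod_cast card_grid c m
      push_cast
      calc (#(grid a m) : ℝ) * #(grid c m) * Real.exp (-(5 * d + 1) * ℓ)
          ≤ (2 ^ a + 1) ^ d * (17 ^ d * Real.exp (4 * d * ℓ)) * Real.exp (-(5 * d + 1) * ℓ) := by
            gcongr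
            exact h2.trans hM4d
        _ = (2 ^ a + 1) ^ d * 17 ^ d * (Real.exp (4 * d * ℓ) * Real.exp (-(5 * d + 1) * ℓ)) := by ring
        _ = _ := by rw [← Real.exp_add]; congr 2; ring
  have u3 : μ.real (⋃ n ∈ G3, E3 n) ≤ 2 ^ d * Real.exp C3 * Real.exp (-(d + 1) * ℓ) := by
    refine (measureReal_biUnion_finset_le _ _).trans ?_
    refine (Finset.sum_le_sum (g := fun _ => Real.exp (-ε * M ^ 2 + C3)) fun p hp => ?_).trans ?_
    · refine H3 M hM1 _ (le_trans ?_ (hsh (rd c m p)))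
      gcongr
      exact Finset.inter_subset_left
    · rw [Finset.sum_const, nsmul_eq_mul]
      have h1 : (#G3 : ℝ) ≤ 2 ^ d * Real.exp M := by
        have h2 : #G3 ≤ 2 ^ d * 2 ^ M := by
          rw [hG3, card_brick0, hMdef, tot, ← Finset.prod_pow_eq_pow_sum]
          calc ∏ i, (dy m i + 1) ≤ ∏ i, (2 * 2 ^ m i) := Finset.prod_le_prod' fun i _ => by
                have : 1 ≤ 2 ^ m i := Nat.one_le_two_pow
                simp only [dy]; omega
            _ = _ := by rw [Finset.prod_mul_distrib]; simp
        have h3 : (#G3 : ℝ) ≤ 2 ^ d * 2 ^ M := by exact_mod_cast h2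
        have h4 : (2 : ℝ) ^ M ≤ Real.exp M := by
          rw [← Real.exp_one_pow]
          gcongr
          have := Real.exp_one_gt_d9; linarith
        exact h3.trans (by gcongr)
      have h5 : (M : ℝ) + (-ε * M ^ 2 + C3) ≤ C3 + (-(d + 1) * ℓ) := by
        rw [div_le_iff₀ hε] at eM
        nlinarith
      calc (#G3 : ℝ) * Real.exp (-ε * M ^ 2 + C3) ≤
          2 ^ d * Real.exp M * Real.exp (-ε * M ^ 2 + C3) := by gcongr
        _ = 2 ^ d * Real.exp (M + (-ε * M ^ 2 + C3)) := by rw [mul_assoc, ← Real.exp_add]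
        _ ≤ 2 ^ d * Real.exp (C3 + (-(d + 1) * ℓ)) := by gcongr
        _ = _ := by rw [mul_assoc, ← Real.exp_add]
  have u4 : μ.real (⋃ p ∈ grid c m, E4 p) ≤ 17 ^ d * Real.exp C4 * Real.exp (-(d + 1) * ℓ) := by
    refine (measureReal_biUnion_finset_le _ _).trans ?_
    refine (Finset.sum_le_sum (g := fun _ => Real.exp (-ε * Real.sqrt (Real.sqrt M) + C4))
      fun p hp => H4 M hM1 _ (hsh p)).trans ?_
    rw [Finset.sum_const, nsmul_eq_mul]
    have h2 : (#(grid c m) : ℝ) ≤ (2 ^ c + 1) ^ d := by exact_mod_cast card_grid c m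
    have h5 : 4 * d * ℓ + (-ε * Real.sqrt (Real.sqrt M) + C4) ≤ C4 + (-(d + 1) * ℓ) := by
      rw [div_mul_eq_mul_div, div_le_iff₀ hε] at ess
      nlinarith
    calc (#(grid c m) : ℝ) * Real.exp (-ε * Real.sqrt (Real.sqrt M) + C4) ≤
          17 ^ d * Real.exp (4 * d * ℓ) * Real.exp (-ε * Real.sqrt (Real.sqrt M) + C4) := by
          gcongr
          exact h2.trans hM4d
      _ = 17 ^ d * Real.exp (4 * d * ℓ + (-ε * Real.sqrt (Real.sqrt M) + C4)) := by
          rw [mul_assoc, ← Real.exp_add]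
      _ ≤ 17 ^ d * Real.exp (C4 + (-(d + 1) * ℓ)) := by gcongr
      _ = _ := by rw [mul_assoc, ← Real.exp_add]
  have hun : μ.real V ≤ μ.real E0 + μ.real (⋃ p ∈ G1, E1 p) +
      μ.real (⋃ p ∈ grid a m ×ˢ grid c m, E2 p) + μ.real (⋃ n ∈ G3, E3 n) +
      μ.real (⋃ p ∈ grid c m, E4 p) := by
    rw [hV]
    refine (measureReal_union_le _ _).trans (add_le_add ?_ le_rfl)
    refine (measureReal_union_le _ _).trans (add_le_add ?_ le_rfl)
    refine (measureReal_union_le _ _).trans (add_le_add ?_ le_rfl)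
    exact measureReal_union_le _ _
  refine hun.trans ?_
  have : B2 * Real.exp (-(d + 1) * ℓ) = (2 ^ a + 1) ^ d * 17 ^ d * Real.exp (-(d + 1) * ℓ) +
    2 ^ d * Real.exp C3 * Real.exp (-(d + 1) * ℓ) + 17 ^ d * Real.exp C4 * Real.exp (-(d + 1) * ℓ) := by
    rw [hB2]; ring
  simp only []
  rw [this]
  linarith

/-- The normalising sequence `√(2 d |n| log log |n|)`. -/
def nrm (n : Fin d → ℕ) : ℝ :=
  Real.sqrt (2 * d * (∏ i, (n i : ℝ)) * plog (plog (∏ i, (n i : ℝ))))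

/-- Upper half of the law of the iterated logarithm. -/
lemma upper (h : NAField μ X Υ) {ε' : ℝ} (hε' : 0 < ε') :
    ∀ᵐ ω ∂μ, ∀ᶠ n : Fin d → ℕ in atTop,
      ∑ k ∈ brick 0 n, X k ω ≤ (Real.sqrt (∑' j, Υ j) + ε') * nrm n := by
  classical
  have hd := h.hd
  have hd0 : (1 : ℝ) ≤ d := by exact_mod_cast (by omega : 1 ≤ d)
  set σ := Real.sqrt (∑' j, Υ j) with hσ
  have hσ0 : 0 ≤ σ := Real.sqrt_nonneg _
  set W : ℝ := σ + 2 + 12 * 2 ^ d with hW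
  have hW0 : 0 < W := by positivity
  set ε : ℝ := min 1 (ε' / W) with hεd
  have hε : 0 < ε := lt_min one_pos (by positivity)
  have hε1 : ε ≤ 1 := min_le_left _ _
  have hεW : ε * W ≤ ε' := by
    have : ε ≤ ε' / W := min_le_right _ _
    rwa [le_div_iff₀ hW0] at this
  obtain ⟨K0, g, hg, hB⟩ := h.block_bound hε
  set bad : (Fin d → ℕ) → Set Ω := fun m => {ω | (∀ i, K0 ≤ m i) ∧
    ∃ n, n ≤ dy m ∧ (∀ i, dy m i < 2 * n i) ∧
      (σ + ε) * Real.sqrt (2 * d * (#(brick 0 n) : ℝ) * plog (tot m)) +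
        6 * ε * Real.sqrt (2 ^ tot m * plog (tot m)) < ∑ k ∈ brick 0 n, X k ω} with hbad
  have hsum : ∑' m, μ (bad m) ≠ ⊤ := by
    have hle : ∀ m, μ (bad m) ≤ ENNReal.ofReal |g m| := by
      intro m
      rw [← ofReal_measureReal (measure_ne_top _ _)]
      refine ENNReal.ofReal_le_ofReal ?_
      by_cases hm : ∀ i, K0 ≤ m i
      · refine le_trans (measureReal_mono ?_) ((hB m hm).trans (le_abs_self _))
        exact fun ω hω => hω.2
      · have : bad m = ∅ := by
          ext ω; simp only [hbad, Set.mem_setOf_eq, Set.mem_empty_iff_false, iff_false]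
          exact fun hh => hm hh.1
        rw [this]; simp
    refine ne_top_of_le_ne_top ?_ (ENNReal.tsum_le_tsum hle)
    rw [← ENNReal.ofReal_tsum_of_nonneg (fun m => abs_nonneg _) hg.abs]
    exact ENNReal.ofReal_ne_top
  obtain ⟨M0, hM0⟩ := eventually_atTop.1 (plog_le_plog_plog d hε)
  filter_upwards [ae_finite_setOf_mem hsum] with ω hfin
  obtain ⟨b, hb⟩ := hfin.bddAbove
  have i0 : Fin d := ⟨0, by omega⟩
  filter_upwards [eventually_ge_atTop (fun _ : Fin d => 2 ^ (K0 + M0 + b i0 + 1))] with n hn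
  set m : Fin d → ℕ := fun i => Nat.clog 2 (n i) with hm
  have hmge : ∀ i, K0 + M0 + b i0 + 1 ≤ m i := fun i => by
    calc K0 + M0 + b i0 + 1 = Nat.clog 2 (2 ^ (K0 + M0 + b i0 + 1)) :=
          (Nat.clog_pow 2 _ (by norm_num)).symm
      _ ≤ _ := Nat.clog_mono_right 2 (hn i)
  have hn2 : ∀ i, 1 < n i := fun i => lt_of_lt_of_le
    (Nat.one_lt_two_pow (by omega)) (hn i)
  have hnle : n ≤ dy m := fun i => Nat.le_pow_clog (by norm_num) _
  have hlt : ∀ i, dy m i < 2 * n i := fun i => by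
    have h2 := Nat.pow_pred_clog_lt_self (b := 2) (by norm_num) (hn2 i)
    have h3 : 0 < Nat.clog 2 (n i) := Nat.clog_pos (by norm_num) (hn2 i)
    obtain ⟨t, ht⟩ : ∃ t, Nat.clog 2 (n i) = t + 1 := ⟨Nat.clog 2 (n i) - 1, by omega⟩
    simp only [dy, hm]
    rw [ht] at h2 ⊢
    simp only [Nat.pred_succ] at h2
    rw [pow_succ]; omega
  have hnot : ω ∉ bad m := fun hmem => by
    have h1 : m i0 ≤ b i0 := hb (show m ∈ {i | ω ∈ bad i} from hmem) i0
    have h2 := hmge i0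
    omega
  have hK : ∀ i, K0 ≤ m i := fun i => by have := hmge i; omega
  have hmain : ∑ k ∈ brick 0 n, X k ω ≤
      (σ + ε) * Real.sqrt (2 * d * (#(brick 0 n) : ℝ) * plog (tot m)) +
        6 * ε * Real.sqrt (2 ^ tot m * plog (tot m)) := by
    by_contra hcon
    exact hnot ⟨hK, n, hnle, hlt, not_le.1 hcon⟩
  refine hmain.trans ?_
  have hN : (#(brick 0 n) : ℝ) = ∏ i, (n i : ℝ) := by rw [card_brick0]; push_cast; rfl
  rw [nrm, hN]
  set N : ℝ := ∏ i, (n i : ℝ) with hNd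
  have hN0 : 0 ≤ N := Finset.prod_nonneg fun i _ => by positivity
  have h2M : (2 : ℝ) ^ tot m ≤ 2 ^ d * N := by
    have h1 : ∏ i, (dy m i) ≤ ∏ i, (2 * n i) := Finset.prod_le_prod' fun i _ => (hlt i).le
    rw [Finset.prod_mul_distrib] at h1
    simp only [dy, Finset.prod_pow_eq_pow_sum, Finset.prod_const, card_univ, Fintype.card_fin] at h1
    have h3 : (2 : ℝ) ^ (∑ i, m i) ≤ 2 ^ d * ∏ i, (n i : ℝ) := by exact_mod_cast h1
    exact h3
  have hM0' : M0 ≤ tot m := tot_ge hd fun i => by have := hmge i; omega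
  have hl := hM0 _ hM0' N h2M
  set ℓ := plog (tot m : ℝ) with hℓ
  set L := plog (plog N) with hL
  have hL1 : 1 ≤ L := one_le_plog _
  have hℓ1 : 1 ≤ ℓ := one_le_plog _
  set Q := Real.sqrt (2 * d * N * L) with hQ
  have hQ0 : 0 ≤ Q := Real.sqrt_nonneg _
  have q1 : Real.sqrt (2 * d * N * ℓ) ≤ (1 + ε) * Q := by
    rw [Real.sqrt_le_left (by positivity), mul_pow, hQ, Real.sq_sqrt (by positivity)]
    calc 2 * d * N * ℓ ≤ 2 * d * N * ((1 + ε) * L) := by gcongr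
      _ = (1 + ε) * (2 * d * N * L) := by ring
      _ ≤ (1 + ε) ^ 2 * (2 * d * N * L) := by
          gcongr
          nlinarith
  have q2 : Real.sqrt (2 ^ tot m * ℓ) ≤ 2 * 2 ^ d * Q := by
    rw [Real.sqrt_le_left (by positivity), mul_pow, hQ, Real.sq_sqrt (by positivity)]
    calc 2 ^ tot m * ℓ ≤ (2 ^ d * N) * ((1 + ε) * L) := by gcongr
      _ ≤ (2 ^ d * N) * ((1 + 1) * L) := by gcongr
      _ = 2 ^ d * 1 * (2 * 1 * N * L) := by ring
      _ ≤ 2 ^ d * (4 * 2 ^ d) * (2 * d * N * L) := by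
          gcongr
          have : (1 : ℝ) ≤ 2 ^ d := one_le_pow₀ (by norm_num)
          linarith
      _ = _ := by ring
  calc (σ + ε) * Real.sqrt (2 * d * N * ℓ) + 6 * ε * Real.sqrt (2 ^ tot m * ℓ)
      ≤ (σ + ε) * ((1 + ε) * Q) + 6 * ε * (2 * 2 ^ d * Q) := by gcongr
    _ = (σ + ε * (σ + 1 + ε + 12 * 2 ^ d)) * Q := by ring
    _ ≤ (σ + ε * W) * Q := by
        rw [hW]; gcongr ?_ * Q
        have : ε * (σ + 1 + ε + 12 * 2 ^ d) ≤ ε * (σ + 2 + 12 * 2 ^ d) :=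
          mul_le_mul_of_nonneg_left (by linarith) hε.le
        linarith
    _ ≤ (σ + ε') * Q := by gcongr

end NAField

/-! ### A Gaussian-type lower bound for the sum over one large box -/

namespace NAField

variable [IsProbabilityMeasure μ] {d : ℕ} {X : (Fin d → ℕ) → Ω → ℝ} {Υ : (Fin d → ℤ) → ℝ}

lemma sq_sum_le {Z : (Fin d → ℕ) → Ω → ℝ} (hna : NegAssocOn μ Z Set.univ)
    (hL : ∀ x, MemLp (Z x) 2 μ) (h0 : ∀ x, ∫ ω, Z x ω ∂μ = 0) (D : Finset (Fin d → ℕ)) :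
    ∫ ω, (∑ x ∈ D, Z x ω) ^ 2 ∂μ ≤ ∑ x ∈ D, ∫ ω, Z x ω ^ 2 ∂μ := by
  classical
  have hi : ∀ x y, Integrable (fun ω => Z x ω * Z y ω) μ := fun x y =>
    (hL x).integrable_mul (hL y)
  have e1 : ∫ ω, (∑ x ∈ D, Z x ω) ^ 2 ∂μ = ∑ x ∈ D, ∑ y ∈ D, ∫ ω, Z x ω * Z y ω ∂μ := by
    simp_rw [sq, Finset.sum_mul_sum]
    rw [integral_finset_sum _ fun x _ => integrable_finset_sum _ fun y _ => hi x y]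
    exact Finset.sum_congr rfl fun x _ => integral_finset_sum _ fun y _ => hi x y
  rw [e1]
  refine Finset.sum_le_sum fun x hx => ?_
  rw [← Finset.add_sum_erase D _ hx]
  have h2 : ∑ y ∈ D.erase x, ∫ ω, Z x ω * Z y ω ∂μ ≤ 0 := by
    refine Finset.sum_nonpos fun y hy => ?_
    have hxy : x ≠ y := (Finset.ne_of_mem_erase hy).symm
    have := hna.int_mul_le (A := {x}) (B := {y}) (Set.subset_univ _) (Set.subset_univ _)
      (by simpa using hxy) (F := fun z => z x) (G := fun z => z y) (fun _ _ hh => hh x)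
      (fun _ _ hh => hh y) (fun u v huv => huv x (by simp)) (fun u v huv => huv y (by simp))
      ((hL x).integrable (by norm_num)) ((hL y).integrable (by norm_num)) (hi x y)
    rw [h0 x, zero_mul] at this
    exact this
  have h3 : ∫ ω, Z x ω * Z x ω ∂μ = ∫ ω, Z x ω ^ 2 ∂μ := by simp_rw [sq]
  linarith

lemma memLp_clip_sub (h : NAField μ X Υ) {τ : ℝ} (hτ : 0 ≤ τ) (x) :
    MemLp (fun ω => clip τ (X x ω) - cm μ X τ) 2 μ := (h.memLp_clip hτ x).sub (memLp_const _)

/-- The truncation remainder of a sum has small second moment per site. -/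
lemma rem_var (h : NAField μ X Υ) {τ δ : ℝ} (hτ : 0 ≤ τ)
    (hδ : ∀ k, ∫ ω, (X k ω - clip τ (X k ω)) ^ 2 ∂μ ≤ δ) (D : Finset (Fin d → ℕ)) :
    ∫ ω, (∑ x ∈ D, (X x ω - (clip τ (X x ω) - cm μ X τ))) ^ 2 ∂μ ≤ #D * δ := by
  have hL : ∀ x, MemLp (fun ω => X x ω - (clip τ (X x ω) - cm μ X τ)) 2 μ := fun x =>
    (h.memLp x).sub (h.memLp_clip_sub hτ x)
  have hE : ∀ x, MemLp (fun ω => X x ω - clip τ (X x ω)) 2 μ := fun x =>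
    (h.memLp x).sub (h.memLp_clip hτ x)
  have hmn : ∀ x, ∫ ω, (X x ω - clip τ (X x ω)) ∂μ = - cm μ X τ := fun x => by
    rw [integral_sub (h.integrable x) ((h.memLp_clip hτ x).integrable (by norm_num)), h.mean',
      h.mean_clip, zero_sub]
  have hna : NegAssocOn μ (fun x ω => X x ω - (clip τ (X x ω) - cm μ X τ)) Set.univ :=
    h.na.comp (fun _ z => z - (clip τ z - cm μ X τ)) fun _ _ a b hab => by
      have := clip_sub_mono hτ hab
      simp only at this ⊢
      linarith
  refine (sq_sum_le hna hL (fun x => ?_) D).trans ?_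
  · rw [integral_sub (h.integrable x) ((h.memLp_clip_sub hτ x).integrable (by norm_num)), h.mean',
      h.mean_clip_sub hτ, sub_zero]
  · rw [← nsmul_eq_mul]
    refine Finset.sum_le_card_nsmul _ _ _ fun x _ => le_trans ?_ (hδ x)
    have := sq_sub_mean_le (hE x)
    rw [hmn] at this
    refine le_trans (le_of_eq ?_) this
    congr 1; ext ω; ring

lemma clip_var_ge (h : NAField μ X Υ) {τ δ κ : ℝ} (hτ : 0 ≤ τ) (hκ : 0 < κ) (hκ1 : κ < 1)
    (hδ : ∀ k, ∫ ω, (X k ω - clip τ (X k ω)) ^ 2 ∂μ ≤ δ) (D : Finset (Fin d → ℕ)) :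
    #D * ((1 - κ) * (∑' j, Υ j) - δ / κ) ≤
      ∫ ω, (∑ x ∈ D, (clip τ (X x ω) - cm μ X τ)) ^ 2 ∂μ := by
  have hA : MemLp (fun ω => ∑ x ∈ D, (clip τ (X x ω) - cm μ X τ)) 2 μ :=
    memLp_finsetSum D fun x _ => h.memLp_clip_sub hτ x
  have hB : MemLp (fun ω => ∑ x ∈ D, X x ω) 2 μ := memLp_finsetSum D fun x _ => h.memLp x
  have hR : MemLp (fun ω => ∑ x ∈ D, (X x ω - (clip τ (X x ω) - cm μ X τ))) 2 μ :=
    memLp_finsetSum D fun x _ => (h.memLp x).sub (h.memLp_clip_sub hτ x)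
  have h1 : ∫ ω, ((1 - κ) * (∑ x ∈ D, X x ω) ^ 2 -
      1 / κ * (∑ x ∈ D, (X x ω - (clip τ (X x ω) - cm μ X τ))) ^ 2) ∂μ ≤
      ∫ ω, (∑ x ∈ D, (clip τ (X x ω) - cm μ X τ)) ^ 2 ∂μ := by
    refine integral_mono ((hB.integrable_sq.const_mul _).sub (hR.integrable_sq.const_mul _))
      hA.integrable_sq fun ω => ?_
    simp only [Finset.sum_sub_distrib]
    set z := ∑ x ∈ D, X x ω
    set y := ∑ x ∈ D, clip τ (X x ω) - ∑ x ∈ D, cm μ X τ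
    have e : y ^ 2 - ((1 - κ) * z ^ 2 - 1 / κ * (z - y) ^ 2) =
        1 / κ * ((z - y) - κ * z) ^ 2 + (z - y) ^ 2 := by field_simp; ring
    have : 0 ≤ 1 / κ * ((z - y) - κ * z) ^ 2 + (z - y) ^ 2 := by positivity
    linarith
  rw [integral_sub (hB.integrable_sq.const_mul _) (hR.integrable_sq.const_mul _),
    integral_const_mul, integral_const_mul] at h1
  have h2 := mul_le_mul_of_nonneg_left (h.var_ge D) (by linarith : 0 ≤ 1 - κ)
  have h3 := mul_le_mul_of_nonneg_left (h.rem_var hτ hδ D) (by positivity : 0 ≤ 1 / κ)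
  have e : (#D : ℝ) * ((1 - κ) * (∑' j, Υ j) - δ / κ) =
    (1 - κ) * (#D * ∑' j, Υ j) - 1 / κ * (#D * δ) := by ring
  linarith

lemma clip_exp (h : NAField μ X Υ) {τ s : ℝ} (hτ : 0 ≤ τ) (hs : 0 ≤ s) (hsτ : s * (2 * τ) ≤ 1)
    (D : Finset (Fin d → ℕ)) (hsD : s ^ 2 * #D ≤ 1) :
    ∫ ω, Real.exp (s * |∑ x ∈ D, (clip τ (X x ω) - cm μ X τ)|) ∂μ ≤ 2 * Real.exp (4 * Υ 0) := by
  have hmeas : ∀ x, Measurable fun ω => clip τ (X x ω) - cm μ X τ := fun x =>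
    ((clip_measurable τ).comp (h.meas x)).sub_const _
  have hbd : ∀ x ω, |clip τ (X x ω) - cm μ X τ| ≤ 2 * τ := fun x ω => abs_clip_sub_le hτ _
  have hw : (1 / 2 + s * (2 * τ) * Real.exp (s * (2 * τ))) * s ^ 2 * (#D * Υ 0) ≤ 4 * Υ 0 := by
    have hs2 := h.s2_nonneg
    have h3 : Real.exp (s * (2 * τ)) ≤ 3 := (Real.exp_le_exp.2 hsτ).trans (by
      have := Real.exp_one_lt_d9; linarith)
    calc _ = (1 / 2 + s * (2 * τ) * Real.exp (s * (2 * τ))) * (s ^ 2 * #D) * Υ 0 := by ring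
      _ ≤ (1 / 2 + 1 * 3) * 1 * Υ 0 := by gcongr
      _ ≤ _ := by linarith
  have key : ∀ Z : (Fin d → ℕ) → Ω → ℝ, NegAssocOn μ Z Set.univ → (∀ x, Measurable (Z x)) →
      (∀ x ω, |Z x ω| ≤ 2 * τ) → (∀ x, ∫ ω, Z x ω ∂μ = 0) → (∀ x, ∫ ω, Z x ω ^ 2 ∂μ ≤ Υ 0) →
      Integrable (fun ω => Real.exp (s * ∑ x ∈ D, Z x ω)) μ ∧
      ∫ ω, Real.exp (s * ∑ x ∈ D, Z x ω) ∂μ ≤ Real.exp (4 * Υ 0) := by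
    intro Z hna hm hb h0 h2
    have := exp_sum_le_of_single hna D (Set.subset_univ _) (fun x _ => hm x) hs (fun x _ => hb x)
      (fun _ => (1 / 2 + s * (2 * τ) * Real.exp (s * (2 * τ))) * s ^ 2 * Υ 0)
      (fun x _ => single_mgf_le (hm x) hs (hb x) (h0 x) (h2 x))
    refine ⟨this.1, this.2.trans (Real.exp_le_exp.2 (le_trans (le_of_eq ?_) hw))⟩
    rw [Finset.sum_const, nsmul_eq_mul]; ring
  have k1 := key (fun x ω => clip τ (X x ω) - cm μ X τ) (h.na_clip τ _) hmeas hbd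
    (h.mean_clip_sub hτ) (h.clip_sq_le hτ)
  have k2 := key (fun x ω => -(clip τ (X x ω) - cm μ X τ)) (h.na_clip τ _).neg
    (fun x => (hmeas x).neg) (fun x ω => by rw [abs_neg]; exact hbd x ω)
    (fun x => by rw [integral_neg, h.mean_clip_sub hτ, neg_zero])
    (fun x => by simpa only [neg_sq] using h.clip_sq_le hτ x)
  calc _ ≤ ∫ ω, (Real.exp (s * ∑ x ∈ D, (clip τ (X x ω) - cm μ X τ)) +
        Real.exp (s * ∑ x ∈ D, -(clip τ (X x ω) - cm μ X τ))) ∂μ := by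
        refine integral_mono_of_nonneg (ae_of_all _ fun ω => (Real.exp_pos _).le)
          (k1.1.add k2.1) (ae_of_all _ fun ω => ?_)
        simp only [Finset.sum_neg_distrib]
        set y := ∑ x ∈ D, (clip τ (X x ω) - cm μ X τ)
        rcases abs_cases y with ⟨e, -⟩ | ⟨e, -⟩ <;> rw [e]
        · linarith [Real.exp_pos (s * -y)]
        · linarith [Real.exp_pos (s * y)]
    _ ≤ _ := by
        rw [integral_add k1.1 k2.1]
        linarith [k1.2, k2.2]

open ProbabilityTheory in
/-- Total covariance between one cell and the other cells of a partition of a box. -/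
lemma cross_cov (h : NAField μ X Υ) {τ : ℝ} (hτ : 0 ≤ τ) {t : ℝ} {L a c : Fin d → ℕ}
    (hL : ∀ i, 0 < L i) {k : Fin d → ℕ} (hk : k ∈ brick 0 c) :
    ∑ l ∈ brick 0 c with l ≠ k,
      -cov[fun ω => t * ∑ x ∈ sub L a k, (clip τ (X x ω) - cm μ X τ),
        fun ω => t * ∑ x ∈ sub L a l, (clip τ (X x ω) - cm μ X τ); μ] ≤
      t ^ 2 * ∑ x ∈ sub L a k, (∑' j, uu Υ j - ∑ y ∈ sub L a k, uu Υ (zsub y x)) := by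
  classical
  have hcov : ∀ l, l ≠ k → -cov[fun ω => t * ∑ x ∈ sub L a k, (clip τ (X x ω) - cm μ X τ),
        fun ω => t * ∑ x ∈ sub L a l, (clip τ (X x ω) - cm μ X τ); μ] ≤
      t ^ 2 * ∑ x ∈ sub L a k, ∑ y ∈ sub L a l, uu Υ (zsub y x) := by
    intro l hl
    have hdis := sub_disjoint (a := a) hL hl
    have e : cov[fun ω => t * ∑ x ∈ sub L a k, (clip τ (X x ω) - cm μ X τ),
        fun ω => t * ∑ x ∈ sub L a l, (clip τ (X x ω) - cm μ X τ); μ] =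
        t ^ 2 * ∑ x ∈ sub L a k, ∑ y ∈ sub L a l,
          cov[fun ω => clip τ (X x ω), fun ω => clip τ (X y ω); μ] := by
      rw [covariance_const_mul_left, covariance_const_mul_right,
        covariance_fun_sum_fun_sum' (fun x _ => h.memLp_clip_sub hτ x)
          (fun x _ => h.memLp_clip_sub hτ x), ← mul_assoc, sq]
      congr 1
      refine Finset.sum_congr rfl fun x _ => Finset.sum_congr rfl fun y _ => ?_
      rw [covariance_sub_const_left ((h.memLp_clip hτ x).integrable (by norm_num)),
        covariance_sub_const_right ((h.memLp_clip hτ y).integrable (by norm_num))]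
    rw [e, ← mul_neg, ← Finset.sum_neg_distrib]
    refine mul_le_mul_of_nonneg_left (Finset.sum_le_sum fun x hx => ?_) (sq_nonneg t)
    rw [← Finset.sum_neg_distrib]
    refine Finset.sum_le_sum fun y hy => ?_
    have hxy : x ≠ y := fun hh => Finset.disjoint_left.1 hdis (hh ▸ hy) hx
    linarith [(h.cov_clip hτ hxy).1]
  refine (Finset.sum_le_sum fun l hl => hcov l (Finset.mem_filter.1 hl).2).trans ?_
  rw [← Finset.mul_sum, Finset.sum_comm]
  refine mul_le_mul_of_nonneg_left (Finset.sum_le_sum fun x hx => ?_) (sq_nonneg t)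
  have h1 := h.row_le (brick a (fun i => a i + L i * c i)) x
  rw [sum_sub hL a c (fun y => uu Υ (zsub y x)), ← Finset.add_sum_erase _ _ hk] at h1
  have h2 : ({l ∈ brick 0 c | l ≠ k} : Finset _) = (brick 0 c).erase k := by
    ext l; simp [and_comm]
  rw [h2]
  linarith

/-- Removing the truncation: a lower bound for the truncated sum passes to the sum itself. -/
lemma untruncate (h : NAField μ X Υ) {τ δ u v : ℝ} (hτ : 0 ≤ τ)
    (hδ : ∀ k, ∫ ω, (X k ω - clip τ (X k ω)) ^ 2 ∂μ ≤ δ) (D : Finset (Fin d → ℕ)) (hu : 0 < u) :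
    μ.real {ω | v + u < ∑ x ∈ D, (clip τ (X x ω) - cm μ X τ)} - #D * δ / u ^ 2 ≤
      μ.real {ω | v < ∑ x ∈ D, X x ω} := by
  set R : Ω → ℝ := fun ω => ∑ x ∈ D, (X x ω - (clip τ (X x ω) - cm μ X τ)) with hR
  have hRL : MemLp R 2 μ :=
    memLp_finsetSum D fun x _ => (h.memLp x).sub (h.memLp_clip_sub hτ x)
  have h1 := mul_meas_ge_le_integral_of_nonneg (μ := μ) (f := fun ω => R ω ^ 2)
    (ae_of_all _ fun ω => sq_nonneg _) hRL.integrable_sq (u ^ 2)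
  have h2 : μ.real {ω | u ^ 2 ≤ R ω ^ 2} ≤ #D * δ / u ^ 2 := by
    rw [le_div_iff₀ (by positivity), mul_comm]
    exact h1.trans (h.rem_var hτ hδ D)
  have h3 : {ω | v + u < ∑ x ∈ D, (clip τ (X x ω) - cm μ X τ)} ⊆
      {ω | v < ∑ x ∈ D, X x ω} ∪ {ω | u ^ 2 ≤ R ω ^ 2} := by
    intro ω hω
    by_cases hv : v < ∑ x ∈ D, X x ω
    · exact Or.inl hv
    · right
      have e : R ω = ∑ x ∈ D, X x ω - ∑ x ∈ D, (clip τ (X x ω) - cm μ X τ) := by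
        simp only [hR, Finset.sum_sub_distrib]
      have hω' : v + u < ∑ x ∈ D, (clip τ (X x ω) - cm μ X τ) := hω
      have : u ≤ -R ω := by rw [e]; push Not at hv; linarith
      show u ^ 2 ≤ R ω ^ 2
      nlinarith
  have h4 := (measureReal_mono (μ := μ) h3).trans (measureReal_union_le _ _)
  linarith

lemma block_err_eq {lam g C0 : ℝ} (hl : 0 < lam) (hg : 0 < g) :
    lam ^ 2 / g ^ 2 * (6 * (384 * (lam⁻¹) ^ 3 * C0) + (lam⁻¹) ^ 4 * C0 ^ 2) =
      2304 * C0 / g ^ 2 / lam + C0 ^ 2 / g ^ 2 / lam ^ 2 := by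
  field_simp
  ring

set_option maxHeartbeats 6400000 in
/-- The sum over a box with large sides exceeds `(1 - 4κ) b` standard deviations with probability
at least `exp (-(1/2 + 2κ) b²)`. -/
lemma one_block (h : NAField μ X Υ) (hs2 : 0 < ∑' j, Υ j) {κ : ℝ} (hκ : 0 < κ) (hκ1 : κ ≤ 1 / 8) :
    ∃ b : ℝ, 1 ≤ b ∧ ∃ q l0 : ℕ, 1 ≤ l0 ∧ ∀ a L : Fin d → ℕ, (∀ i, l0 ≤ L i) →
      Real.exp (-(1 / 2 + 2 * κ) * b ^ 2) ≤
      μ.real {ω | (1 - 4 * κ) * b *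
        Real.sqrt ((∑' j, Υ j) * #(brick a (fun i => a i + L i * 2 ^ q))) <
          ∑ x ∈ brick a (fun i => a i + L i * 2 ^ q), X x ω} := by
  classical
  have hd := h.hd
  set s2 := ∑' j, Υ j with hs2d
  set b : ℝ := 4 / κ with hb
  have hb0 : 0 < b := by positivity
  have hκb : κ * b = 4 := by rw [hb]; field_simp
  have hb32 : 32 ≤ b := by rw [hb, le_div_iff₀ hκ]; linarith
  have hb1 : 1 ≤ b := by linarith
  clear_value b
  set Q : ℝ := Real.exp (-(1 / 2 + 2 * κ) * b ^ 2) with hQ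
  have hQ0 : 0 < Q := Real.exp_pos _
  have hQ1 : Q ≤ 1 := Real.exp_le_one_iff.2 (by nlinarith [sq_nonneg b])
  clear_value Q
  set δ : ℝ := κ ^ 2 * s2 * Q with hδd
  have hδ0 : 0 < δ := by positivity
  clear_value δ
  obtain ⟨τ, hτ0, Hτ⟩ := h.v2_le hδ0
  have hδ : ∀ k, ∫ ω, (X k ω - clip τ (X k ω)) ^ 2 ∂μ ≤ δ := Hτ τ le_rfl
  set C0 : ℝ := 2 * Real.exp (4 * Υ 0) with hC0d
  have hC0 : 0 < C0 := by positivity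
  clear_value C0
  set g : ℝ := Real.sqrt (s2 / 2) / b with hg
  have hg0 : 0 < g := by positivity
  have hg2 : g ^ 2 = s2 / 2 / b ^ 2 := by rw [hg, div_pow, Real.sq_sqrt (by positivity)]
  clear_value g
  obtain ⟨lam0, hl4, hl1, hl2, hl3⟩ : ∃ lam0 : ℝ, 4 ≤ lam0 ∧ 2304 * C0 ≤ lam0 ∧
      4608 * C0 / g ^ 2 ≤ lam0 ∧ 2 * C0 ^ 2 / g ^ 2 ≤ lam0 :=
    ⟨4 + 2304 * C0 + 4608 * C0 / g ^ 2 + 2 * C0 ^ 2 / g ^ 2, by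
      have : 0 ≤ 2304 * C0 + 4608 * C0 / g ^ 2 + 2 * C0 ^ 2 / g ^ 2 := by positivity
      linarith, by
      have : 0 ≤ 4 + 4608 * C0 / g ^ 2 + 2 * C0 ^ 2 / g ^ 2 := by positivity
      linarith, by
      have : 0 ≤ 4 + 2304 * C0 + 2 * C0 ^ 2 / g ^ 2 := by positivity
      linarith, by
      have : 0 ≤ 4 + 2304 * C0 + 4608 * C0 / g ^ 2 := by positivity
      linarith⟩
  obtain ⟨q, hq⟩ := exists_nat_ge ((lam0 / g) ^ 2)
  set T : Finset (Fin d → ℕ) := brick 0 (fun _ => 2 ^ q) with hT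
  have hTc : (#T : ℝ) = (2 ^ q) ^ d := by
    rw [hT, card_brick0]; simp
  clear_value T
  have hT1 : 1 ≤ (#T : ℝ) := by rw [hTc]; exact one_le_pow₀ (one_le_pow₀ (by norm_num))
  have hTq : (lam0 / g) ^ 2 ≤ #T := by
    refine hq.trans ?_
    rw [hTc]
    calc (q : ℝ) ≤ 2 ^ q := by exact_mod_cast (Nat.lt_two_pow_self).le
      _ ≤ (2 ^ q) ^ d := le_self_pow₀ (one_le_pow₀ (by norm_num)) (by omega)
  set P := Real.sqrt #T with hP
  have hP2 : P ^ 2 = #T := Real.sq_sqrt (by positivity)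
  set lam : ℝ := P * g with hlam
  have hlam0 : lam0 ≤ lam := by
    have : lam0 / g ≤ P := Real.le_sqrt_of_sq_le hTq
    rwa [div_le_iff₀ hg0] at this
  have hl4' : 4 ≤ lam := hl4.trans hlam0
  have hlpos : 0 < lam := by linarith
  clear_value lam P
  have hl1' := hl1.trans hlam0
  have hl2' := hl2.trans hlam0
  have hl3' := hl3.trans hlam0
  have hsm : 3 * (384 * (lam⁻¹) ^ 3 * C0) ≤ 1 / 2 := by
    have : 3 * (384 * (lam⁻¹) ^ 3 * C0) = 1152 * C0 / lam ^ 3 := by field_simp; norm_num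
    rw [this, div_le_iff₀ (by positivity)]
    have : lam ≤ lam ^ 3 := le_self_pow₀ (by linarith) (by norm_num)
    linarith
  set E : ℝ := #T * (6 * (384 * (lam⁻¹) ^ 3 * C0) + (lam⁻¹) ^ 4 * C0 ^ 2) with hE
  have hE1 : E ≤ 1 := by
    have e1 : (#T : ℝ) = lam ^ 2 / g ^ 2 := by rw [hlam, mul_pow, hP2]; field_simp
    have e2 : E = 2304 * C0 / g ^ 2 / lam + C0 ^ 2 / g ^ 2 / lam ^ 2 := by
      rw [hE, e1]; exact block_err_eq hlpos hg0
    have h1 : 2304 * C0 / g ^ 2 / lam ≤ 1 / 2 := by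
      rw [div_le_iff₀ hlpos]
      have : 4608 * C0 / g ^ 2 = 2 * (2304 * C0 / g ^ 2) := by ring
      linarith
    have h2 : C0 ^ 2 / g ^ 2 / lam ^ 2 ≤ 1 / 2 := by
      rw [div_le_iff₀ (by positivity)]
      have : 2 * C0 ^ 2 / g ^ 2 = 2 * (C0 ^ 2 / g ^ 2) := by ring
      have : lam ≤ lam ^ 2 := le_self_pow₀ (by linarith) (by norm_num)
      linarith
    linarith
  clear_value E
  set ER : ℝ := Real.exp #T * (#T * ((#T : ℝ) + 1) ^ 2) with hER
  have hER0 : 0 < ER := by positivity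
  clear_value ER
  set ε : ℝ := s2 / (2 * b ^ 2 * ER) with hε
  have hε0 : 0 < ε := by positivity
  clear_value ε
  obtain ⟨l1, hl11, Hout⟩ := h.out_le hε0
  obtain ⟨l2, hl2n⟩ := exists_nat_ge (4 * τ ^ 2)
  refine ⟨b, hb1, q, l1 + l2, by omega, fun a L hL => ?_⟩
  have hLpos : ∀ i, 0 < L i := fun i => by have := hL i; omega
  set D := brick a (fun i => a i + L i * 2 ^ q) with hD
  set Dk : ℝ := ((∏ i, L i : ℕ) : ℝ) with hDk
  have hcs : ∀ k, (#(sub L a k) : ℝ) = Dk := fun k => by rw [card_sub]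
  have hDk2 : 4 * τ ^ 2 ≤ Dk := by
    refine hl2n.trans ?_
    have i0 : Fin d := ⟨0, by omega⟩
    have h1 : L i0 ≤ ∏ i, L i :=
      Finset.single_le_prod' (f := L) (fun i _ => hLpos i) (mem_univ i0)
    have h2 := hL i0
    have h3 : l2 ≤ ∏ i, L i := by omega
    rw [hDk]; exact Nat.cast_le.2 h3
  have hDk0 : 0 < Dk := by
    rw [hDk]; exact_mod_cast Finset.prod_pos fun i _ => hLpos i
  have hDc : (#D : ℝ) = #T * Dk := by
    rw [hD, card_brick, hTc, hDk]
    simp [Finset.prod_mul_distrib, mul_comm]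
  have hsumD : ∀ f : (Fin d → ℕ) → ℝ, ∑ x ∈ D, f x = ∑ k ∈ T, ∑ x ∈ sub L a k, f x := fun f => by
    rw [hD, hT]; exact sum_sub hLpos a (fun _ => 2 ^ q) f
  clear_value D Dk
  set Y : (Fin d → ℕ) → Ω → ℝ := fun k ω => ∑ x ∈ sub L a k, (clip τ (X x ω) - cm μ X τ) with hY
  set Vs : ℝ := ∑ k ∈ T, ∫ ω, Y k ω ^ 2 ∂μ with hVs
  have hVs1 : #D * ((1 - 2 * κ) * s2) ≤ Vs := by
    rw [hDc, hVs, mul_assoc, ← nsmul_eq_mul]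
    refine Finset.card_nsmul_le_sum _ _ _ fun k _ => ?_
    have h1 := h.clip_var_ge hτ0.le hκ (by linarith) hδ (sub L a k)
    rw [hcs] at h1
    refine le_trans (mul_le_mul_of_nonneg_left ?_ hDk0.le) h1
    have h2 : δ / κ ≤ κ * s2 := by
      rw [div_le_iff₀ hκ, hδd]
      have : κ ^ 2 * s2 * Q ≤ κ ^ 2 * s2 * 1 := by gcongr
      linarith
    linarith
  have hD0 : (0 : ℝ) < #D := by rw [hDc]; positivity
  have hVs2 : #D * (s2 / 2) ≤ Vs := by
    have e0 : κ * s2 ≤ 1 / 8 * s2 := mul_le_mul_of_nonneg_right hκ1 hs2.le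
    have e1 : s2 / 2 ≤ (1 - 2 * κ) * s2 := by linarith
    exact le_trans (mul_le_mul_of_nonneg_left e1 hD0.le) hVs1
  have hVs0 : 0 < Vs := lt_of_lt_of_le (mul_pos hD0 (half_pos hs2)) hVs2
  clear_value Vs
  set t : ℝ := b / Real.sqrt Vs with ht
  have ht0 : 0 < t := by positivity
  have ht2 : t ^ 2 = b ^ 2 / Vs := by rw [ht, div_pow, Real.sq_sqrt hVs0.le]
  clear_value t
  have ht2le : t ^ 2 ≤ b ^ 2 / (#T * Dk * (s2 / 2)) := by
    rw [ht2, ← hDc]; gcongr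
  have hsub : ∀ k ω, |t * Y k ω| ≤ t * (Dk * (2 * τ)) := fun k ω => by
    rw [abs_mul, abs_of_pos ht0]
    gcongr
    refine (Finset.abs_sum_le_sum_abs _ _).trans ?_
    rw [← hcs k, ← nsmul_eq_mul]
    exact Finset.sum_le_card_nsmul _ _ _ fun x _ => abs_clip_sub_le hτ0.le _
  have hYm : ∀ k, Measurable (Y k) := fun k => Finset.measurable_sum _ fun x _ =>
    ((clip_measurable τ).comp (h.meas x)).sub_const _
  have hna : NegAssocOn μ (fun k ω => t * Y k ω) Set.univ :=
    ((h.na_clip τ (cm μ X τ)).sum_block (T := Set.univ) (sub L a) (fun _ _ => Set.subset_univ _)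
      (fun k _ l _ hkl => sub_disjoint hLpos hkl)).comp (fun _ z => t * z)
      fun _ _ u v huv => mul_le_mul_of_nonneg_left huv ht0.le
  have hmn : ∀ k, ∫ ω, t * Y k ω ∂μ = 0 := fun k => by
    rw [integral_const_mul, integral_finset_sum _ fun x _ =>
      (h.memLp_clip_sub hτ0.le x).integrable (by norm_num)]
    simp [h.mean_clip_sub hτ0.le]
  have hexp : ∀ k, ∫ ω, Real.exp (lam * |t * Y k ω|) ∂μ ≤ C0 := fun k => by
    have hsq : (lam * t) ^ 2 * Dk ≤ 1 := by
      calc (lam * t) ^ 2 * Dk = lam ^ 2 * t ^ 2 * Dk := by ring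
        _ ≤ lam ^ 2 * (b ^ 2 / (#T * Dk * (s2 / 2))) * Dk := by gcongr
        _ = 1 := by
          rw [hlam, mul_pow, hP2, hg2]
          have : (#T : ℝ) ≠ 0 := by positivity
          field_simp
    have h1 := h.clip_exp (s := lam * t) hτ0.le (by positivity) (by
      refine (le_abs_self _).trans (abs_le_of_sq_le_sq (b := (1:ℝ)) ?_ zero_le_one)
      calc (lam * t * (2 * τ)) ^ 2 = (lam * t) ^ 2 * (4 * τ ^ 2) := by ring
        _ ≤ (lam * t) ^ 2 * Dk := by gcongr
        _ ≤ 1 := hsq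
        _ = 1 ^ 2 := by norm_num) (sub L a k) (by rw [hcs]; exact hsq)
    rw [hC0d]
    refine le_trans (le_of_eq ?_) h1
    congr 1; ext ω
    rw [abs_mul, abs_of_pos ht0, mul_assoc]
  have hcov : ∀ k ∈ T, ∑ l ∈ T with l ≠ k,
      -ProbabilityTheory.covariance (fun ω => t * Y k ω) (fun ω => t * Y l ω) μ ≤ 1 / ER := by
    intro k hk
    rw [hT] at hk
    have h0 := h.cross_cov (t := t) (a := a) hτ0.le hLpos hk
    rw [← hT] at h0
    refine le_trans h0 ?_
    have h1 := Hout (fun i => a i + L i * k i) (fun i => a i + L i * k i + L i) (fun i => by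
      have := hL i; omega)
    calc _ ≤ t ^ 2 * (ε * #(sub L a k)) := mul_le_mul_of_nonneg_left h1 (sq_nonneg t)
      _ ≤ (b ^ 2 / (#T * Dk * (s2 / 2))) * (ε * Dk) := by rw [hcs]; gcongr
      _ = 1 / ER / #T := by
          rw [hε]
          have : (#T : ℝ) ≠ 0 := by positivity
          field_simp
      _ ≤ 1 / ER := div_le_self (by positivity) hT1
  have hVeq : b ^ 2 = ∑ k ∈ T, ∫ ω, (t * Y k ω) ^ 2 ∂μ := by
    simp_rw [mul_pow, integral_const_mul]
    rw [← Finset.mul_sum, ← hVs, ht2]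
    field_simp
  have main := hna.block_lower (fun k _ => (hYm k).const_mul t) (fun k _ => hsub k)
    (T := T) (Set.subset_univ _) (fun k _ => hmn k) hl4' (fun k _ => hexp k) hsm hcov hκ.le
    (by linarith) hE (b ^ 2) hVeq
  have herr : Real.exp #T * (#T * ((#T : ℝ) + 1) ^ 2 * (1 / ER)) = 1 := by
    rw [← mul_assoc, ← hER]; field_simp
  rw [herr] at main
  -- numerics: the first exponential dominates
  set G := Real.exp (b ^ 2 / 2 - 1) with hG
  have n1 : G ≤ Real.exp (b ^ 2 / 2 - E) := Real.exp_le_exp.2 (by linarith)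
  have n2 : 2 * Real.exp ((1 - κ ^ 2) * b ^ 2 / 2 + E) ≤ G / 4 := by
    have e1 : (1 - κ ^ 2) * b ^ 2 / 2 + E ≤ (b ^ 2 / 2 - 1) + (-6) := by
      have : (κ * b) ^ 2 = 16 := by rw [hκb]; norm_num
      nlinarith
    have e2 : Real.exp ((1 - κ ^ 2) * b ^ 2 / 2 + E) ≤ G * Real.exp (-6) := by
      rw [hG, ← Real.exp_add]; exact Real.exp_le_exp.2 e1
    have e3 : Real.exp (-6) ≤ 1 / 8 := by
      rw [Real.exp_neg, inv_eq_one_div]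
      apply one_div_le_one_div_of_le (by norm_num)
      have := Real.add_one_le_exp (3 : ℝ)
      have e4 : Real.exp 6 = Real.exp 3 * Real.exp 3 := by rw [← Real.exp_add]; norm_num
      rw [e4]; nlinarith
    have : G * Real.exp (-6) ≤ G * (1 / 8) := by gcongr
    linarith
  have n3 : 1 ≤ G / 4 := by
    have := Real.add_one_le_exp (b ^ 2 / 2 - 1)
    have : (8 : ℝ) ≤ b ^ 2 := by nlinarith
    rw [hG]; linarith
  have hst : 0 < s2 * #D := by positivity
  set z := Real.sqrt (s2 * #D) with hz
  have hz0 : 0 < z := Real.sqrt_pos.2 hst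
  have hz2 : z ^ 2 = s2 * #D := Real.sq_sqrt hst.le
  set p1 := μ.real {ω | (1 - κ) * b ^ 2 < ∑ k ∈ T, t * Y k ω} with hp1
  have n4 : 2 * Q ≤ p1 := by
    have m1 : G / 2 ≤ Real.exp ((1 + κ) * b ^ 2) * p1 := by linarith
    have m2 : 2 * Q * Real.exp ((1 + κ) * b ^ 2) ≤ G / 2 := by
      have e1 : Q * Real.exp ((1 + κ) * b ^ 2) = Real.exp (b ^ 2 / 2 - κ * b ^ 2) := by
        rw [hQ, ← Real.exp_add]; congr 1; ring
      have e2 : Real.exp (b ^ 2 / 2 - κ * b ^ 2) ≤ G * Real.exp (-3) := by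
        rw [hG, ← Real.exp_add]
        refine Real.exp_le_exp.2 ?_
        have : κ * b ^ 2 = 4 * b := by rw [← hκb]; ring
        linarith
      have e3 : Real.exp (-3) ≤ 1 / 4 := by
        rw [Real.exp_neg, inv_eq_one_div]
        apply one_div_le_one_div_of_le (by norm_num)
        have := Real.add_one_le_exp (3 : ℝ)
        linarith
      have e4 : G * Real.exp (-3) ≤ G * (1 / 4) := by gcongr
      rw [mul_assoc, e1]; linarith
    have m3 : 0 < Real.exp ((1 + κ) * b ^ 2) := Real.exp_pos _
    refine le_of_mul_le_mul_right ?_ m3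
    linarith
  have hu : 0 < κ * b * z := by positivity
  have fin := h.untruncate (v := (1 - 4 * κ) * b * z) hτ0.le hδ D hu
  have hcheb : (#D : ℝ) * δ / (κ * b * z) ^ 2 ≤ Q := by
    rw [mul_pow, mul_pow, hz2, hδd, div_le_iff₀ (by positivity)]
    have : (1 : ℝ) ≤ b ^ 2 := one_le_pow₀ hb1
    calc (#D : ℝ) * (κ ^ 2 * s2 * Q) = Q * (κ ^ 2 * 1 * (s2 * #D)) := by ring
      _ ≤ Q * (κ ^ 2 * b ^ 2 * (s2 * #D)) := by gcongr
  have hincl : p1 ≤ μ.real {ω | (1 - 4 * κ) * b * z + κ * b * z <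
      ∑ x ∈ D, (clip τ (X x ω) - cm μ X τ)} := by
    refine measureReal_mono fun ω hω => ?_
    have hω' : (1 - κ) * b ^ 2 < ∑ k ∈ T, t * Y k ω := hω
    rw [← Finset.mul_sum, ← hsumD] at hω'
    rw [Set.mem_setOf_eq]
    set SD := ∑ x ∈ D, (clip τ (X x ω) - cm μ X τ)
    have hsV : 0 < Real.sqrt Vs := Real.sqrt_pos.2 hVs0
    have h1 : (1 - κ) * b * Real.sqrt Vs < SD := by
      rw [ht, div_mul_eq_mul_div, lt_div_iff₀ hsV] at hω'
      have : b * ((1 - κ) * b * Real.sqrt Vs) < b * SD := by linarith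
      exact lt_of_mul_lt_mul_left this hb0.le
    have h2 : (1 - 2 * κ) * z ≤ Real.sqrt Vs := by
      refine Real.le_sqrt_of_sq_le (le_trans ?_ hVs1)
      rw [mul_pow, hz2]
      have : (1 - 2 * κ) ^ 2 ≤ 1 - 2 * κ := by
        clear * - hκ hκ1
        nlinarith
      calc (1 - 2 * κ) ^ 2 * (s2 * #D) ≤ (1 - 2 * κ) * (s2 * #D) := by gcongr
        _ = _ := by ring
    have h3 : (1 - κ) * b * ((1 - 2 * κ) * z) ≤ (1 - κ) * b * Real.sqrt Vs :=
      mul_le_mul_of_nonneg_left h2 (mul_nonneg (by linarith) hb0.le)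
    have h4 : (1 - 4 * κ) * b * z + κ * b * z ≤ (1 - κ) * b * ((1 - 2 * κ) * z) := by
      have : (1 - κ) * b * ((1 - 2 * κ) * z) - ((1 - 4 * κ) * b * z + κ * b * z) =
        2 * κ ^ 2 * b * z := by ring
      have : 0 ≤ 2 * κ ^ 2 * b * z := by positivity
      linarith
    linarith
  rw [← hQ]
  linarith

end NAField

/-! ### Counting pairs of points in different cells -/

/-- Points `x` of an interval cut into cells of length `L` such that `x + t` lies in the interval
and, when `P` holds, in another cell than `x`. -/
def crossing (P : Prop) (L r a : ℕ) (t : ℤ) : Finset ℕ :=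
  open Classical in
  {x ∈ Ico a (a + L * r) | ∃ y, a ≤ y ∧ y < a + L * r ∧ (y : ℤ) - x = t ∧
    (P → (x - a) / L ≠ (y - a) / L)}

lemma card_crossing_le (P : Prop) (L r a : ℕ) (t : ℤ) : #(crossing P L r a t) ≤ L * r := by
  classical
  refine (Finset.card_filter_le _ _).trans ?_
  simp

/-- A shift by `t` crosses each of the cell borders at most `2 |t|` times. -/
lemma card_crossing_le' {P : Prop} (hP : P) {L : ℕ} (hL : 0 < L) (r a : ℕ) (t : ℤ) :
    #(crossing P L r a t) ≤ 2 * r * t.natAbs := by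
  classical
  have hsub : crossing P L r a t ⊆ (range r).biUnion fun c =>
      Ico (a + L * c + L - t.natAbs) (a + L * c + L) ∪
      Ico (a + L * c) (a + L * c + t.natAbs) := by
    intro x hx
    simp only [crossing, mem_filter, mem_Ico] at hx
    obtain ⟨⟨hx1, hx2⟩, y, hy1, hy2, hyt, hne⟩ := hx
    have hne := hne hP
    rw [mem_biUnion]
    refine ⟨(x - a) / L, ?_, ?_⟩
    · rw [mem_range, Nat.div_lt_iff_lt_mul hL, mul_comm]; omega
    · have h1 : L * ((x - a) / L) ≤ x - a := Nat.mul_div_le _ _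
      have h2 : x - a < L * ((x - a) / L) + L := Nat.lt_mul_div_succ _ hL
      set c := (x - a) / L
      rw [mem_union]
      by_contra hcon
      rw [not_or] at hcon
      simp only [mem_Ico] at hcon
      apply hne
      symm
      rw [Nat.div_eq_iff hL]
      obtain ⟨hc1, hc2⟩ := hcon
      have h3 : L * c = c * L := mul_comm _ _
      omega
  refine (card_le_card hsub).trans (card_biUnion_le.trans ?_)
  calc _ ≤ ∑ c ∈ range r, 2 * t.natAbs := Finset.sum_le_sum fun c _ => by
        refine (card_union_le _ _).trans ?_
        rw [Nat.card_Ico, Nat.card_Ico]; omega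
    _ = _ := by rw [Finset.sum_const, card_range, smul_eq_mul]; ring

/-- Sum of a nonnegative function of the difference over pairs of points whose cells differ in all
coordinates of `Q`. -/
lemma pair_sum_le {d : ℕ} {u : (Fin d → ℤ) → ℝ} (hu : ∀ j, 0 ≤ u j) {L a c : Fin d → ℕ}
    (hL : ∀ i, 0 < L i) (Q : Finset (Fin d)) {J : Finset (Fin d → ℤ)}
    (hJ : ∀ x ∈ brick a (fun i => a i + L i * c i), ∀ y ∈ brick a (fun i => a i + L i * c i),
      zsub y x ∈ J) :
    ∑ k ∈ brick 0 c, ∑ l ∈ brick 0 c with ∀ i ∈ Q, k i ≠ l i,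
      ∑ x ∈ sub L a k, ∑ y ∈ sub L a l, u (zsub y x) ≤
    ∑ j ∈ J, u j * ∏ i, (#(crossing (i ∈ Q) (L i) (c i) (a i) (j i)) : ℝ) := by
  classical
  set B := brick a (fun i => a i + L i * c i) with hB
  set P : Finset ((Fin d → ℕ) × (Fin d → ℕ)) :=
    {p ∈ B ×ˢ B | ∀ i ∈ Q, (p.1 i - a i) / L i ≠ (p.2 i - a i) / L i} with hP
  have e : ∑ k ∈ brick 0 c, ∑ l ∈ brick 0 c with ∀ i ∈ Q, k i ≠ l i,
      ∑ x ∈ sub L a k, ∑ y ∈ sub L a l, u (zsub y x) = ∑ p ∈ P, u (zsub p.2 p.1) := by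
    rw [hP, Finset.sum_filter, Finset.sum_product, hB,
      sum_sub hL a c]
    refine Finset.sum_congr rfl fun k _ => ?_
    rw [Finset.sum_comm]
    refine Finset.sum_congr rfl fun x hx => ?_
    rw [Finset.sum_filter, sum_sub hL a c]
    refine Finset.sum_congr rfl fun l _ => ?_
    have hx' := (mem_sub hL).1 hx
    split_ifs with hkl
    · refine Finset.sum_congr rfl fun y hy => ?_
      have hy' := (mem_sub hL).1 hy
      rw [if_pos fun i hi => by rw [hx'.2 i, hy'.2 i]; exact hkl i hi]
    · symm
      refine Finset.sum_eq_zero fun y hy => ?_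
      have hy' := (mem_sub hL).1 hy
      rw [if_neg]
      refine fun hh => hkl fun i hi => ?_
      have := hh i hi
      rwa [hx'.2 i, hy'.2 i] at this
  rw [e, ← Finset.sum_fiberwise_of_maps_to (g := fun p => zsub p.2 p.1) (t := J) (fun p hp => by
    rw [hP, mem_filter, mem_product] at hp
    exact hJ _ hp.1.1 _ hp.1.2)]
  refine Finset.sum_le_sum fun j _ => ?_
  rw [Finset.sum_congr rfl (g := fun _ => u j) fun p hp => by rw [(mem_filter.1 hp).2],
    Finset.sum_const, nsmul_eq_mul, mul_comm]
  refine mul_le_mul_of_nonneg_left ?_ (hu j)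
  rw [← Nat.cast_prod, Nat.cast_le, ← Fintype.card_piFinset]
  refine Finset.card_le_card_of_injOn Prod.fst (fun p hp => ?_) ?_
  · rw [Finset.mem_coe, mem_filter, hP, mem_filter, mem_product] at hp
    obtain ⟨⟨⟨h1, h2⟩, h3⟩, h4⟩ := hp
    rw [mem_brick] at h1 h2
    rw [Finset.mem_coe, Fintype.mem_piFinset]
    intro i
    simp only [crossing, mem_filter, mem_Ico]
    exact ⟨h1 i, p.2 i, (h2 i).1, (h2 i).2, congrFun h4 i, h3 i⟩
  · intro p hp p' hp' hpp
    rw [Finset.mem_coe, mem_filter] at hp hp'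
    refine Prod.ext hpp (NAField.zsub_inj p.1 ?_)
    show zsub p.2 p.1 = zsub p'.2 p.1
    rw [hp.2, hpp, hp'.2]

/-- The weight bounding the proportion of crossings by a shift `t` at scale `A ^ m`. -/
def wt (A r m : ℕ) (t : ℤ) : ℝ :=
  if t.natAbs < A ^ m then 4 * (r : ℝ) ^ 2 * (t.natAbs / A ^ m) else 0

lemma wt_nonneg (A r m : ℕ) (t : ℤ) : 0 ≤ wt A r m t := by
  unfold wt; split_ifs <;> positivity

lemma geom_sum_le {A : ℕ} (hA : 2 ≤ A) (s : Finset ℕ) (t : ℕ) :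
    ∑ m ∈ s, (if t < A ^ m then (t : ℝ) / A ^ m else 0) ≤ 2 := by
  classical
  have hA' : (2 : ℝ) ≤ A := by exact_mod_cast hA
  rw [← Finset.sum_filter]
  set s' := s.filter fun m => t < A ^ m with hs'
  rcases s'.eq_empty_or_nonempty with h0 | hne
  · rw [h0]; simp
  set m0 := s'.min' hne with hm0
  have hm0' : t < A ^ m0 := (mem_filter.1 (s'.min'_mem hne)).2
  calc ∑ m ∈ s', (t : ℝ) / A ^ m ≤ ∑ m ∈ s', (1 / 2 : ℝ) ^ (m - m0) := by
        refine Finset.sum_le_sum fun m hm => ?_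
        have hle : m0 ≤ m := s'.min'_le m hm
        have h1 : (t : ℝ) ≤ A ^ m0 := by exact_mod_cast hm0'.le
        have h2 : (A : ℝ) ^ m = A ^ m0 * A ^ (m - m0) := by rw [← pow_add]; congr 1; omega
        rw [div_le_iff₀ (by positivity), h2]
        have h3 : (2 : ℝ) ^ (m - m0) ≤ A ^ (m - m0) := by gcongr
        have h4 : (1 : ℝ) ≤ (1 / 2) ^ (m - m0) * A ^ (m - m0) := by
          rw [one_div, inv_pow, ← div_eq_inv_mul, one_le_div (by positivity)]
          exact h3
        calc (t : ℝ) ≤ A ^ m0 * 1 := by linarith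
          _ ≤ A ^ m0 * ((1 / 2) ^ (m - m0) * A ^ (m - m0)) := by gcongr
          _ = _ := by ring
    _ = ∑ n ∈ s'.image (fun m => m - m0), (1 / 2 : ℝ) ^ n := by
        rw [Finset.sum_image]
        intro x hx y hy hxy
        have h1 : m0 ≤ x := s'.min'_le x hx
        have h2 : m0 ≤ y := s'.min'_le y hy
        simp only at hxy
        omega
    _ ≤ ∑' n : ℕ, (1 / 2 : ℝ) ^ n :=
        Summable.sum_le_tsum _ (fun _ _ => by positivity) summable_geometric_two
    _ = 2 := tsum_geometric_two

lemma sum_wt_le {A : ℕ} (hA : 2 ≤ A) (r : ℕ) (s : Finset ℕ) (t : ℤ) :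
    ∑ m ∈ s, wt A r m t ≤ 8 * (r : ℝ) ^ 2 := by
  have h := geom_sum_le hA s t.natAbs
  have e : ∑ m ∈ s, wt A r m t = 4 * (r : ℝ) ^ 2 *
      ∑ m ∈ s, (if t.natAbs < A ^ m then (t.natAbs : ℝ) / A ^ m else 0) := by
    rw [Finset.mul_sum]
    refine Finset.sum_congr rfl fun m _ => ?_
    unfold wt
    split_ifs <;> simp
  rw [e]
  nlinarith [sq_nonneg (r : ℝ)]

/-- Proportion of crossings in the interval `[A ^ (m - 1), A ^ m)` cut into `r` cells. -/
lemma crossing_le_wt {A r m L : ℕ} (hA : 2 ≤ A) (hm : 1 ≤ m) (hL : 0 < L)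
    (hLr : A ^ (m - 1) + L * r = A ^ m) (P : Prop) [Decidable P] (t : ℤ) :
    (#(crossing P L r (A ^ (m - 1)) t) : ℝ) ≤ L * (if P then wt A r m t else r) := by
  split_ifs with hP
  · unfold wt
    split_ifs with ht
    · have h1 : (#(crossing P L r (A ^ (m - 1)) t) : ℝ) ≤ 2 * r * t.natAbs := by
        exact_mod_cast card_crossing_le' hP hL r _ t
      have h2 : A ^ m ≤ 2 * (L * r) := by
        have : A ^ m = A * A ^ (m - 1) := by rw [← pow_succ']; congr 1; omega
        have : 2 * A ^ (m - 1) ≤ A * A ^ (m - 1) := Nat.mul_le_mul_right _ hA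
        omega
      have h2' : (A : ℝ) ^ m ≤ 2 * (L * r) := by exact_mod_cast h2
      have hA0 : (0 : ℝ) < A ^ m := by
        have : 0 < A := by omega
        positivity
      refine h1.trans ?_
      have h3 : (1 : ℝ) ≤ 2 * (L * r) / A ^ m := by rw [one_le_div hA0]; exact h2'
      calc (2 * r * t.natAbs : ℝ) = 2 * r * t.natAbs * 1 := by ring
        _ ≤ 2 * r * t.natAbs * (2 * (L * r) / A ^ m) := by gcongr
        _ = _ := by ring
    · have : crossing P L r (A ^ (m - 1)) t = ∅ := by
        rw [Finset.eq_empty_iff_forall_notMem]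
        intro x hx
        simp only [crossing, mem_filter, mem_Ico] at hx
        obtain ⟨⟨hx1, hx2⟩, y, hy1, hy2, hyt, hne⟩ := hx
        omega
      rw [this]; simp
  · exact_mod_cast card_crossing_le _ _ _ _ _

/-- The total weight of the shifts in `J` at scale `m`, with crossings required in the coordinates
of `Q`. -/
def wsum {d : ℕ} (u : (Fin d → ℤ) → ℝ) (J : Finset (Fin d → ℤ)) (A r : ℕ) (Q : Finset (Fin d))
    (m : Fin d → ℕ) : ℝ :=
  ∑ j ∈ J, u j * ∏ i, (if i ∈ Q then wt A r (m i) (j i) else r)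

lemma wsum_nonneg {d : ℕ} {u : (Fin d → ℤ) → ℝ} (hu : ∀ j, 0 ≤ u j) (J : Finset (Fin d → ℤ))
    (A r : ℕ) (Q : Finset (Fin d)) (m : Fin d → ℕ) : 0 ≤ wsum u J A r Q m :=
  Finset.sum_nonneg fun j _ => mul_nonneg (hu j) <| Finset.prod_nonneg fun i _ => by
    split_ifs
    · exact wt_nonneg _ _ _ _
    · positivity

lemma pair_sum_le_wsum {d : ℕ} {u : (Fin d → ℤ) → ℝ} (hu : ∀ j, 0 ≤ u j) {A r : ℕ} (hA : 2 ≤ A)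
    {L m : Fin d → ℕ} (hm : ∀ i, 1 ≤ m i) (hL : ∀ i, 0 < L i)
    (hLr : ∀ i, A ^ (m i - 1) + L i * r = A ^ m i) (Q : Finset (Fin d)) {J : Finset (Fin d → ℤ)}
    (hJ : ∀ x ∈ brick 0 (fun i => A ^ m i), ∀ y ∈ brick 0 (fun i => A ^ m i), zsub y x ∈ J) :
    ∑ k ∈ brick 0 (fun _ => r), ∑ l ∈ brick 0 (fun _ => r) with ∀ i ∈ Q, k i ≠ l i,
      ∑ x ∈ sub L (fun i => A ^ (m i - 1)) k, ∑ y ∈ sub L (fun i => A ^ (m i - 1)) l, u (zsub y x) ≤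
    (∏ i, (L i : ℝ)) * wsum u J A r Q m := by
  classical
  have hsub : brick (fun i => A ^ (m i - 1)) (fun i => A ^ (m i - 1) + L i * r) ⊆
      brick 0 (fun i => A ^ m i) := by
    intro x hx
    rw [mem_brick] at hx ⊢
    intro i
    have := hx i
    rw [hLr] at this
    exact ⟨Nat.zero_le _, this.2⟩
  refine (pair_sum_le hu hL Q (c := fun _ => r) (J := J)
    fun x hx y hy => hJ x (hsub hx) y (hsub hy)).trans ?_
  rw [wsum, Finset.mul_sum]
  refine Finset.sum_le_sum fun j _ => ?_
  rw [mul_left_comm, ← Finset.prod_mul_distrib]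
  refine mul_le_mul_of_nonneg_left (Finset.prod_le_prod (fun i _ => by positivity) fun i _ => ?_)
    (hu j)
  exact crossing_le_wt hA (hm i) (hL i) (hLr i) _ _

/-- Averaging over the scales gains a factor `1 / I` for every crossed coordinate. -/
lemma sum_wsum_le {d : ℕ} {u : (Fin d → ℤ) → ℝ} (hu : ∀ j, 0 ≤ u j) (hs : Summable u) {A : ℕ}
    (hA : 2 ≤ A) (r I : ℕ) (Q : Finset (Fin d)) (J : Finset (Fin d → ℤ)) :
    ∑ m ∈ brick (fun _ => I + 1) (fun _ => 2 * I + 1), wsum u J A r Q m ≤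
      (∑' j, u j) * ∏ i, (if i ∈ Q then 8 * (r : ℝ) ^ 2 else (I : ℝ) * r) := by
  classical
  unfold wsum
  rw [Finset.sum_comm]
  have h1 : ∀ j, ∑ m ∈ brick (fun _ => I + 1) (fun _ => 2 * I + 1),
      u j * ∏ i, (if i ∈ Q then wt A r (m i) (j i) else (r : ℝ)) ≤
      u j * ∏ i, (if i ∈ Q then 8 * (r : ℝ) ^ 2 else (I : ℝ) * r) := fun j => by
    rw [← Finset.mul_sum, brick, ← Finset.prod_univ_sum (t := fun _ : Fin d => Ico (I + 1) (2 * I + 1))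
      (f := fun i m => if i ∈ Q then wt A r m (j i) else (r : ℝ))]
    refine mul_le_mul_of_nonneg_left (Finset.prod_le_prod (fun i _ => ?_) fun i _ => ?_) (hu j)
    · refine Finset.sum_nonneg fun x _ => ?_
      split_ifs
      · exact wt_nonneg _ _ _ _
      · positivity
    · split_ifs
      · exact sum_wt_le hA r _ _
      · rw [Finset.sum_const, Nat.card_Ico, nsmul_eq_mul]
        apply le_of_eq; congr 2; omega
  refine (Finset.sum_le_sum fun j _ => h1 j).trans ?_
  rw [← Finset.sum_mul]
  refine mul_le_mul_of_nonneg_right (hs.sum_le_tsum _ fun j _ => hu j) ?_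
  exact Finset.prod_nonneg fun i _ => by split_ifs <;> positivity

/-! ### Decoupling the cells of one box -/

lemma card_share_le {d : ℕ} {r : ℕ} (hr : 0 < r) (hd : 1 ≤ d) (k : Fin d → ℕ) :
    #{l ∈ brick (0 : Fin d → ℕ) (fun _ => r) | ∃ i, k i = l i} ≤ d * r ^ (d - 1) := by
  classical
  have hsub : {l ∈ brick (0 : Fin d → ℕ) (fun _ => r) | ∃ i, k i = l i} ⊆
      (univ : Finset (Fin d)).biUnion fun i =>
        {l ∈ brick (0 : Fin d → ℕ) (fun _ => r) | k i = l i} := by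
    intro l hl
    rw [mem_filter] at hl
    obtain ⟨h1, i, hi⟩ := hl
    exact mem_biUnion.2 ⟨i, mem_univ _, mem_filter.2 ⟨h1, hi⟩⟩
  refine (card_le_card hsub).trans (card_biUnion_le.trans ?_)
  have : ∀ i : Fin d, #{l ∈ brick (0 : Fin d → ℕ) (fun _ => r) | k i = l i} ≤ r ^ (d - 1) := by
    intro i
    have h1 := card_brick_filter (0 : Fin d → ℕ) (fun _ => r) i (fun t => k i = t)
    rw [card_brick0] at h1
    simp only [Pi.zero_apply, Nat.sub_zero, Finset.prod_const, card_univ, Fintype.card_fin] at h1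
    have h2 : #{t ∈ Ico 0 r | k i = t} ≤ 1 := by
      rw [Finset.card_le_one]
      intro x hx y hy
      rw [mem_filter] at hx hy
      omega
    refine Nat.le_of_mul_le_mul_right ?_ hr
    rw [h1, ← pow_succ, Nat.sub_add_cancel hd]
    exact (Nat.mul_le_mul_right _ h2).trans (by simp)
  calc _ ≤ ∑ i : Fin d, r ^ (d - 1) := Finset.sum_le_sum fun i _ => this i
    _ = _ := by simp

lemma cl01_sub_mono {x y : ℝ} (h : x ≤ y) : cl01 y - cl01 x ≤ y - x := by
  unfold cl01
  rcases max_cases 0 (min y 1) with h1 | h1 <;> rcases max_cases 0 (min x 1) with h2 | h2 <;>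
  rcases min_cases y 1 with h3 | h3 <;> rcases min_cases x 1 with h4 | h4 <;> linarith

namespace NAField

variable [IsProbabilityMeasure μ] {d : ℕ} {X : (Fin d → ℕ) → Ω → ℝ} {Υ : (Fin d → ℤ) → ℝ}

/-- The soft indicator that the (scaled) sum over `D` exceeds the level `c`. -/
def soft (X : (Fin d → ℕ) → Ω → ℝ) (s c : ℝ) (D : Finset (Fin d → ℕ)) (ω : Ω) : ℝ :=
  cl01 (s * (∑ x ∈ D, X x ω) - c)

lemma soft_meas (h : NAField μ X Υ) (s c : ℝ) (D) : Measurable (soft X s c D) := by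
  have : Measurable cl01 := cl01_mono.measurable
  exact this.comp (((Finset.measurable_sum _ fun x _ => h.meas x).const_mul s).sub_const c)

lemma soft_bd (s c : ℝ) (D) (ω : Ω) : 0 ≤ soft X s c D ω ∧ soft X s c D ω ≤ 1 :=
  ⟨cl01_nonneg _, cl01_le_one _⟩

open ProbabilityTheory in
/-- Since `cl01` is nondecreasing and `1`-Lipschitz, the covariance of two soft indicators is
controlled by the covariance of the underlying sums. -/
lemma soft_cov (h : NAField μ X Υ) {s : ℝ} (hs : 0 ≤ s) (c : ℝ) {D D' : Finset (Fin d → ℕ)}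
    (hD : Disjoint D D') :
    -cov[soft X s c D, soft X s c D'; μ] ≤ s ^ 2 * ∑ x ∈ D, ∑ y ∈ D', uu Υ (zsub y x) := by
  have hna : NegAssocOn μ (fun x ω => s * X x ω) Set.univ :=
    h.na.comp (fun _ z => s * z) fun _ _ u v huv => mul_le_mul_of_nonneg_left huv hs
  have e : ∀ D ω, soft X s c D ω = cl01 ((∑ x ∈ D, s * X x ω) - c) := fun D ω => by
    rw [soft, Finset.mul_sum]
  have hL : ∀ D, MemLp (soft X s c D) 2 μ := fun D =>
    memLp_of_bdd (h.soft_meas s c D) (C := 1) fun ω => by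
      rw [abs_of_nonneg (soft_bd s c D ω).1]; exact (soft_bd s c D ω).2
  have hmon : ∀ D : Finset (Fin d → ℕ),
      Monotone fun x : (Fin d → ℕ) → ℝ => (∑ i ∈ D, x i) - cl01 ((∑ i ∈ D, x i) - c) := by
    intro D x y hxy
    have h1 : ∑ i ∈ D, x i ≤ ∑ i ∈ D, y i := Finset.sum_le_sum fun i _ => hxy i
    have := cl01_sub_mono (sub_le_sub_right h1 c)
    simp only
    linarith
  have hdep : ∀ D : Finset (Fin d → ℕ),
      DependsOn (fun x : (Fin d → ℕ) → ℝ => cl01 ((∑ i ∈ D, x i) - c)) (D : Set (Fin d → ℕ)) := by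
    intro D x y hxy
    simp only
    rw [Finset.sum_congr rfl fun i hi => hxy i hi]
  have main := hna.newman (A := D) (B := D') (Set.subset_univ _) (Set.subset_univ _) hD
    (F := fun x => cl01 ((∑ i ∈ D, x i) - c)) (G := fun x => cl01 ((∑ i ∈ D', x i) - c))
    (fun x y hxy => cl01_mono (sub_le_sub_right (Finset.sum_le_sum fun i _ => hxy i) c))
    (hdep D) (hdep D') (hmon D) (hmon D') (fun x _ => (h.memLp x).const_mul s)
    (by simpa only [← e] using hL D) (by simpa only [← e] using hL D')
  simp only [← e] at main
  have e2 : ∑ i ∈ D, ∑ j ∈ D', cov[fun ω => s * X i ω, fun ω => s * X j ω; μ] =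
      -(s ^ 2 * ∑ x ∈ D, ∑ y ∈ D', uu Υ (zsub y x)) := by
    rw [Finset.mul_sum, ← Finset.sum_neg_distrib]
    refine Finset.sum_congr rfl fun x hx => ?_
    rw [Finset.mul_sum, ← Finset.sum_neg_distrib]
    refine Finset.sum_congr rfl fun y hy => ?_
    have hxy : y ≠ x := fun hh => Finset.disjoint_left.1 hD hx (hh ▸ hy)
    rw [covariance_const_mul_left, covariance_const_mul_right, h.cov_eq, Υ_eq_neg_uu (Υ := Υ) hxy]
    ring
  rw [e2] at main
  have : cov[soft X s c D, soft X s c D'; μ] =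
    cov[fun ω => soft X s c D ω, fun ω => soft X s c D' ω; μ] := rfl
  linarith

/-- Simultaneous success of all cells of a box at scale `m`, given smallness of the error terms. -/
lemma cells_lower (h : NAField μ X Υ) {s c q C : ℝ} (hs : 0 ≤ s) (hq : 0 < q)
    {A r : ℕ} (hA : 2 ≤ A) (hr : 0 < r) {L m : Fin d → ℕ} (hm : ∀ i, 1 ≤ m i) (hL : ∀ i, 0 < L i)
    (hLr : ∀ i, A ^ (m i - 1) + L i * r = A ^ m i) {J : Finset (Fin d → ℤ)}
    (hJ : ∀ x ∈ brick 0 (fun i => A ^ m i), ∀ y ∈ brick 0 (fun i => A ^ m i), zsub y x ∈ J)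
    (hC : s ^ 2 * ∏ i, (L i : ℝ) ≤ C)
    (hqf : ∀ k ∈ brick 0 (fun _ => r),
      q ≤ ∫ ω, soft X s c (sub L (fun i => A ^ (m i - 1)) k) ω ∂μ)
    (h1 : (q⁻¹) ^ (2 * (d * r ^ (d - 1)) + 1) * (C * ∑ i, wsum (uu Υ) J A r {i} m) ≤ 1 / 4)
    (h2 : (r : ℝ) ^ d * ((r : ℝ) ^ d + 1) ^ 2 * (C * wsum (uu Υ) J A r univ m) ≤ q ^ (r ^ d) / 4) :
    q ^ (r ^ d) / 2 ≤
      ∫ ω, ∏ k ∈ brick 0 (fun _ => r), soft X s c (sub L (fun i => A ^ (m i - 1)) k) ω ∂μ := by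
  classical
  have hd := h.hd
  set a : Fin d → ℕ := fun i => A ^ (m i - 1) with ha
  set T : Finset (Fin d → ℕ) := brick 0 (fun _ => r) with hT
  have hTc : #T = r ^ d := by rw [hT, card_brick0]; simp
  set f : (Fin d → ℕ) → Ω → ℝ := fun k => soft X s c (sub L a k) with hf
  have hna : NegAssocOn μ f Set.univ :=
    (h.na.sum_block (T := Set.univ) (sub L a) (fun _ _ => Set.subset_univ _)
      (fun k _ l _ hkl => sub_disjoint hL hkl)).comp (fun _ z => cl01 (s * z - c))
      fun _ _ u v huv => cl01_mono (sub_le_sub_right (mul_le_mul_of_nonneg_left huv hs) c)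
  have hcov : ∀ k l, l ≠ k → -ProbabilityTheory.covariance (f k) (f l) μ ≤
      s ^ 2 * ∑ x ∈ sub L a k, ∑ y ∈ sub L a l, uu Υ (zsub y x) := fun k l hkl =>
    h.soft_cov hs c (sub_disjoint hL hkl.symm)
  have hpn : ∀ k l, 0 ≤ ∑ x ∈ sub L a k, ∑ y ∈ sub L a l, uu Υ (zsub y x) := fun k l =>
    Finset.sum_nonneg fun x _ => Finset.sum_nonneg fun y _ => h.uu_nonneg _
  -- total interaction over pairs of cells that differ in all coordinates of `Q`
  have hps : ∀ Q : Finset (Fin d), ∑ k ∈ T, ∑ l ∈ T with ∀ i ∈ Q, k i ≠ l i,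
      s ^ 2 * ∑ x ∈ sub L a k, ∑ y ∈ sub L a l, uu Υ (zsub y x) ≤ C * wsum (uu Υ) J A r Q m := by
    intro Q
    have hp := pair_sum_le_wsum h.uu_nonneg hA hm hL hLr Q hJ
    simp_rw [← Finset.mul_sum]
    calc _ ≤ s ^ 2 * ((∏ i, (L i : ℝ)) * wsum (uu Υ) J A r Q m) :=
          mul_le_mul_of_nonneg_left hp (sq_nonneg s)
      _ = s ^ 2 * (∏ i, (L i : ℝ)) * wsum (uu Υ) J A r Q m := by ring
      _ ≤ _ := mul_le_mul_of_nonneg_right hC (wsum_nonneg h.uu_nonneg _ _ _ _ _)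
  have c1 : ∑ k ∈ T, ∑ l ∈ T with l ≠ k ∧ (∃ i, k i = l i),
      -ProbabilityTheory.covariance (f k) (f l) μ ≤ C * ∑ i, wsum (uu Υ) J A r {i} m := by
    rw [Finset.mul_sum]
    refine le_trans ?_ (Finset.sum_le_sum fun i _ => hps {i})
    rw [Finset.sum_comm]
    refine Finset.sum_le_sum fun k _ => ?_
    calc _ ≤ ∑ l ∈ T with l ≠ k ∧ (∃ i, k i = l i), ∑ i : Fin d, (if k i ≠ l i then
          s ^ 2 * ∑ x ∈ sub L a k, ∑ y ∈ sub L a l, uu Υ (zsub y x) else 0) := by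
          refine Finset.sum_le_sum fun l hl => ?_
          have hkl := (mem_filter.1 hl).2.1
          obtain ⟨i, hi⟩ := Function.ne_iff.1 hkl.symm
          refine (hcov k l hkl).trans ?_
          have := Finset.single_le_sum (f := fun i => (if k i ≠ l i then
            s ^ 2 * ∑ x ∈ sub L a k, ∑ y ∈ sub L a l, uu Υ (zsub y x) else 0))
            (fun i _ => by
              split_ifs
              · exact mul_nonneg (sq_nonneg s) (hpn k l)
              · exact le_rfl) (mem_univ i)
          simp only [if_pos hi] at this
          exact this
      _ ≤ ∑ l ∈ T, ∑ i : Fin d, (if k i ≠ l i then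
          s ^ 2 * ∑ x ∈ sub L a k, ∑ y ∈ sub L a l, uu Υ (zsub y x) else 0) := by
          refine Finset.sum_le_sum_of_subset_of_nonneg (filter_subset _ _) fun l _ _ => ?_
          refine Finset.sum_nonneg fun i _ => ?_
          split_ifs
          · exact mul_nonneg (sq_nonneg s) (hpn k l)
          · exact le_rfl
      _ = _ := by
          rw [Finset.sum_comm]
          refine Finset.sum_congr rfl fun i _ => ?_
          rw [← Finset.sum_filter]
          refine Finset.sum_congr ?_ fun _ _ => rfl
          ext l; simp
  have c2 : ∀ k ∈ T, ∑ l ∈ T with l ≠ k ∧ ¬ (∃ i, k i = l i),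
      -ProbabilityTheory.covariance (f k) (f l) μ ≤ C * wsum (uu Υ) J A r univ m := by
    intro k hk
    refine le_trans ?_ (hps univ)
    have := Finset.single_le_sum (f := fun k => ∑ l ∈ T with ∀ i ∈ (univ : Finset (Fin d)), k i ≠ l i,
      s ^ 2 * ∑ x ∈ sub L a k, ∑ y ∈ sub L a l, uu Υ (zsub y x))
      (fun k _ => Finset.sum_nonneg fun l _ => mul_nonneg (sq_nonneg s) (hpn k l)) hk
    refine le_trans ?_ this
    refine (Finset.sum_le_sum fun l hl => hcov k l (mem_filter.1 hl).2.1).trans ?_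
    refine Finset.sum_le_sum_of_subset_of_nonneg ?_ fun l _ _ => mul_nonneg (sq_nonneg s) (hpn k l)
    intro l hl
    rw [mem_filter] at hl ⊢
    exact ⟨hl.1, fun i _ hi => hl.2.2 ⟨i, hi⟩⟩
  have main := hna.decouple (fun k _ => h.soft_meas s c _) (fun k _ ω => soft_bd s c _ ω)
    (fun k l => ∃ i, k i = l i) (T := T) (Set.subset_univ _) hq
    (fun k _ => card_share_le hr (by omega) k) hqf c1 c2
  have hpr : q ^ (r ^ d) ≤ ∏ k ∈ T, ∫ ω, f k ω ∂μ := by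
    rw [← hTc, ← Finset.prod_const]
    exact Finset.prod_le_prod (fun _ _ => hq.le) hqf
  rw [hTc] at main
  push_cast at main
  have hq0 : 0 < q ^ (r ^ d) := by positivity
  have hx : (∏ k ∈ T, ∫ ω, f k ω ∂μ) * (3 / 4) ≤ (∏ k ∈ T, ∫ ω, f k ω ∂μ) *
      (1 - (q⁻¹) ^ (2 * (d * r ^ (d - 1)) + 1) * (C * ∑ i, wsum (uu Υ) J A r {i} m)) :=
    mul_le_mul_of_nonneg_left (by linarith) (hq0.le.trans hpr)
  have : ∫ ω, pr f T ω ∂μ = ∫ ω, ∏ k ∈ T, soft X s c (sub L a k) ω ∂μ := rfl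
  linarith

end NAField

/-! ### One stage of the lower bound -/

lemma card_markov {ι : Type} {M : Finset ι} {w : ι → ℝ} (hw : ∀ m, 0 ≤ w m) {W : ℝ} (hW : 0 < W)
    (hs : ∑ m ∈ M, w m ≤ W) (hM : 0 < #M) :
    (#{m ∈ M | ¬ w m ≤ 4 * W / #M} : ℝ) ≤ #M / 4 := by
  have hM' : (0 : ℝ) < #M := by exact_mod_cast hM
  have h1 : (#{m ∈ M | ¬ w m ≤ 4 * W / #M} : ℝ) * (4 * W / #M) ≤ W := by
    rw [← nsmul_eq_mul]
    refine (Finset.card_nsmul_le_sum _ w _ fun m hm => ?_).trans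
      ((Finset.sum_le_sum_of_subset_of_nonneg (filter_subset _ _) fun m _ _ => hw m).trans hs)
    have := (mem_filter.1 hm).2
    push Not at this
    exact this.le
  rw [le_div_iff₀ (by norm_num)]
  have h2 : (#{m ∈ M | ¬ w m ≤ 4 * W / #M} : ℝ) * (4 * W / #M) =
    ((#{m ∈ M | ¬ w m ≤ 4 * W / #M} : ℝ) * 4) / #M * W := by ring
  rw [h2] at h1
  have h3 : ((#{m ∈ M | ¬ w m ≤ 4 * W / #M} : ℝ) * 4) / #M ≤ 1 := by
    exact le_of_mul_le_mul_right (by rw [one_mul]; exact h1) hW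
  rwa [div_le_one hM'] at h3

/-- If two nonnegative weights have bounded sums, at least half of the indices are good for both. -/
lemma card_two_markov {ι : Type} {M : Finset ι} {w v : ι → ℝ} (hw : ∀ m, 0 ≤ w m)
    (hv : ∀ m, 0 ≤ v m) {W V : ℝ} (hW : 0 < W) (hV : 0 < V)
    (hs : ∑ m ∈ M, w m ≤ W) (hs' : ∑ m ∈ M, v m ≤ V) (hM : 0 < #M) :
    (#M : ℝ) / 2 ≤ #{m ∈ M | w m ≤ 4 * W / #M ∧ v m ≤ 4 * V / #M} := by
  classical
  have h1 := card_markov hw hW hs hM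
  have h2 := card_markov hv hV hs' hM
  have hsub : M ⊆ {m ∈ M | w m ≤ 4 * W / #M ∧ v m ≤ 4 * V / #M} ∪
      ({m ∈ M | ¬ w m ≤ 4 * W / #M} ∪ {m ∈ M | ¬ v m ≤ 4 * V / #M}) := by
    intro m hm
    simp only [mem_union, mem_filter]
    tauto
  have h3 : (#M : ℝ) ≤ #{m ∈ M | w m ≤ 4 * W / #M ∧ v m ≤ 4 * V / #M} +
      (#{m ∈ M | ¬ w m ≤ 4 * W / #M} + #{m ∈ M | ¬ v m ≤ 4 * V / #M}) := by
    exact_mod_cast (card_le_card hsub).trans ((card_union_le _ _).trans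
      (Nat.add_le_add_left (card_union_le _ _) _))
  linarith

/-- The box `[A ^ (m - 1), A ^ m)` in `ℕ^d`. -/
def bx {d : ℕ} (A : ℕ) (m : Fin d → ℕ) : Finset (Fin d → ℕ) :=
  brick (fun i => A ^ (m i - 1)) (fun i => A ^ m i)

lemma bx_disjoint {d A : ℕ} (hA : 2 ≤ A) {m m' : Fin d → ℕ} (h : m ≠ m') :
    Disjoint (bx A m) (bx A m') := by
  obtain ⟨i, hi⟩ := Function.ne_iff.1 h
  rw [Finset.disjoint_left]
  intro x hx hx'
  rw [bx, mem_brick] at hx hx'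
  have h1 := hx i
  have h2 := hx' i
  rcases Nat.lt_or_gt_of_ne hi with h3 | h3
  · have : A ^ m i ≤ A ^ (m' i - 1) := Nat.pow_le_pow_right (by omega) (by omega)
    omega
  · have : A ^ m' i ≤ A ^ (m i - 1) := Nat.pow_le_pow_right (by omega) (by omega)
    omega

/-- Side lengths of the cells of `bx (2 ^ a) m` when every side is cut into `2 ^ ρ` parts. -/
def cl {d : ℕ} (a ρ : ℕ) (m : Fin d → ℕ) (i : Fin d) : ℕ :=
  2 ^ (a * (m i - 1) - ρ) * (2 ^ a - 1)

lemma cl_mul {d a ρ : ℕ} {m : Fin d → ℕ} {i : Fin d} (hm : 1 ≤ m i) (h : ρ ≤ a * (m i - 1)) :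
    (2 ^ a) ^ (m i - 1) + cl a ρ m i * 2 ^ ρ = (2 ^ a) ^ m i := by
  have h1 : 2 ^ (a * (m i - 1) - ρ) * 2 ^ ρ = (2 ^ a) ^ (m i - 1) := by
    rw [← pow_add, Nat.sub_add_cancel h, pow_mul]
  have h2 : (2 ^ a) ^ m i = (2 ^ a) ^ (m i - 1) * 2 ^ a := by
    rw [← pow_succ, Nat.sub_add_cancel hm]
  have h3 : 1 ≤ 2 ^ a := Nat.one_le_two_pow
  rw [cl, mul_right_comm, h1, h2]
  obtain ⟨w, hw⟩ := Nat.exists_eq_add_of_le h3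
  rw [hw, Nat.add_sub_cancel_left]
  ring

lemma cl_pos {d a ρ : ℕ} (ha : 1 ≤ a) (m : Fin d → ℕ) (i : Fin d) : 0 < cl a ρ m i := by
  have h : 2 ≤ 2 ^ a := by
    calc 2 = 2 ^ 1 := by norm_num
      _ ≤ 2 ^ a := Nat.pow_le_pow_right (by norm_num) ha
  exact Nat.mul_pos (by positivity) (by omega)

/-- The cell lengths are large multiples of `2 ^ q`. -/
lemma cl_eq {d a ρ q l0 : ℕ} (ha : 1 ≤ a) {m : Fin d → ℕ} {i : Fin d}
    (h : ρ + q + l0 ≤ a * (m i - 1)) : ∃ l, l0 ≤ l ∧ cl a ρ m i = l * 2 ^ q := by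
  have h3 : 2 ≤ 2 ^ a := by
    calc 2 = 2 ^ 1 := by norm_num
      _ ≤ 2 ^ a := Nat.pow_le_pow_right (by norm_num) ha
  refine ⟨2 ^ (a * (m i - 1) - ρ - q) * (2 ^ a - 1), ?_, ?_⟩
  · calc l0 ≤ 2 ^ l0 := Nat.lt_two_pow_self.le
      _ ≤ 2 ^ (a * (m i - 1) - ρ - q) := Nat.pow_le_pow_right (by norm_num) (by omega)
      _ ≤ _ := Nat.le_mul_of_pos_right _ (by omega)
  · rw [cl, mul_right_comm, ← pow_add]
    congr 2; omega

namespace NAField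

variable [IsProbabilityMeasure μ] {d : ℕ} {X : (Fin d → ℕ) → Ω → ℝ} {Υ : (Fin d → ℤ) → ℝ}

/-- The expectation of a soft indicator is bounded below by a probability. -/
lemma soft_mean_ge (h : NAField μ X Υ) {s c v : ℝ} (hs : 0 < s) (hv : c + 1 ≤ s * v)
    (D : Finset (Fin d → ℕ)) :
    μ.real {ω | v < ∑ x ∈ D, X x ω} ≤ ∫ ω, soft X s c D ω ∂μ := by
  have hm : MeasurableSet {ω | v < ∑ x ∈ D, X x ω} :=
    measurableSet_lt measurable_const (Finset.measurable_sum _ fun x _ => h.meas x)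
  rw [← integral_indicator_one hm]
  refine integral_mono ((integrable_const (1 : ℝ)).indicator hm) ?_ fun ω => ?_
  · exact integrable_of_bdd (h.soft_meas s c D) (C := 1) fun ω => by
      rw [abs_of_nonneg (soft_bd s c D ω).1]; exact (soft_bd s c D ω).2
  · by_cases hω : ω ∈ {ω | v < ∑ x ∈ D, X x ω}
    · rw [Set.indicator_of_mem hω]
      have hω' : v < ∑ x ∈ D, X x ω := hω
      have : s * v ≤ s * ∑ x ∈ D, X x ω := mul_le_mul_of_nonneg_left hω'.le hs.le
      simp only [Pi.one_apply, soft, cl01]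
      rw [min_eq_right (by linarith), max_eq_right zero_le_one]
    · rw [Set.indicator_of_notMem hω]
      exact (soft_bd s c D ω).1

lemma soft_pos {s c v : ℝ} (hs : 0 < s) (hv : s * v = c) {D : Finset (Fin d → ℕ)} {ω : Ω}
    (h : soft X s c D ω ≠ 0) : v ≤ ∑ x ∈ D, X x ω := by
  by_contra hcon
  push Not at hcon
  apply h
  have : s * ∑ x ∈ D, X x ω ≤ s * v := mul_le_mul_of_nonneg_left hcon.le hs.le
  rw [soft, cl01, max_eq_left]
  exact (min_le_left _ _).trans (by linarith)

set_option maxHeartbeats 1600000 in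
/-- A stage succeeds up to an exponentially small probability: among the boxes at scales
`I < m ≤ 2 I` one has an exceptionally large sum. -/
lemma stage (h : NAField μ X Υ) {κ b Q : ℝ} (hs2 : 0 < ∑' j, Υ j) (hκ : 0 < κ) (hb : 1 ≤ b)
    (hQ : 0 < Q) {q l0 : ℕ}
    (hblock : ∀ a L : Fin d → ℕ, (∀ i, l0 ≤ L i) → Q ≤
      μ.real {ω | (1 - 4 * κ) * b *
        Real.sqrt ((∑' j, Υ j) * #(brick a (fun i => a i + L i * 2 ^ q))) <
          ∑ x ∈ brick a (fun i => a i + L i * 2 ^ q), X x ω})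
    {a ρ I : ℕ} (ha : 1 ≤ a) (hI : ρ + q + l0 + 1 ≤ I) {C U : ℝ}
    (hC : C = 1 / ((κ * b) ^ 2 * ∑' j, Υ j)) (hU0 : 0 < U) (hU : ∑' j, uu Υ j ≤ U)
    (n1 : (Q⁻¹) ^ (2 * (d * (2 ^ ρ) ^ (d - 1)) + 1) *
      (C * (4 * (d * (U * (8 * (2 ^ ρ : ℝ) ^ 2 * (I * 2 ^ ρ) ^ (d - 1)))) / I ^ d)) ≤ 1 / 4)
    (n2 : (2 ^ ρ : ℝ) ^ d * ((2 ^ ρ : ℝ) ^ d + 1) ^ 2 *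
      (C * (4 * (U * (8 * (2 ^ ρ : ℝ) ^ 2) ^ d) / I ^ d)) ≤ Q ^ ((2 ^ ρ) ^ d) / 4) :
    μ.real {ω | ∀ m ∈ brick (fun _ : Fin d => I + 1) (fun _ => 2 * I + 1),
      ¬ ((1 - 5 * κ) * b * Real.sqrt ((2 ^ ρ : ℝ) ^ d * ((∑' j, Υ j) * #(bx (2 ^ a) m))) ≤
        ∑ x ∈ bx (2 ^ a) m, X x ω)} ≤
      Real.exp (-((I : ℝ) ^ d / 2 * (Q ^ ((2 ^ ρ) ^ d) / 2))) := by
  classical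
  have hd := h.hd
  set s2 := ∑' j, Υ j with hs2d
  clear_value s2
  have hκb : 0 < κ * b := mul_pos hκ (by linarith)
  have hA : 2 ≤ 2 ^ a := by
    calc 2 = 2 ^ 1 := by norm_num
      _ ≤ 2 ^ a := Nat.pow_le_pow_right (by norm_num) ha
  set Ms : Finset (Fin d → ℕ) := brick (fun _ => I + 1) (fun _ => 2 * I + 1) with hMs
  have hMc : #Ms = I ^ d := by
    rw [hMs, card_brick, Finset.prod_const, card_univ, Fintype.card_fin]; congr 1; omega
  have hI0 : 0 < I := by omega
  have hMpos : 0 < #Ms := by rw [hMc]; positivity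
  have hmI : ∀ m ∈ Ms, ∀ i, ρ + q + l0 ≤ a * (m i - 1) ∧ 1 ≤ m i := by
    intro m hm i
    rw [hMs, mem_brick] at hm
    have := hm i
    have h1 : m i - 1 ≤ a * (m i - 1) := Nat.le_mul_of_pos_left _ ha
    omega
  -- a finite set of differences large enough for all scales
  set N : ℕ := (2 ^ a) ^ (2 * I) with hN
  set J : Finset (Fin d → ℤ) :=
    (brick 0 (fun _ => N) ×ˢ brick 0 (fun _ => N)).image fun p => zsub p.2 p.1 with hJ
  have hJm : ∀ m ∈ Ms, ∀ x ∈ brick 0 (fun i => (2 ^ a) ^ m i), ∀ y ∈ brick 0 (fun i => (2 ^ a) ^ m i),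
      zsub y x ∈ J := by
    intro m hm
    have hsub : brick 0 (fun i => (2 ^ a) ^ m i) ⊆ brick 0 (fun _ => N) := by
      intro x hx
      rw [mem_brick] at hx ⊢
      intro i
      refine ⟨(hx i).1, (hx i).2.trans_le ?_⟩
      rw [hMs, mem_brick] at hm
      have := hm i
      exact Nat.pow_le_pow_right (by omega) (by omega)
    intro x hx y hy
    exact mem_image.2 ⟨(x, y), mem_product.2 ⟨hsub hx, hsub hy⟩, rfl⟩
  set w1 : (Fin d → ℕ) → ℝ := fun m => ∑ i, wsum (uu Υ) J (2 ^ a) (2 ^ ρ) {i} m with hw1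
  set w2 : (Fin d → ℕ) → ℝ := fun m => wsum (uu Υ) J (2 ^ a) (2 ^ ρ) univ m with hw2
  set W1 : ℝ := d * (U * (8 * (2 ^ ρ : ℝ) ^ 2 * (I * 2 ^ ρ) ^ (d - 1))) with hW1
  set W2 : ℝ := U * (8 * (2 ^ ρ : ℝ) ^ 2) ^ d with hW2
  have hI0' : (0 : ℝ) < I := by exact_mod_cast hI0
  have hd0 : (0 : ℝ) < d := by exact_mod_cast (by omega : 0 < d)
  have hs1 : ∑ m ∈ Ms, w1 m ≤ W1 := by
    rw [hw1, Finset.sum_comm]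
    calc _ ≤ ∑ i : Fin d, U * (8 * (2 ^ ρ : ℝ) ^ 2 * (I * 2 ^ ρ) ^ (d - 1)) := by
          refine Finset.sum_le_sum fun i _ => ?_
          refine (sum_wsum_le h.uu_nonneg h.summable_uu hA (2 ^ ρ) I {i} J).trans ?_
          have e : ∏ i' : Fin d, (if i' ∈ ({i} : Finset (Fin d)) then 8 * ((2 ^ ρ : ℕ) : ℝ) ^ 2 else
              (I : ℝ) * (2 ^ ρ : ℕ)) = 8 * (2 ^ ρ : ℝ) ^ 2 * (I * 2 ^ ρ) ^ (d - 1) := by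
            rw [← Finset.mul_prod_erase univ _ (mem_univ i), if_pos (mem_singleton_self i),
              Finset.prod_congr rfl (g := fun _ => (I : ℝ) * 2 ^ ρ) fun j hj => by
                rw [if_neg (by simpa using (mem_erase.1 hj).1)]; push_cast; rfl]
            rw [Finset.prod_const, card_erase_of_mem (mem_univ i), card_univ, Fintype.card_fin]
            push_cast; rfl
          rw [e]
          gcongr
      _ = W1 := by rw [Finset.sum_const, card_univ, Fintype.card_fin, nsmul_eq_mul]
  have hs2' : ∑ m ∈ Ms, w2 m ≤ W2 := by
    refine (sum_wsum_le h.uu_nonneg h.summable_uu hA (2 ^ ρ) I univ J).trans ?_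
    simp only [mem_univ, if_true, Finset.prod_const, card_univ, Fintype.card_fin]
    push_cast
    rw [hW2]
    gcongr
  have hgood := card_two_markov (M := Ms) (w := w1) (v := w2)
    (fun m => Finset.sum_nonneg fun i _ => wsum_nonneg h.uu_nonneg _ _ _ _ _)
    (fun m => wsum_nonneg h.uu_nonneg _ _ _ _ _) (W := W1) (V := W2)
    (by positivity) (by positivity) hs1 hs2' hMpos
  set Gd : Finset (Fin d → ℕ) := {m ∈ Ms | w1 m ≤ 4 * W1 / #Ms ∧ w2 m ≤ 4 * W2 / #Ms} with hGd
  have hMc' : (#Ms : ℝ) = (I : ℝ) ^ d := by rw [hMc]; push_cast; rfl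
  set P : (Fin d → ℕ) → ℝ := fun m => ((∏ i, cl a ρ m i : ℕ) : ℝ) with hP
  have hP0 : ∀ m, 0 < P m := fun m => by
    rw [hP]; exact Nat.cast_pos.2 (Finset.prod_pos fun i _ => cl_pos ha m i)
  set s : (Fin d → ℕ) → ℝ := fun m => 1 / (κ * b * Real.sqrt (s2 * P m)) with hs
  have hz : ∀ m, 0 < Real.sqrt (s2 * P m) := fun m => Real.sqrt_pos.2 (mul_pos hs2 (hP0 m))
  have hs0 : ∀ m, 0 < s m := fun m => one_div_pos.2 (mul_pos hκb (hz m))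
  have hsv : ∀ m t, s m * (t * b * Real.sqrt (s2 * P m)) = t / κ := fun m t => by
    have := (hz m).ne'
    have hb' : b ≠ 0 := by linarith
    simp only [hs]
    field_simp
  set c : ℝ := (1 - 5 * κ) / κ with hc
  set base : (Fin d → ℕ) → Fin d → ℕ := fun m i => (2 ^ a) ^ (m i - 1) with hbase
  set T : Finset (Fin d → ℕ) := brick 0 (fun _ => 2 ^ ρ) with hT
  have hLr : ∀ m ∈ Ms, ∀ i, base m i + cl a ρ m i * 2 ^ ρ = (2 ^ a) ^ m i := fun m hm i =>
    cl_mul (hmI m hm i).2 (by have := (hmI m hm i).1; omega)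
  have hbx : ∀ m ∈ Ms, bx (2 ^ a) m = brick (base m) (fun i => base m i + cl a ρ m i * 2 ^ ρ) := by
    intro m hm
    rw [bx]
    congr 1
    funext i
    exact (hLr m hm i).symm
  set H : (Fin d → ℕ) → ((Fin d → ℕ) → ℝ) → ℝ := fun m x =>
    ∏ k ∈ T, cl01 (s m * (∑ y ∈ sub (cl a ρ m) (base m) k, x y) - c) with hH
  set G : (Fin d → ℕ) → Ω → ℝ := fun m ω => H m (fun x => X x ω) with hG
  have hGe : ∀ m ω, G m ω = ∏ k ∈ T, soft X (s m) c (sub (cl a ρ m) (base m) k) ω :=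
    fun m ω => rfl
  have hGm : ∀ m, Measurable (G m) := fun m =>
    Finset.measurable_prod _ fun k _ => h.soft_meas (s m) c _
  have hG0 : ∀ m ω, 0 ≤ G m ω := fun m ω => Finset.prod_nonneg fun k _ => cl01_nonneg _
  have hG1 : ∀ m ω, G m ω ≤ 1 := fun m ω =>
    Finset.prod_le_one (fun k _ => cl01_nonneg _) fun k _ => cl01_le_one _
  have hna : NegAssocOn μ G (Ms : Set (Fin d → ℕ)) := by
    refine h.na.block (T := (Ms : Set (Fin d → ℕ))) (fun m => bx (2 ^ a) m)
      (fun _ _ => Set.subset_univ _) (fun m _ m' _ hmm => bx_disjoint hA hmm) H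
      (fun m _ x y hxy => ?_) (fun m hm x y hxy => ?_)
    · refine Finset.prod_le_prod (fun k _ => cl01_nonneg _) fun k _ => cl01_mono ?_
      exact sub_le_sub_right (mul_le_mul_of_nonneg_left (Finset.sum_le_sum fun i _ => hxy i)
        (hs0 m).le) c
    · refine Finset.prod_congr rfl fun k hk => ?_
      rw [Finset.sum_congr rfl fun i hi => hxy i (by
        rw [hbx m hm]; exact sub_subset (c := fun _ => 2 ^ ρ) hk hi)]
  -- every good scale succeeds with probability at least `Q ^ (r ^ d) / 2`
  have hEG : ∀ m ∈ Gd, Q ^ ((2 ^ ρ) ^ d) / 2 ≤ ∫ ω, G m ω ∂μ := by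
    intro m hm
    rw [hGd, mem_filter] at hm
    obtain ⟨hmM, hm1, hm2⟩ := hm
    have hcl : ∀ i, ∃ l, l0 ≤ l ∧ cl a ρ m i = l * 2 ^ q := fun i => cl_eq ha (hmI m hmM i).1
    choose l hl1 hl2 using hcl
    have hCs : s m ^ 2 * ∏ i, (cl a ρ m i : ℝ) ≤ C := by
      apply le_of_eq
      have e : ∏ i, (cl a ρ m i : ℝ) = P m := by rw [hP]; push_cast; rfl
      have e2 : Real.sqrt (s2 * P m) ^ 2 = s2 * P m :=
        Real.sq_sqrt (mul_pos hs2 (hP0 m)).le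
      have := (hP0 m).ne'
      rw [e, hC, hs]
      simp only
      rw [div_pow, mul_pow, e2]
      field_simp
    have hC0 : 0 ≤ C := by rw [hC]; positivity
    rw [hMc'] at hm1 hm2
    have hr := h.cells_lower (s := s m) (c := c) (q := Q) (C := C) (hs0 m).le hQ hA
      (r := 2 ^ ρ) (by positivity) (L := cl a ρ m) (m := m) (fun i => (hmI m hmM i).2)
      (fun i => cl_pos ha m i) (hLr m hmM) (hJm m hmM) hCs (fun k _ => ?_) ?_ ?_
    · exact hr
    · have e : sub (cl a ρ m) (fun i => (2 ^ a) ^ (m i - 1)) k = brick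
          (fun i => (2 ^ a) ^ (m i - 1) + cl a ρ m i * k i)
          (fun i => (2 ^ a) ^ (m i - 1) + cl a ρ m i * k i + l i * 2 ^ q) := by
        rw [sub]; congr 1; funext i; rw [← hl2 i]
      have hcard : (#(sub (cl a ρ m) (fun i => (2 ^ a) ^ (m i - 1)) k) : ℝ) = P m := by
        rw [card_sub]
      have hb1 := hblock (fun i => (2 ^ a) ^ (m i - 1) + cl a ρ m i * k i) l hl1
      rw [← e, hcard] at hb1
      refine hb1.trans (h.soft_mean_ge (hs0 m) ?_ _)
      rw [hsv, hc]
      apply le_of_eq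
      field_simp
      ring
    · refine le_trans ?_ n1
      push_cast
      gcongr
    · refine le_trans ?_ n2
      push_cast
      gcongr
  -- failure forces all `G m` to vanish
  have hfail : {ω | ∀ m ∈ Ms,
      ¬ ((1 - 5 * κ) * b * Real.sqrt ((2 ^ ρ : ℝ) ^ d * (s2 * #(bx (2 ^ a) m))) ≤
        ∑ x ∈ bx (2 ^ a) m, X x ω)} ⊆ {ω | 1 ≤ ∏ m ∈ Gd, (1 - G m ω)} := by
    intro ω hω
    have hz0 : ∀ m ∈ Gd, G m ω = 0 := by
      intro m hm
      have hmM : m ∈ Ms := (mem_filter.1 hm).1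
      by_contra hne
      refine hω m hmM ?_
      rw [hGe] at hne
      have hk : ∀ k ∈ T, (1 - 5 * κ) * b * Real.sqrt (s2 * P m) ≤
          ∑ x ∈ sub (cl a ρ m) (base m) k, X x ω := fun k hk =>
        soft_pos (hs0 m) (hsv m _) (Finset.prod_ne_zero_iff.1 hne k hk)
      have hTc : (#T : ℝ) = (2 ^ ρ) ^ d := by rw [hT, card_brick0]; simp
      have hcb : (#(bx (2 ^ a) m) : ℝ) = (2 ^ ρ) ^ d * P m := by
        rw [hbx m hmM, card_brick, hP]
        simp [Finset.prod_mul_distrib, mul_comm]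
      have e : (2 ^ ρ : ℝ) ^ d * (s2 * #(bx (2 ^ a) m)) = ((2 ^ ρ : ℝ) ^ d) ^ 2 * (s2 * P m) := by
        rw [hcb]; ring
      rw [e, Real.sqrt_mul (by positivity), Real.sqrt_sq (by positivity), hbx m hmM,
        sum_sub (cl_pos ha m) (base m) (fun _ => 2 ^ ρ)]
      have := Finset.card_nsmul_le_sum T _ _ hk
      rw [nsmul_eq_mul, hTc] at this
      refine le_trans (le_of_eq ?_) this
      ring
    show 1 ≤ ∏ m ∈ Gd, (1 - G m ω)
    rw [Finset.prod_congr rfl fun m hm => by rw [hz0 m hm, sub_zero]]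
    simp
  have hpb : ∀ ω, 0 ≤ ∏ m ∈ Gd, (1 - G m ω) ∧ ∏ m ∈ Gd, (1 - G m ω) ≤ 1 := fun ω =>
    ⟨Finset.prod_nonneg fun m _ => by linarith [hG1 m ω],
      Finset.prod_le_one (fun m _ => by linarith [hG1 m ω]) fun m _ => by linarith [hG0 m ω]⟩
  have hpm : Measurable fun ω => ∏ m ∈ Gd, (1 - G m ω) :=
    Finset.measurable_prod _ fun m _ => (hGm m).const_sub 1
  have hmk := mul_meas_ge_le_integral_of_nonneg (μ := μ) (f := fun ω => ∏ m ∈ Gd, (1 - G m ω))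
    (ae_of_all _ fun ω => (hpb ω).1) (integrable_of_bdd hpm (C := 1) fun ω => by
      rw [abs_of_nonneg (hpb ω).1]; exact (hpb ω).2) 1
  have hGdM : (Gd : Set (Fin d → ℕ)) ⊆ Ms := fun m hm => (mem_filter.1 hm).1
  have hprod := hna.prod_one_sub_le Gd hGdM (fun m _ => hGm m) (fun m _ => hG0 m)
    (fun m _ => hG1 m)
  set z : ℝ := Q ^ ((2 ^ ρ) ^ d) / 2 with hzd
  have hz0 : 0 ≤ z := by positivity
  have hfin : ∏ m ∈ Gd, (1 - ∫ ω, G m ω ∂μ) ≤ Real.exp (-((I : ℝ) ^ d / 2 * z)) := by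
    calc ∏ m ∈ Gd, (1 - ∫ ω, G m ω ∂μ) ≤ ∏ m ∈ Gd, Real.exp (-z) := by
          refine Finset.prod_le_prod (fun m _ => ?_) fun m hm => ?_
          · have : ∫ ω, G m ω ∂μ ≤ ∫ ω, (1 : ℝ) ∂μ :=
              integral_mono (integrable_of_bdd (hGm m) (C := 1) fun ω => by
                rw [abs_of_nonneg (hG0 m ω)]; exact hG1 m ω) (integrable_const _) (hG1 m)
            simp at this
            linarith
          · have h1 := hEG m hm
            have h2 := Real.add_one_le_exp (-z)
            linarith
      _ = Real.exp (-(#Gd * z)) := by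
          rw [Finset.prod_const, ← Real.exp_nat_mul]; congr 1; ring
      _ ≤ _ := by
          refine Real.exp_le_exp.2 (neg_le_neg ?_)
          rw [hMc'] at hgood
          gcongr
  refine (measureReal_mono hfail).trans ?_
  linarith

end NAField

/-! ### Asymptotics of the stage parameters -/

lemma num1 {d : ℕ} (hd : 2 ≤ d) {β γ K : ℝ} (hβ : 0 < β) (hγ : 0 ≤ γ) (hK : 0 ≤ K) :
    ∀ᶠ r : ℝ in atTop, Real.exp (γ * (2 * (d * r ^ (d - 1)) + 1)) * (K * r ^ (d + 1)) ≤
      Real.exp (β * r ^ d) := by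
  filter_upwards [eventually_ge_atTop 1, eventually_ge_atTop K,
    eventually_ge_atTop ((γ * (2 * d + 1) + (d + 2)) / β)] with r h1 h2 h3
  rw [div_le_iff₀ hβ] at h3
  have hr0 : 0 ≤ r := by linarith
  have e1 : r ≤ Real.exp r := by linarith [Real.add_one_le_exp r]
  have e2 : K * r ^ (d + 1) ≤ Real.exp ((d + 2) * r) := by
    calc K * r ^ (d + 1) ≤ r * r ^ (d + 1) := by gcongr
      _ = r ^ (d + 2) := by ring
      _ ≤ Real.exp r ^ (d + 2) := by gcongr
      _ = _ := by rw [← Real.exp_nat_mul]; push_cast; ring_nf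
  have e3 : (1 : ℝ) ≤ r ^ (d - 1) := one_le_pow₀ h1
  have e4 : r ≤ r ^ (d - 1) := le_self_pow₀ h1 (by omega)
  have e5 : r ^ d = r ^ (d - 1) * r := by rw [← pow_succ]; congr 1; omega
  calc _ ≤ Real.exp (γ * (2 * (d * r ^ (d - 1)) + 1)) * Real.exp ((d + 2) * r) := by gcongr
    _ = Real.exp (γ * (2 * (d * r ^ (d - 1)) + 1) + (d + 2) * r) := by rw [Real.exp_add]
    _ ≤ _ := by
      refine Real.exp_le_exp.2 ?_
      rw [e5]
      calc _ ≤ γ * (2 * (d * r ^ (d - 1)) + r ^ (d - 1)) + (d + 2) * r ^ (d - 1) := by gcongr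
        _ = r ^ (d - 1) * (γ * (2 * d + 1) + (d + 2)) := by ring
        _ ≤ r ^ (d - 1) * (r * β) := by gcongr
        _ = _ := by ring

lemma num2 {c : ℝ} (hc : 0 < c) (K : ℝ) (n : ℕ) : ∀ᶠ x : ℝ in atTop, K * x ^ n ≤ Real.exp (c * x) := by
  have h := (isLittleO_pow_exp_pos_mul_atTop n hc).const_mul_left K
  filter_upwards [h.bound (c := 1) one_pos] with x hx
  rw [one_mul, Real.norm_eq_abs, Real.norm_eq_abs, abs_of_pos (Real.exp_pos _)] at hx
  exact (le_abs_self _).trans hx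

lemma plog_le_of_le_exp {t c : ℝ} (hc : 1 ≤ c) (h : t ≤ Real.exp c) : plog t ≤ c := by
  rw [plog, Real.log_le_iff_le_exp (lt_max_of_lt_right (Real.exp_pos 1))]
  exact max_le h (Real.exp_le_exp.2 hc)

/-- Number of scales used at a stage with `2 ^ ρ` cells per side. -/
def nsc (β : ℝ) (d ρ : ℕ) : ℕ := ⌈Real.exp (β * (2 ^ ρ : ℝ) ^ d)⌉₊

lemma nsc_ge (β : ℝ) (d ρ : ℕ) : Real.exp (β * (2 ^ ρ : ℝ) ^ d) ≤ nsc β d ρ := Nat.le_ceil _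

lemma nsc_le {β : ℝ} (hβ : 0 ≤ β) (d ρ : ℕ) :
    (nsc β d ρ : ℝ) ≤ 2 * Real.exp (β * (2 ^ ρ : ℝ) ^ d) := by
  have h1 := (Nat.ceil_lt_add_one (Real.exp_pos (β * (2 ^ ρ : ℝ) ^ d)).le).le
  have h2 : 1 ≤ Real.exp (β * (2 ^ ρ : ℝ) ^ d) := Real.one_le_exp (by positivity)
  unfold nsc
  linarith

lemma tendsto_two_pow : Tendsto (fun ρ : ℕ => (2 ^ ρ : ℝ)) atTop atTop :=
  tendsto_pow_atTop_atTop_of_one_lt (by norm_num)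

lemma tendsto_two_pow_pow {d : ℕ} (hd : 1 ≤ d) :
    Tendsto (fun ρ : ℕ => ((2 ^ ρ : ℝ)) ^ d) atTop atTop :=
  (tendsto_pow_atTop (by omega)).comp tendsto_two_pow

lemma ev_nsc_large {d : ℕ} (hd : 1 ≤ d) {β : ℝ} (hβ : 0 < β) (M : ℕ) :
    ∀ᶠ ρ : ℕ in atTop, ρ + M ≤ nsc β d ρ := by
  have h1 := (tendsto_two_pow_pow hd).eventually (num2 hβ 2 1)
  have h2 := (tendsto_two_pow_pow hd).eventually (eventually_ge_atTop (M : ℝ))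
  filter_upwards [h1, h2] with ρ h1 h2
  have h3 : (ρ : ℝ) ≤ (2 ^ ρ : ℝ) ^ d := by
    calc (ρ : ℝ) ≤ 2 ^ ρ := by exact_mod_cast Nat.lt_two_pow_self.le
      _ ≤ _ := le_self_pow₀ (one_le_pow₀ (by norm_num)) (by omega)
  have h4 := nsc_ge β d ρ
  have : ((ρ + M : ℕ) : ℝ) ≤ nsc β d ρ := by push_cast; linarith
  exact_mod_cast this

/-- The relative loss caused by cells sharing a coordinate is eventually small: the exponent
`2^(ρ (d - 1))` is beaten by one factor `nsc β d ρ ≈ exp (β 2^(ρ d))`. -/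
lemma ev_n1 {d : ℕ} (hd : 2 ≤ d) {β γ C U : ℝ} (hβ : 0 < β) (hγ : 0 ≤ γ) (hC : 0 ≤ C)
    (hU : 0 ≤ U) :
    ∀ᶠ ρ : ℕ in atTop, ((Real.exp (-γ))⁻¹) ^ (2 * (d * (2 ^ ρ) ^ (d - 1)) + 1) *
      (C * (4 * (d * (U * (8 * (2 ^ ρ : ℝ) ^ 2 * (nsc β d ρ * 2 ^ ρ) ^ (d - 1)))) /
        (nsc β d ρ : ℝ) ^ d)) ≤ 1 / 4 := by
  have h1 := tendsto_two_pow.eventually (num1 hd hβ hγ (K := 128 * C * d * U) (by positivity))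
  filter_upwards [h1] with ρ h1
  have h2 := nsc_ge β d ρ
  have hI : (0 : ℝ) < nsc β d ρ := lt_of_lt_of_le (Real.exp_pos _) h2
  set r : ℝ := 2 ^ ρ with hr
  have e1 : ((Real.exp (-γ))⁻¹) ^ (2 * (d * (2 ^ ρ) ^ (d - 1)) + 1) =
      Real.exp (γ * (2 * (d * r ^ (d - 1)) + 1)) := by
    rw [← Real.exp_neg, neg_neg, ← Real.exp_nat_mul]
    push_cast
    congr 1
    ring
  have e2 : C * (4 * (d * (U * (8 * r ^ 2 * (nsc β d ρ * r) ^ (d - 1)))) / (nsc β d ρ : ℝ) ^ d) =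
      1 / 4 * (128 * C * d * U * r ^ (d + 1)) / nsc β d ρ := by
    have e3 : (nsc β d ρ : ℝ) ^ d = (nsc β d ρ : ℝ) ^ (d - 1) * nsc β d ρ := by
      rw [← pow_succ]; congr 1; omega
    have e4 : r ^ (d + 1) = r ^ 2 * r ^ (d - 1) := by rw [← pow_add]; congr 1; omega
    rw [mul_pow, e3, e4]
    field_simp
    ring
  rw [e1, e2, mul_div_assoc', div_le_iff₀ hI]
  calc _ = 1 / 4 * (Real.exp (γ * (2 * (d * r ^ (d - 1)) + 1)) *
        (128 * C * d * U * r ^ (d + 1))) := by ring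
    _ ≤ 1 / 4 * nsc β d ρ := by gcongr; exact h1.trans h2

lemma exp_nsc_ge {d : ℕ} {β γ : ℝ} (ρ : ℕ) :
    Real.exp ((d * β - γ) * (2 ^ ρ : ℝ) ^ d) ≤
      (nsc β d ρ : ℝ) ^ d * Real.exp (-γ) ^ ((2 ^ ρ) ^ d) := by
  have h2 := nsc_ge β d ρ
  have e1 : Real.exp (-γ) ^ ((2 ^ ρ) ^ d) = Real.exp (-(γ * (2 ^ ρ : ℝ) ^ d)) := by
    rw [← Real.exp_nat_mul]; push_cast; congr 1; ring
  have e2 : Real.exp (d * (β * (2 ^ ρ : ℝ) ^ d)) ≤ (nsc β d ρ : ℝ) ^ d := by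
    rw [Real.exp_nat_mul]; gcongr
  rw [e1]
  calc _ = Real.exp (d * (β * (2 ^ ρ : ℝ) ^ d)) * Real.exp (-(γ * (2 ^ ρ : ℝ) ^ d)) := by
        rw [← Real.exp_add]; congr 1; ring
    _ ≤ _ := by gcongr

/-- The loss caused by cells sharing no coordinate is eventually small against the success
probability of a scale, thanks to the factor `nsc β d ρ ^ d` and `γ < d β`. -/
lemma ev_n2 {d : ℕ} (hd : 2 ≤ d) {β γ C U : ℝ} (hβγ : γ < d * β) (hC : 0 ≤ C)
    (hU : 0 ≤ U) :
    ∀ᶠ ρ : ℕ in atTop, (2 ^ ρ : ℝ) ^ d * ((2 ^ ρ : ℝ) ^ d + 1) ^ 2 *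
      (C * (4 * (U * (8 * (2 ^ ρ : ℝ) ^ 2) ^ d) / (nsc β d ρ : ℝ) ^ d)) ≤
        Real.exp (-γ) ^ ((2 ^ ρ) ^ d) / 4 := by
  have h1 := (tendsto_two_pow_pow (by omega : 1 ≤ d)).eventually
    (num2 (sub_pos.2 hβγ) (64 * C * U * 8 ^ d) 5)
  filter_upwards [h1] with ρ h1
  have h2 := h1.trans (exp_nsc_ge (γ := γ) ρ)
  have hI : (0 : ℝ) < nsc β d ρ := lt_of_lt_of_le (Real.exp_pos _) (nsc_ge β d ρ)
  set x : ℝ := (2 ^ ρ : ℝ) ^ d with hx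
  have hx1 : 1 ≤ x := one_le_pow₀ (one_le_pow₀ (by norm_num))
  have e : (8 * (2 ^ ρ : ℝ) ^ 2) ^ d = 8 ^ d * x ^ 2 := by
    rw [mul_pow, hx, ← pow_mul, ← pow_mul, ← pow_mul, ← pow_mul]
    congr 2
    ring
  rw [e, mul_div_assoc', mul_div_assoc', div_le_iff₀ (by positivity)]
  have e2 : (x + 1) ^ 2 ≤ 4 * x ^ 2 := by nlinarith
  calc x * (x + 1) ^ 2 * (C * (4 * (U * (8 ^ d * x ^ 2))))
      ≤ x * (4 * x ^ 2) * (C * (4 * (U * (8 ^ d * x ^ 2)))) := by gcongr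
    _ = 1 / 4 * (64 * C * U * 8 ^ d * x ^ 5) := by ring
    _ ≤ 1 / 4 * ((nsc β d ρ : ℝ) ^ d * Real.exp (-γ) ^ ((2 ^ ρ) ^ d)) := by gcongr
    _ = _ := by ring

/-- The exponent in the failure probability of `stage` is eventually at least `ρ`. -/
lemma ev_n3 {d : ℕ} (hd : 2 ≤ d) {β γ : ℝ} (hβγ : γ < d * β) :
    ∀ᶠ ρ : ℕ in atTop, (ρ : ℝ) ≤ (nsc β d ρ : ℝ) ^ d / 2 * (Real.exp (-γ) ^ ((2 ^ ρ) ^ d) / 2) := by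
  have h1 := (tendsto_two_pow_pow (by omega : 1 ≤ d)).eventually
    (num2 (sub_pos.2 hβγ) 4 1)
  filter_upwards [h1] with ρ h1
  have h2 := h1.trans (exp_nsc_ge (γ := γ) ρ)
  have h3 : (ρ : ℝ) ≤ (2 ^ ρ : ℝ) ^ d := by
    calc (ρ : ℝ) ≤ 2 ^ ρ := by exact_mod_cast Nat.lt_two_pow_self.le
      _ ≤ _ := le_self_pow₀ (one_le_pow₀ (by norm_num)) (by omega)
  linarith

/-- At the scales of a stage the iterated logarithm is controlled by the number of cells. -/
lemma ev_loglog {d : ℕ} (hd : 2 ≤ d) {β β' : ℝ} (hβ : 0 < β) (hβ' : β < β') {a : ℕ} (ha : 1 ≤ a) :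
    ∀ᶠ ρ : ℕ in atTop, ∀ m ∈ brick (fun _ : Fin d => nsc β d ρ + 1) (fun _ => 2 * nsc β d ρ + 1),
      plog (plog (∏ i, (((2 ^ a) ^ m i : ℕ) : ℝ))) ≤ β' * (2 ^ ρ : ℝ) ^ d := by
  have h1 := (tendsto_two_pow_pow (by omega : 1 ≤ d)).eventually
    (eventually_ge_atTop (Real.log (4 * d * a) / (β' - β)))
  have h2 := (tendsto_two_pow_pow (by omega : 1 ≤ d)).eventually (eventually_ge_atTop (1 / β'))
  filter_upwards [h1, h2] with ρ h1 h2 m hm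
  have hb0 : 0 < β' := by linarith
  rw [div_le_iff₀ (sub_pos.2 hβ')] at h1
  rw [div_le_iff₀ hb0] at h2
  set x : ℝ := (2 ^ ρ : ℝ) ^ d with hx
  have hI2 := nsc_le hβ.le d ρ
  have hI1 : 1 ≤ (nsc β d ρ : ℝ) :=
    le_trans (Real.one_le_exp (by positivity)) (nsc_ge β d ρ)
  set I : ℝ := ((nsc β d ρ : ℕ) : ℝ) with hId
  have hd' : (1 : ℝ) ≤ d := by exact_mod_cast (by omega : 1 ≤ d)
  have ha' : (1 : ℝ) ≤ a := by exact_mod_cast ha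
  have hda : 1 ≤ 2 * I * d * a := by
    calc (1 : ℝ) ≤ 2 * 1 * 1 * 1 := by norm_num
      _ ≤ _ := by gcongr
  have p1 : plog (∏ i, (((2 ^ a) ^ m i : ℕ) : ℝ)) ≤ 2 * I * d * a := by
    refine plog_le_of_le_exp hda ?_
    have hi : ∀ i, (((2 ^ a) ^ m i : ℕ) : ℝ) ≤ Real.exp (2 * I * a) := by
      intro i
      rw [mem_brick] at hm
      have hmi : (m i : ℝ) ≤ 2 * I := by
        have := (hm i).2
        have h3 : m i ≤ 2 * nsc β d ρ := by omega
        rw [hId]; exact_mod_cast h3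
      push_cast
      rw [← pow_mul]
      calc (2 : ℝ) ^ (a * m i) ≤ Real.exp 1 ^ (a * m i) := by
            have := Real.add_one_le_exp (1 : ℝ)
            gcongr; linarith
        _ = Real.exp (a * m i) := by rw [← Real.exp_nat_mul]; push_cast; rw [mul_one]
        _ ≤ _ := by
          refine Real.exp_le_exp.2 ?_
          rw [mul_comm]; gcongr
    calc _ ≤ ∏ i : Fin d, Real.exp (2 * I * a) :=
          Finset.prod_le_prod (fun i _ => by positivity) fun i _ => hi i
      _ = _ := by
        rw [Finset.prod_const, card_univ, Fintype.card_fin, ← Real.exp_nat_mul]; congr 1; ring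
  refine plog_le_of_le_exp (by linarith) (p1.trans ?_)
  calc 2 * I * d * a ≤ 2 * (2 * Real.exp (β * x)) * d * a := by gcongr
    _ = 4 * d * a * Real.exp (β * x) := by ring
    _ = Real.exp (Real.log (4 * d * a) + β * x) := by
        rw [Real.exp_add, Real.exp_log (by positivity)]
    _ ≤ _ := Real.exp_le_exp.2 (by linarith)

/-! ### The lower half of the law of the iterated logarithm -/

/-- Inclusion–exclusion: the sum over a box is an alternating sum of sums over boxes anchored at
the origin. -/
lemma incl_excl {d : ℕ} {a b : Fin d → ℕ} (hab : a ≤ b) (f : (Fin d → ℕ) → ℝ) :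
    ∑ x ∈ brick a b, f x =
      ∑ t : Finset (Fin d), (-1 : ℝ) ^ #t * ∑ x ∈ brick 0 (t.piecewise a b), f x := by
  classical
  have e1 : ∀ t : Finset (Fin d), ∑ x ∈ brick 0 (t.piecewise a b), f x =
      ∑ x ∈ brick 0 b, (∏ i ∈ t, if x i < a i then (1 : ℝ) else 0) * f x := by
    intro t
    have : brick 0 (t.piecewise a b) = {x ∈ brick 0 b | ∀ i ∈ t, x i < a i} := by
      ext x
      simp only [Finset.mem_filter, mem_brick, Pi.zero_apply, zero_le, true_and]
      constructor
      · intro hx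
        have h2 : ∀ i, x i < b i := fun i => by
          have := hx i
          by_cases hi : i ∈ t
          · rw [Finset.piecewise_eq_of_mem _ _ _ hi] at this; exact this.trans_le (hab i)
          · rwa [Finset.piecewise_eq_of_notMem _ _ _ hi] at this
        refine ⟨h2, fun i hi => ?_⟩
        have := hx i
        rwa [Finset.piecewise_eq_of_mem _ _ _ hi] at this
      · rintro ⟨h1, h2⟩ i
        by_cases hi : i ∈ t
        · rw [Finset.piecewise_eq_of_mem _ _ _ hi]; exact h2 i hi
        · rw [Finset.piecewise_eq_of_notMem _ _ _ hi]; exact h1 i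
    rw [this, Finset.sum_filter]
    refine Finset.sum_congr rfl fun x _ => ?_
    rw [Finset.prod_ite_zero]
    simp
  have e2 : ∑ x ∈ brick a b, f x =
      ∑ x ∈ brick 0 b, (∏ i, (1 - if x i < a i then (1 : ℝ) else 0)) * f x := by
    have : brick a b = {x ∈ brick 0 b | ∀ i, ¬ x i < a i} := by
      ext x
      simp only [Finset.mem_filter, mem_brick, Pi.zero_apply, zero_le, true_and, not_lt]
      exact ⟨fun h => ⟨fun i => (h i).2, fun i => (h i).1⟩, fun h i => ⟨h.2 i, h.1 i⟩⟩
    rw [this, Finset.sum_filter]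
    refine Finset.sum_congr rfl fun x _ => ?_
    have e3 : ∀ i, (1 - if x i < a i then (1 : ℝ) else 0) = if ¬ x i < a i then (1 : ℝ) else 0 := by
      intro i; by_cases hi : x i < a i <;> simp [hi]
    simp_rw [e3]
    rw [Finset.prod_ite_zero]
    simp
  rw [e2]
  simp_rw [e1, Finset.mul_sum]
  rw [Finset.sum_comm]
  refine Finset.sum_congr rfl fun x _ => ?_
  simp_rw [← mul_assoc]
  rw [← Finset.sum_mul]
  congr 1
  have := Finset.prod_add (fun i => -(if x i < a i then (1 : ℝ) else 0)) (fun _ => (1 : ℝ))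
    (Finset.univ : Finset (Fin d))
  simp only [Finset.prod_const_one, mul_one, Finset.powerset_univ] at this
  calc _ = ∏ i, (-(if x i < a i then (1 : ℝ) else 0) + 1) :=
        Finset.prod_congr rfl fun i _ => by ring
    _ = _ := by
      rw [this]
      refine Finset.sum_congr rfl fun t _ => ?_
      rw [Finset.prod_neg]

namespace NAField

variable [IsProbabilityMeasure μ] {d : ℕ} {X : (Fin d → ℕ) → Ω → ℝ} {Υ : (Fin d → ℤ) → ℝ}

/-- Shrinking at least one side by the factor `A` shrinks the normalisation by `√A`. -/
lemma nrm_piecewise {A : ℕ} (hA : 1 ≤ A) {m : Fin d → ℕ} (hm : ∀ i, 1 ≤ m i)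
    {t : Finset (Fin d)} (ht : t.Nonempty) :
    nrm (t.piecewise (fun i => A ^ (m i - 1)) (fun i => A ^ m i)) ≤
      nrm (fun i => A ^ m i) / Real.sqrt A := by
  classical
  have hA' : (1 : ℝ) ≤ A := by exact_mod_cast hA
  have hAm : ∀ i, (A : ℝ) ^ m i = A * (A : ℝ) ^ (m i - 1) := fun i => by
    rw [← pow_succ']; congr 1; have := hm i; omega
  set p : Fin d → ℕ := t.piecewise (fun i => A ^ (m i - 1)) (fun i => A ^ m i) with hp
  have hle : ∀ i, (p i : ℝ) ≤ ((A ^ m i : ℕ) : ℝ) := by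
    intro i
    by_cases hi : i ∈ t
    · rw [hp, Finset.piecewise_eq_of_mem _ _ _ hi]
      exact_mod_cast Nat.pow_le_pow_right hA (by omega)
    · rw [hp, Finset.piecewise_eq_of_notMem _ _ _ hi]
  have hprod : A * ∏ i, (p i : ℝ) ≤ ∏ i, ((A ^ m i : ℕ) : ℝ) := by
    obtain ⟨j, hj⟩ := ht
    rw [← Finset.mul_prod_erase _ _ (Finset.mem_univ j),
      ← Finset.mul_prod_erase _ (fun i => ((A ^ m i : ℕ) : ℝ)) (Finset.mem_univ j), ← mul_assoc]
    refine mul_le_mul ?_ (Finset.prod_le_prod (fun _ _ => by positivity) fun i _ => hle i)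
      (by positivity) (by positivity)
    rw [hp, Finset.piecewise_eq_of_mem _ _ _ hj]
    push_cast
    rw [hAm j]
  have hprod' : ∏ i, (p i : ℝ) ≤ ∏ i, ((A ^ m i : ℕ) : ℝ) :=
    Finset.prod_le_prod (fun _ _ => by positivity) fun i _ => hle i
  rw [le_div_iff₀ (by positivity), nrm, nrm, ← Real.sqrt_mul' _ (by positivity)]
  refine Real.sqrt_le_sqrt ?_
  have h1 := plog_mono (plog_mono hprod')
  have h2 := plog_pos (plog (∏ i, (p i : ℝ)))
  calc _ = 2 * d * (A * ∏ i, (p i : ℝ)) * plog (plog (∏ i, (p i : ℝ))) := by ring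
    _ ≤ _ := by gcongr

/-- If the anchored sums satisfy an upper bound, the sum over the large corner box `bx A m`
dominates the other terms of inclusion–exclusion. -/
lemma link {A : ℕ} (hA : 1 ≤ A) {f : (Fin d → ℕ) → ℝ} {K : ℝ} (hK : 0 ≤ K) {N0 : Fin d → ℕ}
    (hN : ∀ n, N0 ≤ n → |∑ x ∈ brick 0 n, f x| ≤ K * nrm n) {m : Fin d → ℕ} (hm : ∀ i, 1 ≤ m i)
    (hm' : ∀ i, N0 i ≤ A ^ (m i - 1)) :
    ∑ x ∈ bx A m, f x - 2 ^ d * (K / Real.sqrt A) * nrm (fun i => A ^ m i) ≤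
      ∑ x ∈ brick 0 (fun i => A ^ m i), f x := by
  classical
  have hle : ∀ i, A ^ (m i - 1) ≤ A ^ m i := fun i => Nat.pow_le_pow_right hA (by omega)
  have h1 := incl_excl (a := fun i => A ^ (m i - 1)) (b := fun i => A ^ m i) hle f
  rw [← Finset.add_sum_erase _ _ (Finset.mem_univ ∅)] at h1
  simp only [Finset.card_empty, pow_zero, one_mul, Finset.piecewise_empty] at h1
  have hB : 0 ≤ K / Real.sqrt A * nrm (fun i => A ^ m i) :=
    mul_nonneg (by positivity) (Real.sqrt_nonneg _)
  have h2 : ∑ t ∈ (univ : Finset (Finset (Fin d))).erase ∅, (-1 : ℝ) ^ #t *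
      ∑ x ∈ brick 0 (t.piecewise (fun i => A ^ (m i - 1)) (fun i => A ^ m i)), f x ≤
      2 ^ d * (K / Real.sqrt A * nrm (fun i => A ^ m i)) := by
    calc _ ≤ ∑ t ∈ (univ : Finset (Finset (Fin d))).erase ∅,
          K / Real.sqrt A * nrm (fun i => A ^ m i) := by
          refine Finset.sum_le_sum fun t ht => ?_
          have ht' : t.Nonempty := Finset.nonempty_iff_ne_empty.2 (Finset.ne_of_mem_erase ht)
          have h3 := hN (t.piecewise (fun i => A ^ (m i - 1)) (fun i => A ^ m i)) (by
            intro i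
            by_cases hi : i ∈ t
            · rw [Finset.piecewise_eq_of_mem _ _ _ hi]; exact hm' i
            · rw [Finset.piecewise_eq_of_notMem _ _ _ hi]; exact (hm' i).trans (hle i))
          calc _ ≤ |(-1 : ℝ) ^ #t *
                ∑ x ∈ brick 0 (t.piecewise (fun i => A ^ (m i - 1)) (fun i => A ^ m i)), f x| :=
                le_abs_self _
            _ = |∑ x ∈ brick 0 (t.piecewise (fun i => A ^ (m i - 1)) (fun i => A ^ m i)), f x| := by
                rw [abs_mul, abs_pow, abs_neg, abs_one, one_pow, one_mul]
            _ ≤ _ := h3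
            _ ≤ K * (nrm (fun i => A ^ m i) / Real.sqrt A) := by
                gcongr; exact nrm_piecewise hA hm ht'
            _ = _ := by ring
      _ = (#((univ : Finset (Finset (Fin d))).erase ∅) : ℝ) *
          (K / Real.sqrt A * nrm (fun i => A ^ m i)) := by rw [Finset.sum_const, nsmul_eq_mul]
      _ ≤ _ := by
          refine mul_le_mul_of_nonneg_right ?_ hB
          have : #((univ : Finset (Finset (Fin d))).erase ∅) ≤ 2 ^ d :=
            (Finset.card_erase_le).trans (by simp)
          exact_mod_cast this
  have h3 : ∑ x ∈ bx A m, f x = _ := h1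
  rw [h3]
  linarith

/-- Comparison of the level reached on `bx A m` with the normalisation at `A ^ m`. -/
lemma level_ge {κ b s R u : ℝ} (hκ : 0 < κ) (hκ1 : κ ≤ 1 / 8) (hb : 1 ≤ b) (hs : 0 ≤ s)
    (hR : 0 ≤ R) (hd : 1 ≤ d) {A : ℕ} (hA : 1 ≤ A) (hu : u = 1 / (A : ℝ)) {m : Fin d → ℕ}
    (hm : ∀ i, 1 ≤ m i)
    (hLL : plog (plog (∏ i, ((A ^ m i : ℕ) : ℝ))) ≤ (1 + 6 * κ) * b ^ 2 / (2 * d) * R) :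
    Real.sqrt s * ((1 - 5 * κ) / Real.sqrt (1 + 6 * κ) * Real.sqrt ((1 - u) ^ d)) *
      nrm (fun i => A ^ m i) ≤ (1 - 5 * κ) * b * Real.sqrt (R * (s * #(bx A m))) := by
  have hA' : (1 : ℝ) ≤ A := by exact_mod_cast hA
  have hd' : (1 : ℝ) ≤ d := by exact_mod_cast hd
  have hu1 : 0 ≤ 1 - u := by
    rw [hu, sub_nonneg]; exact (div_le_one (by linarith)).2 hA'
  have hcard : (#(bx A m) : ℝ) = (1 - u) ^ d * ∏ i, ((A ^ m i : ℕ) : ℝ) := by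
    rw [bx, card_brick]
    push_cast
    have : ∀ i, ((A ^ m i - A ^ (m i - 1) : ℕ) : ℝ) = (1 - u) * (A : ℝ) ^ m i := by
      intro i
      rw [Nat.cast_sub (Nat.pow_le_pow_right hA (by omega))]
      have hAm : (A : ℝ) ^ m i = A * (A : ℝ) ^ (m i - 1) := by
        rw [← pow_succ']; congr 1; have := hm i; omega
      push_cast
      rw [hAm, hu]
      field_simp
    simp_rw [this]
    rw [Finset.prod_mul_distrib, Finset.prod_const, card_univ, Fintype.card_fin]
  set N : ℝ := ∏ i, ((A ^ m i : ℕ) : ℝ) with hNd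
  have hN0 : 0 ≤ N := Finset.prod_nonneg fun _ _ => by positivity
  have hn : nrm (fun i => A ^ m i) ≤ Real.sqrt (1 + 6 * κ) * (b * Real.sqrt (R * N)) := by
    have e : b = Real.sqrt (b ^ 2) := (Real.sqrt_sq (by linarith)).symm
    rw [nrm, e, ← Real.sqrt_mul (by positivity), ← Real.sqrt_mul (by positivity)]
    refine Real.sqrt_le_sqrt ?_
    calc 2 * d * N * plog (plog N) ≤ 2 * d * N * ((1 + 6 * κ) * b ^ 2 / (2 * d) * R) := by
          gcongr
      _ = _ := by field_simp; 
  have e2 : Real.sqrt (R * (s * ((1 - u) ^ d * N))) =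
      Real.sqrt s * Real.sqrt ((1 - u) ^ d) * Real.sqrt (R * N) := by
    rw [← Real.sqrt_mul hs, ← Real.sqrt_mul (by positivity)]; congr 1; ring
  rw [hcard, e2]
  have h15 : 0 ≤ 1 - 5 * κ := by linarith
  have hq : 0 < Real.sqrt (1 + 6 * κ) := Real.sqrt_pos.2 (by linarith)
  calc _ ≤ Real.sqrt s * ((1 - 5 * κ) / Real.sqrt (1 + 6 * κ) * Real.sqrt ((1 - u) ^ d)) *
        (Real.sqrt (1 + 6 * κ) * (b * Real.sqrt (R * N))) := by gcongr
    _ = _ := by field_simp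

end NAField

/-- Almost surely, infinitely many of the events `F ρ` fail to occur. -/
lemma ae_frequently_of_exp_le [IsProbabilityMeasure μ] {F : ℕ → Set Ω}
    (hF : ∀ᶠ ρ : ℕ in atTop, μ.real (F ρ) ≤ Real.exp (-ρ)) :
    ∀ᵐ ω ∂μ, ∀ ρ0 : ℕ, ∃ ρ ≥ ρ0, ω ∉ F ρ := by
  rw [ae_all_iff]
  intro ρ0
  rw [ae_iff]
  have hsub : ∀ ρ ≥ ρ0, {ω | ¬ ∃ ρ ≥ ρ0, ω ∉ F ρ} ⊆ F ρ := by
    intro ρ hρ ω hω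
    by_contra hc
    exact hω ⟨ρ, hρ, hc⟩
  have h0 : μ.real {ω | ¬ ∃ ρ ≥ ρ0, ω ∉ F ρ} ≤ 0 := by
    have ht : Tendsto (fun ρ : ℕ => Real.exp (-(ρ : ℝ))) atTop (nhds 0) :=
      Real.tendsto_exp_neg_atTop_nhds_zero.comp tendsto_natCast_atTop_atTop
    refine ge_of_tendsto ht ?_
    filter_upwards [hF, eventually_ge_atTop ρ0] with ρ h1 h2
    exact (measureReal_mono (hsub ρ h2)).trans h1
  exact (measureReal_eq_zero_iff).1 (le_antisymm h0 measureReal_nonneg)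

namespace NAField

variable [IsProbabilityMeasure μ] {d : ℕ} {X : (Fin d → ℕ) → Ω → ℝ} {Υ : (Fin d → ℤ) → ℝ}

lemma abs_upper (h : NAField μ X Υ) :
    ∀ᵐ ω ∂μ, ∃ N0 : Fin d → ℕ, ∀ n, N0 ≤ n →
      |∑ x ∈ brick 0 n, X x ω| ≤ (Real.sqrt (∑' j, Υ j) + 1) * nrm n := by
  filter_upwards [h.upper one_pos, h.neg.upper one_pos] with ω h1 h2
  obtain ⟨N0, hN⟩ := eventually_atTop.1 (h1.and h2)
  refine ⟨N0, fun n hn => abs_le.2 ?_⟩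
  obtain ⟨h3, h4⟩ := hN n hn
  rw [Finset.sum_neg_distrib] at h4
  exact ⟨by linarith, h3⟩

/-- The lower half with an explicit loss, for the geometric ratio `A = 2^a`; the loss vanishes as
`a → ∞`. -/
lemma lower_aux (h : NAField μ X Υ) (hs2 : 0 < ∑' j, Υ j) {a : ℕ} (ha : 3 ≤ a) {u : ℝ}
    (hu : u = 1 / ((2 ^ a : ℕ) : ℝ)) :
    ∀ᵐ ω ∂μ, ∃ᶠ n : Fin d → ℕ in atTop,
      (Real.sqrt (∑' j, Υ j) * ((1 - 5 * u) / Real.sqrt (1 + 6 * u) * Real.sqrt ((1 - u) ^ d)) -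
        2 ^ d * ((Real.sqrt (∑' j, Υ j) + 1) / Real.sqrt ((2 ^ a : ℕ) : ℝ))) * nrm n ≤
        ∑ x ∈ brick 0 n, X x ω := by
  have hd := h.hd
  have hd' : (1 : ℝ) ≤ d := by exact_mod_cast (by omega : 1 ≤ d)
  have hu0 : 0 < u := by rw [hu]; positivity
  have hu1 : u ≤ 1 / 8 := by
    rw [hu]
    have : (8 : ℝ) ≤ ((2 ^ a : ℕ) : ℝ) := by
      have : 2 ^ 3 ≤ 2 ^ a := Nat.pow_le_pow_right (by norm_num) ha
      exact_mod_cast this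
    gcongr
  obtain ⟨b, hb, q, l0, hl0, hblock⟩ := h.one_block hs2 hu0 hu1
  set γ : ℝ := (1 / 2 + 2 * u) * b ^ 2 with hγ
  set β : ℝ := (1 + 5 * u) * b ^ 2 / (2 * d) with hβ
  set β' : ℝ := (1 + 6 * u) * b ^ 2 / (2 * d) with hβ'
  have hb2 : 0 < b ^ 2 := by positivity
  have hγ0 : 0 ≤ γ := by positivity
  have hβ0 : 0 < β := by positivity
  have hββ : β < β' := by rw [hβ, hβ']; gcongr; norm_num
  have hβγ : γ < d * β := by
    have : d * β = (1 / 2 + 5 / 2 * u) * b ^ 2 := by rw [hβ]; field_simp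
    rw [this, hγ]; gcongr; linarith
  have hblock' : ∀ a L : Fin d → ℕ, (∀ i, l0 ≤ L i) → Real.exp (-γ) ≤
      μ.real {ω | (1 - 4 * u) * b *
        Real.sqrt ((∑' j, Υ j) * #(brick a (fun i => a i + L i * 2 ^ q))) <
          ∑ x ∈ brick a (fun i => a i + L i * 2 ^ q), X x ω} := by
    intro a L hL
    have := hblock a L hL
    rwa [neg_mul] at this
  set C : ℝ := 1 / ((u * b) ^ 2 * ∑' j, Υ j) with hC
  have hC0 : 0 ≤ C := by positivity
  have hUU : 0 ≤ ∑' j, uu Υ j := _root_.tsum_nonneg h.uu_nonneg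
  have hprob : ∀ᶠ ρ : ℕ in atTop, μ.real {ω | ∀ m ∈ brick (fun _ : Fin d => nsc β d ρ + 1)
      (fun _ => 2 * nsc β d ρ + 1),
      ¬ ((1 - 5 * u) * b * Real.sqrt ((2 ^ ρ : ℝ) ^ d * ((∑' j, Υ j) * #(bx (2 ^ a) m))) ≤
        ∑ x ∈ bx (2 ^ a) m, X x ω)} ≤ Real.exp (-ρ) := by
    filter_upwards [ev_nsc_large (by omega : 1 ≤ d) hβ0 (q + l0 + 1),
      ev_n1 hd hβ0 hγ0 hC0 (U := ∑' j, uu Υ j + 1) (by linarith),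
      ev_n2 hd hβγ hC0 (U := ∑' j, uu Υ j + 1) (by linarith), ev_n3 hd hβγ] with ρ e0 e1 e2 e3
    refine (h.stage hs2 hu0 hb (Real.exp_pos _) hblock' (by omega) (by omega) hC
      (by linarith : 0 < ∑' j, uu Υ j + 1) (by linarith) e1 e2).trans ?_
    exact Real.exp_le_exp.2 (neg_le_neg e3)
  obtain ⟨ρ1, hρ1⟩ := eventually_atTop.1 ((ev_nsc_large (by omega : 1 ≤ d) hβ0 1).and
    (ev_loglog hd hβ0 hββ (by omega : 1 ≤ a)))
  filter_upwards [ae_frequently_of_exp_le hprob, h.abs_upper] with ω hω ⟨N0, hN0⟩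
  rw [frequently_atTop]
  intro n0
  obtain ⟨ρ, hρ, hfail⟩ := hω (ρ1 + ∑ i, (n0 i + N0 i))
  simp only [Set.mem_setOf_eq, not_forall, not_not] at hfail
  obtain ⟨m, hm, hS⟩ := hfail
  obtain ⟨hlarge, hLL⟩ := hρ1 ρ (by omega)
  have hmi : ∀ i, n0 i + N0 i + 1 ≤ m i := by
    intro i
    have h1 := ((mem_brick.1 hm) i).1
    have h2 : n0 i + N0 i ≤ ∑ i, (n0 i + N0 i) :=
      Finset.single_le_sum (f := fun i => n0 i + N0 i) (fun _ _ => Nat.zero_le _) (Finset.mem_univ i)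
    omega
  have hm1 : ∀ i, 1 ≤ m i := fun i => by have := hmi i; omega
  have h2a : 2 ≤ 2 ^ a := le_self_pow₀ (by norm_num) (by omega)
  have hpow : ∀ k, k ≤ (2 ^ a) ^ k := fun k => (Nat.lt_pow_self (by omega)).le
  refine ⟨fun i => (2 ^ a) ^ m i, fun i => ?_, ?_⟩
  · have := hmi i; have := hpow (m i); show n0 i ≤ (2 ^ a) ^ m i; omega
  · have h1 := link (by omega : 1 ≤ 2 ^ a) (by positivity) hN0 hm1 (fun i => by
      have := hmi i; have := hpow (m i - 1); omega)
    have h2 := level_ge (d := d) hu0 hu1 hb hs2.le (R := (2 ^ ρ : ℝ) ^ d) (by positivity) (by omega)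
      (by omega : 1 ≤ 2 ^ a) hu hm1 (hLL m hm)
    have h3 := h2.trans hS
    rw [sub_mul]
    linarith

/-- Lower half of the law of the iterated logarithm. -/
lemma lower (h : NAField μ X Υ) (hs2 : 0 < ∑' j, Υ j) {ε : ℝ} (hε : 0 < ε) :
    ∀ᵐ ω ∂μ, ∃ᶠ n : Fin d → ℕ in atTop,
      (Real.sqrt (∑' j, Υ j) - ε) * nrm n ≤ ∑ x ∈ brick 0 n, X x ω := by
  set σ := Real.sqrt (∑' j, Υ j) with hσ
  have hc : ContinuousAt (fun u : ℝ => σ * ((1 - 5 * u) / Real.sqrt (1 + 6 * u) *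
      Real.sqrt ((1 - u) ^ d)) - 2 ^ d * ((σ + 1) * Real.sqrt u)) 0 := by
    refine ContinuousAt.sub (ContinuousAt.mul continuousAt_const (ContinuousAt.mul
      (ContinuousAt.div (by fun_prop) (by fun_prop) (by norm_num)) (by fun_prop))) (by fun_prop)
  have hl : Tendsto (fun a : ℕ => 1 / ((2 ^ a : ℕ) : ℝ)) atTop (nhds 0) := by
    have := tendsto_two_pow.inv_tendsto_atTop
    refine this.congr fun a => ?_
    simp
  have ht := hc.tendsto.comp hl
  have hev := ht.eventually_const_lt (u := σ - ε) (by norm_num; exact hε)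
  obtain ⟨a, ha1, ha2⟩ := (hev.and (eventually_ge_atTop 3)).exists
  filter_upwards [h.lower_aux hs2 ha2 rfl] with ω hω
  refine hω.mono fun n hn => le_trans ?_ hn
  refine mul_le_mul_of_nonneg_right ?_ (Real.sqrt_nonneg _)
  simp only [Function.comp] at ha1
  rw [Real.sqrt_div zero_le_one, Real.sqrt_one, mul_one_div (σ + 1)] at ha1
  exact ha1.le

end NAField

end

/-! ### Assembling the theorem -/

lemma NegAssocOn.shift {Ω : Type} [MeasurableSpace Ω] {μ : Measure Ω} {d : ℕ}
    {X : (Fin d → ℕ) → Ω → ℝ} (h : NegAssocOn μ X (Set.Ici 1)) :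
    NegAssocOn μ (fun k => X (k + 1)) Set.univ := by
  classical
  intro A B _ _ hAB f g hf hg i1 i2 i3
  have hmem : ∀ (s : Finset (Fin d → ℕ)) (i : s), (i : Fin d → ℕ) + 1 ∈ s.image (· + 1) :=
    fun s i => Finset.mem_image_of_mem _ i.2
  have hs : ∀ s : Finset (Fin d → ℕ), ((s.image (· + 1) : Finset (Fin d → ℕ)) : Set (Fin d → ℕ)) ⊆
      Set.Ici 1 := by
    intro s x hx
    obtain ⟨y, -, rfl⟩ := Finset.mem_image.1 (Finset.mem_coe.1 hx)
    exact fun i => by simp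
  exact h (A.image (· + 1)) (B.image (· + 1)) (hs A) (hs B)
    ((Finset.disjoint_image (add_left_injective _)).2 hAB)
    (fun v => f fun i => v ⟨(i : Fin d → ℕ) + 1, hmem A i⟩)
    (fun v => g fun i => v ⟨(i : Fin d → ℕ) + 1, hmem B i⟩)
    (fun v w hvw => hf fun i => hvw _) (fun v w hvw => hg fun i => hvw _) i1 i2 i3

lemma sum_shift {d : ℕ} (n : Fin d → ℕ) (f : (Fin d → ℕ) → ℝ) :
    ∑ k ∈ Finset.Icc 1 n, f k = ∑ k ∈ brick 0 n, f (k + 1) := by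
  classical
  have : Finset.Icc 1 n = (brick 0 n).image (· + 1) := by
    ext x
    simp only [Finset.mem_Icc, Finset.mem_image, mem_brick]
    constructor
    · rintro ⟨h1, h2⟩
      refine ⟨x - 1, fun i => ⟨Nat.zero_le _, ?_⟩, ?_⟩
      · have := h1 i; have := h2 i; simp at *; omega
      · exact tsub_add_cancel_of_le h1
    · rintro ⟨y, hy, rfl⟩
      exact ⟨fun i => by simp, fun i => by have := (hy i).2; simp; omega⟩
  rw [this, Finset.sum_image (fun _ _ _ _ h => add_left_injective 1 h)]

/-- Identification of an extended-real upper limit of quotients from upper and lower estimates. -/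
lemma limsup_eq_of_bounds {d : ℕ} {S N : (Fin d → ℕ) → ℝ} {σ : ℝ}
    (hN : ∀ᶠ n in atTop, 0 < N n)
    (hup : ∀ k : ℕ, ∀ᶠ n in atTop, S n ≤ (σ + 1 / (k + 1)) * N n)
    (hlo : ∀ k : ℕ, ∃ᶠ n in atTop, (σ - 1 / (k + 1)) * N n ≤ S n) :
    limsup (fun n => ((S n : EReal) / (N n : EReal))) atTop = (σ : EReal) := by
  have hk : Tendsto (fun k : ℕ => (1 : ℝ) / (k + 1)) atTop (nhds 0) :=
    tendsto_one_div_add_atTop_nhds_zero_nat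
  refine le_antisymm ?_ ?_
  · have h1 : Tendsto (fun k : ℕ => ((σ + 1 / (k + 1) : ℝ) : EReal)) atTop (nhds (σ : EReal)) := by
      refine (continuous_coe_real_ereal.tendsto σ).comp ?_
      simpa using hk.const_add σ
    refine ge_of_tendsto' h1 fun k => ?_
    refine limsup_le_of_le (by isBoundedDefault) ?_
    filter_upwards [hN, hup k] with n h2 h3
    rw [← EReal.coe_div, EReal.coe_le_coe_iff]
    exact (div_le_iff₀ h2).2 h3
  · have h1 : Tendsto (fun k : ℕ => ((σ - 1 / (k + 1) : ℝ) : EReal)) atTop (nhds (σ : EReal)) := by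
      refine (continuous_coe_real_ereal.tendsto σ).comp ?_
      simpa using hk.const_sub σ
    refine le_of_tendsto' h1 fun k => ?_
    refine le_limsup_of_frequently_le ?_ (by isBoundedDefault)
    refine ((hlo k).and_eventually hN).mono fun n ⟨h2, h3⟩ => ?_
    rw [← EReal.coe_div, EReal.coe_le_coe_iff]
    exact (le_div_iff₀ h3).2 h2

/-- **LIL for weakly stationary negatively associated random fields** (Theorem 1).
If `d ≥ 2` and `{X_n : n ∈ ℕ^d}` is a weakly stationary negatively associated field of
identically distributed random variables with `E X_1 = 0` and
`E[X_1² log^{d-1}|X_1| / log log |X_1|] < ∞`, then a.s.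
`limsup_{n → ∞} S_n / √(2 d |n| log log |n|) = σ`, where
`σ² = ∑_{j ∈ ℤ^d} Υ(j)` and `Υ(j - i) = Cov(X_j, X_i)`. -/
theorem lil_weakly_stationary_na_field
    {Ω : Type} [MeasurableSpace Ω] (μ : Measure Ω) [IsProbabilityMeasure μ]
    (d : ℕ) (hd : 2 ≤ d)
    (X : (Fin d → ℕ) → Ω → ℝ)
    (hmeas : ∀ k : Fin d → ℕ, 1 ≤ k → Measurable (X k))
    (hNA : NegAssocOn μ X (Set.Ici 1))
    (hid : ∀ k : Fin d → ℕ, 1 ≤ k → μ.map (X k) = μ.map (X 1))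
    (hint : Integrable (X 1) μ)
    (hmean : ∫ ω, X 1 ω ∂μ = 0)
    (hmom : Integrable
      (fun ω => (X 1 ω) ^ 2 * (plog |X 1 ω|) ^ (d - 1) / plog (plog |X 1 ω|)) μ)
    (Υ : (Fin d → ℤ) → ℝ)
    (hws : ∀ i j : Fin d → ℕ, 1 ≤ i → 1 ≤ j →
      (∫ ω, X j ω * X i ω ∂μ) - (∫ ω, X j ω ∂μ) * ∫ ω, X i ω ∂μ
        = Υ (fun t => (j t : ℤ) - (i t : ℤ)))
    (σ : ℝ) (hσ : σ = Real.sqrt (∑' j : Fin d → ℤ, Υ j)) :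
    ∀ᵐ ω ∂μ,
      Filter.limsup (fun n : Fin d → ℕ =>
          (((∑ k ∈ Finset.Icc 1 n, X k ω) /
            Real.sqrt (2 * d * (∏ i, (n i : ℝ)) *
              plog (plog (∏ i, (n i : ℝ))))) : EReal))
        Filter.atTop = (σ : EReal) := by
  have h1 : ∀ k : Fin d → ℕ, 1 ≤ k + 1 := fun k i => by simp
  have hzero : ∀ k : Fin d → ℕ, 1 ≤ k → ∫ ω, X k ω ∂μ = 0 := by
    intro k hk
    have e : ∀ j : Fin d → ℕ, 1 ≤ j → ∫ ω, X j ω ∂μ = ∫ x, x ∂(μ.map (X j)) := fun j hj =>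
      (integral_map (hmeas j hj).aemeasurable aestronglyMeasurable_id).symm
    rw [e k hk, hid k hk, ← e 1 le_rfl, hmean]
  have h : NAField μ (fun k => X (k + 1)) Υ :=
    { hd := hd
      meas := fun k => hmeas _ (h1 k)
      na := hNA.shift
      idd := fun k => by rw [hid _ (h1 k), zero_add]
      int := by simpa using hint
      mean := by simpa using hmean
      mom := by simpa using hmom
      ws := fun x y => by
        have := hws (x + 1) (y + 1) (h1 x) (h1 y)
        rw [hzero _ (h1 y), zero_mul, sub_zero] at this
        rw [this]
        congr 1
        funext t
        simp [zsub] }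
  have hs := h.tsum_nonneg
  have hNpos : ∀ᶠ n : Fin d → ℕ in atTop, 0 < NAField.nrm n := by
    filter_upwards [eventually_ge_atTop (1 : Fin d → ℕ)] with n hn
    refine Real.sqrt_pos.2 (mul_pos (mul_pos (by positivity) (Finset.prod_pos fun i _ => ?_))
      (plog_pos _))
    exact_mod_cast hn i
  have hup : ∀ᵐ ω ∂μ, ∀ k : ℕ, ∀ᶠ n : Fin d → ℕ in atTop,
      ∑ x ∈ Finset.Icc 1 n, X x ω ≤ (σ + 1 / (k + 1)) * NAField.nrm n := by
    rw [ae_all_iff]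
    intro k
    filter_upwards [h.upper (ε' := 1 / ((k : ℝ) + 1)) (by positivity)] with ω hω
    filter_upwards [hω] with n hn
    rw [sum_shift, hσ]
    exact hn
  have hlo : ∀ᵐ ω ∂μ, ∀ k : ℕ, ∃ᶠ n : Fin d → ℕ in atTop,
      (σ - 1 / (k + 1)) * NAField.nrm n ≤ ∑ x ∈ Finset.Icc 1 n, X x ω := by
    rw [ae_all_iff]
    intro k
    rcases hs.lt_or_eq with hpos | hzero
    · filter_upwards [h.lower hpos (ε := 1 / ((k : ℝ) + 1)) (by positivity)] with ω hω
      refine hω.mono fun n hn => ?_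
      rw [sum_shift, hσ]
      exact hn
    · -- For `σ = 0` the lower estimate is the upper estimate for the field `-X`.
      filter_upwards [h.neg.upper (ε' := 1 / ((k : ℝ) + 1)) (by positivity)] with ω hω
      refine (hω.mono fun n hn => ?_).frequently
      rw [sum_shift, hσ]
      rw [← hzero, Finset.sum_neg_distrib] at *
      simp only [Real.sqrt_zero, zero_add, zero_sub] at *
      linarith
  filter_upwards [hup, hlo] with ω hu hl
  exact limsup_eq_of_bounds hNpos hu hl
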